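/- Let n ≥ 5. Then every (n-2)-tuple (H_1, …, H_{n-2}) of core-free subgroups of the alternating group A_n is regular; moreover, if H is the stabilizer in A_n of the point n, then for all g_1, …, g_{n-3} ∈ A_n the intersection ⋂_{i=1}^{n-3} g_i H g_i^{-1} is nontrivial, so this (n-3)-tuple of core-free subgroups is non-regular. Consequently the regularity number of A_n equals n-2. -/

import Mathlib

/-!
As `A_n` is simple, its core-free subgroups are the proper ones, and the upper
bound asks that any `n - 2` proper subgroups of `A_n` have conjugates with trivial intersection.

The claim is strengthened so that induction applies. For a labelling `c` of the points with
`rk c` labels, let `Yg c` be its Young subgroup. Whenever `n - 1 ≤ rk c + k`, any `k` proper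
subgroups have conjugates whose intersection with `Yg c ∩ A_n` is trivial (`claim`). The
constant labelling gives the theorem, and the induction runs downwards on `rk c`, starting at
`rk c = n - 1`, where `Yg c ∩ A_n = 1`. The inductive step is `Step`. In it, an intransitive
subgroup can always be conjugated so as to split a class of `c`, which raises the rank by one at the
cost of one subgroup (`step_intr`); with at least two labels an imprimitive subgroup does the same
(`step_impr`), and with one label three imprimitive subgroups produce four invariant pieces
(`step_three_impr`). There remain lists made essentially of primitive groups.

Making a point `ω` a class of its own and spending all groups but one, the induction hypothesis gives
an intersection `L` in which only the identity fixes `ω`; so `|L|` is at most the size of the class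
of `ω`, and `L` has a regular orbit. One group is left to kill `L`.

* For `n ≥ 9`, a proper primitive group contains no 3-cycle, no 5-cycle, and no double
  transposition (`tame_of_prim`). For double transpositions, any two supports would meet in an even
  number of points, and primitivity would place three of them, complements of
  independent lines of a Fano plane, inside seven points; supports that leave these seven points,
  and then an eighth, violate the parity (`no_quad`). For such a group, a nontrivial even
  permutation lies in a random conjugate with small probability: at most `1/5`, and
  about `1/15` for large `n` (`Tame.phiLe`). Together with Bochert's bound
  `|H| ≤ n (n - 1) ⋯ (n - ⌊n/2⌋ + 1)` for one of the groups, averaging over conjugates finishes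
  the proof for `n < 250`. For larger `n` (and small classes), `L` is killed by a group without
  3-cycles: such a group `H` has a conjugate with no nontrivial element supported in a given set `S`
  of half the points. If an element `x` of `L` has `j` disjoint arcs `(a, x a)` inside `S`, then among
  the conjugates of `x` by even permutations of the starting points of the arcs, at most one lies in
  that conjugate of `H`, and averaging gives a bound `2 / j!` (`NoThree.kill_small`,
  `NoThree.kill_large`).
* For `n ≤ 7`, `|L| ≤ 7` and all cases but that of a Klein four-group are immediate; that group is
  handled by its support (`step_seven_le`).
* For `n = 8` and one label, three imprimitive groups and any three others are handled by explicit
  partitions (`eight_impr`). A primitive group containing a double transposition is affine, and three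
  affine groups can be conjugated to have a small intersection (`eight_affine`). Otherwise four
  primitive groups leave a group of order at most 8 which, if of order 8, acts regularly
  (`eight_core`), and two more groups kill it: either one of them is imprimitive, or one contains no
  double transposition, in which case it contains a given fixed-point-free involution with
  probability at most `1/3` (`phi_free_le`).

For the lower bound, an intersection of `n - 3` point stabilizers fixes at most `n - 3` points, and
so contains a 3-cycle on the remaining ones.
-/

/-- The conjugate `g H g⁻¹` of a subgroup `H` by an element `g`. -/
def conjSub {G : Type*} [Group G] (g : G) (H : Subgroup G) : Subgroup G :=
  H.map (MulAut.conj g).toMonoidHom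

/-- A `k`-tuple of subgroups is regular if some intersection of conjugates is trivial. -/
def IsRegularTuple {G : Type*} [Group G] {k : ℕ} (H : Fin k → Subgroup G) : Prop :=
  ∃ g : Fin k → G, (⨅ i, conjSub (g i) (H i)) = ⊥

namespace AltReg

set_option linter.unusedSectionVars false

open Equiv Equiv.Perm

/-! ### Regular lists of subgroups -/

theorem mem_conjSub {G : Type*} [Group G] {g x : G} {H : Subgroup G} :
    x ∈ conjSub g H ↔ g⁻¹ * x * g ∈ H := by
  constructor
  · rintro ⟨y, hy, rfl⟩
    simpa [mul_assoc] using hy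
  · intro h
    exact ⟨_, h, by simp [mul_assoc]⟩

theorem conjSub_mul {G : Type*} [Group G] (g h : G) (H : Subgroup G) :
    conjSub (g * h) H = conjSub g (conjSub h H) := by
  ext x; simp [mem_conjSub, mul_assoc]

theorem conjSub_one {G : Type*} [Group G] (H : Subgroup G) : conjSub 1 H = H := by
  ext x; simp [mem_conjSub]

theorem conjSub_mono {G : Type*} [Group G] {g : G} {H K : Subgroup G} (h : H ≤ K) :
    conjSub g H ≤ conjSub g K := by
  intro x; simp only [mem_conjSub]; exact fun hx => h hx

variable {α : Type*} [Fintype α] [DecidableEq α]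

/-- `Reg K l`: suitable `Alt`-conjugates of the members of `l` meet `K` trivially. -/
def Reg : Subgroup (Perm α) → List (Subgroup (Perm α)) → Prop
  | K, [] => K = ⊥
  | K, H :: l => ∃ g ∈ alternatingGroup α, Reg (K ⊓ conjSub g H) l

theorem Reg.mono {l : List (Subgroup (Perm α))} : ∀ {K K' : Subgroup (Perm α)}, K' ≤ K →
    Reg K l → Reg K' l := by
  induction l with
  | nil => intro K K' h hr; exact le_bot_iff.1 (h.trans (le_of_eq hr))
  | cons H l ih =>
    rintro K K' h ⟨g, hg, hr⟩
    exact ⟨g, hg, ih (inf_le_inf_right _ h) hr⟩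

theorem Reg.perm {l l' : List (Subgroup (Perm α))} (hp : l.Perm l') :
    ∀ {K : Subgroup (Perm α)}, Reg K l → Reg K l' := by
  induction hp with
  | nil => intro K h; exact h
  | cons H _ ih => rintro K ⟨g, hg, hr⟩; exact ⟨g, hg, ih hr⟩
  | swap H H' l =>
    rintro K ⟨g, hg, h, hh, hr⟩
    exact ⟨h, hh, g, hg, by rwa [inf_right_comm] at hr⟩
  | trans _ _ ih₁ ih₂ => intro K h; exact ih₂ (ih₁ h)

theorem Reg.bot (l : List (Subgroup (Perm α))) : Reg ⊥ l := by
  induction l with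
  | nil => rfl
  | cons H l ih => exact ⟨1, one_mem _, by simpa using ih⟩

theorem Reg.append {l m : List (Subgroup (Perm α))} : ∀ {K : Subgroup (Perm α)},
    Reg K l → Reg K (l ++ m) := by
  induction l with
  | nil => intro K h; have h' : K = ⊥ := h; subst h'; exact Reg.bot _
  | cons H l ih => rintro K ⟨g, hg, hr⟩; exact ⟨g, hg, ih hr⟩

/-- If `l` regularises `K ⊓ M`, then there is an intersection `L` of `K` with conjugates of the
members of `l` which avoids `M`, and it remains to regularise `L`. -/
theorem Reg.exists_core {l : List (Subgroup (Perm α))} (M : Subgroup (Perm α)) :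
    ∀ {K : Subgroup (Perm α)}, Reg (K ⊓ M) l →
    ∃ L : Subgroup (Perm α), L ≤ K ∧ L ⊓ M = ⊥ ∧ (∀ m, Reg L m → Reg K (l ++ m)) ∧
      ∀ H ∈ l, ∃ g ∈ alternatingGroup α, L ≤ conjSub g H := by
  induction l with
  | nil => intro K h; exact ⟨K, le_rfl, h, fun m hm => hm, by simp⟩
  | cons H l ih =>
    rintro K ⟨g, hg, hr⟩
    rw [inf_right_comm] at hr
    obtain ⟨L, hL, hM, hm, hl⟩ := ih hr
    refine ⟨L, hL.trans inf_le_left, hM, fun m h => ⟨g, hg, hm m h⟩, ?_⟩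
    intro H' h'
    rcases List.mem_cons.1 h' with rfl | h'
    · exact ⟨g, hg, hL.trans inf_le_right⟩
    · exact hl _ h'

theorem Reg.single {K H : Subgroup (Perm α)} :
    Reg K [H] ↔ ∃ g ∈ alternatingGroup α, K ⊓ conjSub g H = ⊥ := Iff.rfl

/-! ### Young subgroups -/

/-- The Young subgroup of a labelling `c`: all permutations preserving the labels. -/
def Yg (c : α → ℕ) : Subgroup (Perm α) where
  carrier := {x | ∀ a, c (x a) = c a}
  mul_mem' := by
    intro x y hx hy a
    simp only [Set.mem_ofPred_eq] at hx hy
    rw [Perm.mul_apply, hx, hy]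
  one_mem' := by intro a; rfl
  inv_mem' := by
    intro x hx a
    simp only [Set.mem_ofPred_eq] at hx
    have := hx (x⁻¹ a)
    simpa using this.symm

theorem mem_Yg {c : α → ℕ} {x : Perm α} : x ∈ Yg c ↔ ∀ a, c (x a) = c a := Iff.rfl

/-- The number of labels used by `c`. -/
def rk (c : α → ℕ) : ℕ := (Finset.univ.image c).card

/-- The common refinement of two labellings. -/
def refn (c f : α → ℕ) : α → ℕ := fun a => Nat.pair (c a) (f a)

theorem rk_refn {c f : α → ℕ} {a b : α} (h : c a = c b) (hf : f a ≠ f b) :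
    rk c < rk (refn c f) := by
  have : Finset.univ.image c = (Finset.univ.image (refn c f)).image (fun p => (Nat.unpair p).1) := by
    rw [Finset.image_image]; congr 1; funext x; simp [refn]
  rw [rk, this]
  refine lt_of_le_of_ne Finset.card_image_le ?_
  intro he
  have hinj := Finset.card_image_iff.1 he
  have : refn c f a = refn c f b :=
    hinj (by simp) (by simp) (by simp [refn, h])
  apply hf
  have := congrArg (fun p => (Nat.unpair p).2) this
  simpa [refn] using this

theorem mem_Yg_refn {c f : α → ℕ} {x : Perm α} :
    x ∈ Yg (refn c f) ↔ x ∈ Yg c ∧ x ∈ Yg f := by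
  simp only [mem_Yg, refn, Nat.pair_eq_pair]
  exact forall_and

theorem three_le_card_support {x : Perm α} (hx : x ∈ alternatingGroup α) (h1 : x ≠ 1) :
    3 ≤ x.support.card := by
  by_contra h
  have h2 : x.support.card = 2 := by
    have := two_le_card_support_of_ne_one h1
    omega
  have := (card_support_eq_two.1 h2).sign_eq
  rw [mem_alternatingGroup] at hx
  rw [hx] at this
  exact absurd this (by decide)

theorem Yg_inf_alt_eq_bot {c : α → ℕ} (h : Fintype.card α - 1 ≤ rk c) :
    Yg c ⊓ alternatingGroup α = ⊥ := by
  rw [eq_bot_iff]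
  rintro x ⟨hx, hxA⟩
  rw [Subgroup.mem_bot]
  by_contra h1
  have h3 := three_le_card_support hxA h1
  obtain ⟨a, ha⟩ : x.support.Nonempty := Finset.card_pos.1 (by omega)
  obtain ⟨b, hb, hb'⟩ : ∃ b ∈ x.support, b ∉ ({a, x a} : Finset α) := by
    by_contra hc
    push Not at hc
    have := Finset.card_le_card (show x.support ⊆ {a, x a} from hc)
    have := Finset.card_le_two (a := a) (b := x a)
    omega
  simp only [Finset.mem_insert, Finset.mem_singleton, not_or] at hb'
  rw [mem_support] at ha hb
  have hs : Finset.univ.image c = (Finset.univ \ {a, b}).image c := by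
    apply Finset.Subset.antisymm _ (Finset.image_subset_image (Finset.subset_univ _))
    intro p hp
    obtain ⟨y, -, rfl⟩ := Finset.mem_image.1 hp
    have key : c a ∈ (Finset.univ \ {a, b}).image c :=
      Finset.mem_image.2 ⟨x a, by simp [ha, Ne.symm hb'.2], hx a⟩
    by_cases hya : y = a
    · subst hya; exact key
    by_cases hyb : y = b
    · subst hyb
      by_cases hxa : x y = a
      · rw [← hx y, hxa]; exact key
      · exact Finset.mem_image.2 ⟨x y, by simp [hxa, hb], hx y⟩
    · exact Finset.mem_image.2 ⟨y, by simp [hya, hyb], rfl⟩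
  rw [rk, hs] at h
  have h5 := h.trans Finset.card_image_le
  rw [Finset.card_sdiff_of_subset (Finset.subset_univ _), Finset.card_pair (Ne.symm hb'.1),
    Finset.card_univ] at h5
  have := Finset.card_le_univ x.support
  omega

/-- `H` is a proper subgroup of the alternating group. -/
def Prp (H : Subgroup (Perm α)) : Prop := H ≤ alternatingGroup α ∧ H ≠ alternatingGroup α

/-- The induction hypothesis: the claim holds for all labellings with more labels than `c`. -/
def IHyp (c : α → ℕ) : Prop := ∀ (c' : α → ℕ) (l : List (Subgroup (Perm α))), rk c < rk c' →
  (∀ H ∈ l, Prp H) → Fintype.card α - 1 ≤ rk c' + l.length → Reg (Yg c' ⊓ alternatingGroup α) l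

/-- The inductive step: the statement for `c` follows from that for labellings with more labels. -/
def Step (α : Type*) [Fintype α] [DecidableEq α] : Prop :=
  ∀ (c : α → ℕ) (l : List (Subgroup (Perm α))), IHyp c →
  (∀ H ∈ l, Prp H) → Fintype.card α - 1 ≤ rk c + l.length → rk c + 2 ≤ Fintype.card α →
  Reg (Yg c ⊓ alternatingGroup α) l

theorem claim (hs : Step α) (c : α → ℕ) (l : List (Subgroup (Perm α))) (hl : ∀ H ∈ l, Prp H)
    (hc : Fintype.card α - 1 ≤ rk c + l.length) : Reg (Yg c ⊓ alternatingGroup α) l := by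
  induction hk : Fintype.card α - rk c using Nat.strong_induction_on generalizing c l with
  | _ k ih =>
    by_cases h : rk c + 2 ≤ Fintype.card α
    · refine hs c l ?_ hl hc h
      intro c' l' hr hl' hc'
      exact ih _ (by omega) c' l' hl' hc' rfl
    · rw [Yg_inf_alt_eq_bot (by omega)]
      exact Reg.bot l

theorem IHyp.refine {c f : α → ℕ} (ih : IHyp c) {l : List (Subgroup (Perm α))}
    (hl : ∀ H ∈ l, Prp H) (hc : Fintype.card α - 1 ≤ rk c + l.length)
    {H : Subgroup (Perm α)} (hH : H ∈ l) {g : Perm α} (hg : g ∈ alternatingGroup α)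
    (hf : ∀ x ∈ Yg c, x ∈ conjSub g H → x ∈ Yg f) {a b : α} (hab : c a = c b) (hfab : f a ≠ f b) :
    Reg (Yg c ⊓ alternatingGroup α) l := by
  classical
  refine Reg.perm (List.perm_cons_erase hH).symm ⟨g, hg, ?_⟩
  have hr := rk_refn hab hfab
  refine Reg.mono ?_ (ih (refn c f) (l.erase H) hr (fun H' h' => hl _ (List.mem_of_mem_erase h')) ?_)
  · rintro x ⟨⟨hx, hxA⟩, hxH⟩
    exact ⟨mem_Yg_refn.2 ⟨hx, hf x hx hxH⟩, hxA⟩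
  · rw [List.length_erase_of_mem hH]
    have := List.length_pos_of_mem hH
    omega

/-- The class of `a` with respect to the labelling `c`. -/
def cls (c : α → ℕ) (a : α) : Finset α := Finset.univ.filter (fun b => c b = c a)

theorem mem_cls {c : α → ℕ} {a b : α} : b ∈ cls c a ↔ c b = c a := by simp [cls]

theorem self_mem_cls (c : α → ℕ) (a : α) : a ∈ cls c a := by simp [cls]

theorem exists_perm_cons {β : Type*} {l : List β} {H : β} (hH : H ∈ l) :
    ∃ l', l.Perm (H :: l') := by
  classical
  exact ⟨_, List.perm_cons_erase hH⟩

/-- Regularising the stabiliser of `ω` with all members but `H` leaves a group `L` for which `ω`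
lies in a regular orbit; it then suffices to find a conjugate of `H` meeting `L` trivially. -/
theorem IHyp.exists_core {c : α → ℕ} (ih : IHyp c) {l l' : List (Subgroup (Perm α))}
    (hl : ∀ H ∈ l, Prp H) (hc : Fintype.card α - 1 ≤ rk c + l.length)
    {H : Subgroup (Perm α)} (hp : l.Perm (H :: l')) {ω a : α} (ha : c a = c ω) (hne : a ≠ ω) :
    ∃ L : Subgroup (Perm α), L ≤ Yg c ⊓ alternatingGroup α ∧ (∀ x ∈ L, x ω = ω → x = 1) ∧
      (∀ H' ∈ l', ∃ g ∈ alternatingGroup α, L ≤ conjSub g H') ∧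
      ((∃ g ∈ alternatingGroup α, L ⊓ conjSub g H = ⊥) → Reg (Yg c ⊓ alternatingGroup α) l) := by
  let f : α → ℕ := fun b => if b = ω then 1 else 0
  have hr : rk c < rk (refn c f) := rk_refn ha (by simp [f, hne])
  have hReg := ih (refn c f) l' hr
    (fun H' h' => hl _ (hp.mem_iff.2 (List.mem_cons_of_mem _ h'))) (by
      have := hp.length_eq
      rw [List.length_cons] at this
      omega)
  have hReg' : Reg ((Yg c ⊓ alternatingGroup α) ⊓ Yg f) l' :=
    Reg.mono (fun x hx => by
      rw [Subgroup.mem_inf, Subgroup.mem_inf] at hx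
      exact ⟨mem_Yg_refn.2 ⟨hx.1.1, hx.2⟩, hx.1.2⟩) hReg
  obtain ⟨L, hL, hM, hm, hcj⟩ := Reg.exists_core _ hReg'
  refine ⟨L, hL, ?_, hcj, ?_⟩
  · intro x hx hxω
    have : x ∈ L ⊓ Yg f := by
      refine ⟨hx, fun b => ?_⟩
      have : x b = ω ↔ b = ω := by
        constructor
        · intro h; exact x.injective (h.trans hxω.symm)
        · rintro rfl; exact hxω
      simp [f, this]
    rwa [hM, Subgroup.mem_bot] at this
  · intro hg
    refine Reg.perm ?_ (hm [H] (Reg.single.2 hg))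
    exact (List.perm_append_singleton H _).trans hp.symm

theorem card_le_cls {c : α → ℕ} {L : Subgroup (Perm α)} (hL : L ≤ Yg c) {ω : α}
    (hω : ∀ x ∈ L, x ω = ω → x = 1) : Nat.card L ≤ (cls c ω).card := by
  classical
  have : Nat.card L ≤ Nat.card (cls c ω) := by
    refine Nat.card_le_card_of_injective (fun x : L => ⟨x.1 ω, mem_cls.2 (hL x.2 ω)⟩) ?_
    intro x y hxy
    have h : x.1 ω = y.1 ω := congrArg Subtype.val hxy
    have := hω (y⁻¹ * x : L) (y⁻¹ * x : L).2 (by simp [h])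
    have h' : y⁻¹ * x = 1 := Subtype.ext this
    exact (inv_mul_eq_one.1 h').symm
  simpa using this

theorem ap_inv {β : Type*} (f : Perm β) (x : β) : f (f⁻¹ x) = x := f.apply_symm_apply x

theorem inv_ap {β : Type*} (f : Perm β) (x : β) : f⁻¹ (f x) = x := f.symm_apply_apply x

open scoped Pointwise

/-! ### Consequences of simplicity -/

theorem exists_not_le (hn : 5 ≤ Fintype.card α) {H K : Subgroup (Perm α)} (hH : Prp H)
    (hK : K ≤ alternatingGroup α) (hK1 : K ≠ ⊥) :
    ∃ g ∈ alternatingGroup α, ¬ K ≤ conjSub g H := by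
  by_contra hc
  push Not at hc
  have hs : IsSimpleGroup (alternatingGroup α) :=
    alternatingGroup.isSimpleGroup (by rwa [Nat.card_eq_fintype_card])
  let N := (H.subgroupOf (alternatingGroup α)).normalCore
  have hN : ∀ x (hx : x ∈ K), (⟨x, hK hx⟩ : alternatingGroup α) ∈ N := by
    intro x hx g
    have := hc g⁻¹ (inv_mem g.2) hx
    rw [mem_conjSub] at this
    simpa [Subgroup.mem_subgroupOf] using this
  rcases hs.eq_bot_or_eq_top_of_normal N inferInstance with h | h
  · apply hK1
    rw [eq_bot_iff]
    intro x hx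
    have := hN x hx
    rw [h, Subgroup.mem_bot] at this
    exact congrArg Subtype.val this
  · apply hH.2
    refine le_antisymm hH.1 fun x hx => ?_
    have h2 : N ≤ H.subgroupOf (alternatingGroup α) := Subgroup.normalCore_le _
    rw [h, top_le_iff] at h2
    have : (⟨x, hx⟩ : alternatingGroup α) ∈ H.subgroupOf (alternatingGroup α) := by
      rw [h2]; trivial
    exact this

theorem card_inf_half (hn : 5 ≤ Fintype.card α) {H K : Subgroup (Perm α)} (hH : Prp H)
    (hK : K ≤ alternatingGroup α) (hK1 : K ≠ ⊥) :
    ∃ g ∈ alternatingGroup α, 2 * Nat.card (K ⊓ conjSub g H : Subgroup _) ≤ Nat.card K := by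
  obtain ⟨g, hg, h⟩ := exists_not_le hn hH hK hK1
  refine ⟨g, hg, ?_⟩
  have hle : K ⊓ conjSub g H ≤ K := inf_le_left
  obtain ⟨k, hk⟩ := Subgroup.card_dvd_of_le hle
  have hpos : 0 < Nat.card K := Nat.card_pos
  have hk2 : 2 ≤ k := by
    by_contra hk2
    have h01 : k = 0 ∨ k = 1 := by omega
    rcases h01 with rfl | rfl
    · omega
    · apply h
      have := Subgroup.eq_of_le_of_card_ge hle (by omega)
      rw [← this]; exact inf_le_right
  rw [hk, mul_comm]
  exact Nat.mul_le_mul_left _ hk2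

theorem exists_inf_eq_bot_of_card_le_three (hn : 5 ≤ Fintype.card α) {H K : Subgroup (Perm α)}
    (hH : Prp H) (hK : K ≤ alternatingGroup α) (h3 : Nat.card K ≤ 3) :
    ∃ g ∈ alternatingGroup α, K ⊓ conjSub g H = ⊥ := by
  by_cases hK1 : K = ⊥
  · exact ⟨1, one_mem _, by rw [hK1]; simp⟩
  · obtain ⟨g, hg, h⟩ := card_inf_half hn hH hK hK1
    refine ⟨g, hg, Subgroup.card_eq_one.1 ?_⟩
    have : 0 < Nat.card (K ⊓ conjSub g H : Subgroup _) := Nat.card_pos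
    omega

theorem Reg.of_card (hn : 5 ≤ Fintype.card α) : ∀ (l : List (Subgroup (Perm α)))
    {K : Subgroup (Perm α)}, (∀ H ∈ l, Prp H) → K ≤ alternatingGroup α →
    Nat.card K < 2 ^ (l.length + 1) → Reg K l := by
  intro l
  induction l with
  | nil =>
    intro K _ _ h
    have : 0 < Nat.card K := Nat.card_pos
    exact Subgroup.card_eq_one.1 (by simp at h; omega)
  | cons H l ih =>
    intro K hl hK h
    by_cases hK1 : K = ⊥
    · rw [hK1]; exact Reg.bot _
    · obtain ⟨g, hg, h2⟩ := card_inf_half hn (hl H (by simp)) hK hK1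
      refine ⟨g, hg, ih (fun H' h' => hl _ (by simp [h'])) (inf_le_left.trans hK) ?_⟩
      rw [List.length_cons, pow_succ] at h
      omega

/-! ### Multiple transitivity in concrete form -/

theorem exists_perm_map {k : ℕ} {f g : Fin k → α} (hf : Function.Injective f)
    (hg : Function.Injective g) : ∃ σ : Perm α, ∀ i, σ (f i) = g i := by
  have := Equiv.Perm.isMultiplyPretransitive α k
  obtain ⟨σ, hσ⟩ := MulAction.exists_smul_eq (Perm α) (⟨f, hf⟩ : Fin k ↪ α) ⟨g, hg⟩
  exact ⟨σ, fun i => by simpa using DFunLike.congr_fun hσ i⟩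

theorem exists_even_perm_map {k : ℕ} (hk : k + 2 ≤ Fintype.card α) {f g : Fin k → α}
    (hf : Function.Injective f) (hg : Function.Injective g) :
    ∃ σ ∈ alternatingGroup α, ∀ i, σ (f i) = g i := by
  obtain ⟨σ, hσ⟩ := exists_perm_map hf hg
  have hc : (Finset.univ.image f).card ≤ k := by
    simpa using (Finset.card_image_le (s := Finset.univ) (f := f))
  have h2 : 1 < (Finset.univ.image f)ᶜ.card := by
    rw [Finset.card_compl]; omega
  obtain ⟨a, ha, b, hb, hab⟩ := Finset.one_lt_card.1 h2
  simp only [Finset.mem_compl, Finset.mem_image, Finset.mem_univ, true_and, not_exists] at ha hb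
  rcases Int.units_eq_one_or (sign σ) with h | h
  · exact ⟨σ, h, hσ⟩
  · refine ⟨σ * swap a b, ?_, fun i => ?_⟩
    · rw [mem_alternatingGroup, Perm.sign_mul, h, sign_swap hab]; rfl
    · rw [mul_apply, swap_apply_of_ne_of_ne (ha i) (hb i), hσ]

/-! ### Intransitive and imprimitive subgroups -/

/-- `H` leaves a proper nonempty set invariant. -/
def Intr (H : Subgroup (Perm α)) : Prop :=
  ∃ D : Finset α, D.Nonempty ∧ D ≠ Finset.univ ∧ ∀ x ∈ H, ∀ a ∈ D, x a ∈ D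

/-- `H` preserves the partition of `α` into the fibres of `e`. -/
def Pres (H : Subgroup (Perm α)) (e : α → ℕ) : Prop :=
  ∀ x ∈ H, ∀ a b, e (x a) = e (x b) ↔ e a = e b

/-- `H` preserves a nontrivial partition into classes of equal size. -/
def Impr (H : Subgroup (Perm α)) : Prop :=
  ∃ (e : α → ℕ) (b : ℕ), 2 ≤ b ∧ b < Fintype.card α ∧ (∀ a, (cls e a).card = b) ∧ Pres H e

/-- `H` is transitive on `α`. -/
def Trans (H : Subgroup (Perm α)) : Prop := ∀ a b, ∃ x ∈ H, x a = b

theorem Pres.conj {H : Subgroup (Perm α)} {e : α → ℕ} (h : Pres H e) (g : Perm α) :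
    Pres (conjSub g H) (e ∘ ⇑g⁻¹) := by
  intro x hx a b
  rw [mem_conjSub] at hx
  have := h _ hx (g⁻¹ a) (g⁻¹ b)
  simpa using this

theorem exists_even_comp {e : α → ℕ} {p q : α} (hpq : p ≠ q) (he : e p = e q) (g : Perm α) :
    ∃ g' ∈ alternatingGroup α, e ∘ ⇑g'⁻¹ = e ∘ ⇑g⁻¹ := by
  rcases Int.units_eq_one_or (sign g) with h | h
  · exact ⟨g, h, rfl⟩
  · refine ⟨g * swap p q, ?_, ?_⟩
    · rw [mem_alternatingGroup, Perm.sign_mul, h, sign_swap hpq]; rfl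
    · funext a
      simp only [Function.comp_apply, mul_inv_rev, swap_inv, mul_apply]
      rcases swap_apply_eq_iff.1 (rfl : swap p q (g⁻¹ a) = _) with _
      by_cases h1 : g⁻¹ a = p
      · rw [h1, swap_apply_left, he]
      · by_cases h2 : g⁻¹ a = q
        · rw [h2, swap_apply_right, he]
        · rw [swap_apply_of_ne_of_ne h1 h2]

/-- The number of points `y` with label `k` in the `e`-class of `a`. -/
def nu (e c : α → ℕ) (k : ℕ) (a : α) : ℕ :=
  (Finset.univ.filter (fun y => e y = e a ∧ c y = k)).card

theorem nu_invariant {e c : α → ℕ} {K : Subgroup (Perm α)} (hK : Pres K e) {x : Perm α}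
    (hx : x ∈ K) (hc : x ∈ Yg c) (k : ℕ) : x ∈ Yg (nu e c k) := by
  intro a
  symm
  refine Finset.card_bij (fun y _ => x y) ?_ (fun _ _ _ _ h => x.injective h) ?_
  · intro y hy
    simp only [Finset.mem_filter, Finset.mem_univ, true_and] at hy ⊢
    exact ⟨(hK x hx y a).2 hy.1, (hc y).trans hy.2⟩
  · intro y hy
    simp only [Finset.mem_filter, Finset.mem_univ, true_and] at hy
    refine ⟨x⁻¹ y, ?_, by simp⟩
    simp only [Finset.mem_filter, Finset.mem_univ, true_and]
    refine ⟨(hK x hx _ _).1 (by simpa using hy.1), ?_⟩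
    have := hc (x⁻¹ y)
    simp only [ap_inv] at this
    rw [← this]; exact hy.2

/-- Moving the labelled point `d` out of the class of `a`, in exchange for the unlabelled `x`,
lowers the count at `a` and does not lower it elsewhere outside this class. -/
theorem nu_swap {e c : α → ℕ} {a₁ a₂ d x : α} (h1 : e a₁ = e d) (h2 : e a₂ ≠ e d)
    (hx : e x ≠ e d) (hxc : c x ≠ c d) (ha1 : a₁ ≠ d) (ha2 : a₂ ≠ x)
    (hnu : nu e c (c d) a₁ = nu e c (c d) a₂) :
    nu (e ∘ ⇑(swap d x)) c (c d) a₁ < nu (e ∘ ⇑(swap d x)) c (c d) a₂ := by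
  have hdx : d ≠ x := fun h => hx (by rw [h])
  have ha1x : a₁ ≠ x := by rintro rfl; exact hx h1
  have ha2d : a₂ ≠ d := by rintro rfl; exact h2 rfl
  have s1 : (swap d x) a₁ = a₁ := swap_apply_of_ne_of_ne ha1 ha1x
  have s2 : (swap d x) a₂ = a₂ := swap_apply_of_ne_of_ne ha2d ha2
  have A : nu (e ∘ ⇑(swap d x)) c (c d) a₁ < nu e c (c d) a₁ := by
    refine Finset.card_lt_card (Finset.ssubset_iff_subset_ne.2 ⟨?_, ?_⟩)
    · intro y hy
      simp only [Finset.mem_filter, Finset.mem_univ, true_and, Function.comp_apply, s1] at hy ⊢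
      refine ⟨?_, hy.2⟩
      have hyx : y ≠ x := by rintro rfl; exact hxc hy.2
      by_cases hyd : y = d
      · subst hyd; exact h1.symm
      · rw [swap_apply_of_ne_of_ne hyd hyx] at hy; exact hy.1
    · intro h
      have : d ∈ Finset.univ.filter (fun y => e y = e a₁ ∧ c y = c d) := by simp [h1]
      rw [← h] at this
      simp [s1, h1, hx] at this
  have B : nu e c (c d) a₂ ≤ nu (e ∘ ⇑(swap d x)) c (c d) a₂ := by
    refine Finset.card_le_card ?_
    intro y hy
    simp only [Finset.mem_filter, Finset.mem_univ, true_and, Function.comp_apply, s2] at hy ⊢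
    refine ⟨?_, hy.2⟩
    have hyx : y ≠ x := by rintro rfl; exact hxc hy.2
    have hyd : y ≠ d := by rintro rfl; exact h2 hy.1.symm
    rw [swap_apply_of_ne_of_ne hyd hyx]; exact hy.1
  omega

theorem exists_pair_of_rk {c : α → ℕ} (h : rk c + 1 ≤ Fintype.card α) :
    ∃ a b, a ≠ b ∧ c a = c b := by
  by_contra hc
  push Not at hc
  have : Function.Injective c := fun a b hab => by
    by_contra hne; exact hc a b hne hab
  have := Finset.card_image_of_injective Finset.univ this
  rw [Finset.card_univ] at this
  rw [rk] at h; omega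

theorem step_intr {c : α → ℕ} (ih : IHyp c) {l : List (Subgroup (Perm α))}
    (hl : ∀ H ∈ l, Prp H) (hc : Fintype.card α - 1 ≤ rk c + l.length)
    (hr : rk c + 2 ≤ Fintype.card α) (hn : 5 ≤ Fintype.card α)
    {H : Subgroup (Perm α)} (hH : H ∈ l) (hi : Intr H) :
    Reg (Yg c ⊓ alternatingGroup α) l := by
  obtain ⟨D, ⟨p, hp⟩, hD', hinv⟩ := hi
  obtain ⟨q, hq⟩ : ∃ q, q ∉ D := by
    by_contra h; push Not at h; exact hD' (Finset.eq_univ_iff_forall.2 h)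
  have hinv' : ∀ x ∈ H, ∀ a, x a ∈ D ↔ a ∈ D := fun x hx a =>
    ⟨fun h => by simpa using hinv _ (inv_mem hx) _ h, hinv x hx a⟩
  obtain ⟨a, b, hab, hcab⟩ := exists_pair_of_rk (c := c) (by omega)
  have hpq : p ≠ q := by rintro rfl; exact hq hp
  obtain ⟨g, hg, hgm⟩ := exists_even_perm_map (k := 2) (by omega)
    (f := ![p, q]) (g := ![a, b])
    (by intro i j; fin_cases i <;> fin_cases j <;> simp [hpq, hpq.symm])
    (by intro i j; fin_cases i <;> fin_cases j <;> simp [hab, hab.symm])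
  have h0 : g p = a := hgm 0
  have h1 : g q = b := hgm 1
  refine ih.refine hl hc hH hg (f := fun y => if g⁻¹ y ∈ D then 1 else 0) ?_ hcab ?_
  · intro x _ hx y
    rw [mem_conjSub] at hx
    have := hinv' _ hx (g⁻¹ y)
    simp only [mul_apply, ap_inv] at this
    exact if_congr this rfl rfl
  · simp [← h0, ← h1, hp, hq]

theorem step_impr {c : α → ℕ} (ih : IHyp c) {l : List (Subgroup (Perm α))}
    (hl : ∀ H ∈ l, Prp H) (hc : Fintype.card α - 1 ≤ rk c + l.length)
    (hr : rk c + 2 ≤ Fintype.card α) (hr1 : 2 ≤ rk c) (hn : 5 ≤ Fintype.card α)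
    {H : Subgroup (Perm α)} (hH : H ∈ l) (hi : Impr H) :
    Reg (Yg c ⊓ alternatingGroup α) l := by
  obtain ⟨e, b, hb2, hbn, hcls, hpres⟩ := hi
  have : Nonempty α := Fintype.card_pos_iff.1 (by omega)
  -- a class of `c` of maximal size
  obtain ⟨a₀, ha₀⟩ := Finite.exists_max (fun a => (cls c a).card)
  obtain ⟨u, v, huv, hcuv⟩ := exists_pair_of_rk (c := c) (by omega)
  have h2 : 1 < (cls c a₀).card := by
    refine lt_of_lt_of_le ?_ (ha₀ u)
    exact Finset.one_lt_card.2 ⟨u, self_mem_cls _ _, v, mem_cls.2 hcuv.symm, huv⟩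
  obtain ⟨a₁, h1, a₂, h2', h12⟩ := Finset.one_lt_card.1 h2
  rw [mem_cls] at h1 h2'
  obtain ⟨d, hd⟩ : ∃ d, c d ≠ c a₀ := by
    by_contra h
    push Not at h
    have : Finset.univ.image c ⊆ {c a₀} := by
      intro k hk
      obtain ⟨y, -, rfl⟩ := Finset.mem_image.1 hk
      simp [h y]
    have := Finset.card_le_card this
    rw [rk] at hr1
    simp at this; omega
  obtain ⟨x, hxc, hx1, hx2⟩ : ∃ x, c x ≠ c d ∧ x ≠ a₁ ∧ x ≠ a₂ := by
    by_contra h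
    push Not at h
    have hsub : (cls c d)ᶜ ⊆ {a₁, a₂} := by
      intro y hy
      simp only [Finset.mem_compl, mem_cls] at hy
      simp only [Finset.mem_insert, Finset.mem_singleton]
      by_cases hy1 : y = a₁
      · exact Or.inl hy1
      · exact Or.inr (h y hy hy1)
    have h3 := (Finset.card_le_card hsub).trans Finset.card_le_two
    have h4 : cls c a₀ ⊆ (cls c d)ᶜ := by
      intro y hy
      simp only [Finset.mem_compl, mem_cls] at hy ⊢
      rw [hy]; exact fun h => hd h.symm
    have h5 := Finset.card_le_card h4
    have h6 := ha₀ d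
    rw [Finset.card_compl] at h3 h5
    have := Finset.card_le_univ (cls c d)
    omega
  -- the points of the partition to be placed
  obtain ⟨p₀⟩ := this
  obtain ⟨p₁, hp1, p₂, hp2, hp12⟩ := Finset.one_lt_card.1 (lt_of_lt_of_eq hb2 (hcls p₀).symm)
  rw [mem_cls] at hp1 hp2
  obtain ⟨q₀, hq0⟩ : ∃ q, e q ≠ e p₀ := by
    by_contra h
    push Not at h
    have : cls e p₀ = Finset.univ := by ext y; simp [mem_cls, h y]
    have h' := hcls p₀
    rw [this, Finset.card_univ] at h'; omega
  obtain ⟨q₁, hq1, q₂, hq2, hq12⟩ := Finset.one_lt_card.1 (lt_of_lt_of_eq hb2 (hcls q₀).symm)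
  rw [mem_cls] at hq1 hq2
  have npq : ∀ {p q}, e p = e p₀ → e q = e q₀ → p ≠ q := by
    rintro p q hp hq rfl; exact hq0 (hq.symm.trans hp)
  have n11 := npq hp1 hq1
  have n12 := npq hp1 hq2
  have n21 := npq hp2 hq1
  have n22 := npq hp2 hq2
  have hda1 : a₁ ≠ d := by rintro rfl; exact hd h1
  have hda2 : a₂ ≠ d := by rintro rfl; exact hd h2'
  have hxd : x ≠ d := by rintro rfl; exact hxc rfl
  obtain ⟨g, hgm⟩ := exists_perm_map (f := ![p₁, p₂, q₁, q₂]) (g := ![a₁, d, a₂, x])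
    (by intro i j
        fin_cases i <;> fin_cases j <;>
          simp [hp12, hp12.symm, hq12, hq12.symm, n11, n12, n21, n22, n11.symm, n12.symm,
            n21.symm, n22.symm])
    (by intro i j
        fin_cases i <;> fin_cases j <;>
          simp [h12, h12.symm, hda1, hda1.symm, hda2, hda2.symm, hxd, hxd.symm, hx1, hx1.symm,
            hx2, hx2.symm])
  have g1 : g p₁ = a₁ := hgm 0
  have g2 : g p₂ = d := hgm 1
  have g3 : g q₁ = a₂ := hgm 2
  have g4 : g q₂ = x := hgm 3
  have main : ∀ g' : Perm α, nu (e ∘ ⇑g'⁻¹) c (c d) a₁ ≠ nu (e ∘ ⇑g'⁻¹) c (c d) a₂ →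
      Reg (Yg c ⊓ alternatingGroup α) l := by
    intro g' hne
    obtain ⟨g'', hg'', he⟩ := exists_even_comp hp12 (hp1.trans hp2.symm) g'
    rw [← he] at hne
    refine ih.refine hl hc hH hg'' (f := nu (e ∘ ⇑g''⁻¹) c (c d)) ?_ (h1.trans h2'.symm) hne
    intro y hy hy'
    exact nu_invariant (hpres.conj g'') hy' hy _
  by_cases hnu : nu (e ∘ ⇑g⁻¹) c (c d) a₁ = nu (e ∘ ⇑g⁻¹) c (c d) a₂
  · refine main (swap d x * g) ?_
    have e1 : g.symm a₁ = p₁ := by rw [← g1]; simp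
    have e2 : g.symm d = p₂ := by rw [← g2]; simp
    have e3 : g.symm a₂ = q₁ := by rw [← g3]; simp
    have e4 : g.symm x = q₂ := by rw [← g4]; simp
    have := nu_swap (e := e ∘ ⇑g⁻¹) (c := c) (a₁ := a₁) (a₂ := a₂) (d := d) (x := x)
      (by simp [e1, e2, hp1, hp2]) (by simp [e2, e3, hp2, hq1, hq0])
      (by simp [e2, e4, hp2, hq2, hq0]) hxc hda1 (Ne.symm hx2) hnu
    have hcomp : e ∘ ⇑(swap d x * g)⁻¹ = (e ∘ ⇑g⁻¹) ∘ ⇑(swap d x) := by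
      funext y; simp
    rw [hcomp]
    exact this.ne
  · exact main g hnu

/-- A class of size at most three can be handled: the core group has order at most three. -/
theorem step_small {c : α → ℕ} (ih : IHyp c) {l : List (Subgroup (Perm α))}
    (hl : ∀ H ∈ l, Prp H) (hc : Fintype.card α - 1 ≤ rk c + l.length)
    (hr : rk c + 2 ≤ Fintype.card α) (hn : 5 ≤ Fintype.card α)
    {ω a : α} (ha : c a = c ω) (hne : a ≠ ω) (h3 : (cls c ω).card ≤ 3) :
    Reg (Yg c ⊓ alternatingGroup α) l := by
  obtain ⟨H, hH⟩ : ∃ H, H ∈ l := List.exists_mem_of_length_pos (by omega)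
  obtain ⟨l', hp⟩ := exists_perm_cons hH
  obtain ⟨L, hL, hω, -, hk⟩ := ih.exists_core hl hc hp ha hne
  refine hk (exists_inf_eq_bot_of_card_le_three hn (hl H hH) (hL.trans inf_le_right) ?_)
  exact (card_le_cls (hL.trans inf_le_left) hω).trans h3

/-! ### The trichotomy -/

theorem exists_label {β : Type*} (f : α → β) : ∃ e : α → ℕ, ∀ a b, e a = e b ↔ f a = f b := by
  classical
  let F : Finset β := Finset.univ.image f
  refine ⟨fun a => (F.equivFin ⟨f a, Finset.mem_image_of_mem _ (Finset.mem_univ _)⟩).1, ?_⟩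
  intro a b
  rw [← Fin.ext_iff, F.equivFin.injective.eq_iff, Subtype.mk.injEq]

theorem trichotomy (H : Subgroup (Perm α)) (hn : 5 ≤ Fintype.card α) :
    Intr H ∨ (Trans H ∧ Impr H) ∨ (Trans H ∧ MulAction.IsPreprimitive H α) := by
  classical
  have : Nonempty α := Fintype.card_pos_iff.1 (by omega)
  have hnt : Nontrivial α := Fintype.one_lt_card_iff_nontrivial.1 (by omega)
  by_cases ht : Trans H
  swap
  · left
    rw [Trans] at ht
    push Not at ht
    obtain ⟨a, b, hab⟩ := ht
    refine ⟨Finset.univ.filter (fun y => ∃ x ∈ H, x a = y), ⟨a, ?_⟩, ?_, ?_⟩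
    · simp only [Finset.mem_filter, Finset.mem_univ, true_and]; exact ⟨1, one_mem _, rfl⟩
    · intro h
      have := h ▸ Finset.mem_univ b
      simp only [Finset.mem_filter, Finset.mem_univ, true_and] at this
      obtain ⟨x, hx, hxa⟩ := this
      exact hab x hx hxa
    · intro x hx y hy
      simp only [Finset.mem_filter, Finset.mem_univ, true_and] at hy ⊢
      obtain ⟨z, hz, rfl⟩ := hy
      exact ⟨x * z, mul_mem hx hz, rfl⟩
  right
  have hpt : MulAction.IsPretransitive H α :=
    ⟨fun a b => by obtain ⟨x, hx, hxa⟩ := ht a b; exact ⟨⟨x, hx⟩, hxa⟩⟩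
  by_cases hp : MulAction.IsPreprimitive H α
  · exact Or.inr ⟨ht, hp⟩
  left
  refine ⟨ht, ?_⟩
  obtain ⟨B, hB, hBt⟩ : ∃ B : Set α, MulAction.IsBlock H B ∧ ¬ MulAction.IsTrivialBlock B := by
    by_contra hcon
    push Not at hcon
    exact hp { isTrivialBlock_of_isBlock := fun hB => hcon _ hB }
  rw [MulAction.IsTrivialBlock, not_or, Set.not_subsingleton_iff] at hBt
  obtain ⟨⟨p, hpB, q, hqB, hpq⟩, hBu⟩ := hBt
  -- the label of `a` is the translate of `B` containing `a`
  choose t ht' using fun a : α => hpt.exists_smul_eq p a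
  obtain ⟨e, he⟩ := exists_label (fun a => (t a • B : Set α))
  have hmem : ∀ a, a ∈ t a • B := fun a => ⟨p, hpB, ht' a⟩
  have huniq : ∀ (h : H) (a : α), a ∈ h • B → h • B = t a • B := by
    intro h a ha
    exact hB.smul_eq_smul_of_nonempty ⟨a, ha, hmem a⟩
  have he' : ∀ a b, e a = e b ↔ a ∈ t b • B := by
    intro a b
    rw [he]
    exact ⟨fun h => h ▸ hmem a, fun h => (huniq _ _ h).symm⟩
  have hcard : ∀ a, (cls e a).card = B.ncard := by
    intro a
    rw [← Set.ncard_coe_finset]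
    have : (cls e a : Set α) = t a • B := by
      ext y; simp [mem_cls, he']
    rw [this]
    exact Set.ncard_image_of_injective _ (MulAction.injective _)
  refine ⟨e, B.ncard, ?_, ?_, hcard, ?_⟩
  · exact (Set.one_lt_ncard (Set.toFinite _)).2 ⟨p, hpB, q, hqB, hpq⟩
  · have := Set.ncard_lt_ncard (Set.ssubset_univ_iff.2 hBu) (Set.toFinite _)
    rwa [Set.ncard_univ, Nat.card_eq_fintype_card] at this
  · intro x hx a b
    rw [he', he']
    have h1 : ((⟨x, hx⟩ : H) * t b) • B = t (x b) • B := by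
      apply huniq
      rw [mul_smul]
      exact ⟨b, hmem b, rfl⟩
    rw [← h1, mul_smul]
    constructor
    · rintro ⟨y, hy, hyx⟩
      have : y = a := x.injective hyx
      rwa [← this]
    · intro h; exact ⟨a, h, rfl⟩

/-! ### Averaging over conjugates -/

open Classical in
/-- The proportion of even `g` for which `x` lies in `g H g⁻¹`. -/
noncomputable def phi (H : Subgroup (Perm α)) (x : Perm α) : ℚ :=
  ((Finset.univ.filter (fun g : Perm α => g ∈ alternatingGroup α ∧ x ∈ conjSub g H)).card : ℚ) /
    (Finset.univ.filter (fun g : Perm α => g ∈ alternatingGroup α)).card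

open Classical in
theorem altCard_pos :
    0 < ((Finset.univ.filter (fun g : Perm α => g ∈ alternatingGroup α)).card : ℚ) := by
  exact_mod_cast Finset.card_pos.2 ⟨1, by simp [one_mem]⟩

theorem phi_nonneg (H : Subgroup (Perm α)) (x : Perm α) : 0 ≤ phi H x := by
  unfold phi; positivity

theorem phi_le_one (H : Subgroup (Perm α)) (x : Perm α) : phi H x ≤ 1 := by
  classical
  unfold phi
  refine div_le_one_of_le₀ ?_ (by positivity)
  exact_mod_cast Finset.card_le_card (fun g hg => by
    simp only [Finset.mem_filter, Finset.mem_univ, true_and] at hg ⊢; exact hg.1)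

theorem phi_pow (H : Subgroup (Perm α)) (x : Perm α) (m : ℕ) : phi H x ≤ phi H (x ^ m) := by
  classical
  unfold phi
  refine div_le_div_of_nonneg_right ?_ (by positivity)
  exact_mod_cast Finset.card_le_card (fun g hg => by
    simp only [Finset.mem_filter, Finset.mem_univ, true_and] at hg ⊢
    exact ⟨hg.1, pow_mem hg.2 m⟩)

theorem conj_mem_conjSub {G : Type*} [Group G] {g c x : G} {H : Subgroup G} :
    c * x * c⁻¹ ∈ conjSub g H ↔ x ∈ conjSub (c⁻¹ * g) H := by
  rw [mem_conjSub, mem_conjSub]; simp [mul_assoc]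

theorem phi_conj (H : Subgroup (Perm α)) (x : Perm α) {c : Perm α} (hc : c ∈ alternatingGroup α) :
    phi H (c * x * c⁻¹) = phi H x := by
  classical
  unfold phi
  congr 2
  refine Finset.card_bij (fun g _ => c⁻¹ * g) ?_ (fun _ _ _ _ h => mul_left_cancel h) ?_
  · intro g hg
    simp only [Finset.mem_filter, Finset.mem_univ, true_and, conj_mem_conjSub] at hg ⊢
    exact ⟨mul_mem (inv_mem hc) hg.1, hg.2⟩
  · intro g hg
    simp only [Finset.mem_filter, Finset.mem_univ, true_and] at hg
    refine ⟨c * g, ?_, by simp⟩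
    simp only [Finset.mem_filter, Finset.mem_univ, true_and, conj_mem_conjSub,
      inv_mul_cancel_left]
    exact ⟨mul_mem hc hg.1, hg.2⟩

open Classical in
/-- Double counting: the sum of `phi` over a family is the average number of its hits. -/
theorem exists_ge_sum_phi {ι : Type*} (s : Finset ι) (y : ι → Perm α) (H : Subgroup (Perm α)) :
    ∃ g ∈ alternatingGroup α, ((s.filter (fun i => y i ∈ conjSub g H)).card : ℚ) ≤
      ∑ i ∈ s, phi H (y i) := by
  by_contra hcon
  push Not at hcon
  have h1 : ∑ i ∈ s, phi H (y i) *
      (Finset.univ.filter (fun g : Perm α => g ∈ alternatingGroup α)).card =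
      ∑ g ∈ Finset.univ.filter (fun g : Perm α => g ∈ alternatingGroup α),
        ((s.filter (fun i => y i ∈ conjSub g H)).card : ℚ) := by
    have : ∀ i, phi H (y i) *
        (Finset.univ.filter (fun g : Perm α => g ∈ alternatingGroup α)).card =
        ∑ g ∈ Finset.univ.filter (fun g : Perm α => g ∈ alternatingGroup α),
          if y i ∈ conjSub g H then (1 : ℚ) else 0 := by
      intro i
      unfold phi
      rw [div_mul_cancel₀ _ altCard_pos.ne', Finset.sum_boole, Finset.filter_filter]
    simp_rw [this]
    rw [Finset.sum_comm]
    refine Finset.sum_congr rfl fun g _ => ?_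
    rw [Finset.sum_boole]
  have h2 : ∑ g ∈ Finset.univ.filter (fun g : Perm α => g ∈ alternatingGroup α),
      (∑ i ∈ s, phi H (y i)) <
      ∑ g ∈ Finset.univ.filter (fun g : Perm α => g ∈ alternatingGroup α),
        ((s.filter (fun i => y i ∈ conjSub g H)).card : ℚ) := by
    refine Finset.sum_lt_sum_of_nonempty ⟨1, by simp [one_mem]⟩ fun g hg => ?_
    exact hcon g (by simpa using hg)
  rw [← h1, Finset.sum_const, nsmul_eq_mul, ← Finset.sum_mul, mul_comm] at h2
  exact lt_irrefl _ h2

open Classical in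
/-- A family of conjugates of `x` of which a proportion at most `q`, on average over `g`, meets any
conjugate of `H`, gives a bound on `phi`. -/
theorem phi_le_of_family {ι : Type*} [Fintype ι] [Nonempty ι] (H : Subgroup (Perm α)) (x : Perm α)
    (y : ι → Perm α) (hy : ∀ i, phi H (y i) = phi H x) (f : Perm α → ℚ) (q : ℚ)
    (hf : ∀ g ∈ alternatingGroup α,
      ((Finset.univ.filter (fun i => y i ∈ conjSub g H)).card : ℚ) ≤ f g)
    (hq : ∑ g ∈ Finset.univ.filter (fun g : Perm α => g ∈ alternatingGroup α), f g ≤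
      q * Fintype.card ι * (Finset.univ.filter (fun g : Perm α => g ∈ alternatingGroup α)).card) :
    phi H x ≤ q := by
  have h1 : ∑ i, phi H (y i) *
      (Finset.univ.filter (fun g : Perm α => g ∈ alternatingGroup α)).card =
      ∑ g ∈ Finset.univ.filter (fun g : Perm α => g ∈ alternatingGroup α),
        ((Finset.univ.filter (fun i => y i ∈ conjSub g H)).card : ℚ) := by
    have : ∀ i, phi H (y i) *
        (Finset.univ.filter (fun g : Perm α => g ∈ alternatingGroup α)).card =
        ∑ g ∈ Finset.univ.filter (fun g : Perm α => g ∈ alternatingGroup α),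
          if y i ∈ conjSub g H then (1 : ℚ) else 0 := by
      intro i
      unfold phi
      rw [div_mul_cancel₀ _ altCard_pos.ne', Finset.sum_boole, Finset.filter_filter]
    simp_rw [this]
    rw [Finset.sum_comm]
    refine Finset.sum_congr rfl fun g _ => ?_
    rw [Finset.sum_boole]
  simp_rw [hy] at h1
  rw [Finset.sum_const, nsmul_eq_mul, Finset.card_univ] at h1
  have h2 := Finset.sum_le_sum (fun g (hg : g ∈ Finset.univ.filter
    (fun g : Perm α => g ∈ alternatingGroup α)) => hf g (by simpa using hg))
  rw [← h1] at h2
  have h3 := h2.trans hq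
  have hpos : (0 : ℚ) < Fintype.card ι *
      (Finset.univ.filter (fun g : Perm α => g ∈ alternatingGroup α)).card :=
    mul_pos (by exact_mod_cast Fintype.card_pos) altCard_pos
  refine le_of_mul_le_mul_right (a := (Fintype.card ι : ℚ) *
      (Finset.univ.filter (fun g : Perm α => g ∈ alternatingGroup α)).card) ?_ hpos
  linarith

open Classical in
theorem phi_le_of_family_const {ι : Type*} [Fintype ι] [Nonempty ι] (H : Subgroup (Perm α))
    (x : Perm α) (y : ι → Perm α) (hy : ∀ i, phi H (y i) = phi H x) (m : ℕ)
    (hf : ∀ g ∈ alternatingGroup α,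
      (Finset.univ.filter (fun i => y i ∈ conjSub g H)).card ≤ m) :
    phi H x ≤ m / Fintype.card ι := by
  refine phi_le_of_family H x y hy (fun _ => m) _ (fun g hg => by exact_mod_cast hf g hg) ?_
  have : (Fintype.card ι : ℚ) ≠ 0 := by exact_mod_cast Fintype.card_pos.ne'
  rw [Finset.sum_const, nsmul_eq_mul, div_mul_cancel₀ _ this, mul_comm]

open Classical in
/-- The nontrivial elements of a subgroup. -/
noncomputable def nt (K : Subgroup (Perm α)) : Finset (Perm α) :=
  Finset.univ.filter (fun x => x ∈ K ∧ x ≠ 1)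

theorem mem_nt {K : Subgroup (Perm α)} {x : Perm α} : x ∈ nt K ↔ x ∈ K ∧ x ≠ 1 := by
  simp [nt]

theorem card_nt (K : Subgroup (Perm α)) : (nt K).card + 1 = Nat.card K := by
  classical
  have h : insert 1 (nt K) = Finset.univ.filter (fun x => x ∈ K) := by
    ext x
    simp only [Finset.mem_insert, mem_nt, Finset.mem_filter, Finset.mem_univ, true_and]
    by_cases hx : x = 1
    · subst hx; simp [one_mem]
    · simp [hx]
  have h2 : (nt K).card + 1 = (Finset.univ.filter (fun x => x ∈ K)).card := by
    rw [← h, Finset.card_insert_of_notMem]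
    simp [mem_nt]
  rw [h2, Nat.card_eq_fintype_card, Fintype.card_subtype]

theorem exists_card_inf_le (K H : Subgroup (Perm α)) : ∃ g ∈ alternatingGroup α,
    ((nt (K ⊓ conjSub g H)).card : ℚ) ≤ ∑ x ∈ nt K, phi H x := by
  classical
  obtain ⟨g, hg, h⟩ := exists_ge_sum_phi (nt K) id H
  refine ⟨g, hg, le_trans (le_of_eq ?_) h⟩
  congr 2
  ext x
  simp only [mem_nt, Finset.mem_filter, id, Subgroup.mem_inf]
  tauto

theorem exists_inf_eq_bot {K H : Subgroup (Perm α)} (h : ∑ x ∈ nt K, phi H x < 1) :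
    ∃ g ∈ alternatingGroup α, K ⊓ conjSub g H = ⊥ := by
  obtain ⟨g, hg, hle⟩ := exists_card_inf_le K H
  refine ⟨g, hg, Subgroup.card_eq_one.1 ?_⟩
  have h1 := lt_of_le_of_lt hle h
  have h2 : (nt (K ⊓ conjSub g H)).card < 1 := by exact_mod_cast h1
  have := card_nt (K ⊓ conjSub g H)
  omega

/-- `q` bounds `phi H` on nontrivial even permutations. -/
def PhiLe (H : Subgroup (Perm α)) (q : ℚ) : Prop :=
  ∀ x ∈ alternatingGroup α, x ≠ 1 → phi H x ≤ q

theorem PhiLe.exists_card {H K : Subgroup (Perm α)} {q : ℚ} (h : PhiLe H q)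
    (hK : K ≤ alternatingGroup α) : ∃ g ∈ alternatingGroup α,
    ((nt (K ⊓ conjSub g H)).card : ℚ) ≤ (nt K).card * q := by
  obtain ⟨g, hg, hle⟩ := exists_card_inf_le K H
  refine ⟨g, hg, hle.trans ?_⟩
  rw [← nsmul_eq_mul]
  exact Finset.sum_le_card_nsmul _ _ _ fun x hx => h x (hK (mem_nt.1 hx).1) (mem_nt.1 hx).2

theorem PhiLe.exists_bot {H K : Subgroup (Perm α)} {q : ℚ} (h : PhiLe H q)
    (hK : K ≤ alternatingGroup α) (hq : ((Nat.card K : ℚ) - 1) * q < 1) :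
    ∃ g ∈ alternatingGroup α, K ⊓ conjSub g H = ⊥ := by
  refine exists_inf_eq_bot (lt_of_le_of_lt ?_ hq)
  rw [← card_nt]
  push_cast
  rw [add_sub_cancel_right, ← nsmul_eq_mul]
  exact Finset.sum_le_card_nsmul _ _ _ fun x hx => h x (hK (mem_nt.1 hx).1) (mem_nt.1 hx).2

/-- Successively intersecting with conjugates of subgroups having small `phi`. -/
theorem Reg.of_phi {q : ℚ} (hq : 0 ≤ q) : ∀ (l : List (Subgroup (Perm α)))
    {K : Subgroup (Perm α)}, (∀ H ∈ l, PhiLe H q) → K ≤ alternatingGroup α →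
    ((Nat.card K : ℚ) - 1) * q ^ l.length < 1 → Reg K l := by
  intro l
  induction l with
  | nil =>
    intro K _ _ h
    rw [← card_nt] at h
    push_cast at h
    simp only [List.length_nil, pow_zero, mul_one, add_sub_cancel_right] at h
    have h2 : (nt K).card < 1 := by exact_mod_cast h
    exact Subgroup.card_eq_one.1 (by rw [← card_nt]; omega)
  | cons H l ih =>
    intro K hl hK h
    obtain ⟨g, hg, hle⟩ := (hl H (by simp)).exists_card hK
    refine ⟨g, hg, ih (fun H' h' => hl _ (by simp [h'])) (inf_le_left.trans hK) ?_⟩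
    refine lt_of_le_of_lt ?_ h
    rw [← card_nt, ← card_nt, List.length_cons, pow_succ]
    push_cast
    rw [add_sub_cancel_right, add_sub_cancel_right, mul_comm (q ^ l.length) q, ← mul_assoc]
    exact mul_le_mul_of_nonneg_right hle (by positivity)

/-! ### Three-cycles and Bochert's bound -/

/-- Permutations whose supports meet in exactly one point have a 3-cycle as commutator. -/
theorem isThreeCycle_commutator {x y : Perm α} {a : α} (hx : x a ≠ a) (hy : y a ≠ a)
    (h : ∀ b, x b ≠ b → y b ≠ b → b = a) : (x * y * x⁻¹ * y⁻¹).IsThreeCycle := by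
  have hxa : y (x a) = x a := by
    by_contra hc
    have := h (x a) (fun h' => hx (x.injective h')) hc
    exact hx this
  have hya : x (y a) = y a := by
    by_contra hc
    have := h (y a) hc (fun h' => hy (y.injective h'))
    exact hy this
  have hne : x a ≠ y a := by
    intro h'
    rw [h'] at hxa
    exact hy (y.injective hxa)
  have hcomm : (swap a (x a) * x) * y = y * (swap a (x a) * x) := by
    refine Disjoint.commute fun b => ?_
    by_cases hyb : y b = b
    · exact Or.inr hyb
    left
    rw [mul_apply]
    by_cases hxb : x b = b
    · rw [hxb, swap_apply_of_ne_of_ne]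
      · rintro rfl; exact hx hxb
      · rintro rfl; exact hyb hxa
    · have := h b hxb hyb
      subst this
      exact swap_apply_right _ _
  have hconj : x * y * x⁻¹ = swap a (x a) * y * swap a (x a) := by
    have h1 : x = swap a (x a) * (swap a (x a) * x) := by
      rw [← mul_assoc, swap_mul_self, one_mul]
    have h2 : (swap a (x a) * x) * y * (swap a (x a) * x)⁻¹ = y := by
      rw [hcomm, mul_inv_cancel_right]
    calc x * y * x⁻¹ = swap a (x a) * ((swap a (x a) * x) * y * (swap a (x a) * x)⁻¹) *
          (swap a (x a))⁻¹ := by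
          rw [mul_inv_rev]
          simp only [← mul_assoc, swap_mul_self, one_mul, swap_inv]
          simp [mul_assoc]
      _ = _ := by rw [h2, swap_inv]
  have h3 : x * y * x⁻¹ * y⁻¹ = swap (x a) a * swap (x a) (y a) := by
    rw [hconj, mul_assoc, mul_assoc, ← mul_assoc y, ]
    have : y * swap a (x a) * y⁻¹ = swap (y a) (y (x a)) := by
      rw [swap_apply_apply]
    rw [this, hxa, swap_comm a, swap_comm (y a)]
  rw [h3]
  exact isThreeCycle_swap_mul_swap_same hx hne (Ne.symm hy)

/-- `H` contains no 3-cycle. -/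
def NoThree (H : Subgroup (Perm α)) : Prop := ∀ x ∈ H, ¬ x.IsThreeCycle

theorem NoThree.conj {H : Subgroup (Perm α)} (h : NoThree H) (g : Perm α) :
    NoThree (conjSub g H) := by
  intro x hx h3
  rw [mem_conjSub] at hx
  refine h _ hx ?_
  rw [IsThreeCycle, ← h3.cycleType]
  have := cycleType_conj (σ := x) (τ := g⁻¹)
  rwa [inv_inv] at this

/-- The permutations fixing every point outside `U`. -/
def fixOff (U : Finset α) : Subgroup (Perm α) where
  carrier := {x | ∀ a, a ∉ U → x a = a}
  mul_mem' := by
    intro x y hx hy a ha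
    rw [mul_apply, hy a ha, hx a ha]
  one_mem' := by intro a _; rfl
  inv_mem' := by
    intro x hx a ha
    rw [inv_eq_iff_eq]; exact (hx a ha).symm

theorem mem_fixOff {U : Finset α} {x : Perm α} : x ∈ fixOff U ↔ ∀ a, a ∉ U → x a = a := Iff.rfl

theorem exists_base {H : Subgroup (Perm α)} (hH : NoThree H) (U : Finset α) :
    ∃ G ⊆ U, G.card = U.card / 2 ∧ ∀ x ∈ H, x ∈ fixOff (U \ G) → x = 1 := by
  classical
  -- a base of minimal size
  let P : ℕ → Prop := fun k => ∃ G ⊆ U, G.card = k ∧ ∀ x ∈ H, x ∈ fixOff (U \ G) → x = 1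
  have hP : ∃ k, P k := ⟨U.card, U, subset_rfl, rfl, fun x _ h => by
    ext a; exact h a (by simp)⟩
  obtain ⟨G, hGU, hGc, hG⟩ := Nat.find_spec hP
  have hmin : ∀ k, P k → G.card ≤ k := fun k hk => hGc ▸ Nat.find_min' hP hk
  have hle : G.card ≤ U.card / 2 := by
    by_contra hlt
    have h1 : ¬ P (U \ G).card := by
      intro h
      have := hmin _ h
      rw [Finset.card_sdiff_of_subset hGU] at this
      have := Finset.card_le_card hGU
      omega
    have h1' : ∃ x ∈ H, x ∈ fixOff (U \ (U \ G)) ∧ x ≠ 1 := by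
      by_contra hc
      push Not at hc
      exact h1 ⟨U \ G, Finset.sdiff_subset, rfl, hc⟩
    obtain ⟨x, hxH, hxf, hx1⟩ := h1'
    obtain ⟨a, ha⟩ : ∃ a, x a ≠ a := by
      by_contra hc
      push Not at hc
      exact hx1 (Perm.ext hc)
    have haG : a ∈ G := by
      by_contra hc
      exact ha (hxf a (by simp [hc]))
    have h2 : ∃ y ∈ H, y ∈ fixOff (U \ (G.erase a)) ∧ y ≠ 1 := by
      by_contra hc
      push Not at hc
      have := hmin _ ⟨G.erase a, (Finset.erase_subset _ _).trans hGU, rfl, hc⟩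
      rw [Finset.card_erase_of_mem haG] at this
      have := Finset.card_pos.2 ⟨a, haG⟩
      omega
    obtain ⟨y, hyH, hyf, hy1⟩ := h2
    have hya : y a ≠ a := by
      intro hc
      refine hy1 (hG y hyH fun b hb => ?_)
      by_cases hba : b = a
      · rw [hba, hc]
      · refine hyf b fun h => hb ?_
        simp only [Finset.mem_sdiff, Finset.mem_erase, not_and] at h ⊢
        exact ⟨h.1, h.2 hba⟩
    refine hH _ (mul_mem (mul_mem (mul_mem hxH hyH) (inv_mem hxH)) (inv_mem hyH))
      (isThreeCycle_commutator ha hya ?_)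
    intro b hxb hyb
    by_contra hba
    apply hyb
    refine hyf b ?_
    have hbG : b ∈ G := by
      by_contra hc
      exact hxb (hxf b (by simp [hc]))
    simp [hba, hbG]
  obtain ⟨G', hGG', hG'U, hcard⟩ := Finset.exists_subsuperset_card_eq hGU hle (Nat.div_le_self _ _)
  refine ⟨G', hG'U, hcard, fun x hx hf => hG x hx fun a ha => hf a fun h => ha ?_⟩
  simp only [Finset.mem_sdiff] at h ⊢
  exact ⟨h.1, fun h' => h.2 (hGG' h')⟩

/-- Bochert's bound. -/
theorem card_le_descFactorial {H : Subgroup (Perm α)} (hH : NoThree H) (U : Finset α) :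
    Nat.card (H ⊓ fixOff U : Subgroup _) ≤ U.card.descFactorial (U.card / 2) := by
  classical
  obtain ⟨G, hGU, hc, hG⟩ := exists_base hH U
  have hmap : ∀ x ∈ fixOff U, ∀ a ∈ U, x a ∈ U := by
    intro x hx a ha
    by_contra h
    have := x.injective (hx _ h)
    rw [this] at h
    exact h ha
  let F : (H ⊓ fixOff U : Subgroup (Perm α)) → (G ↪ U) := fun x =>
    ⟨fun a => ⟨x.1 a.1, hmap _ x.2.2 _ (hGU a.2)⟩, fun a b h => by
      have := congrArg Subtype.val h
      exact Subtype.ext (x.1.injective this)⟩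
  have hF : Function.Injective F := by
    intro x y hxy
    have h1 : ∀ a ∈ G, x.1 a = y.1 a := fun a ha =>
      congrArg Subtype.val (DFunLike.congr_fun hxy ⟨a, ha⟩)
    have h2 : (y⁻¹ * x : (H ⊓ fixOff U : Subgroup (Perm α))).1 = 1 := by
      refine hG _ (y⁻¹ * x).2.1 fun a ha => ?_
      by_cases haU : a ∈ U
      · have haG : a ∈ G := by simpa [haU] using ha
        change y.1⁻¹ (x.1 a) = a
        rw [h1 a haG, inv_ap]
      · exact (y⁻¹ * x).2.2 a haU
    exact (inv_mul_eq_one.1 (Subtype.ext h2)).symm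
  have := Nat.card_le_card_of_injective F hF
  refine this.trans (le_of_eq ?_)
  rw [Nat.card_eq_fintype_card, Fintype.card_embedding_eq, Fintype.card_coe, Fintype.card_coe, hc]

/-! ### Few elements of small support in primitive groups -/

/-- Frattini argument: the stabilizer of the support of a `p`-cycle `x` acts on the fixed points
of `x` as the normalizer of `⟨x⟩` does. -/
theorem exists_normalizing {H : Subgroup (Perm α)} {x : Perm α} (hx : x ∈ H) (hc : x.IsCycle)
    (hp : x.support.card.Prime) {u : Perm α} (hu : u ∈ H)
    (hT : ∀ a, u a ∈ x.support ↔ a ∈ x.support) :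
    ∃ h ∈ H, (∀ a, a ∉ x.support → h a = u a) ∧ ∃ i : ℤ, h * x * h⁻¹ = x ^ i := by
  classical
  set T := x.support with hTdef
  set p := T.card with hpdef
  haveI : Fact p.Prime := ⟨hp⟩
  let P : Subgroup (Perm α) := H ⊓ fixOff T
  have hmap : ∀ y ∈ P, ∀ a, y a ∈ T ↔ a ∈ T := by
    intro y hy a
    have h2 := (Subgroup.mem_inf.1 hy).2
    constructor
    · intro h
      by_contra h'
      rw [h2 a h'] at h; exact h' h
    · intro h
      by_contra h'
      have := h2 _ h'
      rw [y.injective this] at h'; exact h' h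
  have hxP : x ∈ P := Subgroup.mem_inf.2 ⟨hx, fun a ha => notMem_support.1 ha⟩
  have hordx : orderOf x = p := hc.orderOf
  -- the order of `P` divides `p!`
  have hcard : Nat.card P ∣ p.factorial := by
    let φ : P →* Perm T :=
      { toFun := fun y => y.1.subtypePerm (hmap y.1 y.2)
        map_one' := by ext; simp
        map_mul' := by intro y z; ext; rfl }
    have hφ : Function.Injective φ := by
      intro y z h
      ext a
      by_cases ha : a ∈ T
      · have := congrArg (fun f : Perm T => (f ⟨a, ha⟩).1) h
        simpa [φ] using this
      · rw [(Subgroup.mem_inf.1 y.2).2 a ha, (Subgroup.mem_inf.1 z.2).2 a ha]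
    have := Subgroup.card_dvd_of_injective φ hφ
    rwa [Nat.card_eq_fintype_card (α := Perm T), Fintype.card_perm, Fintype.card_coe] at this
  have hfac : (Nat.card P).factorization p ≤ 1 := by
    by_contra h
    push Not at h
    have h1 : p ^ 2 ∣ Nat.card P :=
      (hp.pow_dvd_iff_le_factorization Nat.card_pos.ne').2 h
    have h2 := h1.trans hcard
    rw [show p = (p - 1) + 1 from (Nat.succ_pred_prime hp).symm, Nat.factorial_succ, sq] at h2
    have h3 := Nat.dvd_of_mul_dvd_mul_left (Nat.succ_pos _) h2
    rw [Nat.sub_add_cancel hp.one_lt.le] at h3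
    have := (hp.dvd_factorial).1 h3
    have := hp.one_lt
    omega
  have hQ : ∀ y : P, orderOf y = p → Nat.card (Subgroup.zpowers y)
      = p ^ (Nat.card P).factorization p := by
    intro y hy
    rw [Nat.card_zpowers, hy]
    have : 1 ≤ (Nat.card P).factorization p := by
      rw [← hp.pow_dvd_iff_le_factorization Nat.card_pos.ne', pow_one, ← hy]
      exact orderOf_dvd_natCard y
    rw [le_antisymm hfac this, pow_one]
  have huxP : u * x * u⁻¹ ∈ P := by
    refine Subgroup.mem_inf.2 ⟨H.mul_mem (H.mul_mem hu hx) (H.inv_mem hu), fun a ha => ?_⟩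
    have : u⁻¹ a ∉ T := by
      intro h
      rw [← hT, ap_inv] at h
      exact ha h
    have h2 : x (u⁻¹ a) = u⁻¹ a := notMem_support.1 this
    rw [Perm.mul_apply, Perm.mul_apply, h2, ap_inv]
  let X : P := ⟨x, hxP⟩
  let Y : P := ⟨u * x * u⁻¹, huxP⟩
  have hX : orderOf X = p := by rw [← hordx]; exact Subgroup.orderOf_mk _ _
  have hY : orderOf Y = p := by
    rw [← hordx, ← orderOf_injective (MulAut.conj u).toMonoidHom (MulAut.conj u).injective x]
    exact Subgroup.orderOf_mk _ _
  let S₁ : Sylow p P := Sylow.ofCard _ (hQ X hX)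
  let S₂ : Sylow p P := Sylow.ofCard _ (hQ Y hY)
  obtain ⟨w, hw⟩ := MulAction.exists_smul_eq P S₂ S₁
  have h1 : w * Y * w⁻¹ ∈ (S₁ : Subgroup P) := by
    rw [← hw, Sylow.coe_subgroup_smul]
    exact ⟨Y, Subgroup.mem_zpowers Y, rfl⟩
  obtain ⟨i, hi⟩ := Subgroup.mem_zpowers_iff.1 (show w * Y * w⁻¹ ∈ Subgroup.zpowers X from h1)
  refine ⟨w.1 * u, H.mul_mem (Subgroup.mem_inf.1 w.2).1 hu, fun a ha => ?_, i, ?_⟩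
  · have : u a ∉ T := by rwa [hT]
    exact (Subgroup.mem_inf.1 w.2).2 _ this
  · have := congrArg Subtype.val hi
    simp only [X, Y, Subgroup.coe_mul, Subgroup.coe_inv, Subgroup.coe_zpow] at this
    rw [this]; group

/-- A primitive group containing a `p`-cycle, `p ≥ 5` prime, with at least three fixed points
contains a `3`-cycle. -/
theorem exists_three_of_cycle {H : Subgroup (Perm α)} (hH : MulAction.IsPreprimitive H α)
    {x : Perm α} (hx : x ∈ H) (hc : x.IsCycle)
    (hp : x.support.card.Prime) (h5 : 5 ≤ x.support.card)
    (hf : x.support.card + 3 ≤ Fintype.card α) : ∃ z ∈ H, z.IsThreeCycle := by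
  classical
  set T := x.support with hTdef
  have hcF : Tᶜ.card = Fintype.card α - T.card := Finset.card_compl T
  obtain ⟨f, hf'⟩ : ∃ f, Tᶜ.card = f + 1 := ⟨Tᶜ.card - 1, by omega⟩
  have hcn := Finset.card_le_univ T
  have hmt : MulAction.IsMultiplyPretransitive H α (f + 1) := by
    have : MulAction.IsMultiplyPreprimitive H α (f + 2) := by
      apply hH.isMultiplyPreprimitive (s := (x.supportᶜ : Set α))
      · rw [← Finset.coe_compl, Set.ncard_coe_finset]; exact hf'
      · rw [Nat.card_eq_fintype_card]; omega
      · have := isPretransitive_of_isCycle_mem hc hx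
        apply MulAction.IsPreprimitive.of_prime_card
        convert! hp
        rw [Nat.card_eq_fintype_card, hTdef, ← Fintype.card_coe x.support]
        refine Fintype.card_congr (Equiv.subtypeEquivRight fun x => ?_)
        simp [SubMulAction.mem_ofFixingSubgroup_iff]
    have h2 := MulAction.IsMultiplyPreprimitive.isMultiplyPretransitive H α (n := f + 2)
    exact MulAction.isMultiplyPretransitive_of_le (n := f + 2) (by omega) (by simp; omega)
  -- every permutation of the fixed points is induced by a normalizing element
  have key : ∀ s : Perm α, (∀ a, a ∈ T → s a = a) →
      ∃ h ∈ H, (∀ a, a ∉ T → h a = s a) ∧ ∃ i : ℤ, h * x * h⁻¹ = x ^ i := by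
    intro s hs
    let e : Fin (f + 1) ↪ α :=
      (Fintype.equivFinOfCardEq ((Fintype.card_coe _).trans hf' : Fintype.card {a // a ∈ Tᶜ} = f + 1)).symm.toEmbedding.trans
        (Function.Embedding.subtype _)
    have he : ∀ a, a ∉ T → ∃ i, e i = a := by
      intro a ha
      refine ⟨Fintype.equivFinOfCardEq ((Fintype.card_coe _).trans hf' : Fintype.card {a // a ∈ Tᶜ} = f + 1)
        ⟨a, Finset.mem_compl.2 ha⟩, ?_⟩
      simp [e]
    obtain ⟨u, hu⟩ := MulAction.exists_smul_eq H e (e.trans s.toEmbedding)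
    have hu' : ∀ a, a ∉ T → u.1 a = s a := by
      intro a ha
      obtain ⟨i, rfl⟩ := he a ha
      exact congrArg (fun f => f i) hu
    have hsT : ∀ a, s a ∈ T → a ∈ T := fun a ha => by
      have h := hs _ ha
      rw [s.injective h] at ha; exact ha
    have huF : ∀ a, a ∉ T → u.1 a ∉ T := fun a ha h => by
      rw [hu' a ha] at h
      exact ha (hsT a h)
    have hT : ∀ a, u.1 a ∈ T ↔ a ∈ T := by
      have himg : Tᶜ.image u.1 = Tᶜ := by
        apply Finset.eq_of_subset_of_card_le
        · intro b hb
          obtain ⟨a, ha, rfl⟩ := Finset.mem_image.1 hb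
          exact Finset.mem_compl.2 (huF a (Finset.mem_compl.1 ha))
        · rw [Finset.card_image_of_injective _ u.1.injective]
      intro a
      constructor
      · intro h
        by_contra h'
        exact huF a h' h
      · intro h
        by_contra h'
        have : u.1 a ∈ Tᶜ.image u.1 := by rw [himg]; exact Finset.mem_compl.2 h'
        obtain ⟨b, hb, hab⟩ := Finset.mem_image.1 this
        rw [u.1.injective hab] at hb
        exact Finset.mem_compl.1 hb h
    obtain ⟨h, hh, h1, h2⟩ := exists_normalizing hx hc hp u.2 hT
    exact ⟨h, hh, fun a ha => by rw [h1 a ha, hu' a ha], h2⟩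
  obtain ⟨a, b, c, ha, hb, hcc, hab, hac, hbc⟩ : ∃ a b c, a ∈ Tᶜ ∧ b ∈ Tᶜ ∧ c ∈ Tᶜ ∧
      a ≠ b ∧ a ≠ c ∧ b ≠ c := Finset.two_lt_card_iff.1 (by omega)
  rw [Finset.mem_compl] at ha hb hcc
  have hsw : ∀ {a b : α}, a ∉ T → b ∉ T → ∀ t, t ∈ T → swap a b t = t := by
    intro a b ha hb t ht
    exact swap_apply_of_ne_of_ne (by rintro rfl; exact ha ht) (by rintro rfl; exact hb ht)
  have hsF : ∀ {a b : α}, a ∉ T → b ∉ T → ∀ t, t ∉ T → swap a b t ∉ T := by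
    intro a b ha hb t ht
    rw [swap_apply_def]; split_ifs <;> assumption
  obtain ⟨h₁, hh₁, hF₁, i, hi⟩ := key (swap a b) (hsw ha hb)
  obtain ⟨h₂, hh₂, hF₂, j, hj⟩ := key (swap b c) (hsw hb hcc)
  have hinv : ∀ {h s : Perm α}, (∀ a, a ∉ T → h a = s a) → (∀ t, t ∉ T → s⁻¹ t ∉ T) →
      ∀ t, t ∉ T → h⁻¹ t = s⁻¹ t := by
    intro h s hs hsF t ht
    rw [Perm.inv_eq_iff_eq, hs _ (hsF t ht), ap_inv]
  obtain ⟨d, hd⟩ : ∃ d, d = (h₁ * h₂)⁻¹ * (h₂ * h₁) := ⟨_, rfl⟩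
  have hdx : d * x = x * d := by
    have e1 : (h₁ * h₂) * x * (h₁ * h₂)⁻¹ = x ^ (i * j) := by
      rw [show (h₁ * h₂) * x * (h₁ * h₂)⁻¹ = h₁ * (h₂ * x * h₂⁻¹) * h₁⁻¹ by group, hj,
        ← conj_zpow, hi, zpow_mul]
    have e2 : (h₂ * h₁) * x * (h₂ * h₁)⁻¹ = x ^ (i * j) := by
      rw [show (h₂ * h₁) * x * (h₂ * h₁)⁻¹ = h₂ * (h₁ * x * h₁⁻¹) * h₂⁻¹ by group, hi,
        ← conj_zpow, hj, mul_comm i j, zpow_mul]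
    have e3 := e1.trans e2.symm
    rw [mul_inv_eq_iff_eq_mul, mul_assoc, mul_assoc] at e3
    rw [hd]
    have : (h₁ * h₂)⁻¹ * (h₁ * h₂ * x) = (h₁ * h₂)⁻¹ * (h₂ * h₁ * (x * ((h₂ * h₁)⁻¹ * (h₁ * h₂)))) := by
      rw [mul_assoc, e3]; group
    rw [inv_mul_cancel_left] at this
    calc (h₁ * h₂)⁻¹ * (h₂ * h₁) * x
        = (h₁ * h₂)⁻¹ * (h₂ * h₁ * (x * ((h₂ * h₁)⁻¹ * (h₁ * h₂)))) * ((h₁ * h₂)⁻¹ * (h₂ * h₁)) := by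
          group
      _ = _ := by rw [← this]
  obtain ⟨σ, hσ⟩ : ∃ σ, σ = (swap a b * swap b c)⁻¹ * (swap b c * swap a b) := ⟨_, rfl⟩
  have hσ3 : σ.IsThreeCycle := by
    have : σ = (swap b c * swap b a) ^ 2 := by
      rw [hσ, mul_inv_rev, swap_inv, swap_inv, swap_comm a b, sq, mul_assoc]
    rw [this]
    exact (isThreeCycle_swap_mul_swap_same hbc hab.symm hac.symm).isThreeCycle_sq
  have hσT : ∀ t ∈ T, σ t = t := by
    intro t ht
    simp only [hσ, mul_inv_rev, swap_inv, Perm.mul_apply, hsw ha hb t ht, hsw hb hcc t ht]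
  have hdF : ∀ t, t ∉ T → d t = σ t := by
    intro t ht
    simp only [hσ, hd, mul_inv_rev (h₁), mul_inv_rev (swap a b), swap_inv, Perm.mul_apply]
    have q1 := hsF ha hb t ht
    have q2 := hsF hb hcc _ q1
    have q3 := hsF ha hb _ q2
    rw [hF₁ t ht, hF₂ _ q1, hinv hF₁ (by rw [swap_inv]; exact hsF ha hb) _ q2, swap_inv,
      hinv hF₂ (by rw [swap_inv]; exact hsF hb hcc) _ q3, swap_inv]
  have hσF : ∀ t, t ∉ T → σ t ∉ T := by
    intro t ht
    simp only [hσ, mul_inv_rev, swap_inv, Perm.mul_apply]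
    exact hsF hb hcc _ (hsF ha hb _ (hsF hb hcc _ (hsF ha hb t ht)))
  -- `d` agrees with a power of `x` on the support
  have hdT : ∀ t ∈ T, (d ^ T.card) t = t := by
    intro t ht
    have h1 : x t ≠ t := mem_support.1 ht
    have h2 : x (d t) ≠ d t := by
      rw [← Perm.mul_apply, ← hdx, Perm.mul_apply]
      exact fun h => h1 (d.injective h)
    obtain ⟨i, hi⟩ := hc.exists_zpow_eq h1 h2
    have hcomm : Commute d (x ^ i) := Commute.zpow_right hdx i
    have h3 : ∀ m : ℕ, (d ^ m) t = ((x ^ i) ^ m) t := by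
      intro m
      induction m with
      | zero => rfl
      | succ m ih =>
        rw [pow_succ', Perm.mul_apply, ih, ← Perm.mul_apply, (hcomm.pow_right m).eq,
          Perm.mul_apply, ← hi, ← Perm.mul_apply, ← pow_succ]
    rw [h3, ← zpow_natCast, ← zpow_mul, mul_comm i, zpow_mul, zpow_natCast, ← hc.orderOf,
      pow_orderOf_eq_one]
    simp
  have hz : d ^ T.card = σ ^ T.card := by
    ext t
    by_cases ht : t ∈ T
    · rw [hdT t ht]
      symm
      exact pow_apply_eq_self_of_apply_eq_self (hσT t ht) _
    · have : ∀ k : ℕ, (d ^ k) t = (σ ^ k) t ∧ (σ ^ k) t ∉ T := by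
        intro k
        induction k with
        | zero => simpa using ht
        | succ k ih =>
          rw [pow_succ', pow_succ' σ, Perm.mul_apply, Perm.mul_apply, ih.1, hdF _ ih.2]
          exact ⟨rfl, hσF _ ih.2⟩
      rw [(this _).1]
  refine ⟨d ^ T.card, H.pow_mem (hd ▸ H.mul_mem (H.inv_mem (H.mul_mem hh₁ hh₂))
    (H.mul_mem hh₂ hh₁)) _, ?_⟩
  rw [hz, ← pow_mod_orderOf, hσ3.orderOf]
  have h3 : T.card % 3 ≠ 0 := by
    intro h
    have := (Nat.prime_dvd_prime_iff_eq Nat.prime_three hp).1 (Nat.dvd_of_mod_eq_zero h)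
    omega
  have h4 : T.card % 3 < 3 := Nat.mod_lt _ (by norm_num)
  generalize T.card % 3 = r at h3 h4
  interval_cases r
  · omega
  · simpa using hσ3
  · exact hσ3.isThreeCycle_sq

/-! ### Sets supporting double transpositions -/

/-- `S` is the support of a product of two disjoint transpositions lying in `H`. -/
def IsQuad (H : Subgroup (Perm α)) (S : Finset α) : Prop :=
  ∃ x ∈ H, (∀ a, x (x a) = a) ∧ x.support = S ∧ S.card = 4

/-- `H` contains no 5-cycle. -/
def NoFive (H : Subgroup (Perm α)) : Prop := ∀ x ∈ H, x.IsCycle → x.support.card ≠ 5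

theorem quad_form {x : Perm α} (hx : ∀ a, x (x a) = a) (h4 : x.support.card = 4) {a c : α}
    (ha : a ∈ x.support) (hc : c ∈ x.support) (hca : c ≠ a) (hcx : c ≠ x a) :
    x.support = {a, x a, c, x c} ∧ x a ≠ a ∧ x c ≠ c ∧ x c ≠ a ∧ x c ≠ x a := by
  have h1 : x a ≠ a := mem_support.1 ha
  have h2 : x c ≠ c := mem_support.1 hc
  have h3 : x c ≠ a := fun h => hcx (by rw [← h, hx])
  have h5 : x c ≠ x a := fun h => hca (x.injective h)
  refine ⟨?_, h1, h2, h3, h5⟩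
  symm
  apply Finset.eq_of_subset_of_card_le
  · intro p hp
    simp only [Finset.mem_insert, Finset.mem_singleton] at hp
    rcases hp with rfl | rfl | rfl | rfl
    · exact ha
    · rwa [apply_mem_support]
    · exact hc
    · rwa [apply_mem_support]
  · rw [h4, Finset.card_insert_of_notMem, Finset.card_insert_of_notMem,
      Finset.card_insert_of_notMem, Finset.card_singleton]
    · simpa using h2.symm
    · simpa using ⟨hcx.symm, hca.symm⟩
    · simpa using ⟨h1.symm, hca.symm, h3.symm⟩

theorem IsQuad.card {H : Subgroup (Perm α)} {S : Finset α} (h : IsQuad H S) : S.card = 4 :=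
  h.choose_spec.2.2.2

theorem IsQuad.image {H : Subgroup (Perm α)} {S : Finset α} (h : IsQuad H S) {u : Perm α}
    (hu : u ∈ H) : IsQuad H (S.image u) := by
  obtain ⟨x, hx, h1, rfl, h4⟩ := h
  refine ⟨u * x * u⁻¹, H.mul_mem (H.mul_mem hu hx) (H.inv_mem hu), ?_, ?_, ?_⟩
  · intro a
    rw [Perm.mul_apply, Perm.mul_apply, Perm.mul_apply, Perm.mul_apply, inv_ap, h1, ap_inv]
  · rw [support_conj, Finset.map_eq_image]; rfl
  · rw [Finset.card_image_of_injective _ u.injective, h4]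

theorem IsQuad.card_inter_ne_one {H : Subgroup (Perm α)} (h3 : NoThree H) {S S' : Finset α}
    (h : IsQuad H S) (h' : IsQuad H S') : (S ∩ S').card ≠ 1 := by
  obtain ⟨x, hx, -, rfl, -⟩ := h
  obtain ⟨y, hy, -, rfl, -⟩ := h'
  intro hc
  obtain ⟨a, ha⟩ := Finset.card_eq_one.1 hc
  have hm : ∀ b, b ∈ x.support ∩ y.support ↔ b = a := by intro b; rw [ha]; simp
  have haa := Finset.mem_inter.1 ((hm a).2 rfl)
  exact h3 _ (H.mul_mem (H.mul_mem (H.mul_mem hx hy) (H.inv_mem hx)) (H.inv_mem hy))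
    (isThreeCycle_commutator (mem_support.1 haa.1) (mem_support.1 haa.2)
      fun b h1 h2 => (hm b).1 (Finset.mem_inter.2 ⟨mem_support.2 h1, mem_support.2 h2⟩))

theorem IsQuad.card_inter_ne_three {H : Subgroup (Perm α)} (h3 : NoThree H) (h5 : NoFive H)
    {S S' : Finset α} (h : IsQuad H S) (h' : IsQuad H S') : (S ∩ S').card ≠ 3 := by
  obtain ⟨x, hx, hxx, rfl, hx4⟩ := h
  obtain ⟨y, hy, hyy, rfl, hy4⟩ := h'
  intro hcard
  have e1 := Finset.card_sdiff_add_card_inter x.support y.support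
  have e2 := Finset.card_sdiff_add_card_inter y.support x.support
  rw [Finset.inter_comm] at e2
  obtain ⟨d, hd⟩ := Finset.card_eq_one.1 (show (x.support \ y.support).card = 1 by omega)
  obtain ⟨e, he⟩ := Finset.card_eq_one.1 (show (y.support \ x.support).card = 1 by omega)
  have hd' : ∀ p, p ∈ x.support → p ∉ y.support → p = d := fun p h1 h2 => by
    have : p ∈ x.support \ y.support := Finset.mem_sdiff.2 ⟨h1, h2⟩
    rw [hd] at this; simpa using this
  have he' : ∀ p, p ∈ y.support → p ∉ x.support → p = e := fun p h1 h2 => by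
    have : p ∈ y.support \ x.support := Finset.mem_sdiff.2 ⟨h1, h2⟩
    rw [he] at this; simpa using this
  obtain ⟨hdx, hdy⟩ := Finset.mem_sdiff.1 (show d ∈ x.support \ y.support by rw [hd]; simp)
  obtain ⟨hey, hex⟩ := Finset.mem_sdiff.1 (show e ∈ y.support \ x.support by rw [he]; simp)
  have hyd : y d = d := notMem_support.1 hdy
  have hxe : x e = e := notMem_support.1 hex
  have hxd : x d ≠ d := mem_support.1 hdx
  have hxds : x d ∈ x.support := by rwa [apply_mem_support]
  have hcy : x d ∈ y.support := by
    by_contra h; exact hxd (hd' _ hxds h)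
  have hyc : y (x d) ≠ x d := mem_support.1 hcy
  have hycs : y (x d) ∈ y.support := by rwa [apply_mem_support]
  have hcd : y (x d) ≠ d := fun h => hdy (h ▸ hycs)
  obtain ⟨c, hc⟩ : ∃ c, c = x d := ⟨_, rfl⟩
  have hxc : x c = d := by rw [hc, hxx]
  rw [← hc] at hxd hxds hcy hyc hycs hcd
  by_cases hce : y c = e
  · -- `x = (d c)(a b)`, `y = (c e)(a b)`
    obtain ⟨a, ha, had, hac⟩ : ∃ a ∈ x.support, a ≠ d ∧ a ≠ c := by
      have : 0 < (x.support \ {d, c}).card := by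
        have := Finset.le_card_sdiff {d, c} x.support
        have := Finset.card_le_two (a := d) (b := c)
        omega
      obtain ⟨a, ha⟩ := Finset.card_pos.1 this
      simp only [Finset.mem_sdiff, Finset.mem_insert, Finset.mem_singleton, not_or] at ha
      exact ⟨a, ha.1, ha.2⟩
    obtain ⟨hS, -, hxa, hxad, hxac⟩ := quad_form hxx hx4 hdx ha had (by rwa [← hc])
    rw [← hc] at hxac hS
    have hay : a ∈ y.support := by by_contra h; exact had (hd' _ ha h)
    have hae : a ≠ e := fun h => hex (h ▸ ha)
    obtain ⟨hS', -, hya, hyac, hyae⟩ := quad_form hyy hy4 hcy hay hac (by rwa [hce])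
    have hya2 : y a = x a := by
      have h1 : y a ∈ x.support := by
        by_contra h
        exact hyae (by rw [hce]; exact he' _ (by rwa [apply_mem_support]) h)
      have h2 : y a ≠ d := fun h => hdy (by rw [← h]; rwa [apply_mem_support])
      rw [hS] at h1
      simp only [Finset.mem_insert, Finset.mem_singleton] at h1
      tauto
    have hec : e ≠ c := fun h => hyc (by rw [hce, h])
    have hde : d ≠ e := fun h => hex (h ▸ hdx)
    refine h3 (x * y) (H.mul_mem hx hy) ?_
    have : x * y = swap c d * swap c e := by
      ext p
      by_cases hpx : p ∈ x.support
      · rw [hS] at hpx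
        simp only [Finset.mem_insert, Finset.mem_singleton] at hpx
        rcases hpx with rfl | rfl | rfl | rfl
        · rw [Perm.mul_apply, Perm.mul_apply, hyd, swap_apply_of_ne_of_ne (Ne.symm hxd) hde,
            swap_apply_right]; exact hc.symm
        · rw [Perm.mul_apply, Perm.mul_apply, hce, swap_apply_left, hxe,
            swap_apply_of_ne_of_ne hec hde.symm]
        · rw [Perm.mul_apply, Perm.mul_apply, hya2, hxx, swap_apply_of_ne_of_ne hac hae,
            swap_apply_of_ne_of_ne hac had]
        · have : x a ≠ e := by rw [← hya2, ← hce]; exact hyae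
          rw [Perm.mul_apply, Perm.mul_apply, ← hya2, hyy, hya2, swap_apply_of_ne_of_ne hxac this,
            swap_apply_of_ne_of_ne hxac hxad]
      · by_cases hpy : p ∈ y.support
        · have := he' _ hpy hpx
          subst this
          rw [Perm.mul_apply, Perm.mul_apply, swap_apply_right, swap_apply_left, ← hce, hyy, hxc]
        · have h1 : p ≠ c := fun h => hpy (h ▸ hcy)
          have h2 : p ≠ d := fun h => hpx (h ▸ hdx)
          have h3 : p ≠ e := fun h => hpy (h ▸ hey)
          rw [Perm.mul_apply, Perm.mul_apply, notMem_support.1 hpy, notMem_support.1 hpx,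
            swap_apply_of_ne_of_ne h1 h3, swap_apply_of_ne_of_ne h1 h2]
    rw [this]
    exact isThreeCycle_swap_mul_swap_same hxd hec.symm hde
  · obtain ⟨a, ha⟩ : ∃ a, a = y c := ⟨_, rfl⟩
    have hya : y a = c := by rw [ha, hyy]
    rw [← ha] at hyc hycs hcd
    have hax : a ∈ x.support := by by_contra h; exact hce (ha.symm.trans (he' _ hycs h))
    obtain ⟨hS, -, hxa, hxad, hxac⟩ := quad_form hxx hx4 hdx hax hcd (by rwa [← hc])
    rw [← hc] at hxac hS
    obtain ⟨b, hb⟩ : ∃ b, b = x a := ⟨_, rfl⟩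
    rw [← hb] at hxa hxad hxac hS
    have hxb : x b = a := by rw [hb, hxx]
    have hbx : b ∈ x.support := by rw [hS]; simp
    have hby : b ∈ y.support := by by_contra h; exact hxad (hd' _ hbx h)
    obtain ⟨hS', -, hyb, hybc, hyba⟩ := quad_form hyy hy4 hcy hby hxac (by rwa [← ha])
    have hybe : y b = e := by
      rw [hS'] at hey
      simp only [Finset.mem_insert, Finset.mem_singleton] at hey
      rcases hey with h | h | h | h
      · exact absurd (h ▸ (by rw [hc]; rwa [apply_mem_support]) : e ∈ x.support) hex
      · rw [← ha] at h; exact absurd (h ▸ hax) hex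
      · exact absurd (h ▸ hbx) hex
      · exact h.symm
    have hye : y e = b := by rw [← hybe, hyy]
    have hz1 : (x * y) a = d := by rw [Perm.mul_apply, hya, hxc]
    have hz2 : (x * y) d = c := by rw [Perm.mul_apply, hyd, ← hc]
    have hz3 : (x * y) c = b := by rw [Perm.mul_apply, ← ha, ← hb]
    have hz4 : (x * y) b = e := by rw [Perm.mul_apply, hybe, hxe]
    have hz5 : (x * y) e = a := by rw [Perm.mul_apply, hye, hxb]
    have hz : ∀ p, (x * y) p ≠ p → p = a ∨ p = d ∨ p = c ∨ p = b ∨ p = e := by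
      intro p hp
      by_cases hpx : p ∈ x.support
      · rw [hS] at hpx
        simp only [Finset.mem_insert, Finset.mem_singleton] at hpx
        tauto
      · by_cases hpy : p ∈ y.support
        · exact Or.inr (Or.inr (Or.inr (Or.inr (he' _ hpy hpx))))
        · exact absurd (by rw [Perm.mul_apply, notMem_support.1 hpy, notMem_support.1 hpx]) hp
    have hde : d ≠ e := fun h => hex (h ▸ hdx)
    have hae : a ≠ e := fun h => hex (h ▸ hax)
    have hbe : b ≠ e := fun h => hex (h ▸ hbx)
    have hcx : c ∈ x.support := by rw [hc]; rwa [apply_mem_support]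
    have hce' : c ≠ e := fun h => hex (h ▸ hcx)
    refine h5 (x * y) (H.mul_mem hx hy) ⟨a, by rw [hz1]; exact hcd.symm, fun p hp => ?_⟩ ?_
    · rcases hz p hp with rfl | rfl | rfl | rfl | rfl
      · exact ⟨0, rfl⟩
      · exact ⟨1, by rw [zpow_one, hz1]⟩
      · refine ⟨2, ?_⟩
        rw [zpow_ofNat, pow_succ', pow_one, Perm.mul_apply, hz1, hz2]
      · refine ⟨3, ?_⟩
        rw [zpow_ofNat, pow_succ', pow_succ', pow_one, Perm.mul_apply (x * y), Perm.mul_apply (x * y), hz1, hz2, hz3]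
      · refine ⟨-1, ?_⟩
        rw [zpow_neg_one, inv_eq_iff_eq, hz5]
    · have : (x * y).support = {a, d, c, b, e} := by
        ext p
        simp only [mem_support, Finset.mem_insert, Finset.mem_singleton]
        constructor
        · exact hz p
        · rintro (rfl | rfl | rfl | rfl | rfl)
          · rw [hz1]; exact hcd.symm
          · rw [hz2]; exact hxd
          · rw [hz3]; exact hxac
          · rw [hz4]; exact hbe.symm
          · rw [hz5]; exact hae
      rw [this, Finset.card_insert_of_notMem, Finset.card_insert_of_notMem,
        Finset.card_insert_of_notMem, Finset.card_insert_of_notMem, Finset.card_singleton]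
      · simpa using hbe
      · simpa using ⟨hxac.symm, hce'⟩
      · simpa using ⟨Ne.symm hxd, hxad.symm, hde⟩
      · simpa using ⟨hcd, hyc, Ne.symm hxa, hae⟩

theorem IsQuad.card_inter {H : Subgroup (Perm α)} (h3 : NoThree H) (h5 : NoFive H)
    {S S' : Finset α} (h : IsQuad H S) (h' : IsQuad H S') :
    (S ∩ S').card = 0 ∨ (S ∩ S').card = 2 ∨ (S ∩ S').card = 4 := by
  have h1 := h.card_inter_ne_one h3 h'
  have h2 := h.card_inter_ne_three h3 h5 h'
  have h4 := Finset.card_le_card (Finset.inter_subset_left (s₁ := S) (s₂ := S'))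
  rw [h.card] at h4
  omega

theorem IsQuad.symmDiff {H : Subgroup (Perm α)}
    {S S' : Finset α} (h : IsQuad H S) (h' : IsQuad H S') (hc : (S ∩ S').card = 2) :
    IsQuad H (S \ S' ∪ S' \ S) := by
  have hcard : (S \ S' ∪ S' \ S).card = 4 := by
    have e1 := Finset.card_sdiff_add_card_inter S S'
    have e2 := Finset.card_sdiff_add_card_inter S' S
    rw [Finset.inter_comm] at e2
    rw [Finset.card_union_of_disjoint, ]
    · have := h.card; have := h'.card; omega
    · exact Finset.disjoint_left.2 fun p h1 h2 =>
        (Finset.mem_sdiff.1 h1).2 (Finset.mem_sdiff.1 h2).1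
  -- if `y` moves the common points off `S`, the symmetric difference is the image of `S`
  have key : ∀ {S S' : Finset α}, IsQuad H S → (S \ S' ∪ S' \ S).card = 4 → ∀ y ∈ H,
      y.support = S' → (∀ p ∈ S ∩ S', y p ∉ S) → IsQuad H (S \ S' ∪ S' \ S) := by
    intro S S' h hc y hy hyS hp
    have : S.image y = S \ S' ∪ S' \ S := by
      apply Finset.eq_of_subset_of_card_le
      · intro q hq
        obtain ⟨p, hpS, rfl⟩ := Finset.mem_image.1 hq
        by_cases hpS' : p ∈ S'
        · refine Finset.mem_union_right _ (Finset.mem_sdiff.2 ⟨?_, hp p (Finset.mem_inter.2 ⟨hpS, hpS'⟩)⟩)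
          rw [← hyS] at hpS' ⊢
          rwa [apply_mem_support]
        · have : y p = p := by rw [← hyS] at hpS'; exact notMem_support.1 hpS'
          rw [this]
          exact Finset.mem_union_left _ (Finset.mem_sdiff.2 ⟨hpS, hpS'⟩)
      · rw [hc, Finset.card_image_of_injective _ y.injective, h.card]
    rw [← this]
    exact h.image hy
  obtain ⟨x, hx, hxx, hxS, hx4⟩ := id h
  obtain ⟨y, hy, hyy, hyS, hy4⟩ := id h'
  obtain ⟨a, b, hab, hI⟩ := Finset.card_eq_two.1 hc
  have hm : ∀ p, p ∈ S → p ∈ S' → p = a ∨ p = b := fun p h1 h2 => by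
    have := Finset.mem_inter.2 ⟨h1, h2⟩
    rw [hI] at this; simpa using this
  obtain ⟨haS, haS'⟩ := Finset.mem_inter.1 (show a ∈ S ∩ S' by rw [hI]; simp)
  obtain ⟨hbS, hbS'⟩ := Finset.mem_inter.1 (show b ∈ S ∩ S' by rw [hI]; simp)
  have mx : ∀ p, p ∈ S ↔ x p ≠ p := fun p => by rw [← hxS, mem_support]
  have my : ∀ p, p ∈ S' ↔ y p ≠ p := fun p => by rw [← hyS, mem_support]
  have sx : ∀ p, x p ∈ S ↔ p ∈ S := fun p => by rw [← hxS, apply_mem_support]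
  have sy : ∀ p, y p ∈ S' ↔ p ∈ S' := fun p => by rw [← hyS, apply_mem_support]
  by_cases hya : y a ∈ S
  · have hyb : y a = b := (hm _ hya ((sy a).2 haS')).resolve_left ((my a).1 haS')
    have hyb' : y b = a := by rw [← hyb, hyy]
    by_cases hxa : x a ∈ S'
    · have hxb : x a = b := (hm _ ((sx a).2 haS) hxa).resolve_left ((mx a).1 haS)
      have hxb' : x b = a := by rw [← hxb, hxx]
      have hx' : ∀ p ∈ S, p ∉ S' → x p ∈ S ∧ x p ∉ S' := fun p h1 h2 => by
        refine ⟨(sx p).2 h1, fun h3 => ?_⟩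
        rcases hm _ ((sx p).2 h1) h3 with h | h
        · rw [← hxb'] at h; exact h2 (x.injective h ▸ hbS')
        · rw [← hxb] at h; exact h2 (x.injective h ▸ haS')
      have hy' : ∀ p ∈ S', p ∉ S → y p ∈ S' ∧ y p ∉ S := fun p h1 h2 => by
        refine ⟨(sy p).2 h1, fun h3 => ?_⟩
        rcases hm _ h3 ((sy p).2 h1) with h | h
        · rw [← hyb'] at h; exact h2 (y.injective h ▸ hbS)
        · rw [← hyb] at h; exact h2 (y.injective h ▸ haS)
      have fx : ∀ p, p ∉ S → x p = p := fun p hp => by simpa [mx] using hp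
      have fy : ∀ p, p ∉ S' → y p = p := fun p hp => by simpa [my] using hp
      have hxy : ∀ p, (x * y) p = if p ∈ S then (if p ∈ S' then p else x p) else y p := by
        intro p
        rw [Perm.mul_apply]
        split_ifs with h1 h2
        · rcases hm p h1 h2 with rfl | rfl
          · rw [hyb, hxb']
          · rw [hyb', hxb]
        · rw [fy p h2]
        · by_cases h2 : p ∈ S'
          · rw [fx _ (hy' p h2 h1).2]
          · rw [fy p h2, fx p h1]
      refine ⟨x * y, H.mul_mem hx hy, fun p => ?_, ?_, hcard⟩
      · by_cases h1 : p ∈ S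
        · by_cases h2 : p ∈ S'
          · have e : (x * y) p = p := by rw [hxy]; simp [h1, h2]
            rw [e, e]
          · have e : (x * y) p = x p := by rw [hxy]; simp [h1, h2]
            rw [e, hxy]; simp [hx' p h1 h2, hxx]
        · have e : (x * y) p = y p := by rw [hxy]; simp [h1]
          rw [e, hxy]
          by_cases h2 : p ∈ S'
          · simp [hy' p h2 h1, hyy]
          · rw [fy p h2]; simp [h1, fy p h2]
      · ext p
        rw [mem_support, hxy]
        simp only [Finset.mem_union, Finset.mem_sdiff]
        by_cases h1 : p ∈ S <;> by_cases h2 : p ∈ S' <;> simp [h1, h2]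
        · exact (mx p).1 h1
        · exact (my p).1 h2
        · exact fy p h2
    · rw [Finset.union_comm]
      refine key h' (by rwa [Finset.union_comm]) x hx hxS fun p hp => ?_
      obtain ⟨h2, h1⟩ := Finset.mem_inter.1 hp
      rcases hm p h1 h2 with rfl | rfl
      · exact hxa
      · intro h
        rcases hm _ ((sx _).2 h1) h with h4 | h4
        · exact hxa (by rw [← h4, hxx]; exact hbS')
        · exact (mx _).1 h1 h4
  · refine key h hcard y hy hyS fun p hp => ?_
    obtain ⟨h1, h2⟩ := Finset.mem_inter.1 hp
    rcases hm p h1 h2 with rfl | rfl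
    · exact hya
    · intro h
      rcases hm _ h ((sy _).2 h2) with h4 | h4
      · exact hya (by rw [← h4, hyy]; exact hbS)
      · exact (my _).1 h2 h4

/-! ### Three double transpositions and the Fano plane -/

theorem prim_equiv {H : Subgroup (Perm α)} (hH : MulAction.IsPreprimitive H α)
    {r : α → α → Prop} (hr : Equivalence r) (hinv : ∀ x ∈ H, ∀ a b, r a b → r (x a) (x b)) :
    (∀ a b, r a b → a = b) ∨ ∀ a b, r a b := by
  have hinv' : ∀ x ∈ H, ∀ a b, r (x a) (x b) → r a b := fun x hx a b h => by
    have := hinv _ (H.inv_mem hx) _ _ h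
    rwa [inv_ap, inv_ap] at this
  have hb : ∀ a, MulAction.IsBlock H {b | r a b} := by
    intro a
    rw [MulAction.isBlock_iff_smul_eq_of_nonempty]
    rintro ⟨g, hg⟩ ⟨b, hb1, hb2⟩
    obtain ⟨c, hc, rfl⟩ := hb1
    have hga : r a (g a) := hr.trans (show r a (g c) from hb2) (hr.symm (hinv g hg _ _ hc))
    ext d
    constructor
    · rintro ⟨e, he, rfl⟩
      exact hr.trans hga (hinv g hg _ _ he)
    · intro hd
      refine ⟨g⁻¹ d, ?_, ap_inv g d⟩
      apply hinv' g hg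
      rw [ap_inv]
      exact hr.trans (hr.symm hga) hd
  by_cases h : ∃ a, {b | r a b} = Set.univ
  · right
    obtain ⟨a, ha⟩ := h
    have h1 : ∀ b, r a b := fun b => (Set.ext_iff.1 ha b).2 trivial
    exact fun b c => hr.trans (hr.symm (h1 b)) (h1 c)
  · left
    intro a b hab
    rcases hH.isTrivialBlock_of_isBlock (hb a) with h2 | h2
    · exact h2 (hr.refl a) hab
    · exact absurd ⟨a, h2⟩ h

theorem exists_crossing {H : Subgroup (Perm α)} (hH : MulAction.IsPreprimitive H α)
    {S₀ : Finset α} (h₀ : IsQuad H S₀) {W : Finset α} (hW : W.Nonempty)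
    (hW' : W.card < Fintype.card α) : ∃ S, IsQuad H S ∧ (∃ a ∈ S, a ∈ W) ∧ ∃ b ∈ S, b ∉ W := by
  let s : α → α → Prop := fun a b => ∃ S, IsQuad H S ∧ a ∈ S ∧ b ∈ S
  have hs : ∀ x ∈ H, ∀ a b, s a b → s (x a) (x b) := by
    rintro x hx a b ⟨S, hS, ha, hb⟩
    exact ⟨_, hS.image hx, Finset.mem_image_of_mem _ ha, Finset.mem_image_of_mem _ hb⟩
  have hr : Equivalence (Relation.EqvGen s) := Relation.EqvGen.is_equivalence s
  rcases prim_equiv hH hr (fun x hx a b h => by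
    induction h with
    | rel a b h => exact .rel _ _ (hs x hx _ _ h)
    | refl a => exact .refl _
    | symm a b _ ih => exact .symm _ _ ih
    | trans a b c _ _ ih1 ih2 => exact .trans _ _ _ ih1 ih2) with h | h
  · obtain ⟨a, b, ha, hb, hab⟩ := Finset.one_lt_card_iff.1 (by rw [h₀.card]; norm_num)
    exact absurd (h a b (.rel _ _ ⟨S₀, h₀, ha, hb⟩)) hab
  · by_contra hcon
    push Not at hcon
    have key : ∀ a b, Relation.EqvGen s a b → (a ∈ W ↔ b ∈ W) := by
      intro a b h
      induction h with
      | rel a b h =>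
        obtain ⟨S, hS, ha, hb⟩ := h
        exact ⟨fun h' => hcon S hS ⟨a, ha, h'⟩ b hb, fun h' => hcon S hS ⟨b, hb, h'⟩ a ha⟩
      | refl a => exact Iff.rfl
      | symm a b _ ih => exact ih.symm
      | trans a b c _ _ ih1 ih2 => exact ih1.trans ih2
    obtain ⟨a, ha⟩ := hW
    have : W = Finset.univ := Finset.eq_univ_of_forall fun b => (key a b (h a b)).1 ha
    rw [this, Finset.card_univ] at hW'
    exact lt_irrefl _ hW'

/-- Indicator of a set at a point. -/
def ind (V : Finset α) (p : α) : ℕ := if p ∈ V then 1 else 0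

theorem ind_le (V : Finset α) (p : α) : ind V p ≤ 1 := by unfold ind; split_ifs <;> simp

theorem card_inter_eq (V S : Finset α) : (V ∩ S).card = ∑ p ∈ S, ind V p := by
  simp only [ind, Finset.sum_boole, Finset.inter_comm V, Finset.filter_mem_eq_inter, Nat.cast_id]

theorem sum_four {a b c d : α} (h : ({a, b, c, d} : Finset α).card = 4) (f : α → ℕ) :
    ∑ p ∈ {a, b, c, d}, f p = f a + f b + f c + f d ∧
    a ≠ b ∧ a ≠ c ∧ a ≠ d ∧ b ≠ c ∧ b ≠ d ∧ c ≠ d := by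
  have h1 : a ≠ b := by rintro rfl; have := Finset.card_le_three (a := a) (b := c) (c := d); simp at h; omega
  have h2 : a ≠ c := by
    rintro rfl
    rw [Finset.insert_eq_of_mem (by simp)] at h
    have := Finset.card_le_three (a := b) (b := a) (c := d); omega
  have h3 : a ≠ d := by
    rintro rfl
    rw [Finset.insert_eq_of_mem (by simp)] at h
    have := Finset.card_le_three (a := b) (b := c) (c := a); omega
  have h0 := Finset.card_insert_le a {b, c, d}
  have h4 : b ≠ c := by
    rintro rfl
    rw [Finset.insert_eq_of_mem (by simp : b ∈ ({b, d} : Finset α))] at h0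
    have := Finset.card_le_two (a := b) (b := d)
    rw [Finset.insert_eq_of_mem (by simp : b ∈ ({b, d} : Finset α))] at h
    omega
  have h5 : b ≠ d := by
    rintro rfl
    rw [h, Finset.insert_eq_of_mem (by simp : b ∈ ({c, b} : Finset α))] at h0
    have := Finset.card_le_two (a := c) (b := b)
    omega
  have h6 : c ≠ d := by
    rintro rfl
    have := Finset.card_le_two (a := b) (b := c)
    rw [h, Finset.pair_eq_singleton] at h0; omega
  refine ⟨?_, h1, h2, h3, h4, h5, h6⟩
  rw [Finset.sum_insert (by simp [*]), Finset.sum_insert (by simp [*]),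
    Finset.sum_insert (by simp [*]), Finset.sum_singleton]
  ring

/-! ### Primitive groups of degree at least nine contain no double transposition -/

theorem ind_of_mem {V : Finset α} {p : α} (h : p ∈ V) : ind V p = 1 := if_pos h
theorem ind_of_notMem {V : Finset α} {p : α} (h : p ∉ V) : ind V p = 0 := if_neg h

set_option maxHeartbeats 1600000 in
theorem exists_three_quads {H : Subgroup (Perm α)} (hH : MulAction.IsPreprimitive H α)
    (h3 : NoThree H) (h5 : NoFive H) (h8 : 5 ≤ Fintype.card α) {S₀ : Finset α}
    (h₀ : IsQuad H S₀) : ∃ a b c d e f g : α, ({a, b, c, d, e, f, g} : Finset α).card = 7 ∧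
      IsQuad H {a, b, c, d} ∧ IsQuad H {a, b, e, f} ∧ IsQuad H {a, c, e, g} := by
  obtain ⟨S', hS', ⟨p, hp1, hp2⟩, q, hq1, hq2⟩ := exists_crossing hH h₀ (W := S₀)
    (Finset.card_pos.1 (by rw [h₀.card]; norm_num)) (by rw [h₀.card]; omega)
  have hc := h₀.card_inter h3 h5 hS'
  have hc0 : (S₀ ∩ S').card ≠ 0 :=
    (Finset.card_pos.2 ⟨p, Finset.mem_inter.2 ⟨hp2, hp1⟩⟩).ne'
  have hc4 : (S₀ ∩ S').card ≠ 4 := by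
    intro h
    have h1 : S₀ ∩ S' = S' := Finset.eq_of_subset_of_card_le Finset.inter_subset_right
      (by rw [h, hS'.card])
    rw [← h1] at hq1
    exact hq2 (Finset.mem_inter.1 hq1).1
  have hc2 : (S₀ ∩ S').card = 2 := by omega
  obtain ⟨a, b, hab, hab2⟩ := Finset.card_eq_two.1 hc2
  -- some quad separates the two common points, by primitivity
  obtain ⟨R, hR, hR1⟩ : ∃ R, IsQuad H R ∧ (R ∩ (S₀ ∩ S')).card = 1 := by
    by_contra hcon
    push Not at hcon
    have hE : Equivalence (fun x y : α => ∀ R, IsQuad H R → (x ∈ R ↔ y ∈ R)) :=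
      ⟨fun _ _ _ => Iff.rfl, fun h R hR => (h R hR).symm,
        fun h h' R hR => (h R hR).trans (h' R hR)⟩
    rcases prim_equiv hH hE (fun x hx u v huv R hR => by
      have := huv _ (hR.image (H.inv_mem hx))
      have hm : ∀ w, w ∈ R.image (x⁻¹ : Perm α) ↔ x w ∈ R := by
        intro w
        rw [Finset.mem_image]
        constructor
        · rintro ⟨z, hz, rfl⟩; rwa [ap_inv]
        · intro hz; exact ⟨_, hz, inv_ap x w⟩
      rwa [hm, hm] at this) with h | h
    · apply hab
      apply h
      intro R hR
      have h1 := hcon R hR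
      rw [hab2] at h1
      by_contra h2
      apply h1
      by_cases ha : a ∈ R
      · have hb : b ∉ R := fun hb => h2 ⟨fun _ => hb, fun _ => ha⟩
        have : R ∩ {a, b} = {a} := by
          ext z; simp only [Finset.mem_inter, Finset.mem_insert, Finset.mem_singleton]
          grind
        rw [this, Finset.card_singleton]
      · have hb : b ∈ R := by tauto
        have : R ∩ {a, b} = {b} := by
          ext z; simp only [Finset.mem_inter, Finset.mem_insert, Finset.mem_singleton]
          grind
        rw [this, Finset.card_singleton]
    · exact hq2 ((h p q S₀ h₀).1 hp2)
  have cS := h₀.card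
  have cS' := hS'.card
  have cR := hR.card
  have i1 := h₀.card_inter h3 h5 hR
  have i2 := hS'.card_inter h3 h5 hR
  have e1 := Finset.card_inter_add_card_sdiff (S₀ ∩ S') R
  have e2 := Finset.card_inter_add_card_sdiff (S₀ \ S') R
  have e3 := Finset.card_inter_add_card_sdiff (S' \ S₀) R
  have e4 := Finset.card_inter_add_card_sdiff S₀ S'
  have e5 := Finset.card_inter_add_card_sdiff S' S₀
  have e6 := Finset.card_inter_add_card_sdiff (S₀ ∩ R) S'
  have e7 := Finset.card_inter_add_card_sdiff (S' ∩ R) S₀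
  have e8 := Finset.card_inter_add_card_sdiff R S₀
  have e9 := Finset.card_inter_add_card_sdiff (R \ S₀) S'
  have r1 : S₀ ∩ R ∩ S' = S₀ ∩ S' ∩ R := by grind
  have r2 : S' ∩ R ∩ S₀ = S₀ ∩ S' ∩ R := by grind
  have r3 : S' ∩ S₀ = S₀ ∩ S' := by grind
  have r4 : R ∩ (S₀ ∩ S') = S₀ ∩ S' ∩ R := by grind
  have r5 : (S₀ ∩ R) \ S' = (S₀ \ S') ∩ R := by grind
  have r6 : (S' ∩ R) \ S₀ = (S' \ S₀) ∩ R := by grind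
  have r7 : (R \ S₀) ∩ S' = (S' \ S₀) ∩ R := by grind
  have r8 : R ∩ S₀ = S₀ ∩ R := by grind
  rw [r1] at e6
  rw [r2] at e7
  rw [r3] at e5
  rw [r4] at hR1
  rw [r5] at e6
  rw [r6] at e7
  rw [r7] at e9
  rw [r8] at e8
  have aux : ∀ {x1 x2 x3 x4 x5 x6 x7 x8 x9 x10 x11 x12 x13 k1 k2 k3 : ℕ}, x2 + x3 = x1 →
      x4 + x5 = x6 → x7 + x8 = x9 → x1 + x6 = k1 → x1 + x9 = k2 → x2 + x4 = x10 →
      x2 + x7 = x11 → x10 + x12 = k3 → x7 + x13 = x12 → k1 = 4 → k2 = 4 → k3 = 4 → x1 = 2 →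
      x2 = 1 → (x10 = 0 ∨ x10 = 2 ∨ x10 = 4) → (x11 = 0 ∨ x11 = 2 ∨ x11 = 4) →
      x3 = 1 ∧ x4 = 1 ∧ x5 = 1 ∧ x7 = 1 ∧ x8 = 1 ∧ x13 = 1 := by omega
  obtain ⟨y1, y2, y3, y4, y5, y6⟩ := aux e1 e2 e3 e4 e5 e6 e7 e8 e9 cS cS' cR hc2 hR1 i1 i2
  obtain ⟨a, ha⟩ := Finset.card_eq_one.1 hR1
  obtain ⟨b, hb⟩ := Finset.card_eq_one.1 y1
  obtain ⟨c, hc⟩ := Finset.card_eq_one.1 y2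
  obtain ⟨d, hd⟩ := Finset.card_eq_one.1 y3
  obtain ⟨e, he⟩ := Finset.card_eq_one.1 y4
  obtain ⟨f, hf⟩ := Finset.card_eq_one.1 y5
  obtain ⟨g, hg⟩ := Finset.card_eq_one.1 y6
  clear aux y1 y2 y3 y4 y5 y6 e1 e2 e3 e4 e5 e6 e7 e8 e9 r1 r2 r3 r4 r5 r6 r7 r8 i1 i2
    hc2 hc0 hc4 hab2 hR1
  simp only [Finset.ext_iff, Finset.mem_inter, Finset.mem_sdiff, Finset.mem_singleton] at ha hb hc hd he hf hg
  have q1 : S₀ = {a, b, c, d} := by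
    ext z; simp only [Finset.mem_insert, Finset.mem_singleton, ← ha, ← hb, ← hc, ← hd]; tauto
  have q2 : S' = {a, b, e, f} := by
    ext z; simp only [Finset.mem_insert, Finset.mem_singleton, ← ha, ← hb, ← he, ← hf]; tauto
  have q3 : R = {a, c, e, g} := by
    ext z; simp only [Finset.mem_insert, Finset.mem_singleton, ← ha, ← hc, ← he, ← hg]; tauto
  refine ⟨a, b, c, d, e, f, g, ?_, q1 ▸ h₀, q2 ▸ hS', q3 ▸ hR⟩
  have ha' := (ha a).2 rfl
  have hb' := (hb b).2 rfl
  have hc' := (hc c).2 rfl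
  have hd' := (hd d).2 rfl
  have he' := (he e).2 rfl
  have hf' := (hf f).2 rfl
  have hg' := (hg g).2 rfl
  have n1 : a ∉ ({b, c, d, e, f, g} : Finset α) := by
    simp only [Finset.mem_insert, Finset.mem_singleton]; grind
  have n2 : b ∉ ({c, d, e, f, g} : Finset α) := by
    simp only [Finset.mem_insert, Finset.mem_singleton]; grind
  have n3 : c ∉ ({d, e, f, g} : Finset α) := by
    simp only [Finset.mem_insert, Finset.mem_singleton]; grind
  have n4 : d ∉ ({e, f, g} : Finset α) := by
    simp only [Finset.mem_insert, Finset.mem_singleton]; grind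
  have n5 : e ∉ ({f, g} : Finset α) := by
    simp only [Finset.mem_insert, Finset.mem_singleton]; grind
  have n6 : f ≠ g := by grind
  rw [Finset.card_insert_of_notMem n1, Finset.card_insert_of_notMem n2,
    Finset.card_insert_of_notMem n3, Finset.card_insert_of_notMem n4,
    Finset.card_insert_of_notMem n5, Finset.card_pair n6]

theorem sum_insert_ind {W : Finset α} {p : α} (hp : p ∉ W) (V : Finset α) :
    (V ∩ insert p W).card = ind V p + (V ∩ W).card := by
  rw [card_inter_eq, card_inter_eq, Finset.sum_insert hp]

theorem sum_seven {a b c d e f g : α} (h : ({a, b, c, d, e, f, g} : Finset α).card = 7) :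
    a ∉ ({b, c, d, e, f, g} : Finset α) ∧ b ∉ ({c, d, e, f, g} : Finset α) ∧
    c ∉ ({d, e, f, g} : Finset α) ∧ d ∉ ({e, f, g} : Finset α) ∧ e ∉ ({f, g} : Finset α) ∧
    f ≠ g := by
  have k1 := Finset.card_le_six (a := b) (b := c) (c := d) (d := e) (e := f) (f := g)
  have k2 := Finset.card_le_five (a := c) (b := d) (c := e) (d := f) (e := g)
  have k3 := Finset.card_le_four (a := d) (b := e) (c := f) (d := g)
  have k4 := Finset.card_le_three (a := e) (b := f) (c := g)
  have k5 := Finset.card_le_two (a := f) (b := g)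
  have l1 := Finset.card_insert_le a {b, c, d, e, f, g}
  have l2 := Finset.card_insert_le b {c, d, e, f, g}
  have l3 := Finset.card_insert_le c {d, e, f, g}
  have l4 := Finset.card_insert_le d {e, f, g}
  have l5 := Finset.card_insert_le e {f, g}
  refine ⟨fun hm => ?_, fun hm => ?_, fun hm => ?_, fun hm => ?_, fun hm => ?_, ?_⟩
  · rw [Finset.insert_eq_of_mem hm] at h; omega
  · rw [Finset.insert_eq_of_mem hm] at l2 l1; rw [Finset.insert_eq_of_mem hm] at h; omega
  · rw [Finset.insert_eq_of_mem hm] at l3 l2 l1; rw [Finset.insert_eq_of_mem hm] at h; omega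
  · rw [Finset.insert_eq_of_mem hm] at l4 l3 l2 l1; rw [Finset.insert_eq_of_mem hm] at h; omega
  · rw [Finset.insert_eq_of_mem hm] at l5 l4 l3 l2 l1; rw [Finset.insert_eq_of_mem hm] at h; omega
  · intro hm
    subst hm
    rw [Finset.pair_eq_singleton] at l5 l4 l3 l2 l1 h
    rw [Finset.card_singleton] at l5
    omega

/-- If the lines dual to `abcd`, `abef`, `aceg` are met evenly by a set of at most three of the seven
points, that set is a line. -/
theorem fano_weight {a b c d e f g : ℕ} (b1 : a ≤ 1) (b2 : b ≤ 1) (b3 : c ≤ 1) (b4 : d ≤ 1)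
    (b5 : e ≤ 1) (b6 : f ≤ 1) (b7 : g ≤ 1) (h1 : (a + b + c + d) % 2 = 0)
    (h2 : (a + b + e + f) % 2 = 0) (h3 : (a + c + e + g) % 2 = 0)
    (h4 : 1 ≤ a + b + c + d + e + f + g) (h5 : a + b + c + d + e + f + g ≤ 3) :
    a + b + c + d + e + f + g = 3 := by
  interval_cases a <;> interval_cases b <;> interval_cases c <;> interval_cases e <;> omega

set_option maxHeartbeats 1600000 in
/-- The parity conditions with three double transpositions leave only few possibilities for a support
leaving their seven points and for another one leaving the resulting eight; these two then meet in an
odd number of points. -/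
theorem no_quad {H : Subgroup (Perm α)} (hH : MulAction.IsPreprimitive H α)
    (h3 : NoThree H) (h5 : NoFive H) (h9 : 9 ≤ Fintype.card α) (S₀ : Finset α) :
    ¬ IsQuad H S₀ := by
  intro h₀
  obtain ⟨a, b, c, d, e, f, g, h7, hS, hS', hR⟩ := exists_three_quads hH h3 h5 (by omega) h₀
  obtain ⟨n1, n2, n3, n4, n5, n6⟩ := sum_seven h7
  have main : ∀ V : Finset α, IsQuad H V →
      (V ∩ {a, b, c, d, e, f, g}).card = ind V a + ind V b + ind V c + ind V d + ind V e
        + ind V f + ind V g ∧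
      (ind V a + ind V b + ind V c + ind V d) % 2 = 0 ∧
      (ind V a + ind V b + ind V e + ind V f) % 2 = 0 ∧
      (ind V a + ind V c + ind V e + ind V g) % 2 = 0 := by
    intro V hV
    refine ⟨?_, ?_, ?_, ?_⟩
    · rw [sum_insert_ind n1, sum_insert_ind n2, sum_insert_ind n3, sum_insert_ind n4,
        sum_insert_ind n5, sum_insert_ind (by simpa using n6), card_inter_eq, Finset.sum_singleton]
      ring
    · have := hV.card_inter h3 h5 hS
      rw [card_inter_eq, (sum_four hS.card _).1] at this; omega
    · have := hV.card_inter h3 h5 hS'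
      rw [card_inter_eq, (sum_four hS'.card _).1] at this; omega
    · have := hV.card_inter h3 h5 hR
      rw [card_inter_eq, (sum_four hR.card _).1] at this; omega
  have step : ∀ W : Finset α, W.Nonempty → W.card < Fintype.card α → ∃ V, IsQuad H V ∧
      1 ≤ (V ∩ W).card ∧ (V ∩ W).card ≤ 3 ∧ ∃ h ∈ V, h ∉ W := by
    intro W hW hW'
    obtain ⟨V, hV, ⟨p, hp1, hp2⟩, q, hq1, hq2⟩ := exists_crossing hH h₀ hW hW'
    refine ⟨V, hV, Finset.card_pos.2 ⟨p, Finset.mem_inter.2 ⟨hp1, hp2⟩⟩, ?_, q, hq1, hq2⟩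
    have : (V ∩ W).card < V.card := Finset.card_lt_card
      ⟨Finset.inter_subset_left, fun hs => hq2 (Finset.mem_inter.1 (hs hq1)).2⟩
    rw [hV.card] at this
    omega
  obtain ⟨V, hV, hV1, hV2, h, hh, hhW⟩ := step {a, b, c, d, e, f, g} ⟨a, by simp⟩ (by omega)
  obtain ⟨V', hV', hV1', hV2', -⟩ := step (insert h {a, b, c, d, e, f, g}) ⟨h, by simp⟩
    (by rw [Finset.card_insert_of_notMem hhW]; omega)
  obtain ⟨m0, m1, m2, m3⟩ := main V hV
  obtain ⟨m0', m1', m2', m3'⟩ := main V' hV'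
  rw [sum_insert_ind hhW] at hV1' hV2'
  rw [m0'] at hV1' hV2'
  rw [m0] at hV1 hV2
  have hi := ind_of_mem hh
  -- `V` has no further points
  have hV4 : V ⊆ insert h {a, b, c, d, e, f, g} := by
    have h1 : (V ∩ insert h {a, b, c, d, e, f, g}).card = V.card := by
      rw [sum_insert_ind hhW, hi, m0, hV.card, fano_weight (ind_le V a) (ind_le V b) (ind_le V c)
        (ind_le V d) (ind_le V e) (ind_le V f) (ind_le V g) m1 m2 m3 hV1 hV2]
    rw [← Finset.eq_of_subset_of_card_le Finset.inter_subset_left h1.ge]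
    exact Finset.inter_subset_right
  have hVV := hV'.card_inter h3 h5 hV
  have hVs : (V' ∩ V).card = ∑ p ∈ insert h {a, b, c, d, e, f, g}, ind V' p * ind V p := by
    rw [card_inter_eq]
    rw [← Finset.sum_subset hV4 (fun x _ hx => by rw [ind_of_notMem hx, mul_zero])]
    exact Finset.sum_congr rfl fun x hx => by rw [ind_of_mem hx, mul_one]
  rw [Finset.sum_insert hhW, Finset.sum_insert n1, Finset.sum_insert n2, Finset.sum_insert n3,
    Finset.sum_insert n4, Finset.sum_insert n5, Finset.sum_insert (by simpa using n6),
    Finset.sum_singleton] at hVs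
  rw [hVs, hi] at hVV
  clear hVs
  have b1 := ind_le V a; have b2 := ind_le V b; have b3 := ind_le V c; have b4 := ind_le V d
  have b5 := ind_le V e; have b6 := ind_le V f; have b7 := ind_le V g
  have c1 := ind_le V' a; have c2 := ind_le V' b; have c3 := ind_le V' c; have c4 := ind_le V' d
  have c5 := ind_le V' e; have c6 := ind_le V' f; have c7 := ind_le V' g; have c8 := ind_le V' h
  clear m0 m0'
  generalize ind V a = va at *
  generalize ind V b = vb at *
  generalize ind V c = vc at *
  generalize ind V d = vd at *
  generalize ind V e = ve at *
  generalize ind V f = vf at *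
  generalize ind V g = vg at *
  generalize ind V' a = wa at *
  generalize ind V' b = wb at *
  generalize ind V' c = wc at *
  generalize ind V' d = wd at *
  generalize ind V' e = we at *
  generalize ind V' f = wf at *
  generalize ind V' g = wg at *
  generalize ind V' h = wh at *
  clear hV4 main step hh hhW hi hV hV' hS hS' hR n1 n2 n3 n4 n5 n6 h7 h₀ hH h3 h5
  interval_cases va <;> interval_cases vb <;> interval_cases vc <;> try omega
  all_goals interval_cases ve <;> interval_cases vd <;> interval_cases vf <;> interval_cases vg <;> try omega
  all_goals
    interval_cases wa <;> interval_cases wb <;> interval_cases wc <;> interval_cases we <;> omega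

/-! ### Tame groups -/

/-- The restrictions on elements of small support that hold in a proper primitive subgroup of the
alternating group of degree at least nine. -/
structure Tame (H : Subgroup (Perm α)) : Prop where
  le : H ≤ alternatingGroup α
  three : NoThree H
  quad : ∀ S, ¬ IsQuad H S
  five : NoFive H
  seven : 10 ≤ Fintype.card α → ∀ x ∈ H, x.IsCycle → x.support.card ≠ 7

theorem noThree_of_prim {H : Subgroup (Perm α)} (hp : Prp H)
    (hH : MulAction.IsPreprimitive H α) : NoThree H := fun _ hx h3 =>
  hp.2 (le_antisymm hp.1 (alternatingGroup_le_of_isPreprimitive_of_isThreeCycle_mem hH h3 hx))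

theorem noFive_of_prim (h8 : 8 ≤ Fintype.card α) {H : Subgroup (Perm α)} (hp : Prp H)
    (hH : MulAction.IsPreprimitive H α) : NoFive H := by
  intro x hx hc h5
  obtain ⟨z, hz, h3⟩ := exists_three_of_cycle hH hx hc (by rw [h5]; norm_num) (by omega) (by omega)
  exact noThree_of_prim hp hH z hz h3

theorem tame_of_prim (h9 : 9 ≤ Fintype.card α) {H : Subgroup (Perm α)} (hp : Prp H)
    (hH : MulAction.IsPreprimitive H α) : Tame H where
  le := hp.1
  three := noThree_of_prim hp hH
  five := noFive_of_prim (by omega) hp hH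
  quad := no_quad hH (noThree_of_prim hp hH) (noFive_of_prim (by omega) hp hH) h9
  seven := by
    intro h10 x hx hc h7
    obtain ⟨z, hz, h3⟩ := exists_three_of_cycle hH hx hc (by rw [h7]; norm_num) (by omega) (by omega)
    exact noThree_of_prim hp hH z hz h3

theorem card_support_conj' (x g : Perm α) : (g⁻¹ * x * g).support.card = x.support.card := by
  have : (g⁻¹ * x * g⁻¹⁻¹).support.card = x.support.card := card_support_conj
  rwa [inv_inv] at this

theorem isCycle_conj' {x : Perm α} (g : Perm α) (h : x.IsCycle) : (g⁻¹ * x * g).IsCycle := by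
  have := h.conj (g := g⁻¹)
  rwa [inv_inv] at this

theorem Tame.conj {H : Subgroup (Perm α)} (h : Tame H) {g : Perm α} (hg : g ∈ alternatingGroup α) :
    Tame (conjSub g H) where
  le := by
    intro x hx
    rw [mem_conjSub] at hx
    have h1 := mul_mem (mul_mem hg (h.le hx)) (inv_mem hg)
    have : g * (g⁻¹ * x * g) * g⁻¹ = x := by group
    rwa [this] at h1
  three := h.three.conj g
  five := by
    intro x hx hc h5
    rw [mem_conjSub] at hx
    exact h.five _ hx (isCycle_conj' g hc) (by rw [card_support_conj', h5])
  seven := by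
    intro h10 x hx hc h5
    rw [mem_conjSub] at hx
    exact h.seven h10 _ hx (isCycle_conj' g hc) (by rw [card_support_conj', h5])
  quad := by
    rintro S ⟨x, hx, h1, h2, h4⟩
    rw [mem_conjSub] at hx
    refine h.quad _ ⟨_, hx, fun a => ?_, rfl, by rw [card_support_conj', h2, h4]⟩
    rw [Perm.mul_apply, Perm.mul_apply, Perm.mul_apply, Perm.mul_apply, ap_inv, h1, inv_ap]

/-- The cycle type of a permutation of prime order. -/
theorem prime_cycleType {x : Perm α} {p : ℕ} (hp : p.Prime) (hx : x ≠ 1) (hxp : x ^ p = 1) :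
    ∃ k, x.cycleType = Multiset.replicate (k + 1) p ∧ x.support.card = (k + 1) * p := by
  have ho : orderOf x = p := by
    rcases (Nat.dvd_prime hp).1 (orderOf_dvd_of_pow_eq_one hxp) with h | h
    · exact absurd (orderOf_eq_one_iff.1 h) hx
    · exact h
  obtain ⟨k, hk⟩ := cycleType_prime_order (σ := x) (by rwa [ho])
  rw [ho] at hk
  refine ⟨k, hk, ?_⟩
  rw [← sum_cycleType, hk, Multiset.sum_replicate, smul_eq_mul]

theorem sign_of_replicate {x : Perm α} {k p : ℕ} (h : x.cycleType = Multiset.replicate k p) :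
    Perm.sign x = (-1) ^ (k * p + k) := by
  rw [sign_of_cycleType, h, Multiset.sum_replicate, Multiset.card_replicate, smul_eq_mul]

theorem Tame.prime_small {H : Subgroup (Perm α)} (h : Tame H) {x : Perm α} (hx : x ∈ H)
    (hx1 : x ≠ 1) {p : ℕ} (hp : p.Prime) (hxp : x ^ p = 1)
    (hs : x.support.card ≤ 6 ∨ (x.support.card ≤ 7 ∧ 10 ≤ Fintype.card α)) :
    p = 3 ∧ x.support.card = 6 := by
  obtain ⟨k, hk, hc⟩ := prime_cycleType hp hx1 hxp
  have hs7 : x.support.card ≤ 7 := by omega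
  have hsg : Perm.sign x = 1 := h.le hx
  have hcyc : k = 0 → x.IsCycle := by
    rintro rfl
    rw [← card_cycleType_eq_one, hk]; simp
  have hp2 := hp.two_le
  have hp7 : p ≤ 7 := by nlinarith
  interval_cases p
  · exfalso
    have hk4 : k + 1 ≤ 3 := by omega
    rw [sign_of_replicate hk] at hsg
    have hk1 : k = 1 := by
      have : k ≤ 2 := by omega
      interval_cases k
      · exact absurd hsg (by decide)
      · rfl
      · exact absurd hsg (by decide)
    subst hk1
    refine h.quad _ ⟨x, hx, fun a => ?_, rfl, hc⟩
    rw [← Perm.mul_apply, ← pow_two, hxp, Perm.one_apply]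
  · refine ⟨rfl, ?_⟩
    have : k ≤ 1 := by omega
    interval_cases k
    · exact absurd (card_support_eq_three_iff.1 hc) (h.three x hx)
    · exact hc
  · exact absurd hp (by decide)
  · exfalso
    have : k = 0 := by omega
    subst this
    exact h.five x hx (hcyc rfl) hc
  · exact absurd hp (by decide)
  · exfalso
    have : k = 0 := by omega
    subst this
    exact h.seven (by omega) x hx (hcyc rfl) hc

theorem support_subset_of_fixOff {x : Perm α} {U : Finset α} (h : x ∈ fixOff U) : x.support ⊆ U := by
  intro a ha
  by_contra hU
  exact mem_support.1 ha (h a hU)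

theorem fixOff_mono {U V : Finset α} (h : U ⊆ V) : fixOff U ≤ fixOff V :=
  fun _ hx a ha => hx a fun h' => ha (h h')

theorem ne_bot_iff' (K : Subgroup (Perm α)) :
    K ≠ ⊥ ↔ ∃ x ∈ K, x ≠ 1 := Subgroup.ne_bot_iff_exists_ne_one.trans
  ⟨fun ⟨x, hx⟩ => ⟨x, x.2, fun h => hx (Subtype.ext h)⟩,
    fun ⟨x, hx, h⟩ => ⟨⟨x, hx⟩, fun h' => h (congrArg Subtype.val h')⟩⟩

theorem exists_prime_elt {J : Subgroup (Perm α)} {p : ℕ} (hp : p.Prime) (h : p ∣ Nat.card J) :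
    ∃ x ∈ J, x ≠ 1 ∧ x ^ p = 1 := by
  haveI := Fact.mk hp
  obtain ⟨x, hx⟩ := exists_prime_orderOf_dvd_card' p h
  refine ⟨x, x.2, ?_, ?_⟩
  · intro h1
    rw [show x = 1 from Subtype.ext h1, orderOf_one] at hx
    exact hp.one_lt.ne hx
  · have := pow_orderOf_eq_one x
    rw [hx] at this
    exact_mod_cast congrArg Subtype.val this

theorem exists_prime_elt_of_ne_bot {J : Subgroup (Perm α)} (h : J ≠ ⊥) :
    ∃ p, p.Prime ∧ ∃ x ∈ J, x ≠ 1 ∧ x ^ p = 1 := by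
  obtain ⟨p, hp, hd⟩ := Nat.exists_prime_and_dvd (n := Nat.card J)
    (fun h1 => h (Subgroup.card_eq_one.1 h1))
  exact ⟨p, hp, exists_prime_elt hp hd⟩

theorem Tame.isPGroup {H J : Subgroup (Perm α)} (h : Tame H) (hJ : J ≤ H) {U : Finset α}
    (hU : J ≤ fixOff U) (hc : U.card ≤ 6 ∨ (U.card ≤ 7 ∧ 10 ≤ Fintype.card α)) :
    IsPGroup 3 J := by
  haveI : Fact (Nat.Prime 3) := ⟨Nat.prime_three⟩
  rw [IsPGroup.iff_card]
  refine ⟨(Nat.card J).primeFactorsList.length, Nat.eq_prime_pow_of_unique_prime_dvd Nat.card_pos.ne' ?_⟩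
  intro p hp hd
  obtain ⟨x, hx, hx1, hxp⟩ := exists_prime_elt hp hd
  have := Finset.card_le_card (support_subset_of_fixOff (hU hx))
  exact (h.prime_small (hJ hx) hx1 hp hxp (by omega)).1

/-- An element of a tame group supported on six points moves all of them. -/
theorem Tame.semiregular {H : Subgroup (Perm α)} (h : Tame H) {U : Finset α} (hc : U.card ≤ 6)
    {x : Perm α} (hx : x ∈ H) (hU : x ∈ fixOff U) {t : α} (ht : t ∈ U) (hxt : x t = t) : x = 1 := by
  have hJ : H ⊓ fixOff (U.erase t) = ⊥ := by
    by_contra hne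
    obtain ⟨p, hp, y, hy, hy1, hyp⟩ := exists_prime_elt_of_ne_bot hne
    have h1 := Finset.card_le_card (support_subset_of_fixOff (Subgroup.mem_inf.1 hy).2)
    rw [Finset.card_erase_of_mem ht] at h1
    have h2 := (h.prime_small (Subgroup.mem_inf.1 hy).1 hy1 hp hyp (by omega)).2
    omega
  have : x ∈ H ⊓ fixOff (U.erase t) := Subgroup.mem_inf.2 ⟨hx, fun a ha => by
    by_cases hat : a = t
    · rw [hat, hxt]
    · exact hU a fun haU => ha (Finset.mem_erase.2 ⟨hat, haU⟩)⟩
  rwa [hJ, Subgroup.mem_bot] at this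

theorem fixOff_apply_mem {U : Finset α} {x : Perm α} (hx : x ∈ fixOff U) {t : α} (ht : t ∈ U) :
    x t ∈ U := by
  by_contra hn
  have := x.injective (hx _ hn)
  rw [this] at hn
  exact hn ht

theorem Tame.card_le_three {H : Subgroup (Perm α)} (h : Tame H) {U : Finset α} (hc : U.card = 6) :
    Nat.card (H ⊓ fixOff U : Subgroup _) ≤ 3 := by
  haveI : Fact (Nat.Prime 3) := ⟨Nat.prime_three⟩
  obtain ⟨k, hk⟩ := IsPGroup.iff_card.1
    (h.isPGroup (J := H ⊓ fixOff U) inf_le_left inf_le_right (by omega))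
  obtain ⟨t, ht⟩ := Finset.card_pos.1 (by omega : 0 < U.card)
  have h6 : Nat.card (H ⊓ fixOff U : Subgroup _) ≤ 6 := by
    rw [← hc, ← Fintype.card_coe, ← Nat.card_eq_fintype_card]
    refine Nat.card_le_card_of_injective
      (fun x => (⟨x.1 t, fixOff_apply_mem (Subgroup.mem_inf.1 x.2).2 ht⟩ : U)) ?_
    intro x y hxy
    have hxy' : x.1 t = y.1 t := congrArg Subtype.val hxy
    have hm := (H ⊓ fixOff U).mul_mem ((H ⊓ fixOff U).inv_mem y.2) x.2
    have := h.semiregular hc.le (Subgroup.mem_inf.1 hm).1 (Subgroup.mem_inf.1 hm).2 ht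
      (by rw [Perm.mul_apply, hxy', inv_ap])
    exact Subtype.ext (inv_mul_eq_one.1 this).symm
  rw [hk] at h6 ⊢
  have : k < 2 := by
    by_contra hk2
    have := Nat.pow_le_pow_right (show 0 < 3 by norm_num) (not_lt.1 hk2)
    omega
  interval_cases k <;> norm_num

/-- Two six-point sets that share five points cannot both support nontrivial elements. -/
theorem Tame.overlap {H : Subgroup (Perm α)} (h : Tame H) (h10 : 10 ≤ Fintype.card α)
    {S : Finset α} (hS : S.card = 5) {a b : α} (ha : a ∉ S) (hb : b ∉ S) (hab : a ≠ b)
    (h1 : H ⊓ fixOff (insert a S) ≠ ⊥) (h2 : H ⊓ fixOff (insert b S) ≠ ⊥) : False := by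
  haveI : Fact (Nat.Prime 3) := ⟨Nat.prime_three⟩
  have hb' : b ∉ insert a S := by simp [hab.symm, hb]
  have hU7 : (insert b (insert a S)).card = 7 := by
    rw [Finset.card_insert_of_notMem hb', Finset.card_insert_of_notMem ha, hS]
  obtain ⟨U, hU⟩ : ∃ U, U = insert b (insert a S) := ⟨_, rfl⟩
  rw [← hU] at hU7
  have s1 : insert a S ⊆ U := by rw [hU]; exact Finset.subset_insert _ _
  have s2 : insert b S ⊆ U := by rw [hU, Finset.insert_comm]; exact Finset.subset_insert _ _
  have hJ := h.isPGroup (J := H ⊓ fixOff U) inf_le_left inf_le_right (by omega)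
  have hfix := hJ.card_modEq_card_fixedPoints α
  obtain ⟨x, hx, hx1⟩ := (ne_bot_iff' _).1 h1
  obtain ⟨y, hy, hy1⟩ := (ne_bot_iff' _).1 h2
  rw [Subgroup.mem_inf] at hx hy
  have hfp : MulAction.fixedPoints (H ⊓ fixOff U : Subgroup _) α = ((Uᶜ : Finset α) : Set α) := by
    ext p
    rw [MulAction.mem_fixedPoints, Finset.mem_coe, Finset.mem_compl]
    constructor
    · intro hp hpU
      have hxp : x p = p := hp ⟨x, Subgroup.mem_inf.2 ⟨hx.1, fixOff_mono s1 hx.2⟩⟩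
      have hyp : y p = p := hp ⟨y, Subgroup.mem_inf.2 ⟨hy.1, fixOff_mono s2 hy.2⟩⟩
      have : p ∈ insert a S ∨ p ∈ insert b S := by
        rw [hU] at hpU; simp only [Finset.mem_insert] at hpU ⊢; tauto
      rcases this with h' | h'
      · exact hx1 (h.semiregular (by rw [Finset.card_insert_of_notMem ha, hS]) hx.1 hx.2 h' hxp)
      · exact hy1 (h.semiregular (by rw [Finset.card_insert_of_notMem hb, hS]) hy.1 hy.2 h' hyp)
    · intro hp g
      exact (Subgroup.mem_inf.1 g.2).2 p hp
  rw [hfp] at hfix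
  simp only [Nat.card_eq_fintype_card, Fintype.card_coe, SetLike.coe_sort_coe,
    Finset.card_compl, hU7] at hfix
  have := Nat.ModEq.dvd hfix
  omega

/-! ### Expected number of elements in a family of small permutations -/

/-- `Beta H β` bounds by `β` the expected number of elements of a conjugate of `H` in a family of
conjugates of `x` whose quotients are supported on six points. -/
def Beta (H : Subgroup (Perm α)) (β : ℚ) : Prop :=
  ∀ (x : Perm α) (T : Finset α) (Y : Finset (Perm α)), T.card = 6 → Y.Nonempty →
    (∀ y ∈ Y, phi H y = phi H x) → (∀ y ∈ Y, ∀ y' ∈ Y, y⁻¹ * y' ∈ fixOff T) →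
    phi H x ≤ β / Y.card

open Classical in
theorem hits_le {K : Subgroup (Perm α)} {T : Finset α} {Y : Finset (Perm α)}
    (hY : ∀ y ∈ Y, ∀ y' ∈ Y, y⁻¹ * y' ∈ fixOff T) :
    (Finset.univ.filter (fun i : Y => (i : Perm α) ∈ K)).card ≤
      Nat.card (K ⊓ fixOff T : Subgroup _) := by
  classical
  rcases (Finset.univ.filter (fun i : Y => (i : Perm α) ∈ K)).eq_empty_or_nonempty with h | ⟨y, hy⟩
  · rw [h, Finset.card_empty]; exact Nat.zero_le _
  · have hyK := (Finset.mem_filter.1 hy).2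
    rw [← Fintype.card_coe, ← Nat.card_eq_fintype_card]
    refine Nat.card_le_card_of_injective (fun z => ⟨(y : Perm α)⁻¹ * (z.1 : Perm α), ?_⟩) ?_
    · exact Subgroup.mem_inf.2 ⟨K.mul_mem (K.inv_mem hyK) (Finset.mem_filter.1 z.2).2,
        hY _ y.2 _ z.1.2⟩
    · intro z z' hzz
      have h1 := congrArg Subtype.val hzz
      exact Subtype.ext (Subtype.ext (mul_left_cancel h1))

theorem Tame.beta_three {H : Subgroup (Perm α)} (h : Tame H) : Beta H 3 := by
  intro x T Y hT hYn hphi hq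
  haveI : Nonempty Y := hYn.to_subtype
  have := phi_le_of_family_const H x (fun i : Y => (i : Perm α)) (fun i => hphi _ i.2) 3
    (fun g hg => (hits_le hq).trans ((h.conj hg).card_le_three hT))
  rwa [Fintype.card_coe] at this

/-- The even permutations `g` for which `H^g` has a nontrivial element supported on `T`. -/
noncomputable def badSet (H : Subgroup (Perm α)) (T : Finset α) : Finset (Perm α) := by
  classical
  exact Finset.univ.filter fun g => g ∈ alternatingGroup α ∧ conjSub g H ⊓ fixOff T ≠ ⊥

theorem mem_badSet {H : Subgroup (Perm α)} {T : Finset α} {g : Perm α} :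
    g ∈ badSet H T ↔ g ∈ alternatingGroup α ∧ conjSub g H ⊓ fixOff T ≠ ⊥ := by
  simp [badSet]

theorem card_badSet_le (h8 : 8 ≤ Fintype.card α) (H : Subgroup (Perm α)) {T T' : Finset α}
    (hT : T.card = 6) (hT' : T'.card = 6) : (badSet H T).card ≤ (badSet H T').card := by
  obtain ⟨c, hc, hcT⟩ := exists_even_perm_map (k := 6) (by omega)
    (f := fun i => ((T.equivFinOfCardEq hT).symm i : α))
    (g := fun i => ((T'.equivFinOfCardEq hT').symm i : α))
    (Subtype.val_injective.comp (Equiv.injective _)) (Subtype.val_injective.comp (Equiv.injective _))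
  have hmem : ∀ a ∈ T, c a ∈ T' := by
    intro a ha
    have := hcT (T.equivFinOfCardEq hT ⟨a, ha⟩)
    simp only [Equiv.symm_apply_apply] at this
    rw [this]; exact Subtype.prop _
  refine Finset.card_le_card_of_injOn (fun g => c * g) ?_ (fun _ _ _ _ h => mul_left_cancel h)
  intro g hg
  rw [Finset.mem_coe, mem_badSet] at hg ⊢
  refine ⟨mul_mem hc hg.1, ?_⟩
  obtain ⟨x, hx, hx1⟩ := (ne_bot_iff' _).1 hg.2
  rw [Subgroup.mem_inf, mem_conjSub] at hx
  refine (ne_bot_iff' _).2 ⟨c * x * c⁻¹, Subgroup.mem_inf.2 ⟨?_, ?_⟩, fun h => hx1 ?_⟩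
  · rw [mem_conjSub]
    have : (c * g)⁻¹ * (c * x * c⁻¹) * (c * g) = g⁻¹ * x * g := by group
    rw [this]; exact hx.1
  · intro a ha
    rw [Perm.mul_apply, Perm.mul_apply, hx.2 _ (fun h' => ha (by simpa [ap_inv] using hmem _ h')), ap_inv]
  · rwa [conj_eq_one_iff] at h

open Classical in
theorem Tame.card_badSet {H : Subgroup (Perm α)} (h : Tame H) (h10 : 10 ≤ Fintype.card α)
    {T : Finset α} (hT : T.card = 6) :
    (Fintype.card α - 5) * (badSet H T).card ≤
      (Finset.univ.filter (fun g : Perm α => g ∈ alternatingGroup α)).card := by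
  classical
  obtain ⟨S, hST, hS⟩ := Finset.exists_subset_card_eq (s := T) (n := 5) (by omega)
  have h1 : (Fintype.card α - 5) * (badSet H T).card ≤ ∑ s ∈ Sᶜ, (badSet H (insert s S)).card := by
    rw [← hS, ← Finset.card_compl, ← smul_eq_mul]
    refine Finset.card_nsmul_le_sum _ _ _ fun s hs => ?_
    exact card_badSet_le (by omega) H hT
      (by rw [Finset.card_insert_of_notMem (Finset.mem_compl.1 hs), hS])
  refine h1.trans ?_
  simp only [badSet, Finset.card_filter]
  rw [Finset.sum_comm]
  refine Finset.sum_le_sum fun g _ => ?_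
  by_cases hg : g ∈ alternatingGroup α
  · simp only [hg, true_and, if_true]
    rw [← Finset.card_filter, Finset.card_le_one]
    intro a ha b hb
    rw [Finset.mem_filter, Finset.mem_compl] at ha hb
    by_contra hab
    exact (h.conj hg).overlap h10 hS ha.1 hb.1 hab ha.2 hb.2
  · simp [hg]

theorem Tame.beta_ten {H : Subgroup (Perm α)} (h : Tame H) (h10 : 10 ≤ Fintype.card α) :
    Beta H (1 + 2 / ((Fintype.card α : ℚ) - 5)) := by
  classical
  intro x T Y hT hYn hphi hq
  haveI : Nonempty Y := hYn.to_subtype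
  have hYp : (0 : ℚ) < Y.card := by exact_mod_cast hYn.card_pos
  refine phi_le_of_family H x (fun i : Y => (i : Perm α)) (fun i => hphi _ i.2)
    (fun g => 1 + if g ∈ badSet H T then 2 else 0) _ ?_ ?_
  · intro g hg
    have hh := hits_le (K := conjSub g H) hq
    split_ifs with hb
    · have : (Finset.univ.filter (fun i : Y => (i : Perm α) ∈ conjSub g H)).card ≤ 3 :=
        hh.trans ((h.conj hg).card_le_three hT)
      norm_num; exact_mod_cast this
    · have hbot : conjSub g H ⊓ fixOff T = ⊥ := by
        by_contra hne; exact hb (mem_badSet.2 ⟨hg, hne⟩)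
      rw [hbot, Subgroup.card_bot] at hh
      norm_num; exact_mod_cast hh
  · rw [Finset.sum_add_distrib, Finset.sum_const, nsmul_eq_mul, mul_one, ← Finset.sum_filter,
      Finset.sum_const, nsmul_eq_mul, Fintype.card_coe]
    have hsub : (Finset.univ.filter (fun g : Perm α => g ∈ alternatingGroup α)).filter
        (fun g => g ∈ badSet H T) = badSet H T := by
      ext g; simp only [Finset.mem_filter, Finset.mem_univ, true_and, mem_badSet]; tauto
    rw [hsub]
    have hb := h.card_badSet h10 hT
    have hb' : ((Fintype.card α : ℚ) - 5) * (badSet H T).card ≤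
        (Finset.univ.filter (fun g : Perm α => g ∈ alternatingGroup α)).card := by
      have : ((Fintype.card α - 5 : ℕ) : ℚ) = (Fintype.card α : ℚ) - 5 := by
        rw [Nat.cast_sub (by omega)]; norm_num
      rw [← this]; exact_mod_cast hb
    have hn5 : (0 : ℚ) < (Fintype.card α : ℚ) - 5 := by
      have : (10 : ℚ) ≤ Fintype.card α := by exact_mod_cast h10
      linarith
    rw [div_mul_cancel₀ _ hYp.ne', add_mul, one_mul, div_mul_eq_mul_div]
    have : ((badSet H T).card : ℚ) * 2 ≤ 2 * ((Finset.univ.filter (fun g : Perm α => g ∈ alternatingGroup α)).card : ℚ) / ((Fintype.card α : ℚ) - 5) := by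
      rw [le_div_iff₀ hn5]; nlinarith
    linarith

/-! ### Conjugates of elements of odd prime order -/

theorem phi_eq_zero {H : Subgroup (Perm α)} {x : Perm α}
    (h : ∀ g ∈ alternatingGroup α, x ∉ conjSub g H) : phi H x = 0 := by
  classical
  rw [phi, Finset.filter_false_of_mem (fun g _ hg => h g hg.1 hg.2)]; simp

theorem phi_conj_of_odd (H : Subgroup (Perm α)) {x s : Perm α} (hs : s ∉ alternatingGroup α)
    (hsx : s * x = x * s) (c : Perm α) : phi H (c * x * c⁻¹) = phi H x := by
  by_cases hc : c ∈ alternatingGroup α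
  · exact phi_conj H x hc
  · have h1 : c * s ∈ alternatingGroup α := by
      rw [mem_alternatingGroup] at *
      rw [Perm.sign_mul, (Int.units_eq_one_or _).resolve_left hs, (Int.units_eq_one_or _).resolve_left hc]
      rfl
    rw [← phi_conj H x h1]
    congr 1
    rw [mul_assoc c s x, hsx]; group

/-- Conjugating `x` by permutations of a set `C` that contains no full cycle of `x`. -/
theorem Beta.of_subgroup {H : Subgroup (Perm α)} {β : ℚ} (hβ : Beta H β) {x : Perm α}
    {C T : Finset α} (hT : T.card = 6) (hCT : ∀ a ∈ C, a ∈ T ∧ x⁻¹ a ∈ T)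
    (hC : ∀ a ∈ C, ∃ k : ℕ, ∃ b, b ∉ C ∧ (x ^ k) b = a) (G : Subgroup (Perm C))
    (hG : ∀ u ∈ G, phi H (ofSubtype u * x * (ofSubtype u)⁻¹) = phi H x) :
    phi H x ≤ β / Nat.card G := by
  classical
  have hfix : ∀ (u : Perm C) a, a ∉ C → ofSubtype u a = a := fun u a ha =>
    ofSubtype_apply_of_not_mem u ha
  have hinj : Function.Injective (fun u : G => ofSubtype (u : Perm C) * x * (ofSubtype (u : Perm C))⁻¹) := by
    intro u v huv
    have hd : ofSubtype ((v : Perm C)⁻¹ * (u : Perm C)) * x = x * ofSubtype ((v : Perm C)⁻¹ * (u : Perm C)) := by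
      simp only at huv
      rw [map_mul, map_inv]
      calc _ = (ofSubtype (v : Perm C))⁻¹ * (ofSubtype (u : Perm C) * x * (ofSubtype (u : Perm C))⁻¹) * ofSubtype (u : Perm C) := by group
        _ = _ := by rw [huv]; group
    have h1 : ofSubtype ((v : Perm C)⁻¹ * (u : Perm C)) = 1 := by
      ext a
      by_cases ha : a ∈ C
      · obtain ⟨k, b, hb, rfl⟩ := hC a ha
        have hk : Commute (ofSubtype ((v : Perm C)⁻¹ * (u : Perm C))) (x ^ k) :=
          Commute.pow_right hd k
        rw [← Perm.mul_apply, hk.eq, Perm.mul_apply, hfix _ _ hb]; rfl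
      · rw [hfix _ _ ha]; rfl
    have h2 : (v : Perm C)⁻¹ * (u : Perm C) = 1 := ofSubtype_injective (h1.trans (map_one _).symm)
    exact Subtype.ext (inv_mul_eq_one.1 h2).symm
  have hcard : (Finset.univ.image (fun u : G => ofSubtype (u : Perm C) * x * (ofSubtype (u : Perm C))⁻¹)).card = Nat.card G := by
    rw [Finset.card_image_of_injective _ hinj, Finset.card_univ, Nat.card_eq_fintype_card]
  rw [← hcard]
  refine hβ x T _ hT (Finset.univ_nonempty.image _) ?_ ?_
  · intro y hy
    obtain ⟨u, -, rfl⟩ := Finset.mem_image.1 hy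
    exact hG _ u.2
  · intro y hy y' hy'
    obtain ⟨u, -, rfl⟩ := Finset.mem_image.1 hy
    obtain ⟨v, -, rfl⟩ := Finset.mem_image.1 hy'
    have hkey : ∀ w : Perm C, ∀ a, a ∉ T → ofSubtype w a = a := fun w a ha =>
      hfix w a fun h => ha (hCT a h).1
    have hkey2 : ∀ w : Perm C, ∀ a, a ∉ T → ofSubtype w (x a) = x a := fun w a ha =>
      hfix w _ fun h => ha (by have := (hCT _ h).2; rwa [inv_ap] at this)
    intro a ha
    have e : (ofSubtype (u : Perm C) * x * (ofSubtype (u : Perm C))⁻¹)⁻¹ *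
        (ofSubtype (v : Perm C) * x * (ofSubtype (v : Perm C))⁻¹) =
        ofSubtype (u : Perm C) * x⁻¹ * ofSubtype ((u : Perm C)⁻¹ * (v : Perm C)) * x *
          ofSubtype ((v : Perm C)⁻¹) := by
      rw [map_mul, map_inv, map_inv]; group
    rw [e, Perm.mul_apply, hkey _ _ ha, Perm.mul_apply, Perm.mul_apply, hkey2 _ _ ha,
      Perm.mul_apply, inv_ap, hkey _ _ ha]

theorem pow_fix_of_prime {x : Perm α} {p : ℕ} (hp : p.Prime) (hxp : x ^ p = 1) {j : ℕ} {a : α}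
    (hj : ¬ p ∣ j) (h : (x ^ j) a = a) : x a = a := by
  have h1 : Function.IsPeriodicPt x j a := by
    rw [Function.IsPeriodicPt, Function.IsFixedPt, iterate_eq_pow]; exact h
  have h2 : Function.IsPeriodicPt x p a := by
    rw [Function.IsPeriodicPt, Function.IsFixedPt, iterate_eq_pow, hxp]; rfl
  have h3 := h2.gcd h1
  rw [(Nat.Prime.coprime_iff_not_dvd hp).2 hj] at h3
  exact h3

theorem pow_injOn {x : Perm α} {p : ℕ} (hp : p.Prime) (hxp : x ^ p = 1) {a : α} (ha : x a ≠ a)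
    {i j : ℕ} (hi : i < p) (hj : j < p) (h : (x ^ i) a = (x ^ j) a) : i = j := by
  have key : ∀ i j : ℕ, i < j → j < p → (x ^ i) a = (x ^ j) a → False := by
    intro i j hij hj h
    refine ha (pow_fix_of_prime hp hxp (j := j - i)
      (fun hd => absurd (Nat.le_of_dvd (by omega) hd) (by omega)) ?_)
    have : x ^ j = x ^ i * x ^ (j - i) := by rw [← pow_add]; congr 1; omega
    rw [this, Perm.mul_apply] at h
    exact ((x ^ i).injective h).symm
  rcases lt_trichotomy i j with h' | h' | h'
  · exact (key i j h' hj h).elim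
  · exact h'
  · exact (key j i h' hi h.symm).elim

/-- A cycle of prime length at least seven. -/
theorem Beta.one_cycle {H : Subgroup (Perm α)} {β : ℚ} (hβ : Beta H β) {x : Perm α} {p : ℕ}
    (hp : p.Prime) (hxp : x ^ p = 1) (h7 : 7 ≤ p) {a : α} (ha : x a ≠ a) :
    phi H x ≤ β / 60 := by
  classical
  have inj : ∀ S : Finset ℕ, (∀ i ∈ S, i < p) → (S.image (fun i => (x ^ i) a)).card = S.card :=
    fun S hS => Finset.card_image_of_injOn fun i hi j hj h =>
      pow_injOn hp hxp ha (hS i hi) (hS j hj) h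
  have hC5 : ((Finset.Icc 1 5).image (fun i => (x ^ i) a)).card = 5 :=
    inj _ (fun i hi => by have := Finset.mem_Icc.1 hi; omega)
  obtain ⟨C, hCd⟩ : ∃ C, C = (Finset.Icc 1 5).image (fun i => (x ^ i) a) := ⟨_, rfl⟩
  rw [← hCd] at hC5
  have h60 : Nat.card (alternatingGroup C) = 60 := by
    haveI : Nontrivial C := Fintype.one_lt_card_iff_nontrivial.1 (by rw [Fintype.card_coe]; omega)
    have := two_mul_nat_card_alternatingGroup (α := C)
    rw [Nat.card_perm, Nat.card_eq_fintype_card (α := C), Fintype.card_coe, hC5] at this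
    simp only [Nat.factorial] at this
    omega
  have := hβ.of_subgroup (x := x) (C := C) (T := (Finset.range 6).image (fun i => (x ^ i) a))
    (inj _ (fun i hi => by have := Finset.mem_range.1 hi; omega)) ?_ ?_ (alternatingGroup C) ?_
  · rw [h60] at this; exact_mod_cast this
  · intro b hb
    rw [hCd] at hb
    obtain ⟨i, hi, rfl⟩ := Finset.mem_image.1 hb
    rw [Finset.mem_Icc] at hi
    refine ⟨Finset.mem_image.2 ⟨i, Finset.mem_range.2 (by omega), rfl⟩,
      Finset.mem_image.2 ⟨i - 1, Finset.mem_range.2 (by omega), ?_⟩⟩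
    obtain ⟨j, rfl⟩ : ∃ j, i = j + 1 := ⟨i - 1, by omega⟩
    rw [pow_succ', Perm.mul_apply, inv_ap, Nat.add_sub_cancel]
  · intro b hb
    rw [hCd] at hb
    obtain ⟨i, hi, rfl⟩ := Finset.mem_image.1 hb
    refine ⟨i, a, ?_, rfl⟩
    rw [hCd]
    intro hm
    obtain ⟨j, hj, h⟩ := Finset.mem_image.1 hm
    rw [Finset.mem_Icc] at hj
    have := pow_injOn hp hxp ha (i := j) (j := 0) (by omega) (by omega) (by simpa using h)
    omega
  · intro u hu
    refine phi_conj H x ?_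
    rw [mem_alternatingGroup, sign_ofSubtype]
    exact hu

/-- Two cycles of the same odd prime length. -/
theorem Beta.two_cycles {H : Subgroup (Perm α)} {β : ℚ} (hβ : Beta H β) {x : Perm α} {p : ℕ}
    (hp : p.Prime) (hxp : x ^ p = 1) (h3 : 3 ≤ p) {s : Perm α} (hs : s ∉ alternatingGroup α)
    (hsx : s * x = x * s) {a z : α} (ha : x a ≠ a) (hz : x z ≠ z) (haz : ∀ i : ℕ, (x ^ i) a ≠ z) :
    phi H x ≤ β / 24 := by
  classical
  have haz' : ∀ i j : ℕ, i ≤ p → (x ^ i) z ≠ (x ^ j) a := by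
    intro i j hi h
    refine haz (p - i + j) ?_
    rw [pow_add, Perm.mul_apply, ← h, ← Perm.mul_apply, ← pow_add, Nat.sub_add_cancel hi, hxp,
      Perm.one_apply]
  have inj : ∀ S : Finset ℕ, (∀ i ∈ S, i < p) → (S.image (fun i => (x ^ i) a) ∪
      S.image (fun i => (x ^ i) z)).card = 2 * S.card := by
    intro S hS
    rw [Finset.card_union_of_disjoint, Finset.card_image_of_injOn, Finset.card_image_of_injOn]
    · ring
    · exact fun i hi j hj h => pow_injOn hp hxp hz (hS i hi) (hS j hj) h
    · exact fun i hi j hj h => pow_injOn hp hxp ha (hS i hi) (hS j hj) h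
    · rw [Finset.disjoint_left]
      intro b hb hb'
      obtain ⟨i, hi, rfl⟩ := Finset.mem_image.1 hb
      obtain ⟨j, hj, h⟩ := Finset.mem_image.1 hb'
      exact haz' j i (hS j hj).le h
  have hC4 := inj (Finset.Icc 1 2) (fun i hi => by have := Finset.mem_Icc.1 hi; omega)
  have hT6 := inj (Finset.range 3) (fun i hi => by have := Finset.mem_range.1 hi; omega)
  obtain ⟨C, hCd⟩ : ∃ C, C = (Finset.Icc 1 2).image (fun i => (x ^ i) a) ∪
      (Finset.Icc 1 2).image (fun i => (x ^ i) z) := ⟨_, rfl⟩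
  rw [← hCd] at hC4
  have h24 : Nat.card (⊤ : Subgroup (Perm C)) = 24 := by
    rw [Subgroup.card_top, Nat.card_perm, Nat.card_eq_fintype_card (α := C), Fintype.card_coe, hC4]
    rfl
  have hCm : ∀ b, b ∈ C ↔ ∃ i, 1 ≤ i ∧ i ≤ 2 ∧ ((x ^ i) a = b ∨ (x ^ i) z = b) := by
    intro b
    simp only [hCd, Finset.mem_union, Finset.mem_image, Finset.mem_Icc]
    constructor
    · rintro (⟨i, ⟨h1, h2⟩, h⟩ | ⟨i, ⟨h1, h2⟩, h⟩)
      · exact ⟨i, h1, h2, Or.inl h⟩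
      · exact ⟨i, h1, h2, Or.inr h⟩
    · rintro ⟨i, h1, h2, h | h⟩
      · exact Or.inl ⟨i, ⟨h1, h2⟩, h⟩
      · exact Or.inr ⟨i, ⟨h1, h2⟩, h⟩
  have := hβ.of_subgroup (x := x) (C := C) hT6 ?_ ?_ ⊤ (fun u _ => phi_conj_of_odd H hs hsx _)
  · rw [h24] at this; exact_mod_cast this
  · intro b hb
    obtain ⟨i, h1, h2, h⟩ := (hCm b).1 hb
    obtain ⟨j, rfl⟩ : ∃ j, i = j + 1 := ⟨i - 1, by omega⟩
    simp only [Finset.mem_union, Finset.mem_image, Finset.mem_range]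
    rcases h with rfl | rfl
    · refine ⟨Or.inl ⟨j + 1, by omega, rfl⟩, Or.inl ⟨j, by omega, ?_⟩⟩
      rw [pow_succ', Perm.mul_apply, inv_ap]
    · refine ⟨Or.inr ⟨j + 1, by omega, rfl⟩, Or.inr ⟨j, by omega, ?_⟩⟩
      rw [pow_succ', Perm.mul_apply, inv_ap]
  · intro b hb
    obtain ⟨i, h1, h2, h⟩ := (hCm b).1 hb
    rcases h with rfl | rfl
    · refine ⟨i, a, fun hm => ?_, rfl⟩
      obtain ⟨j, j1, j2, h | h⟩ := (hCm a).1 hm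
      · have := pow_injOn hp hxp ha (i := j) (j := 0) (by omega) (by omega) (by simpa using h)
        omega
      · exact haz' j 0 (by omega) (by simpa using h)
    · refine ⟨i, z, fun hm => ?_, rfl⟩
      obtain ⟨j, j1, j2, h | h⟩ := (hCm z).1 hm
      · exact haz j h
      · have := pow_injOn hp hxp hz (i := j) (j := 0) (by omega) (by omega) (by simpa using h)
        omega

/-! ### Conjugates of involutions, and the bound for tame groups -/

/-- The fixed-point-free involution `(01)(23)(45)`. -/
def invo : Perm (Fin 6) := swap 0 1 * swap 2 3 * swap 4 5

/-- Representatives conjugating `invo` to each of the fifteen perfect matchings of six points. -/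
def mover (p : Fin 5 × Fin 3) : Perm (Fin 6) :=
  swap 1 ⟨p.1 + 1, by omega⟩ * swap 3 ⟨p.2 + 3, by omega⟩

theorem mover_injective : ∀ p q : Fin 5 × Fin 3,
    (∀ k, (mover p * invo * (mover p)⁻¹) k = (mover q * invo * (mover q)⁻¹) k) → p = q := by
  decide +kernel

theorem Beta.involution {H : Subgroup (Perm α)} {β : ℚ} (hβ : Beta H β) {x : Perm α}
    (f : Fin 6 ↪ α) (hf : ∀ k, x (f k) = f (invo k)) (hx : ∀ a, x (x a) = a) :
    phi H x ≤ β / 15 := by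
  classical
  have hxi : x⁻¹ = x := by ext a; rw [inv_eq_iff_eq, hx]
  let c : Fin 5 × Fin 3 → Perm α := fun p => (mover p).viaFintypeEmbedding f
  have hc1 : ∀ p k, c p (f k) = f (mover p k) := fun p k => viaFintypeEmbedding_apply_image _ _ _
  have hc1' : ∀ p k, (c p)⁻¹ (f k) = f ((mover p)⁻¹ k) := by
    intro p k
    rw [inv_eq_iff_eq, hc1, ap_inv]
  have hc2 : ∀ p a, a ∉ Set.range f → c p a = a := fun p a h =>
    viaFintypeEmbedding_apply_notMem_range _ _ h
  have hc2' : ∀ p a, a ∉ Set.range f → (c p)⁻¹ a = a := by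
    intro p a h
    rw [inv_eq_iff_eq, hc2 p a h]
  have hxr : ∀ a, a ∉ Set.range f → x a ∉ Set.range f := by
    rintro a ha ⟨k, hk⟩
    exact ha ⟨invo k, by rw [← hf, hk, hx]⟩
  have hy : ∀ p k, (c p * x * (c p)⁻¹) (f k) = f ((mover p * invo * (mover p)⁻¹) k) := by
    intro p k
    rw [Perm.mul_apply, Perm.mul_apply, hc1', hf, hc1, Perm.mul_apply, Perm.mul_apply]
  have hinj : Function.Injective fun p => c p * x * (c p)⁻¹ := by
    intro p q hpq
    apply mover_injective
    intro k
    have h2 := DFunLike.congr_fun hpq (f k)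
    simp only [hy] at h2
    exact f.injective h2
  have hcard : (Finset.univ.image fun p => c p * x * (c p)⁻¹).card = 15 := by
    rw [Finset.card_image_of_injective _ hinj, Finset.card_univ, Fintype.card_prod, Fintype.card_fin, Fintype.card_fin]
  have h01 : f 0 ≠ f 1 := f.injective.ne (by decide)
  have hs : swap (f 0) (f 1) ∉ alternatingGroup α := by
    rw [mem_alternatingGroup, sign_swap h01]; exact fun h => absurd h (by decide)
  have hsx : swap (f 0) (f 1) * x = x * swap (f 0) (f 1) := by
    have h1 : x * swap (f 0) (f 1) * x⁻¹ = swap (x (f 0)) (x (f 1)) := by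
      rw [swap_apply_apply]
    rw [hf, hf, show invo 0 = 1 by decide, show invo 1 = 0 by decide, swap_comm (f 1) (f 0)] at h1
    exact (mul_inv_eq_iff_eq_mul.1 h1).symm
  have := hβ x (Finset.univ.map f) (Finset.univ.image fun p => c p * x * (c p)⁻¹)
    (by rw [Finset.card_map]; rfl) (Finset.univ_nonempty.image _) ?_ ?_
  · rw [hcard] at this; exact_mod_cast this
  · intro y hy
    obtain ⟨p, -, rfl⟩ := Finset.mem_image.1 hy
    exact phi_conj_of_odd H hs hsx _
  · intro y hy y' hy'
    obtain ⟨p, -, rfl⟩ := Finset.mem_image.1 hy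
    obtain ⟨q, -, rfl⟩ := Finset.mem_image.1 hy'
    intro a ha
    have ha' : a ∉ Set.range f := by rintro ⟨k, rfl⟩; exact ha (by simp)
    rw [Perm.mul_apply, inv_eq_iff_eq]
    simp only [Perm.mul_apply]
    rw [hc2' _ _ ha', hc2' _ _ ha', hc2 _ _ (hxr _ ha'), hc2 _ _ (hxr _ ha')]

theorem exists_notMem_of_card {S T : Finset α} (h : T.card < S.card) : ∃ a ∈ S, a ∉ T := by
  by_contra hn
  push Not at hn
  exact absurd (Finset.card_le_card hn) (by omega)

theorem Beta.involution' {H : Subgroup (Perm α)} {β : ℚ} (hβ : Beta H β) {x : Perm α}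
    (hx : ∀ a, x (x a) = a) (h6 : 6 ≤ x.support.card) : phi H x ≤ β / 15 := by
  classical
  obtain ⟨a, ha, -⟩ := exists_notMem_of_card (S := x.support) (T := ∅) (by rw [Finset.card_empty]; omega)
  obtain ⟨b, hb, hb'⟩ := exists_notMem_of_card (S := x.support) (T := {a, x a})
    (by have := Finset.card_le_two (a := a) (b := x a); omega)
  obtain ⟨d, hd, hd'⟩ := exists_notMem_of_card (S := x.support) (T := {a, x a, b, x b})
    (by have := Finset.card_le_four (a := a) (b := x a) (c := b) (d := x b); omega)
  rw [mem_support] at ha hb hd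
  simp only [Finset.mem_insert, Finset.mem_singleton, not_or] at hb' hd'
  have e1 : x b ≠ a := fun h => hb'.2 (by rw [← h, hx])
  have e2 : x d ≠ a := fun h => hd'.2.1 (by rw [← h, hx])
  have e3 : x d ≠ b := fun h => hd'.2.2.2 (by rw [← h, hx])
  have e4 : x a ≠ x b := fun h => hb'.1 (x.injective h).symm
  have e5 : x a ≠ x d := fun h => hd'.1 (x.injective h).symm
  have e6 : x b ≠ x d := fun h => hd'.2.2.1 (x.injective h).symm
  have e7 := hb'.1
  have e8 := hb'.2
  obtain ⟨e9, e10, e11, e12⟩ := hd'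
  refine hβ.involution ⟨![a, x a, b, x b, d, x d], ?_⟩ ?_ hx
  · intro i j hij
    fin_cases i <;> fin_cases j <;> first | rfl | (exfalso; simp at hij; grind)
  · intro k
    fin_cases k
    · rfl
    · exact hx a
    · rfl
    · exact hx b
    · rfl
    · exact hx d

theorem not_mem_conj_of {H : Subgroup (Perm α)} (h : Tame H) {x : Perm α}
    (hx : ∀ K, Tame K → x ∉ K) : phi H x = 0 :=
  phi_eq_zero fun _ hg => hx _ (h.conj hg)

theorem Tame.phi_prime {H : Subgroup (Perm α)} (h : Tame H) {β : ℚ} (h0 : 0 ≤ β) (hβ : Beta H β)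
    {x : Perm α} (hxA : x ∈ alternatingGroup α) (hx : x ≠ 1) {p : ℕ} (hp : p.Prime)
    (hxp : x ^ p = 1) : phi H x ≤ β / 15 := by
  have h15 : 0 ≤ β / 15 := by positivity
  have h24 : β / 24 ≤ β / 15 := by gcongr; norm_num
  have h60 : β / 60 ≤ β / 15 := by gcongr; norm_num
  by_cases hsm : x.support.card < 6
  · rw [not_mem_conj_of h fun K hK hxK => by
      have := (hK.prime_small hxK hx hp hxp (by omega)).2; omega]
    exact h15
  obtain ⟨k, hk, hc⟩ := prime_cycleType hp hx hxp
  have hp2 := hp.two_le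
  obtain ⟨a, ha⟩ : ∃ a, a ∈ x.support := Finset.card_pos.1 (by omega)
  have ha' := mem_support.1 ha
  rcases Nat.eq_or_lt_of_le hp2 with h2 | h3
  · subst h2
    refine hβ.involution' (fun a => ?_) (by omega)
    rw [← Perm.mul_apply, ← pow_two, hxp, Perm.one_apply]
  · rcases Nat.eq_zero_or_pos k with rfl | hk0
    · have h7 : 7 ≤ p := by
        by_contra h7
        have : p = 6 := by omega
        subst this
        exact absurd hp (by decide)
      exact (hβ.one_cycle hp hxp h7 ha').trans h60
    · obtain ⟨z, hz, hz'⟩ := exists_notMem_of_card (S := x.support)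
        (T := (Finset.range p).image fun i => (x ^ i) a) (by
          have h1 := Finset.card_image_le (s := Finset.range p) (f := fun i => (x ^ i) a)
          rw [Finset.card_range] at h1
          nlinarith)
      have hnot : ¬ Subgroup.centralizer {x} ≤ alternatingGroup α := by
        rw [centralizer_le_alternating_iff]
        rintro ⟨-, -, h1⟩
        have := h1 p
        rw [hk, Multiset.count_replicate_self] at this
        omega
      obtain ⟨s, hs, hsA⟩ := SetLike.not_le_iff_exists.1 hnot
      refine (hβ.two_cycles hp hxp h3 hsA (Subgroup.mem_centralizer_singleton_iff.1 hs) ha'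
        (mem_support.1 hz) (fun i hi => hz' ?_)).trans h24
      refine Finset.mem_image.2 ⟨i % p, Finset.mem_range.2 (Nat.mod_lt _ hp.pos), ?_⟩
      rw [← hi]
      conv_rhs => rw [← Nat.mod_add_div i p, pow_add, pow_mul, hxp, one_pow, mul_one]

theorem exists_pow_prime {x : Perm α} (hx : x ≠ 1) :
    ∃ m p : ℕ, p.Prime ∧ x ^ m ≠ 1 ∧ (x ^ m) ^ p = 1 := by
  obtain ⟨p, hp, m, hm⟩ := Nat.exists_prime_and_dvd (n := orderOf x)
    (fun h => hx (orderOf_eq_one_iff.1 h))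
  have ho := orderOf_pos x
  refine ⟨m, p, hp, fun h => ?_, by rw [← pow_mul, mul_comm, ← hm, pow_orderOf_eq_one]⟩
  have h1 := Nat.le_of_dvd (by rcases Nat.eq_zero_or_pos m with rfl | h; · omega
                               · exact h) (orderOf_dvd_of_pow_eq_one h)
  have := hp.two_le
  nlinarith

theorem Tame.phiLe_of_beta {H : Subgroup (Perm α)} (h : Tame H) {β : ℚ} (h0 : 0 ≤ β)
    (hβ : Beta H β) : PhiLe H (β / 15) := by
  intro x hxA hx
  obtain ⟨m, p, hp, h1, h2⟩ := exists_pow_prime hx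
  exact (phi_pow H x m).trans (h.phi_prime h0 hβ (pow_mem hxA m) h1 hp h2)

/-- The bound for `phi` of tame groups. -/
def Phi (n : ℕ) : ℚ := if n < 10 then 1 / 5 else ((n : ℚ) - 3) / (15 * ((n : ℚ) - 5))

theorem Tame.phiLe {H : Subgroup (Perm α)} (h : Tame H) : PhiLe H (Phi (Fintype.card α)) := by
  unfold Phi
  split_ifs with h10
  · have := h.phiLe_of_beta (by norm_num) h.beta_three
    norm_num at this; exact this
  · have hn : (10 : ℚ) ≤ Fintype.card α := by exact_mod_cast not_lt.1 h10
    have hn5 : (0 : ℚ) < (Fintype.card α : ℚ) - 5 := by linarith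
    have := h.phiLe_of_beta (by positivity) (h.beta_ten (by omega))
    convert this using 1
    field_simp
    ring

/-! ### Disjoint arcs and small regular orbits -/

theorem two_mul_card_alt_fixOff (P : Finset α) :
    P.card.factorial ≤ 2 * Nat.card (fixOff P ⊓ alternatingGroup α : Subgroup (Perm α)) := by
  classical
  have h1 : Nat.card (alternatingGroup P) ≤
      Nat.card (fixOff P ⊓ alternatingGroup α : Subgroup (Perm α)) := by
    refine Nat.card_le_card_of_injective (fun d => ⟨ofSubtype d.1, Subgroup.mem_inf.2 ⟨?_, ?_⟩⟩) ?_
    · intro a ha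
      exact ofSubtype_apply_of_not_mem _ ha
    · rw [mem_alternatingGroup, sign_ofSubtype]; exact d.2
    · intro d d' h
      exact Subtype.ext (ofSubtype_injective (congrArg Subtype.val h))
  rcases subsingleton_or_nontrivial P with hs | hs
  · have hc : P.card ≤ 1 := by
      have := Fintype.card_le_one_iff_subsingleton.2 hs
      rwa [Fintype.card_coe] at this
    have : P.card.factorial = 1 := Nat.factorial_eq_one.2 hc
    have := Nat.card_pos (α := (fixOff P ⊓ alternatingGroup α : Subgroup (Perm α)))
    omega
  · have h2 := two_mul_nat_card_alternatingGroup (α := P)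
    rw [Nat.card_perm, Nat.card_eq_fintype_card (α := P), Fintype.card_coe] at h2
    omega

/-- The weight bounding the probability that an element with `j` disjoint arcs in a set lies in a
conjugate of a group with no nontrivial element supported in that set. -/
def wt (j : ℕ) : ℚ := if j < 2 then 1 else 2 / j.factorial

theorem wt_nonneg (j : ℕ) : 0 ≤ wt j := by unfold wt; split_ifs <;> positivity

theorem wt_anti {i j : ℕ} (h : i ≤ j) : wt j ≤ wt i := by
  unfold wt
  have h1 : (i.factorial : ℚ) ≤ j.factorial := by exact_mod_cast Nat.factorial_le h
  have h0 : (0 : ℚ) < i.factorial := by exact_mod_cast Nat.factorial_pos i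
  have h0' : (0 : ℚ) < j.factorial := by exact_mod_cast Nat.factorial_pos j
  split_ifs with hj hi hi
  · exact le_rfl
  · omega
  · rw [div_le_one h0']
    exact_mod_cast (Nat.factorial_le (show 2 ≤ j by omega))
  · exact div_le_div_of_nonneg_left (by norm_num) h0 h1

/-- If `H` has no nontrivial element supported in `S`, then of the conjugates of `x` by even
permutations of the starts `P` of disjoint arcs of `x` inside `S`, at most one lies in `H`. -/
theorem exists_inf_eq_bot_of_arcs {H L : Subgroup (Perm α)} {S : Finset α}
    (hS : H ⊓ fixOff S = ⊥) (P : Perm α → Finset α)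
    (hP : ∀ x ∈ nt L, P x ⊆ S ∧ ∀ a ∈ P x, x a ∈ S ∧ x a ∉ P x)
    (hsum : ∑ x ∈ nt L, wt (P x).card < 1) :
    ∃ g ∈ alternatingGroup α, L ⊓ conjSub g H = ⊥ := by
  classical
  let T : Finset (Perm α) := Finset.univ.filter fun c => c ∈ fixOff S ⊓ alternatingGroup α
  have hTpos : 0 < T.card := Finset.card_pos.2 ⟨1, by simp [T, one_mem]⟩
  have hTpos' : (0 : ℚ) < T.card := by exact_mod_cast hTpos
  have key : ∀ x ∈ nt L, ((T.filter fun c => x ∈ conjSub c H).card : ℚ) ≤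
      wt (P x).card * T.card := by
    intro x hx
    unfold wt
    split_ifs with h2
    · rw [one_mul]; exact_mod_cast Finset.card_filter_le _ _
    let D : Finset (Perm α) := Finset.univ.filter fun d => d ∈ fixOff (P x) ⊓ alternatingGroup α
    have hD : (P x).card.factorial ≤ 2 * D.card := by
      refine (two_mul_card_alt_fixOff (P x)).trans (le_of_eq ?_)
      congr 1
      rw [Nat.card_eq_fintype_card, Fintype.card_subtype]
    have hDT : ∀ d ∈ D, ∀ c, d * c ∈ T ↔ c ∈ T := by
      intro d hd c
      have hd' : d ∈ fixOff S ⊓ alternatingGroup α := by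
        have := (Finset.mem_filter.1 hd).2
        exact Subgroup.mem_inf.2 ⟨fixOff_mono (hP x hx).1 (Subgroup.mem_inf.1 this).1,
          (Subgroup.mem_inf.1 this).2⟩
      simp only [T, Finset.mem_filter, Finset.mem_univ, true_and]
      exact Subgroup.mul_mem_cancel_left _ hd'
    have e1 : ∀ d ∈ D, (T.filter fun c => x ∈ conjSub c H).card =
        (T.filter fun c => x ∈ conjSub (d * c) H).card := by
      intro d hd
      symm
      refine Finset.card_bij (fun c _ => d * c) ?_ (fun _ _ _ _ h => mul_left_cancel h) ?_
      · intro c hc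
        rw [Finset.mem_filter] at hc ⊢
        exact ⟨(hDT d hd c).2 hc.1, hc.2⟩
      · intro c hc
        rw [Finset.mem_filter] at hc
        refine ⟨d⁻¹ * c, ?_, by group⟩
        rw [Finset.mem_filter, ← hDT d hd, mul_inv_cancel_left]
        exact hc
    have e2 : ∀ c ∈ T, (D.filter fun d => x ∈ conjSub (d * c) H).card ≤ 1 := by
      intro c hc
      rw [Finset.card_le_one]
      intro d hd d' hd'
      rw [Finset.mem_filter] at hd hd'
      obtain ⟨hdD, hd⟩ := hd
      obtain ⟨hdD', hd'⟩ := hd'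
      have hdD := (Subgroup.mem_inf.1 (Finset.mem_filter.1 hdD).2).1
      have hdD' := (Subgroup.mem_inf.1 (Finset.mem_filter.1 hdD').2).1
      have hcS := (Subgroup.mem_inf.1 (Finset.mem_filter.1 hc).2).1
      have hPx := hP x hx
      have hxi : ∀ a, a ∉ S → x⁻¹ a ∉ P x := by
        intro a ha h
        have := (hPx.2 _ h).1
        rw [ap_inv] at this
        exact ha this
      have hf : ∀ d ∈ fixOff (P x), ∀ a, a ∉ P x → d a = a := fun d hd a ha => hd a ha
      have hf : ∀ d ∈ fixOff (P x), ∀ a, a ∉ P x → d a = a := fun d hd a ha => hd a ha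
      have hfi : ∀ d ∈ fixOff (P x), ∀ a, a ∉ P x → d⁻¹ a = a := fun d hd a ha =>
        inv_mem hd a ha
      have hq1 : (d⁻¹ * x * d) * (d'⁻¹ * x * d')⁻¹ ∈ fixOff S := by
        intro a ha
        have ha' : a ∉ P x := fun h => ha (hPx.1 h)
        have : (d⁻¹ * x * d) * (d'⁻¹ * x * d')⁻¹ = d⁻¹ * (x * (d * (d'⁻¹ * (x⁻¹ * d')))) := by group
        rw [this]
        simp only [Perm.mul_apply]
        rw [hf _ hdD' a ha', hfi _ hdD' _ (hxi a ha), hf _ hdD _ (hxi a ha), ap_inv,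
          hfi _ hdD _ ha']
      have hq2 : (d⁻¹ * x * d) * (d'⁻¹ * x * d')⁻¹ ∈ conjSub c H := by
        have : ∀ d, x ∈ conjSub (d * c) H → d⁻¹ * x * d ∈ conjSub c H := by
          intro d hd
          rw [mem_conjSub] at hd ⊢
          convert hd using 1
          group
        exact mul_mem (this _ hd) (inv_mem (this _ hd'))
      have hq3 : (d⁻¹ * x * d) * (d'⁻¹ * x * d')⁻¹ = 1 := by
        have : c⁻¹ * ((d⁻¹ * x * d) * (d'⁻¹ * x * d')⁻¹) * c ∈ H ⊓ fixOff S :=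
          Subgroup.mem_inf.2 ⟨mem_conjSub.1 hq2, mul_mem (mul_mem (inv_mem hcS) hq1) hcS⟩
        rw [hS, Subgroup.mem_bot] at this
        have h3 := congrArg (fun y => c * y * c⁻¹) this
        simpa [mul_assoc] using h3
      have hq4 : d⁻¹ * x * d = d'⁻¹ * x * d' := mul_inv_eq_one.1 hq3
      ext a
      by_cases ha : a ∈ P x
      · have h5 := DFunLike.congr_fun hq4 a
        simp only [Perm.mul_apply] at h5
        rw [hfi _ hdD _ (hPx.2 _ (fixOff_apply_mem hdD ha)).2,
          hfi _ hdD' _ (hPx.2 _ (fixOff_apply_mem hdD' ha)).2] at h5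
        exact x.injective h5
      · rw [hf _ hdD _ ha, hf _ hdD' _ ha]
    have e3 : D.card * (T.filter fun c => x ∈ conjSub c H).card ≤ T.card := by
      calc D.card * (T.filter fun c => x ∈ conjSub c H).card
          = ∑ d ∈ D, (T.filter fun c => x ∈ conjSub (d * c) H).card := by
            rw [← smul_eq_mul, ← Finset.sum_const]
            exact Finset.sum_congr rfl e1
        _ = ∑ c ∈ T, (D.filter fun d => x ∈ conjSub (d * c) H).card := by
            simp only [Finset.card_filter]
            exact Finset.sum_comm
        _ ≤ ∑ c ∈ T, 1 := Finset.sum_le_sum e2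
        _ = T.card := by simp
    have hf0 : (0 : ℚ) < (P x).card.factorial := by exact_mod_cast Nat.factorial_pos _
    rw [div_mul_eq_mul_div, le_div_iff₀ hf0]
    have e4 : (P x).card.factorial * (T.filter fun c => x ∈ conjSub c H).card ≤ 2 * T.card := by
      nlinarith
    rw [mul_comm]
    exact_mod_cast e4
  by_contra hcon
  push Not at hcon
  have h1 : (T.card : ℚ) ≤ ∑ x ∈ nt L, ((T.filter fun c => x ∈ conjSub c H).card : ℚ) := by
    have e1 : T ⊆ (nt L).biUnion fun x => T.filter fun c => x ∈ conjSub c H := by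
      intro c hc
      obtain ⟨x, hx, hx1⟩ := (ne_bot_iff' _).1 (hcon c (Subgroup.mem_inf.1 (Finset.mem_filter.1 hc).2).2)
      exact Finset.mem_biUnion.2 ⟨x, mem_nt.2 ⟨(Subgroup.mem_inf.1 hx).1, hx1⟩,
        Finset.mem_filter.2 ⟨hc, (Subgroup.mem_inf.1 hx).2⟩⟩
    exact_mod_cast (Finset.card_le_card e1).trans Finset.card_biUnion_le
  have h2 := Finset.sum_le_sum key
  rw [← Finset.sum_mul] at h2
  nlinarith

/-- A half-size set can be moved by an even permutation into one supporting no nontrivial element of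
a given group without `3`-cycles. -/
theorem NoThree.exists_conj {H : Subgroup (Perm α)} (hH : NoThree H) (hn : 4 ≤ Fintype.card α)
    {S : Finset α} (hS : 2 * S.card ≤ Fintype.card α) :
    ∃ g ∈ alternatingGroup α, conjSub g H ⊓ fixOff S = ⊥ := by
  obtain ⟨G, -, hG, hb⟩ := exists_base hH Finset.univ
  have hc : S.card ≤ (Finset.univ \ G).card := by
    rw [Finset.card_sdiff_of_subset (Finset.subset_univ _), hG, Finset.card_univ]; omega
  obtain ⟨B, hB, hBc⟩ := Finset.exists_subset_card_eq hc
  obtain ⟨g, hg, hgS⟩ := exists_even_perm_map (k := S.card) (by omega)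
    (f := fun i => ((B.equivFinOfCardEq hBc).symm i : α)) (g := fun i => ((S.equivFin).symm i : α))
    (fun i j h => (B.equivFinOfCardEq hBc).symm.injective (Subtype.ext h))
    (fun i j h => (S.equivFin).symm.injective (Subtype.ext h))
  have hmem : ∀ a ∈ S, g⁻¹ a ∈ B := by
    intro a ha
    have h1 := hgS (S.equivFin ⟨a, ha⟩)
    rw [Equiv.symm_apply_apply] at h1
    have h2 := congrArg (⇑g⁻¹) h1
    rw [inv_ap] at h2
    rw [← show _ = g⁻¹ a from h2]
    exact Subtype.prop _
  have hmem' : ∀ a, g a ∈ S → a ∈ B := fun a ha => by simpa using hmem _ ha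
  refine ⟨g, hg, ?_⟩
  rw [eq_bot_iff]
  intro x hx
  obtain ⟨hx1, hx2⟩ := Subgroup.mem_inf.1 hx
  have h1 := hb _ (mem_conjSub.1 hx1) (fun a ha => by
    have hgS : g a ∉ S := fun h => ha (hB (hmem' _ h))
    rw [Perm.mul_apply, Perm.mul_apply, hx2 _ hgS, inv_ap])
  rw [Subgroup.mem_bot]
  have h3 := congrArg (fun y => g * y * g⁻¹) h1
  simpa [mul_assoc] using h3

theorem NoThree.exists_inf_eq_bot {H L : Subgroup (Perm α)} (hH : NoThree H)
    (hn : 4 ≤ Fintype.card α) {S : Finset α} (hS : 2 * S.card ≤ Fintype.card α)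
    (P : Perm α → Finset α) (hP : ∀ x ∈ nt L, P x ⊆ S ∧ ∀ a ∈ P x, x a ∈ S ∧ x a ∉ P x)
    (hsum : ∑ x ∈ nt L, wt (P x).card < 1) :
    ∃ g ∈ alternatingGroup α, L ⊓ conjSub g H = ⊥ := by
  obtain ⟨h, hh, hS'⟩ := hH.exists_conj hn hS
  obtain ⟨g, hg, hgL⟩ := exists_inf_eq_bot_of_arcs hS' P hP hsum
  exact ⟨g * h, mul_mem hg hh, by rw [conjSub_mul]; exact hgL⟩

/-- A fixed-point-free map on an invariant set has at least a third as many disjoint arcs there as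
there are points. -/
theorem exists_arcs (x : Perm α) (O : Finset α) (hO : ∀ a ∈ O, x a ∈ O ∧ x a ≠ a) :
    ∃ P ⊆ O, O.card ≤ 3 * P.card ∧ ∀ a ∈ P, x a ∈ O ∧ x a ∉ P := by
  obtain ⟨P, hP, hmax⟩ := Finset.exists_max_image
    (O.powerset.filter fun P => ∀ a ∈ P, x a ∉ P) Finset.card ⟨∅, by simp⟩
  rw [Finset.mem_filter, Finset.mem_powerset] at hP
  refine ⟨P, hP.1, ?_, fun a ha => ⟨(hO a (hP.1 ha)).1, hP.2 a ha⟩⟩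
  have hsub : O ⊆ P ∪ P.image x ∪ P.image ⇑x⁻¹ := by
    intro y hy
    by_contra hn
    simp only [Finset.mem_union, Finset.mem_image, not_or, not_exists, not_and] at hn
    obtain ⟨⟨h1, h2⟩, h3⟩ := hn
    have h4 : x y ∉ P := fun h => h3 _ h (inv_ap x y)
    have := hmax (insert y P) (by
      rw [Finset.mem_filter, Finset.mem_powerset]
      refine ⟨Finset.insert_subset hy hP.1, ?_⟩
      intro a ha
      rw [Finset.mem_insert] at ha ⊢
      rcases ha with rfl | ha
      · exact fun h => h.elim (hO _ hy).2 h4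
      · exact fun h => h.elim (h2 a ha) (hP.2 a ha))
    rw [Finset.card_insert_of_notMem h1] at this
    omega
  have h1 := Finset.card_le_card hsub
  have h2 := Finset.card_union_le (P ∪ P.image x) (P.image ⇑x⁻¹)
  have h3 := Finset.card_union_le P (P.image x)
  have h4 := Finset.card_image_le (s := P) (f := x)
  have h5 := Finset.card_image_le (s := P) (f := ⇑x⁻¹)
  omega

/-- A group acting semiregularly at `ω` has a regular orbit. -/
theorem exists_regular_orbit {L : Subgroup (Perm α)} {ω : α} (hω : ∀ x ∈ L, x ω = ω → x = 1) :
    ∃ O : Finset α, O.card = Nat.card L ∧ ∀ x ∈ nt L, ∀ a ∈ O, x a ∈ O ∧ x a ≠ a := by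
  classical
  refine ⟨(Finset.univ.filter fun x => x ∈ L).image fun x => x ω, ?_, ?_⟩
  · rw [Finset.card_image_of_injOn, Nat.card_eq_fintype_card, Fintype.card_subtype]
    intro x hx y hy hxy
    simp only [Finset.coe_filter, Finset.mem_univ, true_and] at hx hy
    have := hω (y⁻¹ * x) (mul_mem (inv_mem hy) hx) (by
      rw [Perm.mul_apply, inv_eq_iff_eq]; exact hxy)
    exact (inv_mul_eq_one.1 this).symm
  · intro x hx a ha
    rw [mem_nt] at hx
    obtain ⟨y, hy, rfl⟩ := Finset.mem_image.1 ha
    have hy := (Finset.mem_filter.1 hy).2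
    refine ⟨Finset.mem_image.2 ⟨x * y, by simp [mul_mem hx.1 hy], rfl⟩, fun h => hx.2 ?_⟩
    have := hω (y⁻¹ * (x * y)) (mul_mem (inv_mem hy) (mul_mem hx.1 hy)) (by
      rw [Perm.mul_apply, inv_eq_iff_eq]; exact h)
    have h2 : x * y = y := (inv_mul_eq_one.1 this).symm
    exact mul_eq_right.1 h2

theorem six_mul_lt_factorial {j : ℕ} (hj : 4 ≤ j) : 2 * (3 * j - 1) < j.factorial := by
  induction j, hj using Nat.le_induction with
  | base => decide
  | succ j hj ih => 
    rw [Nat.factorial_succ]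
    have : 5 * j.factorial ≤ (j + 1) * j.factorial := Nat.mul_le_mul_right _ (by omega)
    omega

/-- A group with a regular orbit of between ten and `n / 2` points. -/
theorem NoThree.kill_small {H L : Subgroup (Perm α)} (hH : NoThree H) (hn : 4 ≤ Fintype.card α)
    {ω : α} (hω : ∀ x ∈ L, x ω = ω → x = 1) (h10 : 10 ≤ Nat.card L)
    (hL : 2 * Nat.card L ≤ Fintype.card α) : ∃ g ∈ alternatingGroup α, L ⊓ conjSub g H = ⊥ := by
  classical
  obtain ⟨O, hOc, hO⟩ := exists_regular_orbit hω
  choose! P hP using fun x hx => exists_arcs x O (hO x hx)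
  refine hH.exists_inf_eq_bot hn (S := O) (by omega) P (fun x hx => ⟨(hP x hx).1, (hP x hx).2.2⟩) ?_
  set j := (Nat.card L + 2) / 3 with hj
  have h1 : ∀ x ∈ nt L, wt (P x).card ≤ 2 / j.factorial := by
    intro x hx
    have := (hP x hx).2.1
    have h2 : j ≤ (P x).card := by omega
    refine (wt_anti h2).trans (le_of_eq ?_)
    rw [wt, if_neg (by omega)]
  refine lt_of_le_of_lt (Finset.sum_le_sum h1) ?_
  have h2 := six_mul_lt_factorial (j := j) (by omega)
  have h3 := card_nt L
  have h4 : (nt L).card * 2 < j.factorial := by omega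
  have hf0 : (0 : ℚ) < j.factorial := by exact_mod_cast Nat.factorial_pos _
  rw [Finset.sum_const, nsmul_eq_mul, mul_div_assoc', div_lt_one hf0]
  exact_mod_cast h4

/-! ### Large regular orbits -/

/-- Over a random subset `S`, the events that the disjoint arcs `(a, x a)` lie in `S` are
independent of probability `1 / 4`. -/
theorem sum_arcs (x : Perm α) : ∀ (P U : Finset α), (∀ a ∈ P, a ∈ U ∧ x a ∈ U ∧ x a ∉ P) →
    ∑ S ∈ U.powerset, ∏ a ∈ P, (if a ∈ S ∧ x a ∈ S then (1 / 4 : ℚ) else 1) =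
      2 ^ U.card * (13 / 16) ^ P.card := by
  intro P
  induction P using Finset.induction_on with
  | empty => intro U _; simp
  | insert a P ha ih =>
    intro U hU
    have hxa : x a ≠ a := fun h => (hU a (Finset.mem_insert_self _ _)).2.2 (by rw [h]; simp)
    obtain ⟨h1, h2, h3⟩ := hU a (Finset.mem_insert_self _ _)
    set V := (U.erase a).erase (x a) with hV
    have hxV : x a ∉ V := Finset.notMem_erase _ _
    have haV : a ∉ insert (x a) V := by simp [hV, hxa.symm]
    have hUV : U = insert a (insert (x a) V) := by
      rw [hV, Finset.insert_erase (Finset.mem_erase.2 ⟨hxa, h2⟩), Finset.insert_erase h1]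
    have hPV : ∀ b ∈ P, b ∈ V ∧ x b ∈ V ∧ x b ∉ P := by
      intro b hb
      obtain ⟨k1, k2, k3⟩ := hU b (Finset.mem_insert_of_mem hb)
      have hba : b ≠ a := by rintro rfl; exact ha hb
      simp only [Finset.mem_insert, not_or] at h3 k3
      refine ⟨?_, ?_, k3.2⟩
      · rw [hV, Finset.mem_erase, Finset.mem_erase]
        exact ⟨by rintro rfl; exact h3.2 hb, hba, k1⟩
      · rw [hV, Finset.mem_erase, Finset.mem_erase]
        exact ⟨fun h => hba (x.injective h), k3.1, k2⟩
    have hcard : U.card = V.card + 2 := by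
      rw [hUV, Finset.card_insert_of_notMem haV, Finset.card_insert_of_notMem hxV]
    have hprod : ∀ S ∈ V.powerset, ∀ T ⊆ ({a, x a} : Finset α),
        ∏ b ∈ P, (if b ∈ T ∪ S ∧ x b ∈ T ∪ S then (1 / 4 : ℚ) else 1) =
        ∏ b ∈ P, (if b ∈ S ∧ x b ∈ S then (1 / 4 : ℚ) else 1) := by
      intro S _ T hT
      refine Finset.prod_congr rfl fun b hb => ?_
      obtain ⟨k1, k2, -⟩ := hPV b hb
      have e : ∀ y ∈ V, y ∉ T := by
        intro y hy hyT
        have := hT hyT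
        simp only [Finset.mem_insert, Finset.mem_singleton] at this
        rcases this with rfl | rfl
        · exact haV (Finset.mem_insert_of_mem hy)
        · exact hxV hy
      simp only [Finset.mem_union, e _ k1, e _ k2, false_or]
    rw [hcard, Finset.card_insert_of_notMem ha, hUV, Finset.sum_powerset_insert haV,
      Finset.sum_powerset_insert hxV, Finset.sum_powerset_insert hxV, ← Finset.sum_add_distrib,
      ← Finset.sum_add_distrib, ← Finset.sum_add_distrib]
    have : ∀ S ∈ V.powerset,
        ∏ b ∈ insert a P, (if b ∈ S ∧ x b ∈ S then (1 / 4 : ℚ) else 1) +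
        ∏ b ∈ insert a P, (if b ∈ insert (x a) S ∧ x b ∈ insert (x a) S then (1 / 4 : ℚ) else 1) +
        (∏ b ∈ insert a P, (if b ∈ insert a S ∧ x b ∈ insert a S then (1 / 4 : ℚ) else 1) +
        ∏ b ∈ insert a P, (if b ∈ insert a (insert (x a) S) ∧ x b ∈ insert a (insert (x a) S)
          then (1 / 4 : ℚ) else 1)) =
        4 * (13 / 16) * ∏ b ∈ P, (if b ∈ S ∧ x b ∈ S then (1 / 4 : ℚ) else 1) := by
      intro S hS
      have haS : a ∉ S := fun h => haV (Finset.mem_insert_of_mem (Finset.mem_powerset.1 hS h))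
      have hxS : x a ∉ S := fun h => hxV (Finset.mem_powerset.1 hS h)
      simp only [Finset.prod_insert ha]
      have e1 := hprod S hS {x a} (by simp)
      have e2 := hprod S hS {a} (by simp)
      have e3 := hprod S hS {a, x a} subset_rfl
      rw [show ({x a} : Finset α) ∪ S = insert (x a) S from rfl] at e1
      rw [show ({a} : Finset α) ∪ S = insert a S from rfl] at e2
      rw [show ({a, x a} : Finset α) ∪ S = insert a (insert (x a) S) by
        rw [Finset.insert_union]; rfl] at e3
      rw [e1, e2, e3, if_neg (by tauto), if_neg (by simp [haS, hxa.symm]),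
        if_neg (by simp [hxS, hxa]), if_pos (by simp)]
      ring
    rw [Finset.sum_congr rfl this, ← Finset.mul_sum, ih V hPV]
    ring

theorem wt_le_pow (j : ℕ) : wt j ≤ 64 / 3 * (1 / 4) ^ j := by
  unfold wt
  split_ifs with h
  · interval_cases j <;> norm_num
  · rcases Nat.lt_or_ge j 4 with h4 | h4
    · interval_cases j <;> norm_num [Nat.factorial]
    · induction j, h4 using Nat.le_induction with
      | base => norm_num [Nat.factorial]
      | succ j hj ih =>
        have ih := ih (by omega)
        have hf0 : (0 : ℚ) < j.factorial := by exact_mod_cast Nat.factorial_pos _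
        have hj' : (4 : ℚ) ≤ (j : ℚ) + 1 := by exact_mod_cast (show 4 ≤ j + 1 by omega)
        rw [Nat.factorial_succ, pow_succ, Nat.cast_mul, Nat.cast_succ]
        calc (2 : ℚ) / (((j : ℚ) + 1) * j.factorial) = 2 / j.factorial * (1 / ((j : ℚ) + 1)) := by
              field_simp
          _ ≤ (64 / 3 * (1 / 4) ^ j) * (1 / 4) := by
              gcongr
          _ = _ := by ring

theorem arcs_numeric {j : ℕ} (hj : 42 ≤ j) :
    (3 * (j : ℚ) - 1) * (128 / 3) * (13 / 16) ^ j < 1 := by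
  induction j, hj using Nat.le_induction with
  | base => norm_num
  | succ j hj ih =>
    refine lt_of_le_of_lt ?_ ih
    have hj' : (42 : ℚ) ≤ j := by exact_mod_cast hj
    rw [pow_succ]
    push_cast
    have : (0 : ℚ) < (13 / 16) ^ j := by positivity
    nlinarith

/-- A group with a regular orbit of at least `125` points. -/
theorem NoThree.kill_large {H L : Subgroup (Perm α)} (hH : NoThree H) (hn : 4 ≤ Fintype.card α)
    {ω : α} (hω : ∀ x ∈ L, x ω = ω → x = 1) (hL : 125 ≤ Nat.card L) :
    ∃ g ∈ alternatingGroup α, L ⊓ conjSub g H = ⊥ := by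
  classical
  obtain ⟨O, hOc, hO⟩ := exists_regular_orbit hω
  choose! P hP using fun x hx => exists_arcs x O (hO x hx)
  let Q : Finset α → Perm α → Finset α := fun S x => (P x).filter fun a => a ∈ S ∧ x a ∈ S
  let F : Finset α → ℚ := fun S => ∑ x ∈ nt L, wt (Q S x).card
  by_contra hcon
  have hF0 : ∀ S, 0 ≤ F S := fun S => Finset.sum_nonneg fun x _ => wt_nonneg _
  have hF : ∀ S : Finset α, 2 * S.card ≤ Fintype.card α → 1 ≤ F S := by
    intro S hS
    by_contra hlt
    refine hcon (hH.exists_inf_eq_bot hn hS (Q S) (fun x hx => ⟨?_, ?_⟩) (not_le.1 hlt))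
    · intro a ha
      exact (Finset.mem_filter.1 ha).2.1
    · intro a ha
      have := Finset.mem_filter.1 ha
      exact ⟨this.2.2, fun h => ((hP x hx).2.2 a this.1).2 (Finset.mem_filter.1 h).1⟩
  have h1 : ∀ S : Finset α, 1 ≤ F S + F Sᶜ := by
    intro S
    have hc := Finset.card_compl S
    have hu := Finset.card_le_univ S
    rcases Nat.le_total (2 * S.card) (Fintype.card α) with h | h
    · linarith [hF S h, hF0 Sᶜ]
    · linarith [hF Sᶜ (by omega), hF0 S]
  have h2 : ∑ S : Finset α, F Sᶜ = ∑ S, F S :=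
    Equiv.sum_comp (Function.Involutive.toPerm compl compl_involutive) F
  have h3 : (2 : ℚ) ^ Fintype.card α ≤ 2 * ∑ S, F S := by
    have := Finset.sum_le_sum fun S (_ : S ∈ (Finset.univ : Finset (Finset α))) => h1 S
    rw [Finset.sum_add_distrib, h2, Finset.sum_const, Finset.card_univ, Fintype.card_finset,
      nsmul_eq_mul, mul_one] at this
    push_cast at this
    linarith
  set j := (Nat.card L + 2) / 3 with hj
  have h4 : ∑ S, F S ≤ (nt L).card * (64 / 3 * (2 ^ Fintype.card α * (13 / 16) ^ j)) := by
    rw [Finset.sum_comm, ← nsmul_eq_mul, ← Finset.sum_const]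
    refine Finset.sum_le_sum fun x hx => ?_
    have e1 := sum_arcs x (P x) Finset.univ fun a ha =>
      ⟨Finset.mem_univ _, Finset.mem_univ _, ((hP x hx).2.2 a ha).2⟩
    have e2 : ∀ S : Finset α, wt (Q S x).card ≤
        64 / 3 * ∏ a ∈ P x, (if a ∈ S ∧ x a ∈ S then (1 / 4 : ℚ) else 1) := by
      intro S
      refine (wt_le_pow _).trans (le_of_eq ?_)
      rw [Finset.prod_ite, Finset.prod_const, Finset.prod_const_one, mul_one]
    refine (Finset.sum_le_sum fun S _ => e2 S).trans ?_
    rw [← Finset.mul_sum, ← Finset.powerset_univ, e1, Finset.card_univ]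
    have e3 : j ≤ (P x).card := by have := (hP x hx).2.1; omega
    have e4 : (13 / 16 : ℚ) ^ (P x).card ≤ (13 / 16) ^ j :=
      pow_le_pow_of_le_one (by norm_num) (by norm_num) e3
    gcongr
  have h5 : ((nt L).card : ℚ) ≤ 3 * j - 1 := by
    have := card_nt L
    have h6 : (nt L).card + 1 ≤ 3 * j := by omega
    have : ((nt L).card : ℚ) + 1 ≤ 3 * j := by exact_mod_cast h6
    linarith
  have h6 := arcs_numeric (j := j) (by omega)
  have h7 : (0 : ℚ) < 2 ^ Fintype.card α := by positivity
  have h8 : (0 : ℚ) < (13 / 16) ^ j := by positivity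
  have h9 : ((nt L).card : ℚ) * (64 / 3 * (2 ^ Fintype.card α * (13 / 16) ^ j)) ≤
      (3 * j - 1) * (64 / 3 * (2 ^ Fintype.card α * (13 / 16) ^ j)) :=
    mul_le_mul_of_nonneg_right h5 (by positivity)
  nlinarith

/-! ### Pairs of uniform partitions -/

theorem exists_perm_list (l m : List α) (hl : l.Nodup) (hm : m.Nodup) (h : l.length = m.length) :
    ∃ σ : Perm α, l.map σ = m := by
  obtain ⟨σ, hσ⟩ := exists_perm_map (k := l.length) (f := fun i => l[i]) (g := fun i => m[i.1]'(h ▸ i.2))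
    (fun i j hij => Fin.ext ((hl.getElem_inj_iff).1 hij))
    (fun i j hij => Fin.ext ((hm.getElem_inj_iff).1 hij))
  refine ⟨σ, List.ext_getElem (by simpa using h) ?_⟩
  intro i h1 h2
  rw [List.getElem_map]
  exact hσ ⟨i, by simpa using h1⟩

theorem exists_nodup_list {S : Finset α} {k : ℕ} (h : k ≤ S.card) :
    ∃ m : List α, m.Nodup ∧ m.length = k ∧ ∀ y ∈ m, y ∈ S := by
  refine ⟨S.toList.take k, S.nodup_toList.sublist (List.take_sublist _ _), by simp [h], ?_⟩
  intro y hy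
  exact Finset.mem_toList.1 (List.mem_of_mem_take hy)

theorem exists_perm_finset {S T : Finset α} (h : S.card = T.card) :
    ∃ σ : Perm α, ∀ a, σ a ∈ T ↔ a ∈ S := by
  obtain ⟨σ, hσ⟩ := exists_perm_list S.toList T.toList S.nodup_toList T.nodup_toList (by simpa using h)
  refine ⟨σ, fun a => ?_⟩
  rw [← Finset.mem_toList, ← hσ, List.mem_map, ← Finset.mem_toList (s := S)]
  exact ⟨fun ⟨b, hb, hab⟩ => σ.injective hab ▸ hb, fun ha => ⟨a, ha, rfl⟩⟩

/-- All classes of the labelling `e` have `b` points. -/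
def Unif (e : α → ℕ) (b : ℕ) : Prop := ∀ a, (cls e a).card = b

theorem Unif.comp {e : α → ℕ} {b : ℕ} (h : Unif e b) (σ : Perm α) : Unif (e ∘ σ) b := by
  intro a
  rw [← h (σ a)]
  refine Finset.card_bij (fun y _ => σ y) ?_ (fun _ _ _ _ h => σ.injective h) ?_
  · intro y hy; rw [mem_cls] at hy ⊢; exact hy
  · intro y hy
    refine ⟨σ⁻¹ y, ?_, ap_inv _ _⟩
    rw [mem_cls] at hy ⊢
    simp only [Function.comp_apply, ap_inv]; exact hy

theorem Unif.dvd {e : α → ℕ} {b : ℕ} (h : Unif e b) : b ∣ Fintype.card α := by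
  rw [← Finset.card_univ, Finset.card_eq_sum_card_image e]
  refine Finset.dvd_sum fun k hk => ?_
  obtain ⟨a, -, rfl⟩ := Finset.mem_image.1 hk
  exact dvd_of_eq (h a).symm

theorem Unif.exists_new {e : α → ℕ} {b : ℕ} (h : Unif e b) (l : List α)
    (hl : l.length * b < Fintype.card α) : ∃ a, ∀ y ∈ l, e a ≠ e y := by
  by_contra hc
  push Not at hc
  have h1 : (Finset.univ : Finset α) ⊆ l.toFinset.biUnion (cls e) := by
    intro a _
    obtain ⟨y, hy, hay⟩ := hc a
    exact Finset.mem_biUnion.2 ⟨y, List.mem_toFinset.2 hy, mem_cls.2 hay⟩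
  have h2 := (Finset.card_le_card h1).trans
    (Finset.card_biUnion_le_card_mul _ _ b fun a _ => (h a).le)
  have h3 := List.toFinset_card_le l
  rw [Finset.card_univ] at h2
  have := Nat.mul_le_mul_right b h3
  omega

theorem Unif.exists_list {e : α → ℕ} {b k : ℕ} (h : Unif e b) (hk : k ≤ b) (a : α) :
    ∃ m : List α, m.Nodup ∧ m.length = k ∧ ∀ y ∈ m, e y = e a := by
  obtain ⟨m, h1, h2, h3⟩ := exists_nodup_list (S := cls e a) (k := k) (by rw [h a]; exact hk)
  exact ⟨m, h1, h2, fun y hy => mem_cls.1 (h3 y hy)⟩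

theorem Unif.exists_pair {e : α → ℕ} {b : ℕ} (h : Unif e b) (hk : 2 ≤ b) (a : α) :
    ∃ x y, x ≠ y ∧ e x = e a ∧ e y = e a := by
  obtain ⟨m, h1, h2, h3⟩ := h.exists_list hk a
  obtain ⟨x, y, rfl⟩ := List.length_eq_two.1 h2
  exact ⟨x, y, by simpa using h1, h3 x (by simp), h3 y (by simp)⟩

theorem Unif.exists_triple {e : α → ℕ} {b : ℕ} (h : Unif e b) (hk : 3 ≤ b) (a : α) :
    ∃ x y z, x ≠ y ∧ x ≠ z ∧ y ≠ z ∧ e x = e a ∧ e y = e a ∧ e z = e a := by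
  obtain ⟨m, h1, h2, h3⟩ := h.exists_list hk a
  obtain ⟨x, y, z, rfl⟩ := List.length_eq_three.1 h2
  simp at h1
  exact ⟨x, y, z, by tauto, by tauto, by tauto, h3 x (by simp), h3 y (by simp), h3 z (by simp)⟩

/-- The permutation `x` preserves the partition into the fibres of `e`. -/
def PresElt (x : Perm α) (e : α → ℕ) : Prop := ∀ a b, e (x a) = e (x b) ↔ e a = e b

theorem three_le_card {S : Finset α} {a b c : α} (hab : a ≠ b) (hac : a ≠ c) (hbc : b ≠ c)
    (ha : a ∈ S) (hb : b ∈ S) (hc : c ∈ S) : 3 ≤ S.card := by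
  have h : ({a, b, c} : Finset α) ⊆ S := by
    intro y hy; simp only [Finset.mem_insert, Finset.mem_singleton] at hy
    rcases hy with rfl | rfl | rfl <;> assumption
  have := Finset.card_le_card h
  rwa [Finset.card_eq_three.2 ⟨a, b, c, hab, hac, hbc, rfl⟩] at this

/-- The union of the classes of `e` contained in classes of `f`. -/
def inner (e f : α → ℕ) : Finset α := Finset.univ.filter fun a => ∀ y, e y = e a → f y = f a

theorem mem_inner {e f : α → ℕ} {a : α} : a ∈ inner e f ↔ ∀ y, e y = e a → f y = f a := by
  simp [inner]

theorem inner_invariant {e f : α → ℕ} {x : Perm α} (he : PresElt x e) (hf : PresElt x f) (a : α) :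
    x a ∈ inner e f ↔ a ∈ inner e f := by
  rw [mem_inner, mem_inner]
  constructor
  · intro h y hy
    exact (hf y a).1 (h _ ((he y a).2 hy))
  · intro h y hy
    have h1 := (hf (x⁻¹ y) a).2 (h _ ((he (x⁻¹ y) a).1 (by rw [ap_inv]; exact hy)))
    rwa [ap_inv] at h1

/-- The size of the intersection of the two classes of a point. -/
def mu (e f : α → ℕ) (a : α) : ℕ := (Finset.univ.filter fun y => e y = e a ∧ f y = f a).card

theorem mu_invariant {e f : α → ℕ} {x : Perm α} (he : PresElt x e) (hf : PresElt x f) (a : α) :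
    mu e f (x a) = mu e f a := by
  symm
  refine Finset.card_bij (fun y _ => x y) ?_ (fun _ _ _ _ h => x.injective h) ?_
  · intro y hy
    simp only [Finset.mem_filter, Finset.mem_univ, true_and] at hy ⊢
    exact ⟨(he y a).2 hy.1, (hf y a).2 hy.2⟩
  · intro y hy
    simp only [Finset.mem_filter, Finset.mem_univ, true_and] at hy
    refine ⟨x⁻¹ y, ?_, ap_inv _ _⟩
    simp only [Finset.mem_filter, Finset.mem_univ, true_and]
    exact ⟨(he _ a).1 (by rw [ap_inv]; exact hy.1), (hf _ a).1 (by rw [ap_inv]; exact hy.2)⟩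

/-- A set invariant under all permutations preserving both partitions, neither it nor its complement
having fewer than three points. -/
def Split (e f : α → ℕ) : Prop := ∃ Δ : Finset α, 3 ≤ Δ.card ∧ 3 ≤ Δᶜ.card ∧
  ∀ x : Perm α, PresElt x e → PresElt x f → ∀ a, x a ∈ Δ ↔ a ∈ Δ

theorem split_two {e f : α → ℕ} {d : ℕ} (he : Unif e 2) (hf : Unif f d) (hd : 2 ≤ d)
    (hdn : d < Fintype.card α) (hn : 10 ≤ Fintype.card α) : ∃ σ : Perm α, Split (e ∘ σ) f := by
  have hα : Nonempty α := Fintype.card_pos_iff.1 (by omega)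
  obtain ⟨u₁, u₂, u₃, u₄, u₅, u₆, u₇, u₈, hu, h12, h34, h56, h78⟩ : ∃ u₁ u₂ u₃ u₄ u₅ u₆ u₇ u₈ : α,
      [u₁, u₂, u₃, u₄, u₅, u₆, u₇, u₈].Nodup ∧ f u₁ = f u₂ ∧ f u₃ = f u₄ ∧ f u₅ ≠ f u₆ ∧
        f u₇ ≠ f u₈ := by
    obtain ⟨r₁⟩ := hα
    obtain ⟨r₂, hr₂⟩ := hf.exists_new [r₁] (by simpa using hdn)
    by_cases h3 : 3 * d < Fintype.card α
    · obtain ⟨r₃, hr₃⟩ := hf.exists_new [r₁, r₂] (by simp only [List.length_cons, List.length_nil]; omega)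
      obtain ⟨r₄, hr₄⟩ := hf.exists_new [r₁, r₂, r₃] (by simp only [List.length_cons, List.length_nil]; omega)
      obtain ⟨a, a', h1, h2, h3⟩ := hf.exists_pair hd r₁
      obtain ⟨b, b', h4, h5, h6⟩ := hf.exists_pair hd r₂
      obtain ⟨p, p', h7, h8, h9⟩ := hf.exists_pair hd r₃
      obtain ⟨q, q', h10, h11, h12⟩ := hf.exists_pair hd r₄
      simp only [List.mem_cons, List.not_mem_nil, or_false, forall_eq_or_imp, forall_eq] at hr₂ hr₃ hr₄
      refine ⟨a, a', b, b', p, q, p', q', ?_, by rw [h2, h3], by rw [h5, h6], ?_, ?_⟩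
      · simp only [List.nodup_cons, List.mem_cons, List.not_mem_nil, or_false, not_or, List.nodup_nil,
          not_false_eq_true, and_true]
        and_intros <;> grind
      · grind
      · grind
    · obtain ⟨m, hm1, hm2, hm3⟩ := hf.exists_list (k := 4) (by omega) r₁
      obtain ⟨m', hm1', hm2', hm3'⟩ := hf.exists_list (k := 4) (by omega) r₂
      rcases m with _ | ⟨a, _ | ⟨b, _ | ⟨p, _ | ⟨q, _ | ⟨_, _⟩⟩⟩⟩⟩ <;> simp at hm2
      rcases m' with _ | ⟨a', _ | ⟨b', _ | ⟨p', _ | ⟨q', _ | ⟨_, _⟩⟩⟩⟩⟩ <;> simp at hm2'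
      simp only [List.mem_cons, List.not_mem_nil, or_false, forall_eq_or_imp, forall_eq,
        List.nodup_cons, not_or, List.nodup_nil, not_false_eq_true, and_true] at hr₂ hm1 hm1' hm3 hm3'
      refine ⟨a, b, a', b', p, p', q, q', ?_, by rw [hm3.1, hm3.2.1], by rw [hm3'.1, hm3'.2.1], ?_, ?_⟩
      · simp only [List.nodup_cons, List.mem_cons, List.not_mem_nil, or_false, not_or, List.nodup_nil,
          not_false_eq_true, and_true]
        and_intros <;> grind
      · grind
      · grind
  obtain ⟨r₁⟩ := hα
  obtain ⟨r₂, hr₂⟩ := he.exists_new [r₁] (by simp only [List.length_cons, List.length_nil]; omega)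
  obtain ⟨r₃, hr₃⟩ := he.exists_new [r₁, r₂] (by simp only [List.length_cons, List.length_nil]; omega)
  obtain ⟨r₄, hr₄⟩ := he.exists_new [r₁, r₂, r₃] (by simp only [List.length_cons, List.length_nil]; omega)
  obtain ⟨p₁, p₂, h1, h2, h3⟩ := he.exists_pair le_rfl r₁
  obtain ⟨p₃, p₄, h4, h5, h6⟩ := he.exists_pair le_rfl r₂
  obtain ⟨p₅, p₆, h7, h8, h9⟩ := he.exists_pair le_rfl r₃
  obtain ⟨p₇, p₈, h10, h11, h12'⟩ := he.exists_pair le_rfl r₄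
  simp only [List.mem_cons, List.not_mem_nil, or_false, forall_eq_or_imp, forall_eq] at hr₂ hr₃ hr₄
  obtain ⟨σ, hσ⟩ := exists_perm_list [u₁, u₂, u₃, u₄, u₅, u₆, u₇, u₈] [p₁, p₂, p₃, p₄, p₅, p₆, p₇, p₈]
    hu (by
      simp only [List.nodup_cons, List.mem_cons, List.not_mem_nil, or_false, not_or, List.nodup_nil,
          not_false_eq_true, and_true]
      and_intros <;> grind) rfl
  simp only [List.map_cons, List.map_nil, List.cons.injEq, and_true] at hσ
  obtain ⟨s1, s2, s3, s4, s5, s6, s7, s8⟩ := hσ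
  simp only [List.nodup_cons, List.mem_cons, List.not_mem_nil, or_false, not_or, List.nodup_nil,
          not_false_eq_true, and_true] at hu
  have hpair : ∀ a b, a ≠ b → (e ∘ σ) a = (e ∘ σ) b → f a = f b → a ∈ inner (e ∘ σ) f := by
    intro a b hab h hfab
    rw [mem_inner]
    intro y hy
    by_contra hne
    have := three_le_card (S := cls (e ∘ σ) a) (a := a) (b := b) (c := y) hab
      (fun h => hne (by rw [h])) (fun h => hne (by rw [← h, hfab]))
      (self_mem_cls _ _) (mem_cls.2 h.symm) (mem_cls.2 hy)
    rw [he.comp σ a] at this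
    omega
  have q12 : (e ∘ σ) u₁ = (e ∘ σ) u₂ := by simp only [Function.comp_apply, s1, s2, h2, h3]
  have q34 : (e ∘ σ) u₃ = (e ∘ σ) u₄ := by simp only [Function.comp_apply, s3, s4, h5, h6]
  have q56 : (e ∘ σ) u₅ = (e ∘ σ) u₆ := by simp only [Function.comp_apply, s5, s6, h8, h9]
  have q78 : (e ∘ σ) u₇ = (e ∘ σ) u₈ := by simp only [Function.comp_apply, s7, s8, h11, h12']
  refine ⟨σ, inner (e ∘ σ) f, ?_, ?_, fun x h1 h2 => inner_invariant h1 h2⟩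
  · exact three_le_card (a := u₁) (b := u₂) (c := u₃) (by tauto) (by tauto) (by tauto)
      (hpair _ _ (by tauto) q12 h12) (hpair _ _ (by tauto) q12.symm h12.symm)
      (hpair _ _ (by tauto) q34 h34)
  · refine three_le_card (a := u₅) (b := u₆) (c := u₇) (by tauto) (by tauto) (by tauto) ?_ ?_ ?_
    · rw [Finset.mem_compl, mem_inner]; exact fun h => h56 (h _ q56.symm).symm
    · rw [Finset.mem_compl, mem_inner]; exact fun h => h56 (h _ q56)
    · rw [Finset.mem_compl, mem_inner]; exact fun h => h78 (h _ q78.symm).symm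

theorem split_three {e f : α → ℕ} {b d : ℕ} (he : Unif e b) (hf : Unif f d) (hb : 3 ≤ b)
    (hbd : b ≤ d) (hdn : d < Fintype.card α) (hbn : 2 * b < Fintype.card α) :
    ∃ σ : Perm α, Split (e ∘ σ) f := by
  have hα : Nonempty α := Fintype.card_pos_iff.1 (by omega)
  obtain ⟨r⟩ := hα
  obtain ⟨T, hT, hTc⟩ := Finset.exists_subset_card_eq (s := cls f r) (n := b) (by rw [hf]; exact hbd)
  obtain ⟨σ, hσ⟩ := exists_perm_finset (S := T) (T := cls e r) (by rw [hTc, he])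
  have hT3 : ∀ σ : Perm α, (∀ a, σ a ∈ cls e r ↔ a ∈ T) → ∀ a ∈ T, a ∈ inner (e ∘ σ) f := by
    intro σ hσ a ha
    rw [mem_inner]
    intro y hy
    have h1 := mem_cls.1 ((hσ a).2 ha)
    have h2 : y ∈ T := (hσ y).1 (mem_cls.2 (Eq.trans hy h1))
    rw [mem_cls.1 (hT ha), mem_cls.1 (hT h2)]
  suffices h : ∃ σ : Perm α, (∀ a, σ a ∈ cls e r ↔ a ∈ T) ∧
      ∃ u v, (e ∘ σ) u = (e ∘ σ) v ∧ f u ≠ f v by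
    obtain ⟨σ, hσ, u, v, huv, hfuv⟩ := h
    refine ⟨σ, inner (e ∘ σ) f, ?_, ?_, fun x h1 h2 => inner_invariant h1 h2⟩
    · rw [← hTc] at hb
      exact hb.trans (Finset.card_le_card (hT3 σ hσ))
    · have h1 : cls (e ∘ σ) u ⊆ (inner (e ∘ σ) f)ᶜ := by
        intro y hy
        rw [mem_cls] at hy
        rw [Finset.mem_compl, mem_inner]
        intro h
        exact hfuv ((h u hy.symm).trans (h v (huv.symm.trans hy.symm)).symm)
      have := Finset.card_le_card h1
      rw [he.comp σ u] at this
      omega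
  obtain ⟨u, hu⟩ : ∃ u, u ∉ T := by
    obtain ⟨u, -, hu⟩ := exists_notMem_of_card (S := Finset.univ) (T := T)
      (by rw [hTc, Finset.card_univ]; omega)
    exact ⟨u, hu⟩
  obtain ⟨v, hv, hvu⟩ : ∃ v, v ∉ T ∧ f v ≠ f u := by
    by_cases hur : f u = f r
    · obtain ⟨v, hv⟩ := hf.exists_new [r] (by simpa using hdn)
      have hv := hv r (by simp)
      exact ⟨v, fun h => hv (mem_cls.1 (hT h)), by rw [hur]; exact hv⟩
    · by_cases hd : b < d
      · obtain ⟨v, hv, hv'⟩ := exists_notMem_of_card (S := cls f r) (T := T) (by rw [hTc, hf]; exact hd)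
        exact ⟨v, hv', by rw [mem_cls.1 hv]; exact fun h => hur h.symm⟩
      · obtain ⟨v, hv⟩ := hf.exists_new [r, u] (by simp only [List.length_cons, List.length_nil]; omega)
        exact ⟨v, fun h => hv r (by simp) (mem_cls.1 (hT h)), hv u (by simp)⟩
  by_cases hs : ∃ y, (e ∘ σ) u = (e ∘ σ) y ∧ f u ≠ f y
  · exact ⟨σ, hσ, u, hs⟩
  push Not at hs
  obtain ⟨u', hu', hu'u⟩ := exists_notMem_of_card (S := cls (e ∘ σ) u) (T := {u})
    (by rw [he.comp σ u, Finset.card_singleton]; omega)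
  rw [mem_cls] at hu'
  rw [Finset.mem_singleton] at hu'u
  have hu'T : u' ∉ T := by
    intro h
    have h1 := mem_cls.1 ((hσ u').2 h)
    exact hu ((hσ u).1 (mem_cls.2 (hu'.symm.trans h1)))
  have huv : u ≠ v := fun h => hvu (by rw [h])
  refine ⟨σ * swap u' v, fun a => ?_, u, v, ?_, hvu.symm⟩
  · rw [Perm.mul_apply, hσ]
    by_cases h1 : a = u'
    · subst h1; rw [swap_apply_left]; tauto
    by_cases h2 : a = v
    · subst h2; rw [swap_apply_right]; tauto
    rw [swap_apply_of_ne_of_ne h1 h2]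
  · simp only [Function.comp_apply, Perm.mul_apply]
    rw [swap_apply_right, swap_apply_of_ne_of_ne (Ne.symm hu'u) huv]
    exact hu'.symm

/-! ### Three imprimitive groups -/

theorem Unif.half {e : α → ℕ} {b : ℕ} (h : Unif e b) (hn : Fintype.card α = 2 * b) {a r : α}
    (har : e a ≠ e r) (y : α) : e y = e a ↔ e y ≠ e r := by
  have h1 : cls e a ⊆ (cls e r)ᶜ := by
    intro y hy
    rw [mem_cls] at hy
    rw [Finset.mem_compl, mem_cls, hy]; exact har
  have h2 := Finset.eq_of_subset_of_card_le h1 (by rw [Finset.card_compl, h, h]; omega)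
  rw [← mem_cls, h2, Finset.mem_compl, mem_cls]

theorem split_half {e f : α → ℕ} {b : ℕ} (he : Unif e b) (hf : Unif f b) (hb : 5 ≤ b)
    (hn : Fintype.card α = 2 * b) : ∃ σ : Perm α, Split (e ∘ σ) f := by
  have hα : Nonempty α := Fintype.card_pos_iff.1 (by omega)
  obtain ⟨r⟩ := hα
  obtain ⟨U, hU, hUc⟩ := Finset.exists_subset_card_eq (s := cls f r) (n := 2) (by rw [hf]; omega)
  obtain ⟨V, hV, hVc⟩ := Finset.exists_subset_card_eq (s := (cls f r)ᶜ) (n := b - 2)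
    (by rw [Finset.card_compl, hf]; omega)
  have hdis : ∀ a, a ∈ U → f a = f r := fun a ha => mem_cls.1 (hU ha)
  have hdis' : ∀ a, a ∈ V → f a ≠ f r := fun a ha h => by
    have := hV ha
    rw [Finset.mem_compl, mem_cls] at this
    exact this h
  have hUV : (U ∪ V).card = b := by
    rw [Finset.card_union_of_disjoint (Finset.disjoint_left.2 fun a h1 h2 =>
      hdis' a h2 (hdis a h1))]
    omega
  obtain ⟨σ, hσ⟩ := exists_perm_finset (S := U ∪ V) (T := cls e r) (by rw [hUV, he])
  have hσ' : ∀ a, e (σ a) = e r ↔ a ∈ U ∨ a ∈ V := fun a => by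
    rw [← mem_cls, hσ, Finset.mem_union]
  have hm1 : ∀ a ∈ U, mu (e ∘ σ) f a = 2 := by
    intro a ha
    rw [mu, ← hUc]
    congr 1
    ext y
    simp only [Finset.mem_filter, Finset.mem_univ, true_and, Function.comp_apply]
    rw [(hσ' a).2 (Or.inl ha), hσ', hdis a ha]
    have := hdis y
    have := hdis' y
    tauto
  have hm2 : ∀ a ∈ V, mu (e ∘ σ) f a = b - 2 := by
    intro a ha
    rw [mu, ← hVc]
    congr 1
    ext y
    simp only [Finset.mem_filter, Finset.mem_univ, true_and, Function.comp_apply]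
    rw [(hσ' a).2 (Or.inr ha), hσ', hf.half hn (hdis' a ha)]
    have := hdis y
    have := hdis' y
    tauto
  have hVf : (V ∪ cls f r).card = 2 * b - 2 := by
    rw [Finset.card_union_of_disjoint (Finset.disjoint_left.2 fun a h1 h2 =>
      hdis' a h1 (mem_cls.1 h2)), hf]
    omega
  obtain ⟨w, -, hw⟩ := exists_notMem_of_card (S := Finset.univ) (T := V ∪ cls f r)
    (by rw [hVf, Finset.card_univ]; omega)
  rw [Finset.mem_union, mem_cls, not_or] at hw
  have hm3 : mu (e ∘ σ) f w = 2 := by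
    have h2 : ((V ∪ cls f r)ᶜ).card = 2 := by rw [Finset.card_compl, hVf]; omega
    rw [mu, ← h2]
    congr 1
    ext y
    simp only [Finset.mem_filter, Finset.mem_univ, true_and, Function.comp_apply, Finset.mem_compl,
      Finset.mem_union, mem_cls]
    rw [he.half hn (a := σ w) (r := r) (by rw [Ne, hσ']; have := hdis w; tauto), Ne, hσ',
      hf.half hn hw.2]
    have := hdis y
    tauto
  refine ⟨σ, Finset.univ.filter fun a => mu (e ∘ σ) f a = 2, ?_, ?_, ?_⟩
  · obtain ⟨u, v, huv, rfl⟩ := Finset.card_eq_two.1 hUc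
    refine three_le_card (a := u) (b := v) (c := w) huv ?_ ?_ ?_ ?_ ?_
    · rintro rfl; exact hw.2 (hdis _ (by simp))
    · rintro rfl; exact hw.2 (hdis _ (by simp))
    · simp [hm1]
    · simp [hm1]
    · simp [hm3]
  · have : V ⊆ (Finset.univ.filter fun a => mu (e ∘ σ) f a = 2)ᶜ := by
      intro a ha
      rw [Finset.mem_compl, Finset.mem_filter, hm2 a ha]
      omega
    have := Finset.card_le_card this
    omega
  · intro x h1 h2 a
    rw [Finset.mem_filter, Finset.mem_filter, mu_invariant h1 h2]
    simp

theorem exists_split_of_le {e f : α → ℕ} {b d : ℕ} (he : Unif e b) (hf : Unif f d) (hb : 2 ≤ b)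
    (hbd : b ≤ d) (hdn : d < Fintype.card α) (hn : 9 ≤ Fintype.card α) :
    ∃ σ : Perm α, Split (e ∘ σ) f := by
  obtain ⟨k, hk⟩ := he.dvd
  obtain ⟨m, hm⟩ := hf.dvd
  rcases Nat.eq_or_lt_of_le hb with rfl | hb3
  · exact split_two he hf hbd hdn (by omega)
  by_cases h2 : 2 * b < Fintype.card α
  · exact split_three he hf hb3 hbd hdn h2
  have hk2 : k = 2 := by
    have : k ≤ 2 := by
      by_contra h
      have : b * 3 ≤ b * k := Nat.mul_le_mul_left _ (by omega)
      omega
    interval_cases k <;> omega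
  subst hk2
  have hm2 : 2 ≤ m := by
    by_contra h
    have : m ≤ 1 := by omega
    interval_cases m <;> omega
  have : d * 2 ≤ d * m := Nat.mul_le_mul_left _ hm2
  have hdb : d = b := by omega
  subst hdb
  exact split_half he hf (by omega) (by omega)

theorem exists_split {e f : α → ℕ} {b d : ℕ} (he : Unif e b) (hf : Unif f d) (hb : 2 ≤ b)
    (hbn : b < Fintype.card α) (hd : 2 ≤ d) (hdn : d < Fintype.card α) (hn : 9 ≤ Fintype.card α) :
    ∃ σ τ : Perm α, Split (e ∘ σ) (f ∘ τ) := by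
  rcases Nat.le_total b d with h | h
  · obtain ⟨σ, hσ⟩ := exists_split_of_le he hf hb h hdn hn
    exact ⟨σ, 1, hσ⟩
  · obtain ⟨σ, Δ, h1, h2, h3⟩ := exists_split_of_le hf he hd h hbn hn
    exact ⟨1, σ, Δ, h1, h2, fun x h4 h5 => h3 x h5 h4⟩

/-- The number of points of `Δ` in the class of a point. -/
def cnt (e : α → ℕ) (Δ : Finset α) (a : α) : ℕ := (Δ.filter fun y => e y = e a).card

theorem cnt_congr {e : α → ℕ} {Δ : Finset α} {a b : α} (h : e a = e b) : cnt e Δ a = cnt e Δ b := by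
  rw [cnt, cnt, h]

theorem cnt_invariant {e : α → ℕ} {Δ : Finset α} {x : Perm α} (he : PresElt x e)
    (hx : ∀ a, x a ∈ Δ ↔ a ∈ Δ) (a : α) : cnt e Δ (x a) = cnt e Δ a := by
  symm
  refine Finset.card_bij (fun y _ => x y) ?_ (fun _ _ _ _ h => x.injective h) ?_
  · intro y hy
    rw [Finset.mem_filter] at hy ⊢
    exact ⟨(hx y).2 hy.1, (he y a).2 hy.2⟩
  · intro y hy
    rw [Finset.mem_filter] at hy
    refine ⟨x⁻¹ y, ?_, ap_inv _ _⟩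
    rw [Finset.mem_filter]
    exact ⟨(hx _).1 (by rw [ap_inv]; exact hy.1), (he _ a).1 (by rw [ap_inv]; exact hy.2)⟩

/-- The partition `e` can be placed so that it refines both `Δ` and its complement. -/
theorem exists_refine {e : α → ℕ} {b : ℕ} {Δ : Finset α} (he : Unif e b) (hb : 2 ≤ b)
    (hbn : b < Fintype.card α) (h6 : 6 ≤ Fintype.card α) (hΔ : 3 ≤ Δ.card) (hΔ' : 3 ≤ Δᶜ.card) :
    ∃ σ : Perm α, ∃ a₁ a₂ d₁ d₂, a₁ ∈ Δ ∧ a₂ ∈ Δ ∧ d₁ ∉ Δ ∧ d₂ ∉ Δ ∧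
      cnt (e ∘ σ) Δ a₁ ≠ cnt (e ∘ σ) Δ a₂ ∧ cnt (e ∘ σ) Δ d₁ ≠ cnt (e ∘ σ) Δ d₂ := by
  obtain ⟨m, hm1, hm2, hm3⟩ := exists_nodup_list hΔ
  obtain ⟨a₁, a₂, a₃, rfl⟩ := List.length_eq_three.1 hm2
  obtain ⟨m', hm1', hm2', hm3'⟩ := exists_nodup_list hΔ'
  obtain ⟨d₁, d₂, d₃, rfl⟩ := List.length_eq_three.1 hm2'
  simp only [List.mem_cons, List.not_mem_nil, or_false, forall_eq_or_imp, forall_eq,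
    Finset.mem_compl] at hm3 hm3'
  obtain ⟨k1, k2, k3⟩ := hm3
  obtain ⟨k4, k5, k6⟩ := hm3'
  have hnd : [a₁, a₂, a₃, d₁, d₂, d₃].Nodup := by
    simp only [List.nodup_cons, List.mem_cons, List.not_mem_nil, or_false, not_or, List.nodup_nil,
          not_false_eq_true, and_true] at hm1 hm1' ⊢
    and_intros <;> grind
  have hα : Nonempty α := ⟨a₁⟩
  obtain ⟨r₁⟩ := hα
  obtain ⟨r₂, hr₂⟩ := he.exists_new [r₁] (by simpa using hbn)
  rcases Nat.eq_or_lt_of_le hb with rfl | hb3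
  · obtain ⟨r₃, hr₃⟩ := he.exists_new [r₁, r₂] (by simp only [List.length_cons, List.length_nil]; omega)
    obtain ⟨p, p', h1, h2, h3⟩ := he.exists_pair le_rfl r₁
    obtain ⟨q, q', h4, h5, h6⟩ := he.exists_pair le_rfl r₂
    obtain ⟨s, s', h7, h8, h9⟩ := he.exists_pair le_rfl r₃
    simp only [List.mem_cons, List.not_mem_nil, or_false, forall_eq_or_imp, forall_eq] at hr₂ hr₃
    obtain ⟨σ, hσ⟩ := exists_perm_list [a₁, a₂, a₃, d₁, d₂, d₃] [p, q, p', q', s, s'] hnd (by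
      simp only [List.nodup_cons, List.mem_cons, List.not_mem_nil, or_false, not_or, List.nodup_nil,
          not_false_eq_true, and_true]
      and_intros <;> grind) rfl
    simp only [List.map_cons, List.map_nil, List.cons.injEq, and_true] at hσ
    obtain ⟨s1, s2, s3, s4, s5, s6⟩ := hσ
    have hcl : ∀ u v, u ≠ v → e (σ u) = e (σ v) →
        cnt (e ∘ σ) Δ u = (({u, v} : Finset α).filter fun y => y ∈ Δ).card := by
      intro u v huv h
      have : ({u, v} : Finset α) = cls (e ∘ σ) u := by
        apply Finset.eq_of_subset_of_card_le
        · intro y hy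
          simp only [Finset.mem_insert, Finset.mem_singleton] at hy
          rcases hy with rfl | rfl
          · exact self_mem_cls _ _
          · exact mem_cls.2 h.symm
        · rw [he.comp σ u, Finset.card_pair huv]
      rw [cnt, this]
      congr 1
      ext y
      simp only [Finset.mem_filter, mem_cls]
      tauto
    simp only [List.nodup_cons, List.mem_cons, List.not_mem_nil, or_false, not_or, List.nodup_nil,
          not_false_eq_true, and_true] at hnd
    have c1 := hcl a₁ a₃ (by tauto) (by rw [s1, s3, h2, h3])
    have c2 := hcl a₂ d₁ (by tauto) (by rw [s2, s4, h5, h6])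
    have c3 := hcl d₂ d₃ (by tauto) (by rw [s5, s6, h8, h9])
    have c4 : cnt (e ∘ σ) Δ d₁ = cnt (e ∘ σ) Δ a₂ := cnt_congr (by
      simp only [Function.comp_apply]; rw [s2, s4, h5, h6])
    rw [Finset.filter_insert, Finset.filter_singleton] at c1 c2 c3
    refine ⟨σ, a₁, a₂, d₁, d₂, k1, k2, k4, k5, ?_, ?_⟩
    · rw [c1, c2, if_pos k1, if_pos k3, if_pos k2, if_neg k4, Finset.card_pair (by tauto)]
      simp
    · rw [c4, c3, c2, if_neg k5, if_neg k6, if_pos k2, if_neg k4]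
      simp
  · obtain ⟨p₁, p₂, p₃, h1, h2, h3, h4, h5, h6⟩ := he.exists_triple hb3 r₁
    obtain ⟨q₁, q₂, q₃, h7, h8, h9, h10, h11, h12⟩ := he.exists_triple hb3 r₂
    simp only [List.mem_cons, List.not_mem_nil, or_false, forall_eq_or_imp, forall_eq] at hr₂
    obtain ⟨σ, hσ⟩ := exists_perm_list [a₁, a₂, a₃, d₁, d₂, d₃] [p₁, q₁, p₂, p₃, q₂, q₃] hnd (by
      simp only [List.nodup_cons, List.mem_cons, List.not_mem_nil, or_false, not_or, List.nodup_nil,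
          not_false_eq_true, and_true]
      and_intros <;> grind) rfl
    simp only [List.map_cons, List.map_nil, List.cons.injEq, and_true] at hσ
    obtain ⟨s1, s2, s3, s4, s5, s6⟩ := hσ
    simp only [List.nodup_cons, List.mem_cons, List.not_mem_nil, or_false, not_or, List.nodup_nil,
          not_false_eq_true, and_true] at hnd
    by_cases hne : cnt (e ∘ σ) Δ a₁ = cnt (e ∘ σ) Δ a₂
    · -- exchanging `a₃` and `d₃` makes the two counts differ
      have h13 : e (σ a₁) = e (σ a₃) := by rw [s1, s3, h4, h5]
      have h14 : e (σ a₁) = e (σ d₁) := by rw [s1, s4, h4, h6]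
      have h15 : e (σ a₂) = e (σ d₂) := by rw [s2, s5, h10, h11]
      have h16 : e (σ a₂) = e (σ d₃) := by rw [s2, s6, h10, h12]
      have h17 : e (σ a₁) ≠ e (σ a₂) := by rw [s1, s2, h4, h10]; exact fun h => hr₂ h.symm
      set τ := σ * swap a₃ d₃ with hτ
      have t : ∀ y, y ≠ a₃ → y ≠ d₃ → τ y = σ y := fun y h h' => by
        rw [hτ, Perm.mul_apply, swap_apply_of_ne_of_ne h h']
      have t3 : τ a₃ = σ d₃ := by rw [hτ, Perm.mul_apply, swap_apply_left]
      have c1 : cnt (e ∘ τ) Δ a₁ < cnt (e ∘ σ) Δ a₁ := by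
        refine Finset.card_lt_card ⟨fun y hy => ?_, fun h => ?_⟩
        · rw [Finset.mem_filter] at hy ⊢
          refine ⟨hy.1, ?_⟩
          have h2 := hy.2
          simp only [Function.comp_apply] at h2 ⊢
          rw [t a₁ (by tauto) (by tauto)] at h2
          by_cases hy3 : y = a₃
          · subst hy3; exact h13.symm
          · rwa [t y hy3 (by rintro rfl; exact k6 hy.1)] at h2
        · have := Finset.mem_filter.1 (h (Finset.mem_filter.2 ⟨k3, h13.symm⟩))
          have h2 := this.2
          simp only [Function.comp_apply] at h2
          rw [t a₁ (by tauto) (by tauto), t3, ← h16] at h2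
          exact h17 h2.symm
      have c2 : cnt (e ∘ σ) Δ a₂ ≤ cnt (e ∘ τ) Δ a₂ := by
        refine Finset.card_le_card fun y hy => ?_
        rw [Finset.mem_filter] at hy ⊢
        refine ⟨hy.1, ?_⟩
        have h2 := hy.2
        simp only [Function.comp_apply] at h2 ⊢
        rw [t a₂ (by tauto) (by tauto)]
        have hy3 : y ≠ a₃ := by rintro rfl; exact h17 (h13.trans h2)
        rwa [t y hy3 (by rintro rfl; exact k6 hy.1)]
      have c3 : cnt (e ∘ τ) Δ d₁ = cnt (e ∘ τ) Δ a₁ := cnt_congr (by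
        simp only [Function.comp_apply]
        rw [t a₁ (by tauto) (by tauto), t d₁ (by tauto) (by tauto), h14])
      have c4 : cnt (e ∘ τ) Δ d₂ = cnt (e ∘ τ) Δ a₂ := cnt_congr (by
        simp only [Function.comp_apply]
        rw [t a₂ (by tauto) (by tauto), t d₂ (by tauto) (by tauto), h15])
      exact ⟨τ, a₁, a₂, d₁, d₂, k1, k2, k4, k5, by omega, by omega⟩
    · have c1 : cnt (e ∘ σ) Δ d₁ = cnt (e ∘ σ) Δ a₁ := cnt_congr (by
        simp only [Function.comp_apply]; rw [s4, s1, h6, h4])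
      have c2 : cnt (e ∘ σ) Δ d₂ = cnt (e ∘ σ) Δ a₂ := cnt_congr (by
        simp only [Function.comp_apply]; rw [s5, s2, h11, h10])
      exact ⟨σ, a₁, a₂, d₁, d₂, k1, k2, k4, k5, hne, by rw [c1, c2]; exact hne⟩

theorem Impr.exists_conj {H : Subgroup (Perm α)} (h : Impr H) : ∃ (e : α → ℕ) (b : ℕ), 2 ≤ b ∧
    b < Fintype.card α ∧ Unif e b ∧ ∀ σ : Perm α, ∃ g ∈ alternatingGroup α,
      ∀ x ∈ conjSub g H, PresElt x (e ∘ σ) := by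
  obtain ⟨e, b, hb, hbn, hu, hp⟩ := h
  refine ⟨e, b, hb, hbn, hu, fun σ => ?_⟩
  have hα : Nonempty α := Fintype.card_pos_iff.1 (by omega)
  obtain ⟨r⟩ := hα
  obtain ⟨p, q, hpq, h1, h2⟩ := Unif.exists_pair hu hb r
  obtain ⟨g, hg, he⟩ := exists_even_comp hpq (h1.trans h2.symm) σ⁻¹
  refine ⟨g, hg, fun x hx => ?_⟩
  have := hp.conj g x hx
  rw [he, inv_inv] at this
  exact this

/-- Three imprimitive groups suffice to cut the domain into four invariant pieces. -/
theorem step_three_impr {c : α → ℕ} (ih : IHyp c) {l l' : List (Subgroup (Perm α))}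
    (hl : ∀ H ∈ l, Prp H) (hc : Fintype.card α - 1 ≤ rk c + l.length) (hr : rk c = 1)
    (hn : 9 ≤ Fintype.card α) {H₁ H₂ H₃ : Subgroup (Perm α)} (hp : l.Perm (H₁ :: H₂ :: H₃ :: l'))
    (h₁ : Impr H₁) (h₂ : Impr H₂) (h₃ : Impr H₃) : Reg (Yg c ⊓ alternatingGroup α) l := by
  obtain ⟨e, b, hb, hbn, hu, he⟩ := h₁.exists_conj
  obtain ⟨f, d, hd, hdn, hv, hf⟩ := h₂.exists_conj
  obtain ⟨k, m, hm, hmn, hw, hk⟩ := h₃.exists_conj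
  obtain ⟨σ, τ, Δ, h3, h3', hΔ⟩ := exists_split hu hv hb hbn hd hdn hn
  obtain ⟨ρ, a₁, a₂, d₁, d₂, k1, k2, k4, k5, hne, hne'⟩ := exists_refine hw hm hmn (by omega) h3 h3'
  obtain ⟨g₁, hg₁, hx₁⟩ := he σ
  obtain ⟨g₂, hg₂, hx₂⟩ := hf τ
  obtain ⟨g₃, hg₃, hx₃⟩ := hk ρ
  refine Reg.perm hp.symm ⟨g₁, hg₁, g₂, hg₂, g₃, hg₃, ?_⟩
  let φ : α → ℕ := refn (fun a => if a ∈ Δ then 1 else 0) (cnt (k ∘ ρ) Δ)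
  have hrk : 4 ≤ rk φ := by
    have h : ({φ a₁, φ a₂, φ d₁, φ d₂} : Finset ℕ) ⊆ Finset.univ.image φ := by
      intro y hy
      simp only [Finset.mem_insert, Finset.mem_singleton] at hy
      rcases hy with rfl | rfl | rfl | rfl <;> exact Finset.mem_image_of_mem _ (Finset.mem_univ _)
    refine le_trans ?_ (Finset.card_le_card h)
    rw [Finset.card_insert_of_notMem, Finset.card_insert_of_notMem, Finset.card_pair]
    · simp [φ, refn, Nat.pair_eq_pair, hne']
    · simp [φ, refn, Nat.pair_eq_pair, k2, k4, k5]
    · simp [φ, refn, Nat.pair_eq_pair, k1, k2, k4, k5, hne]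
  have hlen := hp.length_eq
  simp only [List.length_cons] at hlen
  refine Reg.mono ?_ (ih φ l' (by omega) (fun H hH => hl H (hp.mem_iff.2 (by simp [hH]))) (by omega))
  rintro x ⟨⟨⟨⟨-, hxA⟩, hxg₁⟩, hxg₂⟩, hxg₃⟩
  have hxΔ := hΔ x (hx₁ x hxg₁) (hx₂ x hxg₂)
  refine Subgroup.mem_inf.2 ⟨mem_Yg_refn.2 ⟨fun a => ?_, cnt_invariant (hx₃ x hxg₃) hxΔ⟩, hxA⟩
  by_cases h : a ∈ Δ
  · simp [h, (hxΔ a).2 h]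
  · simp [h, mt (hxΔ a).1 h]

/-! ### Degree at least nine -/

theorem exists_list_split {β : Type*} (P : β → Prop) (l : List β) :
    ∃ l₁ l₂ : List β, l.Perm (l₁ ++ l₂) ∧ (∀ H ∈ l₁, P H) ∧ ∀ H ∈ l₂, ¬ P H := by
  classical
  refine ⟨l.filter (fun H => P H), l.filter (fun H => !decide (P H)),
    (List.filter_append_perm _ _).symm, ?_, ?_⟩
  · intro H hH; simpa using (List.mem_filter.1 hH).2
  · intro H hH; simpa using (List.mem_filter.1 hH).2

/-- Counting version of `Reg.of_phi`: after intersecting with the groups in `l` at most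
`(|K| - 1) q ^ l.length` nontrivial elements remain. -/
theorem Reg.of_phi_append {q : ℚ} (hq : 0 ≤ q) {m : List (Subgroup (Perm α))} :
    ∀ (l : List (Subgroup (Perm α))) {K : Subgroup (Perm α)}, (∀ H ∈ l, PhiLe H q) →
    K ≤ alternatingGroup α →
    (∀ K' ≤ K, (Nat.card K' : ℚ) - 1 ≤ ((Nat.card K : ℚ) - 1) * q ^ l.length → Reg K' m) →
    Reg K (l ++ m) := by
  intro l
  induction l with
  | nil => intro K _ _ h; exact h K le_rfl (by simp)
  | cons H l ih =>
    intro K hl hK h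
    obtain ⟨g, hg, hle⟩ := (hl H (by simp)).exists_card hK
    refine ⟨g, hg, ih (fun H' h' => hl _ (by simp [h'])) (inf_le_left.trans hK) ?_⟩
    intro K' hK' h'
    refine h K' (hK'.trans inf_le_left) (h'.trans ?_)
    rw [← card_nt, ← card_nt, List.length_cons, pow_succ]
    push_cast
    rw [add_sub_cancel_right, add_sub_cancel_right, mul_comm (q ^ l.length) q, ← mul_assoc]
    exact mul_le_mul_of_nonneg_right hle (by positivity)

theorem Phi_nonneg {n : ℕ} : 0 ≤ Phi n := by
  unfold Phi
  split_ifs with h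
  · norm_num
  · have : (10 : ℚ) ≤ n := by exact_mod_cast not_lt.1 h
    exact div_nonneg (by linarith) (by linarith)

theorem Phi_anti {m n : ℕ} (hm : 10 ≤ m) (h : m ≤ n) : Phi n ≤ Phi m := by
  unfold Phi
  rw [if_neg (by omega), if_neg (by omega)]
  have h1 : (10 : ℚ) ≤ m := by exact_mod_cast hm
  have h2 : (m : ℚ) ≤ n := by exact_mod_cast h
  rw [div_le_div_iff₀ (by linarith) (by linarith)]
  nlinarith

theorem Phi_le_one {n : ℕ} : Phi n ≤ 1 := by
  by_cases h : n < 10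
  · unfold Phi; rw [if_pos h]; norm_num
  · refine (Phi_anti le_rfl (not_lt.1 h)).trans ?_
    unfold Phi; norm_num

theorem base_numeric_nat : ∀ m < 250, 10 ≤ m →
    m.descFactorial (m / 2) * (m - 3) ^ (m - 5) < (15 * (m - 5)) ^ (m - 5) := by
  decide +kernel

theorem base_numeric {m e : ℕ} (h1 : 10 ≤ m) (h2 : m < 250) (he : m - 5 ≤ e) {q : ℚ} (h0 : 0 ≤ q)
    (hq : q ≤ Phi m) {k : ℕ} (hk : k ≤ m.descFactorial (m / 2)) : ((k : ℚ) - 1) * q ^ e < 1 := by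
  have hn := base_numeric_nat m h2 h1
  have h10 : (10 : ℚ) ≤ m := by exact_mod_cast h1
  have key : (m.descFactorial (m / 2) : ℚ) * Phi m ^ (m - 5) < 1 := by
    unfold Phi
    rw [if_neg (by omega), div_pow, mul_div_assoc', div_lt_one (by apply pow_pos; linarith)]
    have : ((m.descFactorial (m / 2) * (m - 3) ^ (m - 5) : ℕ) : ℚ)
        < ((15 * (m - 5)) ^ (m - 5) : ℕ) := by exact_mod_cast hn
    push_cast [Nat.cast_sub (show 3 ≤ m by omega), Nat.cast_sub (show 5 ≤ m by omega)] at this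
    exact this
  have hq1 : q ≤ 1 := hq.trans Phi_le_one
  have h3 : q ^ e ≤ Phi m ^ (m - 5) :=
    (pow_le_pow_of_le_one h0 hq1 he).trans (pow_le_pow_left₀ h0 hq _)
  have hk' : (k : ℚ) ≤ m.descFactorial (m / 2) := by exact_mod_cast hk
  calc ((k : ℚ) - 1) * q ^ e ≤ (k : ℚ) * q ^ e := by
        apply mul_le_mul_of_nonneg_right _ (by positivity); linarith
    _ ≤ _ := mul_le_mul hk' h3 (by positivity) (by positivity)
    _ < 1 := key

/-- If all nontrivial classes of `c` have more than half of the points, there is only one. -/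
theorem one_class {c : α → ℕ} {t : ℕ} (ht : Fintype.card α ≤ 2 * t + 1)
    (h : ∀ ω a, c a = c ω → a ≠ ω → t < (cls c ω).card) (hr : rk c + 1 ≤ Fintype.card α) :
    ∃ a ω, c a = c ω ∧ a ≠ ω ∧ Yg c ≤ fixOff (cls c ω) ∧
      rk c + (cls c ω).card ≤ Fintype.card α + 1 := by
  obtain ⟨a, ω, hne, hc⟩ := exists_pair_of_rk hr
  refine ⟨a, ω, hc, hne, ?_, ?_⟩
  · intro x hx b hb
    by_contra hxb
    have h1 := h _ _ hc hne
    have h2 := h b (x b) (hx b) hxb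
    have hd : Disjoint (cls c ω) (cls c b) := by
      rw [Finset.disjoint_left]
      intro y h3 h4
      rw [mem_cls] at h3 h4 hb
      exact hb (h4.symm.trans h3)
    have := Finset.card_le_univ (cls c ω ∪ cls c b)
    rw [Finset.card_union_of_disjoint hd] at this
    omega
  · have hsub : Finset.univ.image c ⊆ insert (c ω) ((cls c ω)ᶜ.image c) := by
      intro y hy
      obtain ⟨b, -, rfl⟩ := Finset.mem_image.1 hy
      by_cases hb : c b = c ω
      · rw [hb]; exact Finset.mem_insert_self _ _
      · exact Finset.mem_insert_of_mem (Finset.mem_image_of_mem _ (by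
          rw [Finset.mem_compl, mem_cls]; exact hb))
    have h1 := (Finset.card_le_card hsub).trans (Finset.card_insert_le _ _)
    have h2 : ((cls c ω)ᶜ.image c).card ≤ _ := Finset.card_image_le
    rw [Finset.card_compl] at h2
    have h3 := Finset.card_le_univ (cls c ω)
    change rk c ≤ _ at h1
    omega

/-- Groups with at most half as many elements as there are points, regular on an orbit, can be
avoided by a tame group. -/
theorem Tame.kill_half {H L : Subgroup (Perm α)} (hH : Tame H) (hn : 10 ≤ Fintype.card α)
    (hLA : L ≤ alternatingGroup α) {ω : α} (hω : ∀ x ∈ L, x ω = ω → x = 1)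
    (hL : 2 * Nat.card L ≤ Fintype.card α ∨ Nat.card L ≤ 9 ∨ 125 ≤ Nat.card L) :
    ∃ g ∈ alternatingGroup α, L ⊓ conjSub g H = ⊥ := by
  by_cases h9 : Nat.card L ≤ 9
  · refine hH.phiLe.exists_bot hLA ?_
    have h1 := Phi_anti le_rfl hn
    have h2 : Phi 10 = 7 / 75 := by unfold Phi; norm_num
    have h3 : (Nat.card L : ℚ) ≤ 9 := by exact_mod_cast h9
    have h4 : (0 : ℚ) ≤ Phi (Fintype.card α) := Phi_nonneg
    nlinarith
  · rcases hL with hL | hL | hL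
    · exact hH.three.kill_small (by omega) hω (by omega) hL
    · omega
    · exact hH.three.kill_large (by omega) hω hL

theorem step_prim_nine {c : α → ℕ} (ih : IHyp c) {l : List (Subgroup (Perm α))}
    (hl : ∀ H ∈ l, Prp H) (hc : Fintype.card α - 1 ≤ rk c + l.length)
    (hr : rk c + 2 ≤ Fintype.card α) (hr2 : 2 ≤ rk c) (hn : 9 ≤ Fintype.card α)
    (ht : ∀ H ∈ l, Tame H) : Reg (Yg c ⊓ alternatingGroup α) l := by
  obtain ⟨H, hH⟩ : ∃ H, H ∈ l := List.exists_mem_of_length_pos (by omega)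
  obtain ⟨l', hp⟩ := exists_perm_cons hH
  have hlen : l.length = l'.length + 1 := by simpa using hp.length_eq
  have ht' : ∀ H' ∈ l', PhiLe H' (Phi (Fintype.card α)) := fun H' h' =>
    (ht H' (hp.mem_iff.2 (by simp [h']))).phiLe
  have hPhi0 : (0 : ℚ) ≤ Phi (Fintype.card α) := Phi_nonneg
  -- a class of size `m` such that groups of order at most `m` can be avoided
  by_cases hgood : ∃ ω a, c a = c ω ∧ a ≠ ω ∧
      (if 10 ≤ Fintype.card α then 2 * (cls c ω).card ≤ Fintype.card α ∨ (cls c ω).card ≤ 9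
        else (cls c ω).card ≤ 5)
  · obtain ⟨ω, a, ha, hne, hsz⟩ := hgood
    obtain ⟨L, hL, hω, -, hk⟩ := ih.exists_core hl hc hp ha hne
    have hLc := card_le_cls (hL.trans inf_le_left) hω
    refine hk ?_
    split_ifs at hsz with h10
    · exact (ht H hH).kill_half h10 (hL.trans inf_le_right) hω (by omega)
    · refine (ht H hH).phiLe.exists_bot (hL.trans inf_le_right) ?_
      have h2 : Phi (Fintype.card α) = 1 / 5 := by unfold Phi; rw [if_pos (by omega)]
      have h3 : (Nat.card L : ℚ) ≤ 5 := by exact_mod_cast hLc.trans hsz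
      rw [h2]; linarith
  push Not at hgood
  obtain ⟨a, ω, ha, hne, hfix, hrk⟩ := one_class (c := c)
    (t := if 10 ≤ Fintype.card α then Fintype.card α / 2 else 5) (by split_ifs <;> omega)
    (by
      intro ω a ha hne
      have := hgood ω a ha hne
      split_ifs at this ⊢ <;> omega) (by omega)
  have hsz := hgood ω a ha hne
  have hm := Finset.card_le_univ (cls c ω)
  -- intersect with one group and use the bound on pointwise stabilisers
  have main : ∀ q : ℚ, Phi (Fintype.card α) = q →
      (∀ k : ℕ, k ≤ (cls c ω).card.descFactorial ((cls c ω).card / 2) →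
        ((k : ℚ) - 1) * q ^ l'.length < 1) → Reg (Yg c ⊓ alternatingGroup α) l := by
    rintro q rfl hq
    refine Reg.perm hp.symm ⟨1, one_mem _, Reg.of_phi Phi_nonneg l' ht'
      (inf_le_left.trans inf_le_right) (hq _ ?_)⟩
    rw [conjSub_one]
    refine (Subgroup.card_le_of_le ?_).trans (card_le_descFactorial (ht H hH).three _)
    exact le_inf inf_le_right ((inf_le_left.trans inf_le_left).trans hfix)
  by_cases h10 : 10 ≤ Fintype.card α
  · rw [if_pos h10] at hsz
    push Not at hsz
    by_cases h250 : Fintype.card α < 250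
    · exact main _ rfl fun k hk => base_numeric (by omega) (by omega) (by omega) Phi_nonneg
        (Phi_anti (by omega) hm) hk
    · obtain ⟨L, hL, hω, -, hk⟩ := ih.exists_core hl hc hp ha hne
      exact hk ((ht H hH).kill_half h10 (hL.trans inf_le_right) hω (by omega))
  · rw [if_neg h10] at hsz
    have h9 : Fintype.card α = 9 := by omega
    refine main (1 / 5) (by unfold Phi; rw [if_pos (by omega)]) ?_
    intro k hk
    rw [not_le] at hsz
    have hm8 : (cls c ω).card ≤ 8 := by omega
    have he : (cls c ω).card - 3 ≤ l'.length := by omega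
    have hpow : ((1 : ℚ) / 5) ^ l'.length ≤ (1 / 5) ^ ((cls c ω).card - 3) :=
      pow_le_pow_of_le_one (by norm_num) (by norm_num) he
    have hpos : (0 : ℚ) < (1 / 5) ^ l'.length := by positivity
    generalize (cls c ω).card = m at *
    have hk' : (k : ℚ) ≤ m.descFactorial (m / 2) := by exact_mod_cast hk
    have hm6 : 6 ≤ m := hsz
    have aux : ∀ (N : ℚ) (t : ℚ), (k : ℚ) ≤ N → 0 < t → N * t < 1 → ((k : ℚ) - 1) * t < 1 := by
      intro N t h1 h2 h3; nlinarith
    have e1 : (6).descFactorial 3 = 120 := by decide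
    have e2 : (7).descFactorial 3 = 210 := by decide
    have e3 : (8).descFactorial 4 = 1680 := by decide
    refine aux _ _ hk' hpos ?_
    interval_cases m
    · simp only [Nat.reduceDiv, e1]; norm_num at hpow ⊢; linarith
    · simp only [Nat.reduceDiv, e2]; norm_num at hpow ⊢; linarith
    · simp only [Nat.reduceDiv, e3]; norm_num at hpow ⊢; linarith

theorem step_trans_nine {c : α → ℕ} (ih : IHyp c) {l : List (Subgroup (Perm α))}
    (hl : ∀ H ∈ l, Prp H) (hc : Fintype.card α - 1 ≤ rk c + l.length)
    (hr : rk c = 1) (hn : 9 ≤ Fintype.card α)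
    (ht : ∀ H ∈ l, Tame H ∨ Impr H) : Reg (Yg c ⊓ alternatingGroup α) l := by
  obtain ⟨l₁, l₂, hp, h₁, h₂⟩ := exists_list_split (fun H => Tame H) l
  have hlen : l.length = l₁.length + l₂.length := by simpa using hp.length_eq
  have h₂' : ∀ H ∈ l₂, Impr H := fun H hH =>
    (ht H (hp.mem_iff.2 (by simp [hH]))).resolve_left (h₂ H hH)
  have hp2 : ∀ H ∈ l₂, Prp H := fun H hH => hl H (hp.mem_iff.2 (by simp [hH]))
  rcases Nat.lt_or_ge l₂.length 3 with h3 | h3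
  swap
  · match l₂, h₂', hp, h3 with
    | A :: B :: C :: m, h₂', hp, _ =>
      refine step_three_impr ih hl hc hr hn (H₁ := A) (H₂ := B) (H₃ := C) (l' := m ++ l₁)
        (hp.trans ?_) (h₂' _ (by simp)) (h₂' _ (by simp)) (h₂' _ (by simp))
      simpa using (List.perm_append_comm (l₁ := l₁) (l₂ := A :: B :: C :: m))
  match l₁, h₁, hp, hlen with
  | [], _, _, hlen => simp at hlen; omega
  | H :: l', h₁, hp, hlen =>
    simp only [List.length_cons] at hlen
    have hH := h₁ H (by simp)
    have ht' : ∀ H' ∈ l', PhiLe H' (Phi (Fintype.card α)) := fun H' h' => (h₁ H' (by simp [h'])).phiLe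
    have hcard : Nat.card (Yg c ⊓ alternatingGroup α ⊓ conjSub 1 H : Subgroup _) ≤
        (Fintype.card α).descFactorial (Fintype.card α / 2) := by
      rw [conjSub_one]
      have := card_le_descFactorial hH.three Finset.univ
      rw [Finset.card_univ] at this
      refine (Subgroup.card_le_of_le ?_).trans this
      refine le_inf inf_le_right fun x _ => ?_
      rw [mem_fixOff]; simp
    by_cases h10 : 10 ≤ Fintype.card α
    · by_cases h250 : Fintype.card α < 250
      · refine Reg.perm hp.symm ⟨1, one_mem _, Reg.append (Reg.of_phi Phi_nonneg l' ht'
          (inf_le_left.trans inf_le_right) ?_)⟩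
        exact base_numeric h10 h250 (by omega) Phi_nonneg le_rfl hcard
      · obtain ⟨a, ω, hne, ha⟩ := exists_pair_of_rk (c := c) (by omega)
        obtain ⟨L, hL, hω, -, hk⟩ := ih.exists_core hl hc hp ha hne
        exact hk (hH.kill_half h10 (hL.trans inf_le_right) hω (by omega))
    · have h9 : Fintype.card α = 9 := by omega
      have hPhi : Phi (Fintype.card α) = 1 / 5 := by unfold Phi; rw [if_pos (by omega)]
      rw [hPhi] at ht'
      -- four further tame groups leave at most five elements
      have hl' : 4 ≤ l'.length := by omega
      refine Reg.perm hp.symm ?_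
      refine ⟨1, one_mem _, ?_⟩
      rw [← List.take_append_drop 4 l']
      show Reg _ (_ ++ _ ++ _)
      rw [List.append_assoc]
      refine Reg.of_phi_append (q := 1 / 5) (by norm_num) _
        (fun H' h' => ht' H' (List.mem_of_mem_take h')) (inf_le_left.trans inf_le_right) ?_
      intro K' hK' hcK
      rw [List.length_take, min_eq_left hl'] at hcK
      have h1 : Nat.card K' < 8 := by
        rw [h9] at hcard
        have h2 : (Nat.card (Yg c ⊓ alternatingGroup α ⊓ conjSub 1 H : Subgroup _) : ℚ) ≤ 3024 := by
          exact_mod_cast hcard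
        have h3 : (Nat.card K' : ℚ) < 8 := by
          generalize (Nat.card (Yg c ⊓ alternatingGroup α ⊓ conjSub 1 H : Subgroup _) : ℚ) = u at *
          norm_num at hcK; linarith
        exact_mod_cast h3
      refine Reg.of_card (by omega) _ ?_ (hK'.trans (inf_le_left.trans inf_le_right)) ?_
      · intro H' h'
        rcases List.mem_append.1 h' with h' | h'
        · exact hl _ (hp.mem_iff.2 (by simp [List.mem_of_mem_drop h']))
        · exact hp2 _ h'
      · refine h1.trans_le ?_
        have : 2 ≤ (l'.drop 4 ++ l₂).length := by simp; omega
        calc 8 = 2 ^ (2 + 1) := by norm_num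
          _ ≤ _ := Nat.pow_le_pow_right (by norm_num) (by omega)

theorem step_nine (hn : 9 ≤ Fintype.card α) : Step α := by
  intro c l ih hl hc hr
  by_cases hi : ∃ H ∈ l, Intr H
  · obtain ⟨H, hH, hi⟩ := hi
    exact step_intr ih hl hc hr (by omega) hH hi
  push Not at hi
  have hti : ∀ H ∈ l, Tame H ∨ Impr H := by
    intro H hH
    rcases trichotomy H (by omega) with h | h | h
    · exact absurd h (hi H hH)
    · exact Or.inr h.2
    · exact Or.inl (tame_of_prim hn (hl H hH) h.2)
  have hrpos : 0 < rk c := by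
    have : Nonempty α := Fintype.card_pos_iff.1 (by omega)
    exact Finset.card_pos.2 (Finset.univ_nonempty.image c)
  rcases Nat.lt_or_ge (rk c) 2 with h2 | h2
  · exact step_trans_nine ih hl hc (by omega) hn hti
  · by_cases him : ∃ H ∈ l, Impr H
    · obtain ⟨H, hH, him⟩ := him
      exact step_impr ih hl hc hr h2 (by omega) hH him
    · push Not at him
      exact step_prim_nine ih hl hc hr h2 hn fun H hH => (hti H hH).resolve_right (him H hH)

/-! ### Small groups semiregular at a point -/

theorem inv_small {x : Perm α} (hxA : x ∈ alternatingGroup α) (hx2 : x ^ 2 = 1) (hx1 : x ≠ 1)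
    (h7 : x.support.card ≤ 7) : x.support.card = 4 := by
  obtain ⟨k, hk, hs⟩ := prime_cycleType Nat.prime_two hx1 hx2
  have hsg := sign_of_replicate hk
  rw [mem_alternatingGroup.1 hxA] at hsg
  have hk3 : k < 3 := by omega
  interval_cases k
  · exact absurd hsg (by decide)
  · exact hs
  · exact absurd hsg (by decide)

theorem sq_eq {x : Perm α} (h : x ^ 2 = 1) (a : α) : x (x a) = a := by
  have := congrArg (fun f : Perm α => f a) h
  simpa [pow_two] using this

/-- A group of order four is killed by a conjugate of `H` unless it is a Klein four group: if it
is cyclic, it suffices to remove its involution. -/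
theorem card_four (hn : 5 ≤ Fintype.card α) {H L : Subgroup (Perm α)} (hH : Prp H)
    (hL : L ≤ alternatingGroup α) (h4 : Nat.card L = 4) :
    (∃ g ∈ alternatingGroup α, L ⊓ conjSub g H = ⊥) ∨ ∀ x ∈ L, x ^ 2 = 1 := by
  by_cases hsq : ∀ x ∈ L, x ^ 2 = 1
  · exact Or.inr hsq
  left
  push Not at hsq
  obtain ⟨x, hx, hx2⟩ := hsq
  have ho : orderOf x = 4 := by
    have h1 : orderOf x ∣ 4 := by
      rw [← h4]; exact Subgroup.orderOf_dvd_natCard L hx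
    have h2 : ¬ orderOf x ∣ 2 := fun h => hx2 (orderOf_dvd_iff_pow_eq_one.1 h)
    have := Nat.le_of_dvd (by norm_num) h1
    interval_cases orderOf x <;> omega
  have hz : Subgroup.zpowers x = L := by
    refine Subgroup.eq_of_le_of_card_ge (Subgroup.zpowers_le.2 hx) ?_
    rw [Nat.card_zpowers, ho, h4]
  have hx4 : x ^ 4 = 1 := by rw [← ho]; exact pow_orderOf_eq_one x
  obtain ⟨g, hg, hgK⟩ := exists_not_le hn hH (K := Subgroup.zpowers (x ^ 2))
    ((Subgroup.zpowers_le.2 (pow_mem hx 2)).trans hL)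
    (fun h => hx2 (Subgroup.zpowers_eq_bot.1 h))
  refine ⟨g, hg, (Subgroup.eq_bot_iff_forall _).2 ?_⟩
  rintro y ⟨hyL, hyH⟩
  by_contra hy1
  apply hgK
  rw [Subgroup.zpowers_le]
  rw [← hz] at hyL
  obtain ⟨i, rfl⟩ := mem_powers_iff_mem_zpowers.2 (show y ∈ Subgroup.zpowers x from hyL)
  replace hyH : x ^ i ∈ conjSub g H := hyH
  replace hy1 : x ^ i ≠ 1 := hy1
  have hmod : x ^ i = x ^ (i % 4) := by
    rw [← ho]; exact (pow_mod_orderOf x i).symm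
  rw [hmod] at hyH hy1
  have hi : i % 4 < 4 := Nat.mod_lt _ (by norm_num)
  generalize i % 4 = j at *
  interval_cases j
  · exact absurd (pow_zero x) hy1
  · rw [pow_one] at hyH; exact pow_mem hyH 2
  · exact hyH
  · have := pow_mem hyH 2
    rwa [← pow_mul, show 3 * 2 = 4 + 2 from rfl, pow_add, hx4, one_mul] at this

theorem card_prime_kill (hn : 5 ≤ Fintype.card α) {H L : Subgroup (Perm α)} (hH : Prp H)
    (hL : L ≤ alternatingGroup α) (hp : (Nat.card L).Prime) :
    ∃ g ∈ alternatingGroup α, L ⊓ conjSub g H = ⊥ := by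
  obtain ⟨g, hg, h⟩ := card_inf_half hn hH hL (fun h => by
    rw [h] at hp; simp at hp; exact absurd hp Nat.not_prime_one)
  refine ⟨g, hg, Subgroup.card_eq_one.1 ?_⟩
  rcases (Nat.dvd_prime hp).1 (Subgroup.card_dvd_of_le (inf_le_left : L ⊓ conjSub g H ≤ L)) with h' | h'
  · exact h'
  · have := hp.pos
    omega

theorem small_L (hn : 5 ≤ Fintype.card α) {H L : Subgroup (Perm α)} (hH : Prp H)
    (hL : L ≤ alternatingGroup α) {ω : α} (hω : ∀ x ∈ L, x ω = ω → x = 1)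
    (h7 : Nat.card L ≤ 7) (hs : ∀ x ∈ L, x.support.card ≤ 7) :
    (∃ g ∈ alternatingGroup α, L ⊓ conjSub g H = ⊥) ∨
      (Nat.card L = 4 ∧ ∀ x ∈ L, x ≠ 1 → (∀ a, x (x a) = a) ∧ x.support.card = 4) := by
  rcases Nat.lt_or_ge (Nat.card L) 4 with h | h
  · exact Or.inl (exists_inf_eq_bot_of_card_le_three hn hH hL (by omega))
  have : Nat.card L = 4 ∨ Nat.card L = 5 ∨ Nat.card L = 6 ∨ Nat.card L = 7 := by omega
  rcases this with h | h | h | h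
  · rcases card_four hn hH hL h with h' | h'
    · exact Or.inl h'
    · exact Or.inr ⟨h, fun x hx hx1 => ⟨sq_eq (h' x hx), inv_small (hL hx) (h' x hx) hx1 (hs x hx)⟩⟩
  · exact Or.inl (card_prime_kill hn hH hL (by rw [h]; norm_num))
  · exfalso
    obtain ⟨x, hx, hx1, hx2⟩ := exists_prime_elt (J := L) Nat.prime_two (by rw [h]; norm_num)
    obtain ⟨O, hO, hO'⟩ := exists_regular_orbit hω
    have h4 := inv_small (hL hx) hx2 hx1 (hs x hx)
    have hle := Finset.card_le_card (s := O) (t := x.support)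
      (fun a ha => mem_support.2 (hO' x (mem_nt.2 ⟨hx, hx1⟩) a ha).2)
    omega
  · exact Or.inl (card_prime_kill hn hH hL (by rw [h]; norm_num))

/-- Every pair of points of the 4-set `S` is interchanged by an involution of `H` with support
`S`; this is what a Klein four group acting regularly on `S` gives. -/
def FullQuad (H : Subgroup (Perm α)) (S : Finset α) : Prop :=
  S.card = 4 ∧ ∀ a ∈ S, ∀ b ∈ S, a ≠ b → ∃ x ∈ H, (∀ a, x (x a) = a) ∧ x.support = S ∧ x a = b

theorem FullQuad.image {H : Subgroup (Perm α)} {S : Finset α} (h : FullQuad H S) {u : Perm α}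
    (hu : u ∈ H) : FullQuad H (S.image u) := by
  refine ⟨by rw [Finset.card_image_of_injective _ u.injective, h.1], ?_⟩
  intro a' ha' b' hb' hab
  obtain ⟨a, ha, rfl⟩ := Finset.mem_image.1 ha'
  obtain ⟨b, hb, rfl⟩ := Finset.mem_image.1 hb'
  obtain ⟨x, hx, h1, h2, h3⟩ := h.2 a ha b hb fun h => hab (by rw [h])
  refine ⟨u * x * u⁻¹, H.mul_mem (H.mul_mem hu hx) (H.inv_mem hu), ?_, ?_, ?_⟩
  · intro a
    rw [Perm.mul_apply, Perm.mul_apply, Perm.mul_apply, Perm.mul_apply, inv_ap, h1, ap_inv]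
  · rw [support_conj, Finset.map_eq_image, h2]; rfl
  · rw [Perm.mul_apply, Perm.mul_apply, inv_ap, h3]

theorem FullQuad.card_inter_ne_three {H : Subgroup (Perm α)} (h3 : NoThree H) {S T : Finset α}
    (h : FullQuad H S) (h' : FullQuad H T) : (S ∩ T).card ≠ 3 := by
  intro hc
  obtain ⟨b, c, d, hbc, hbd, hcd, he⟩ := Finset.card_eq_three.1 hc
  have hm : ∀ z, z ∈ S ∩ T ↔ z = b ∨ z = c ∨ z = d := by intro z; rw [he]; simp
  have hb := Finset.mem_inter.1 ((hm b).2 (by simp))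
  have hcc := Finset.mem_inter.1 ((hm c).2 (by simp))
  have hd := Finset.mem_inter.1 ((hm d).2 (by simp))
  obtain ⟨x, hx, hxx, hxs, hxc⟩ := h.2 c hcc.1 d hd.1 hcd
  obtain ⟨y, hy, hyy, hys, hyc⟩ := h'.2 c hcc.2 d hd.2 hcd
  have key : ∀ {x : Perm α} {S : Finset α}, (∀ a, x (x a) = a) → x.support = S → S.card = 4 → 
      b ∈ S → c ∈ S → x c = d → S = {c, d, b, x b} ∧ x b ≠ b ∧ x b ≠ c ∧ x b ≠ d := by
    intro x S hxx hxs h4 hbS hcS hxc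
    have h1 := quad_form (a := c) (c := b) hxx (by rw [hxs, h4]) (by rw [hxs]; exact hcS)
      (by rw [hxs]; exact hbS) hbc (by rw [hxc]; exact hbd)
    rw [hxc] at h1
    exact ⟨hxs ▸ h1.1, h1.2.2.1, h1.2.2.2.1, h1.2.2.2.2⟩
  obtain ⟨eS, p1, p2, p3⟩ := key hxx hxs h.1 hb.1 hcc.1 hxc
  obtain ⟨eT, q1, q2, q3⟩ := key hyy hys h'.1 hb.2 hcc.2 hyc
  have hpq : x b ≠ y b := by
    intro hpq
    have : x b ∈ S ∩ T := Finset.mem_inter.2 ⟨by rw [eS]; simp, by rw [eT, hpq]; simp⟩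
    rcases (hm _).1 this with h | h | h
    exacts [p1 h, p2 h, p3 h]
  have hout : ∀ {x : Perm α} {S : Finset α}, x.support = S → ∀ z, z ∉ S → x z = z :=
    fun h z hz => notMem_support.1 (by rw [h]; exact hz)
  have hxy : x * y = swap b (x b) * swap b (y b) := by
    ext z
    rw [Perm.mul_apply, Perm.mul_apply]
    have hxd : x d = c := by rw [← hxc, hxx]
    have hyd : y d = c := by rw [← hyc, hyy]
    by_cases z1 : z = b
    · subst z1
      rw [swap_apply_left, swap_apply_of_ne_of_ne q1 (Ne.symm hpq)]
      refine hout hxs _ fun hz => ?_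
      rw [eS] at hz
      simp only [Finset.mem_insert, Finset.mem_singleton] at hz
      rcases hz with h | h | h | h
      exacts [q2 h, q3 h, q1 h, hpq h.symm]
    by_cases z2 : z = y b
    · subst z2
      rw [hyy, swap_apply_right, swap_apply_left]
    by_cases z3 : z = c
    · subst z3
      rw [hyc, hxd, swap_apply_of_ne_of_ne z1 z2, swap_apply_of_ne_of_ne z1 p2.symm]
    by_cases z4 : z = d
    · subst z4
      rw [hyd, hxc, swap_apply_of_ne_of_ne z1 z2, swap_apply_of_ne_of_ne z1 p3.symm]
    have hzT : y z = z := hout hys z (by rw [eT]; simp [z1, z2, z3, z4])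
    rw [hzT, swap_apply_of_ne_of_ne z1 z2]
    by_cases z5 : z = x b
    · subst z5; rw [hxx, swap_apply_right]
    · rw [swap_apply_of_ne_of_ne z1 z5]
      exact hout hxs z (by rw [eS]; simp [z1, z5, z3, z4])
  refine h3 _ (H.mul_mem hx hy) ?_
  rw [hxy]
  exact isThreeCycle_swap_mul_swap_same p1.symm q1.symm hpq

/-- A double transposition `(a b)(c d)` and its conjugates `(q b)(c d)` have pairwise quotients
that are 3-cycles, so at most one of them lies in a given conjugate of `H`. -/
theorem phi_quad {H : Subgroup (Perm α)} (h3 : NoThree H) {x : Perm α} (hx : ∀ a, x (x a) = a)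
    (h4 : x.support.card = 4) : phi H x ≤ 1 / ((Fintype.card α : ℚ) - 3) := by
  classical
  obtain ⟨a, ha⟩ : x.support.Nonempty := Finset.card_pos.1 (by omega)
  obtain ⟨c, hc⟩ : (x.support \ {a, x a}).Nonempty := by
    refine Finset.card_pos.1 ?_
    have := Finset.le_card_sdiff {a, x a} x.support
    have := Finset.card_le_two (a := a) (b := x a)
    omega
  simp only [Finset.mem_sdiff, Finset.mem_insert, Finset.mem_singleton, not_or] at hc
  obtain ⟨hS, h1, h2, h5, h6⟩ := quad_form hx h4 ha hc.1 hc.2.1 hc.2.2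
  obtain ⟨b, hb⟩ : ∃ b, x a = b := ⟨_, rfl⟩
  obtain ⟨d, hd⟩ : ∃ d, x c = d := ⟨_, rfl⟩
  have hca : c ≠ a := hc.2.1
  have hcb : c ≠ b := fun h => hc.2.2 (h.trans hb.symm)
  have hxb : x b = a := by rw [← hb, hx]
  have hxd : x d = c := by rw [← hd, hx]
  rw [hb, hd] at hS h6
  rw [hb] at h1
  rw [hd] at h2 h5
  have hxe : x = swap b a * swap c d := by
    ext z
    rw [Perm.mul_apply]
    by_cases z1 : z = a
    · subst z1; rw [swap_apply_of_ne_of_ne hca.symm h5.symm, swap_apply_right, hb]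
    by_cases z2 : z = b
    · subst z2; rw [swap_apply_of_ne_of_ne hcb.symm h6.symm, swap_apply_left, hxb]
    by_cases z3 : z = c
    · subst z3; rw [swap_apply_left, swap_apply_of_ne_of_ne h6 h5, hd]
    by_cases z4 : z = d
    · subst z4; rw [swap_apply_right, swap_apply_of_ne_of_ne hcb hca, hxd]
    · rw [swap_apply_of_ne_of_ne z3 z4, swap_apply_of_ne_of_ne z2 z1]
      exact notMem_support.1 (by rw [hS]; simp [z1, z2, z3, z4])
  have hcm : ∀ q, q ≠ b → q ≠ c → q ≠ d → swap c d * swap b q = swap b q * swap c d := by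
    intro q q1 q2 q3
    have := swap_apply_apply (swap c d) b q
    rw [swap_apply_of_ne_of_ne hcb.symm h6.symm, swap_apply_of_ne_of_ne q2 q3] at this
    nth_rw 2 [this]
    group
  let ι := {q : α // q ∉ ({b, c, d} : Finset α)}
  have hι : ∀ q : ι, q.1 ≠ b ∧ q.1 ≠ c ∧ q.1 ≠ d := fun q => by simpa using q.2
  haveI : Nonempty ι := ⟨⟨a, by simp [h1.symm, hca.symm, h5.symm]⟩⟩
  have hcard : (Fintype.card ι : ℚ) = (Fintype.card α : ℚ) - 3 := by
    have e : Fintype.card ι + ({b, c, d} : Finset α).card = Fintype.card α := by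
      rw [Fintype.card_subtype, ← Finset.card_compl_add_card ({b, c, d} : Finset α)]
      congr 2
      ext z; simp
    rw [Finset.card_insert_of_notMem, Finset.card_pair h2.symm] at e
    · rw [← e]; push_cast; ring
    · simp [hcb.symm, h6.symm]
  have key := phi_le_of_family_const (ι := ι) H x (fun q => swap b q.1 * swap c d) ?_ 1 ?_
  · rwa [hcard, Nat.cast_one] at key
  · intro q
    obtain ⟨q1, q2, q3⟩ := hι q
    rw [← phi_conj_of_odd H (s := swap c d) (x := x) _ _ (swap a q.1)]
    · congr 1
      rw [hxe]
      calc _ = swap (swap a q.1 b) (swap a q.1 a) * swap (swap a q.1 c) (swap a q.1 d) := by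
            rw [swap_apply_left, swap_apply_of_ne_of_ne h1 q1.symm, swap_apply_of_ne_of_ne hca q2.symm,
              swap_apply_of_ne_of_ne h5 q3.symm]
        _ = _ := by rw [swap_apply_apply, swap_apply_apply]; group
    · rw [mem_alternatingGroup, sign_swap h2.symm]; decide
    · rw [hxe, ← mul_assoc, hcm a h1.symm hca.symm h5.symm]
  · intro g hg
    rw [Finset.card_le_one]
    intro q hq q' hq'
    simp only [Finset.mem_filter, Finset.mem_univ, true_and] at hq hq'
    by_contra hne
    obtain ⟨q1, q2, q3⟩ := hι q
    obtain ⟨r1, r2, r3⟩ := hι q'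
    refine (NoThree.conj h3 g) _ ((conjSub g H).mul_mem hq hq') ?_
    have : swap b q.1 * swap c d * (swap b q'.1 * swap c d) = swap b q.1 * swap b q'.1 := by
      rw [← hcm _ r1 r2 r3, mul_assoc, ← mul_assoc (swap c d), swap_mul_self, one_mul]
    rw [this]
    exact isThreeCycle_swap_mul_swap_same q1.symm r1.symm fun h => hne (Subtype.ext h)

/-! ### Degrees five, six and seven -/

theorem kill_small_L (hn : 7 ≤ Fintype.card α) {H L : Subgroup (Perm α)} (hH : Prp H)
    (h3 : NoThree H) (hL : L ≤ alternatingGroup α) {ω : α} (hω : ∀ x ∈ L, x ω = ω → x = 1)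
    (h7 : Nat.card L ≤ 7) (hs : ∀ x ∈ L, x.support.card ≤ 7) :
    ∃ g ∈ alternatingGroup α, L ⊓ conjSub g H = ⊥ := by
  rcases small_L (by omega) hH hL hω h7 hs with h | ⟨h4, hq⟩
  · exact h
  refine exists_inf_eq_bot ?_
  have h1 : ∑ x ∈ nt L, phi H x ≤ ∑ _x ∈ nt L, (1 / 4 : ℚ) := by
    refine Finset.sum_le_sum fun x hx => ?_
    obtain ⟨hxL, hx1⟩ := mem_nt.1 hx
    refine (phi_quad h3 (hq x hxL hx1).1 (hq x hxL hx1).2).trans ?_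
    have : (7 : ℚ) ≤ Fintype.card α := by exact_mod_cast hn
    exact one_div_le_one_div_of_le (by norm_num) (by linarith)
  have h2 := card_nt L
  have h3 : (nt L).card = 3 := by omega
  rw [Finset.sum_const, h3] at h1
  refine h1.trans_lt ?_
  norm_num

theorem rk_add_card_cls (c : α → ℕ) (ω : α) : rk c + (cls c ω).card ≤ Fintype.card α + 1 := by
  classical
  have h : rk c ≤ 1 + ((cls c ω)ᶜ).card := by
    have h1 : Finset.univ.image c ⊆ insert (c ω) ((cls c ω)ᶜ.image c) := by
      intro y hy
      obtain ⟨b, -, rfl⟩ := Finset.mem_image.1 hy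
      by_cases hb : c b = c ω
      · rw [hb]; exact Finset.mem_insert_self _ _
      · exact Finset.mem_insert_of_mem (Finset.mem_image_of_mem _ (by rw [Finset.mem_compl, mem_cls]; exact hb))
    refine (Finset.card_le_card h1).trans ((Finset.card_insert_le _ _).trans ?_)
    have := Finset.card_image_le (s := (cls c ω)ᶜ) (f := c)
    omega
  have := Finset.card_compl_add_card (cls c ω)
  omega

/-- A Klein four group all of whose involutions have the same support. -/
theorem v4_full {L : Subgroup (Perm α)} {ω : α} (hω : ∀ x ∈ L, x ω = ω → x = 1)
    (h4 : Nat.card L = 4) (hq : ∀ x ∈ L, x ≠ 1 → (∀ a, x (x a) = a) ∧ x.support.card = 4) :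
    ∃ O, FullQuad L O ∧ ∀ x ∈ L, x ≠ 1 → x.support = O := by
  classical
  obtain ⟨O, hO, hO'⟩ := exists_regular_orbit hω
  have hsup : ∀ x ∈ L, x ≠ 1 → x.support = O := by
    intro x hx hx1
    refine (Finset.eq_of_subset_of_card_le
      (fun a ha => mem_support.2 (hO' x (mem_nt.2 ⟨hx, hx1⟩) a ha).2) ?_).symm
    rw [(hq x hx hx1).2, hO, h4]
  refine ⟨O, ⟨by omega, ?_⟩, hsup⟩
  intro a ha b hb hab
  have himg : (Finset.univ.filter (fun x => x ∈ L)).image (fun x : Perm α => x a) = O := by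
    refine Finset.eq_of_subset_of_card_le ?_ ?_
    · intro z hz
      obtain ⟨x, hx, rfl⟩ := Finset.mem_image.1 hz
      have hxL : x ∈ L := by simpa using hx
      by_cases hx1 : x = 1
      · rw [hx1]; exact ha
      · exact (hO' x (mem_nt.2 ⟨hxL, hx1⟩) a ha).1
    · rw [Finset.card_image_of_injOn, hO, Nat.card_eq_fintype_card, Fintype.card_subtype]
      intro x hx y hy hxy
      simp only [Finset.coe_filter, Finset.mem_univ, true_and] at hx hy
      by_contra hne
      have hmem : y⁻¹ * x ∈ L := mul_mem (inv_mem hy) hx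
      refine (hO' (y⁻¹ * x) (mem_nt.2 ⟨hmem, fun h => hne (inv_mul_eq_one.1 h).symm⟩) a ha).2 ?_
      rw [Perm.mul_apply]
      simp only at hxy
      rw [hxy, inv_ap]
  rw [← himg] at hb
  obtain ⟨x, hx, hxb⟩ := Finset.mem_image.1 hb
  have hxL : x ∈ L := by simpa using hx
  have hx1 : x ≠ 1 := by rintro rfl; exact hab hxb
  exact ⟨x, hxL, (hq x hxL hx1).1, hsup x hxL hx1, hxb⟩

theorem FullQuad.of_le_conj {L H : Subgroup (Perm α)} {O : Finset α} (h : FullQuad L O)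
    {g : Perm α} (hL : L ≤ conjSub g H) : FullQuad H (O.image ⇑g⁻¹) := by
  have h' : FullQuad (conjSub g⁻¹ L) (O.image ⇑g⁻¹) := by
    refine ⟨by rw [Finset.card_image_of_injective _ g⁻¹.injective, h.1], ?_⟩
    intro a' ha' b' hb' hab
    obtain ⟨a, ha, rfl⟩ := Finset.mem_image.1 ha'
    obtain ⟨b, hb, rfl⟩ := Finset.mem_image.1 hb'
    obtain ⟨x, hx, h1, h2, h3⟩ := h.2 a ha b hb fun h => hab (by rw [h])
    refine ⟨g⁻¹ * x * g, ?_, ?_, ?_, ?_⟩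
    · rw [mem_conjSub]
      have : g⁻¹⁻¹ * (g⁻¹ * x * g) * g⁻¹ = x := by group
      rwa [this]
    · intro a
      rw [Perm.mul_apply, Perm.mul_apply, Perm.mul_apply, Perm.mul_apply, ap_inv, h1, inv_ap]
    · have : g⁻¹ * x * g = g⁻¹ * x * g⁻¹⁻¹ := by group
      rw [this, support_conj, Finset.map_eq_image, h2]; rfl
    · rw [Perm.mul_apply, Perm.mul_apply, ap_inv, h3]
  refine ⟨h'.1, fun a ha b hb hab => ?_⟩
  obtain ⟨x, hx, r⟩ := h'.2 a ha b hb hab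
  refine ⟨x, ?_, r⟩
  rw [mem_conjSub] at hx
  have := hL hx
  rw [mem_conjSub] at this
  have e : g⁻¹ * (g⁻¹⁻¹ * x * g⁻¹) * g = x := by group
  rwa [e] at this

theorem no_full_five (hn : Fintype.card α = 5) {H : Subgroup (Perm α)} (ht : Trans H)
    (h3 : NoThree H) {S : Finset α} : ¬ FullQuad H S := by
  intro h
  have hc : Sᶜ.card = 1 := by rw [Finset.card_compl, h.1, hn]
  obtain ⟨e, he⟩ := Finset.card_eq_one.1 hc
  obtain ⟨a, ha⟩ : S.Nonempty := Finset.card_pos.1 (by rw [h.1]; norm_num)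
  obtain ⟨u, hu, hue⟩ := ht e a
  have hm : ∀ z, z ∉ S ↔ z = e := fun z => by rw [← Finset.mem_compl, he, Finset.mem_singleton]
  have hT : S.image u = {a}ᶜ := by
    ext z
    rw [Finset.mem_compl, Finset.mem_singleton, Finset.mem_image]
    constructor
    · rintro ⟨b, hb, rfl⟩ h'
      exact (hm b).2 (u.injective (h'.trans hue.symm)) hb
    · intro hz
      refine ⟨u⁻¹ z, ?_, ap_inv _ _⟩
      by_contra hz'
      rw [hm] at hz'
      exact hz (by rw [← hue, ← hz', ap_inv])
  refine h.card_inter_ne_three h3 (h.image hu) ?_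
  rw [hT]
  have : S ∩ {a}ᶜ = S.erase a := by ext z; simp [and_comm]
  rw [this, Finset.card_erase_of_mem ha, h.1]

theorem no_full_six (hn : Fintype.card α = 6) {H : Subgroup (Perm α)}
    (hH : MulAction.IsPreprimitive H α) (h3 : NoThree H) {S : Finset α} : ¬ FullQuad H S := by
  intro h
  have h3' : ∀ a b c, a ≠ b → b ≠ c → a ≠ c → FullQuad H ({a, b} : Finset α)ᶜ →
      ¬ FullQuad H ({b, c} : Finset α)ᶜ := by
    intro a b c hab hbc hac h1 h2
    refine h1.card_inter_ne_three h3 h2 ?_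
    have : ({a, b} : Finset α)ᶜ ∩ {b, c}ᶜ = ({a, b, c} : Finset α)ᶜ := by ext z; simp only [Finset.mem_inter, Finset.mem_compl, Finset.mem_insert, Finset.mem_singleton]; tauto
    rw [this, Finset.card_compl, hn, Finset.card_eq_three.2 ⟨a, b, c, hab, hac, hbc, rfl⟩]
  have himg : ∀ (x : Perm α) a b, (({a, b} : Finset α)ᶜ).image x = {x a, x b}ᶜ := by
    intro x a b
    ext z
    rw [Finset.mem_image]
    constructor
    · rintro ⟨y, hy, rfl⟩
      simpa using hy
    · intro hz
      refine ⟨x⁻¹ z, ?_, ap_inv _ _⟩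
      simp only [Finset.mem_compl, Finset.mem_insert, Finset.mem_singleton, not_or] at hz ⊢
      exact ⟨fun h => hz.1 (by rw [← h, ap_inv]), fun h => hz.2 (by rw [← h, ap_inv])⟩
  let r : α → α → Prop := fun a b => a = b ∨ FullQuad H ({a, b} : Finset α)ᶜ
  have hr : Equivalence r := by
    refine ⟨fun _ => Or.inl rfl, ?_, ?_⟩
    · rintro a b (rfl | h)
      · exact Or.inl rfl
      · rw [Finset.pair_comm] at h; exact Or.inr h
    · rintro a b c (rfl | h1) (rfl | h2)
      · exact Or.inl rfl
      · exact Or.inr h2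
      · exact Or.inr h1
      · by_cases hac : a = c
        · exact Or.inl hac
        by_cases hab : a = b
        · subst hab; exact Or.inr h2
        by_cases hbc : b = c
        · subst hbc; exact Or.inr h1
        exact absurd h2 (h3' a b c hab hbc hac h1)
  have hinv : ∀ x ∈ H, ∀ a b, r a b → r (x a) (x b) := by
    rintro x hx a b (rfl | h)
    · exact Or.inl rfl
    · right; rw [← himg]; exact h.image hx
  rcases prim_equiv hH hr hinv with hr | hr
  · obtain ⟨a, b, hab, he⟩ := Finset.card_eq_two.1 (show Sᶜ.card = 2 by rw [Finset.card_compl, h.1, hn])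
    refine hab (hr a b (Or.inr ?_))
    rwa [← he, compl_compl]
  · obtain ⟨a, b, c, hab, hac, hbc⟩ := Fintype.two_lt_card_iff.1 (by omega : 2 < Fintype.card α)
    exact h3' a b c hab hbc hac ((hr a b).resolve_left hab) ((hr b c).resolve_left hbc)

/-- Six points: a class of the partition is placed so as to contain one point `a` moved by the Klein
four group and one or two of its fixed points; every involution moves `a` out of this class. -/
theorem kill_impr_six (hn : Fintype.card α = 6) {H L : Subgroup (Perm α)} (hi : Impr H)
    {ω : α} (hω : ∀ x ∈ L, x ω = ω → x = 1)
    (h4 : Nat.card L = 4) (hq : ∀ x ∈ L, x ≠ 1 → (∀ a, x (x a) = a) ∧ x.support.card = 4) :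
    ∃ g ∈ alternatingGroup α, L ⊓ conjSub g H = ⊥ := by
  obtain ⟨O, hO, hs⟩ := v4_full hω h4 hq
  obtain ⟨f, b, hb, hbn, hu, hf⟩ := hi.exists_conj
  have hb3 : b ≤ 3 := by
    have := hu.dvd
    rw [hn] at this hbn
    interval_cases b <;> omega
  obtain ⟨a, ha⟩ : O.Nonempty := Finset.card_pos.1 (by rw [hO.1]; norm_num)
  obtain ⟨R, hR, hRc⟩ := Finset.exists_subset_card_eq (s := Oᶜ) (n := b - 1)
    (by rw [Finset.card_compl, hO.1, hn]; omega)
  have haR : a ∉ R := fun h => Finset.mem_compl.1 (hR h) ha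
  obtain ⟨r, hr⟩ : R.Nonempty := Finset.card_pos.1 (by omega)
  obtain ⟨σ, hσ⟩ := exists_perm_finset (S := insert a R) (T := cls f ω) (by
    rw [Finset.card_insert_of_notMem haR, hRc, hu ω]; omega)
  obtain ⟨g, hg, hx⟩ := hf σ
  refine ⟨g, hg, (Subgroup.eq_bot_iff_forall _).2 ?_⟩
  rintro x ⟨hxL, hxH⟩
  by_contra hx1
  have hsx := hs x hxL hx1
  have hxr : x r = r := notMem_support.1 (by rw [hsx]; exact Finset.mem_compl.1 (hR hr))
  have hxa : x a ∈ O := by rw [← hsx, apply_mem_support, hsx]; exact ha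
  have hxa' : x a ≠ a := mem_support.1 (by rw [hsx]; exact ha)
  have h1 := mem_cls.1 ((hσ a).2 (by simp))
  have h2 := mem_cls.1 ((hσ r).2 (by simp [hr]))
  have h3 := (hx x hxH a r).2 (h1.trans h2.symm)
  rw [hxr, Function.comp_apply, Function.comp_apply, h2] at h3
  have h5 := (hσ (x a)).1 (mem_cls.2 h3)
  rcases Finset.mem_insert.1 h5 with h | h
  · exact hxa' h
  · exact Finset.mem_compl.1 (hR h) hxa

theorem step_seven_le (hn : 5 ≤ Fintype.card α) (hn7 : Fintype.card α ≤ 7) : Step α := by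
  intro c l ih hl hc hr
  by_cases hi : ∃ H ∈ l, Intr H
  · obtain ⟨H, hH, hi⟩ := hi
    exact step_intr ih hl hc hr hn hH hi
  push Not at hi
  by_cases hsm : ∃ ω a, c a = c ω ∧ a ≠ ω ∧ (cls c ω).card ≤ 3
  · obtain ⟨ω, a, h1, h2, h3⟩ := hsm
    exact step_small ih hl hc hr hn h1 h2 h3
  push Not at hsm
  obtain ⟨a, ω, hne, ha⟩ := exists_pair_of_rk (c := c) (by omega)
  have h4 := hsm ω a ha hne
  have hrk := rk_add_card_cls c ω
  have hs : ∀ x : Perm α, x.support.card ≤ 7 := fun x => x.support.card_le_univ.trans hn7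
  -- an imprimitive group, if there is one, is used last
  obtain ⟨H, hH, hHi⟩ : ∃ H ∈ l, Impr H ∨ ∀ H' ∈ l, ¬ Impr H' := by
    by_cases h : ∃ H ∈ l, Impr H
    · obtain ⟨H, hH, hi⟩ := h
      exact ⟨H, hH, Or.inl hi⟩
    · push Not at h
      obtain ⟨H, hH⟩ : ∃ H, H ∈ l := List.exists_mem_of_length_pos (by omega)
      exact ⟨H, hH, Or.inr h⟩
  obtain ⟨l', hp⟩ := exists_perm_cons hH
  obtain ⟨L, hL, hω, hle, hk⟩ := ih.exists_core hl hc hp ha hne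
  have hL7 : Nat.card L ≤ 7 :=
    (card_le_cls (hL.trans inf_le_left) hω).trans ((Finset.card_le_univ _).trans hn7)
  refine hk ?_
  have hLA := hL.trans inf_le_right
  rcases small_L hn (hl H hH) hLA hω hL7 (fun x _ => hs x) with h | ⟨hL4, hq⟩
  · exact h
  have hdvd : ∀ {H : Subgroup (Perm α)}, Impr H → Fintype.card α = 6 := by
    rintro H ⟨e, b, hb, hbn, hu, -⟩
    have := Unif.dvd hu
    generalize Fintype.card α = n at *
    interval_cases n <;> interval_cases b <;> omega
  rcases hHi with hi6 | hprim
  · exact kill_impr_six (hdvd hi6) hi6 hω hL4 hq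
  have hpr : ∀ H' ∈ l, Trans H' ∧ MulAction.IsPreprimitive H' α := fun H' hH' =>
    ((trichotomy H' hn).resolve_left (hi H' hH')).resolve_left fun h => hprim H' hH' h.2
  rcases Nat.lt_or_ge (Fintype.card α) 7 with h6 | h7
  · exfalso
    have hlen := hp.length_eq
    rw [List.length_cons] at hlen
    obtain ⟨H', hH'⟩ : ∃ H', H' ∈ l' := List.exists_mem_of_length_pos (by omega)
    have hHl : H' ∈ l := hp.mem_iff.2 (by simp [hH'])
    obtain ⟨g, -, hg⟩ := hle H' hH'
    obtain ⟨O, hO, -⟩ := v4_full hω hL4 hq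
    have hF := hO.of_le_conj hg
    have h3 := noThree_of_prim (hl H' hHl) (hpr H' hHl).2
    have : Fintype.card α = 5 ∨ Fintype.card α = 6 := by omega
    rcases this with h | h
    · exact no_full_five h (hpr H' hHl).1 h3 hF
    · exact no_full_six h (hpr H' hHl).2 h3 hF
  · exact kill_small_L h7 (hl H hH) (noThree_of_prim (hl H hH) (hpr H hH).2) hLA hω hL7
      (fun x _ => hs x)

/-! ### Degree eight, at least two classes -/

theorem even_four {x : Perm α} (hxA : x ∈ alternatingGroup α) (h4 : x.support.card = 4) (a : α) :
    x (x a) = a := by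
  have hs := sign_of_cycleType x
  rw [mem_alternatingGroup.1 hxA, sum_cycleType, h4] at hs
  have hsum := sum_cycleType x
  rw [h4] at hsum
  have h2 : ∀ n ∈ x.cycleType, 2 ≤ n := fun n hn => two_le_of_mem_cycleType hn
  have hle : Multiset.card x.cycleType • 2 ≤ x.cycleType.sum := Multiset.card_nsmul_le_sum h2
  rw [hsum, smul_eq_mul] at hle
  have hc : Multiset.card x.cycleType = 0 ∨ Multiset.card x.cycleType = 1 ∨
      Multiset.card x.cycleType = 2 := by omega
  rcases hc with h | h | h
  · rw [Multiset.card_eq_zero.1 h] at hsum; simp at hsum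
  · rw [h] at hs; exact absurd hs (by decide)
  · obtain ⟨m, n, hmn⟩ := Multiset.card_eq_two.1 h
    rw [hmn] at h2 hsum
    have hm := h2 m (by simp)
    have hn := h2 n (by simp)
    simp at hsum
    have e1 : m = 2 := by omega
    have e2 : n = 2 := by omega
    refine sq_eq ?_ a
    rw [← orderOf_dvd_iff_pow_eq_one, ← lcm_cycleType, hmn, e1, e2]
    decide

/-- Eight points: each further primitive group allows one point less to be fixed. -/
theorem prim_chain (hn : Fintype.card α = 8) {K : Subgroup (Perm α)} (hK : K ≤ alternatingGroup α)
    {T : Finset α} (hT : T.Nonempty) {ω : α} (hω : ω ∉ T) {l : List (Subgroup (Perm α))}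
    (hl : Reg (K ⊓ fixOff (insert ω T)ᶜ) l) {H : Subgroup (Perm α)} (hH : Prp H) (h3 : NoThree H) :
    Reg (K ⊓ fixOff Tᶜ) (l ++ [H]) := by
  have hTc : Tᶜ.card ≤ 7 := by
    have := Finset.card_compl_add_card T
    have := hT.card_pos
    omega
  have hle : (K ⊓ fixOff Tᶜ) ⊓ fixOff ({ω} : Finset α)ᶜ ≤ K ⊓ fixOff (insert ω T)ᶜ := by
    rintro x ⟨⟨h1, h2⟩, h3⟩
    refine ⟨h1, mem_fixOff.2 fun a ha => ?_⟩
    rw [Finset.mem_compl, not_not, Finset.mem_insert] at ha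
    rcases ha with rfl | ha
    · exact mem_fixOff.1 h3 _ (by simp)
    · exact mem_fixOff.1 h2 _ (by simpa using ha)
  obtain ⟨L, hL, hLM, hk, -⟩ := Reg.exists_core (fixOff ({ω} : Finset α)ᶜ) (Reg.mono hle hl)
  have hω' : ∀ x ∈ L, x ω = ω → x = 1 := by
    intro x hx hxω
    rw [← Subgroup.mem_bot, ← hLM]
    refine ⟨hx, mem_fixOff.2 fun a ha => ?_⟩
    rw [Finset.mem_compl, not_not, Finset.mem_singleton] at ha
    rw [ha, hxω]
  have hsup : ∀ x ∈ L, x.support ⊆ Tᶜ := fun x hx => support_subset_of_fixOff (hL hx).2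
  have hc7 : Nat.card L ≤ 7 := by
    refine le_trans (card_le_cls (c := fun b => if b ∈ T then 0 else 1) (L := L) (fun x hx a => ?_) hω') ?_
    · have h1 := (hL hx).2
      by_cases ha : a ∈ T
      · rw [mem_fixOff.1 h1 a (by simpa using ha)]
      · have := fixOff_apply_mem h1 (t := a) (by simpa using ha)
        simp only [Finset.mem_compl] at this
        simp [ha, this]
    · refine le_trans (Finset.card_le_card fun b hb => ?_) hTc
      rw [mem_cls] at hb
      rw [Finset.mem_compl]
      intro hbT
      simp [hbT, hω] at hb
  exact hk _ (Reg.single.2 (kill_small_L (by omega) hH h3 ((hL.trans inf_le_left).trans hK) hω' hc7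
    fun x hx => (Finset.card_le_card (hsup x hx)).trans hTc))

/-- The even permutations of a 4-set are killed by a group without 3-cycles: only three double
transpositions have to be avoided. -/
theorem kill_four (hn : Fintype.card α = 8) {K H : Subgroup (Perm α)} (hK : K ≤ alternatingGroup α)
    {Δ : Finset α} (hΔ : Δ.card = 4) (hKΔ : K ≤ fixOff Δ) (h3 : NoThree H) :
    ∃ g ∈ alternatingGroup α, K ⊓ conjSub g H = ⊥ := by
  classical
  refine exists_inf_eq_bot ?_
  obtain ⟨ω, hω⟩ : Δ.Nonempty := Finset.card_pos.1 (by omega)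
  let Q := (nt K).filter fun x => x.support.card = 4
  have hsup : ∀ x ∈ K, x.support ⊆ Δ := fun x hx => support_subset_of_fixOff (hKΔ hx)
  have hQ : ∀ x ∈ Q, x ∈ K ∧ x ≠ 1 ∧ (∀ a, x (x a) = a) ∧ x.support.card = 4 ∧ x.support = Δ := by
    intro x hx
    obtain ⟨h1, h2⟩ := Finset.mem_filter.1 hx
    obtain ⟨h1, h1'⟩ := mem_nt.1 h1
    exact ⟨h1, h1', even_four (hK h1) h2, h2, Finset.eq_of_subset_of_card_le (hsup x h1) (by omega)⟩
  have hQc : Q.card ≤ 3 := by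
    have hle : Q.card ≤ (Δ.erase ω).card := by
      refine Finset.card_le_card_of_injOn (fun x => x ω) ?_ ?_
      · intro x hx
        obtain ⟨-, -, -, -, hs⟩ := hQ x hx
        have hωx : ω ∈ x.support := by rw [hs]; exact hω
        exact Finset.mem_erase.2 ⟨mem_support.1 hωx, by rw [← hs]; exact apply_mem_support.2 hωx⟩
      · intro x hx y hy hxy
        obtain ⟨hxK, -, hxx, hx4, hxs⟩ := hQ x hx
        obtain ⟨hyK, -, hyy, hy4, hys⟩ := hQ y hy
        replace hxy : x ω = y ω := hxy
        by_contra hne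
        have hωx : ω ∈ x.support := by rw [hxs]; exact hω
        have hmem : y * x ∈ K := K.mul_mem hyK hxK
        have h1 : y * x ≠ 1 := by
          intro h
          refine hne ?_
          have hyi : y⁻¹ = y := by
            rw [inv_eq_iff_mul_eq_one]; ext a; exact hyy a
          rw [← hyi] at h
          exact (inv_mul_eq_one.1 h).symm
        have := three_le_card_support (hK hmem) h1
        have hsub : (y * x).support ⊆ (Δ.erase ω).erase (x ω) := by
          intro a ha
          refine Finset.mem_erase.2 ⟨?_, Finset.mem_erase.2 ⟨?_, hsup _ hmem ha⟩⟩
          · rintro rfl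
            exact mem_support.1 ha (by rw [Perm.mul_apply, hxx, hxy])
          · rintro rfl
            exact mem_support.1 ha (by rw [Perm.mul_apply, hxy, hyy])
        have h2 := Finset.card_le_card hsub
        rw [Finset.card_erase_of_mem, Finset.card_erase_of_mem hω, hΔ] at h2
        · omega
        · exact Finset.mem_erase.2 ⟨mem_support.1 hωx, by rw [← hxs]; exact apply_mem_support.2 hωx⟩
    rw [Finset.card_erase_of_mem hω, hΔ] at hle
    exact hle
  have h0 : ∑ x ∈ nt K, phi H x = ∑ x ∈ Q, phi H x := by
    refine (Finset.sum_subset (Finset.filter_subset _ _) ?_).symm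
    intro x hx hxQ
    obtain ⟨h1, h2⟩ := mem_nt.1 hx
    refine phi_eq_zero fun g _ hxg => NoThree.conj h3 g x hxg (card_support_eq_three_iff.1 ?_)
    have := three_le_card_support (hK h1) h2
    have := Finset.card_le_card (hsup x h1)
    have : x.support.card ≠ 4 := fun h => hxQ (Finset.mem_filter.2 ⟨hx, h⟩)
    omega
  rw [h0]
  have h1 : ∑ x ∈ Q, phi H x ≤ ∑ _x ∈ Q, (1 / 5 : ℚ) := by
    refine Finset.sum_le_sum fun x hx => ?_
    obtain ⟨-, -, hxx, hx4, -⟩ := hQ x hx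
    have := phi_quad h3 hxx hx4
    rw [hn] at this
    norm_num at this ⊢
    exact this
  rw [Finset.sum_const, nsmul_eq_mul] at h1
  have h2 : (Q.card : ℚ) ≤ 3 := by exact_mod_cast hQc
  linarith

theorem step_eight_rk {c : α → ℕ} (hn : Fintype.card α = 8) (ih : IHyp c)
    {l : List (Subgroup (Perm α))} (hl : ∀ H ∈ l, Prp H)
    (hc : Fintype.card α - 1 ≤ rk c + l.length) (hr : rk c + 2 ≤ Fintype.card α)
    (hr2 : 2 ≤ rk c) : Reg (Yg c ⊓ alternatingGroup α) l := by
  by_cases hi : ∃ H ∈ l, Intr H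
  · obtain ⟨H, hH, hi⟩ := hi
    exact step_intr ih hl hc hr (by omega) hH hi
  push Not at hi
  by_cases him : ∃ H ∈ l, Impr H
  · obtain ⟨H, hH, him⟩ := him
    exact step_impr ih hl hc hr hr2 (by omega) hH him
  push Not at him
  have h3 : ∀ H ∈ l, NoThree H := fun H hH => noThree_of_prim (hl H hH)
    (((trichotomy H (by omega)).resolve_left (hi H hH)).resolve_left fun h => him H hH h.2).2
  by_cases hsm : ∃ ω a, c a = c ω ∧ a ≠ ω ∧ (cls c ω).card ≤ 3
  · obtain ⟨ω, a, h1, h2, h3⟩ := hsm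
    exact step_small ih hl hc hr (by omega) h1 h2 h3
  push Not at hsm
  obtain ⟨a, ω, hne, ha⟩ := exists_pair_of_rk (c := c) (by omega)
  have h4 := hsm ω a ha hne
  have hrk := rk_add_card_cls c ω
  by_cases htwo : ∃ b b', c b ≠ c ω ∧ b' ≠ b ∧ c b' = c b
  swap
  · push Not at htwo
    obtain ⟨H, hH⟩ : ∃ H, H ∈ l := List.exists_mem_of_length_pos (by omega)
    obtain ⟨l', hp⟩ := exists_perm_cons hH
    obtain ⟨L, hL, hω, hle, hk⟩ := ih.exists_core hl hc hp ha hne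
    have hL7 := card_le_cls (hL.trans inf_le_left) hω
    refine hk (kill_small_L (by omega) (hl H hH) (h3 H hH) (hL.trans inf_le_right) hω (by omega) ?_)
    intro x hx
    refine (Finset.card_le_card (t := cls c ω) fun b hb => ?_).trans (by omega)
    rw [mem_cls]
    by_contra hcb
    exact htwo b (x b) hcb (mem_support.1 hb) ((hL hx).1 b)
  · obtain ⟨b, b', hb, hbb, hcb⟩ := htwo
    have h4' := hsm b b' hcb hbb
    have hd : Disjoint (cls c ω) (cls c b) := by
      rw [Finset.disjoint_left]
      intro y h1 h2
      rw [mem_cls] at h1 h2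
      exact hb (h2.symm.trans h1)
    have hu := Finset.card_union_of_disjoint hd
    have hle : (cls c ω ∪ cls c b).card ≤ 8 := hn ▸ Finset.card_le_univ _
    have huniv : cls c ω ∪ cls c b = Finset.univ := Finset.eq_univ_of_card _ (by omega)
    have hcov : ∀ y, c y = c ω ∨ c y = c b := fun y => by
      have := Finset.mem_univ y
      rw [← huniv, Finset.mem_union, mem_cls, mem_cls] at this
      exact this
    have hrk2 : rk c ≤ 2 := by
      refine (Finset.card_le_card (t := {c ω, c b}) fun y hy => ?_).trans Finset.card_le_two
      obtain ⟨z, -, rfl⟩ := Finset.mem_image.1 hy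
      simpa using hcov z
    -- three points `ω, p, q` of the first class
    obtain ⟨m, hm1, hm2, hm3⟩ := exists_nodup_list (S := (cls c ω).erase ω) (k := 2)
      (by rw [Finset.card_erase_of_mem (self_mem_cls _ _)]; omega)
    obtain ⟨p, q, rfl⟩ := List.length_eq_two.1 hm2
    have hpq : p ≠ q := by simpa using hm1
    have hp := Finset.mem_erase.1 (hm3 p (by simp))
    have hq := Finset.mem_erase.1 (hm3 q (by simp))
    obtain ⟨H₁, H₂, H₃, l', rfl⟩ : ∃ H₁ H₂ H₃ l', l = H₁ :: H₂ :: H₃ :: l' := by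
      match l, (show 3 ≤ l.length by omega) with
      | H₁ :: H₂ :: H₃ :: l', _ => exact ⟨_, _, _, _, rfl⟩
    simp only [List.length_cons] at hc
    set K := Yg c ⊓ alternatingGroup α with hKdef
    have hKA : K ≤ alternatingGroup α := inf_le_right
    have r1 : Reg (K ⊓ fixOff (insert p (insert q {ω}) : Finset α)ᶜ) [H₁] := by
      refine Reg.single.2 (kill_four hn (inf_le_left.trans hKA) (Δ := cls c b) (by omega) ?_
        (h3 H₁ (by simp)))
      rintro x ⟨hx, hxf⟩
      refine mem_fixOff.2 fun y hy => ?_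
      rw [mem_cls] at hy
      have hyω := (hcov y).resolve_right hy
      by_contra hxy
      have hfix : ∀ z ∈ (insert p (insert q {ω}) : Finset α), x z = z := fun z hz =>
        mem_fixOff.1 hxf z (by rw [Finset.mem_compl, not_not]; exact hz)
      have hT : (insert p (insert q {ω}) : Finset α).card = 3 :=
        Finset.card_eq_three.2 ⟨p, q, ω, hpq, hp.1, hq.1, rfl⟩
      have hyT : y ∉ (insert p (insert q {ω}) : Finset α) := fun h => hxy (hfix y h)
      have hxyT : x y ∉ insert y (insert p (insert q {ω}) : Finset α) := by
        intro h
        rcases Finset.mem_insert.1 h with h | h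
        · exact hxy h
        · exact hxy (x.injective (hfix _ h))
      have hsub : insert (x y) (insert y (insert p (insert q {ω}) : Finset α)) ⊆ cls c ω := by
        intro z hz
        rw [mem_cls]
        simp only [Finset.mem_insert, Finset.mem_singleton] at hz
        rcases hz with rfl | rfl | rfl | rfl | rfl
        · exact (hx.1 y).trans hyω
        · exact hyω
        · exact mem_cls.1 hp.2
        · exact mem_cls.1 hq.2
        · rfl
      have := Finset.card_le_card hsub
      rw [Finset.card_insert_of_notMem hxyT, Finset.card_insert_of_notMem hyT, hT] at this
      omega
    have r2 := prim_chain hn hKA (by simp) (by simp [hpq, hp.1]) r1 (hl H₂ (by simp)) (h3 H₂ (by simp))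
    have r3 := prim_chain hn hKA (by simp) (by simp [hq.1]) r2 (hl H₃ (by simp)) (h3 H₃ (by simp))
    obtain ⟨L, hL, hLM, hk, -⟩ := Reg.exists_core (fixOff ({ω} : Finset α)ᶜ) r3
    have hω' : ∀ x ∈ L, x ω = ω → x = 1 := by
      intro x hx hxω
      rw [← Subgroup.mem_bot, ← hLM]
      refine ⟨hx, mem_fixOff.2 fun a ha => ?_⟩
      rw [Finset.mem_compl, not_not, Finset.mem_singleton] at ha
      rw [ha, hxω]
    have hcard := card_le_cls (hL.trans inf_le_left) hω'
    refine hk l' (Reg.of_card (by omega) l' (fun H hH => hl H (by simp [hH])) (hL.trans hKA) ?_)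
    have : 2 ^ 3 ≤ 2 ^ (l'.length + 1) := Nat.pow_le_pow_right (by norm_num) (by omega)
    omega

/-! ### Degree eight: primitive groups with double transpositions are affine -/

/-- The map `y` of `𝔽₂³` (vectors coded as binary numbers below 8) is affine. -/
def Aff (y : Fin 8 → Fin 8) : Prop :=
  y 3 = y 0 ^^^ y 1 ^^^ y 2 ∧ y 5 = y 0 ^^^ y 1 ^^^ y 4 ∧ y 6 = y 0 ^^^ y 2 ^^^ y 4 ∧
    y 7 = y 1 ^^^ y 2 ^^^ y 4

theorem xor_solve : ∀ a b c d : Fin 8, a ^^^ b ^^^ c ^^^ d = 0 → d = a ^^^ b ^^^ c := by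
  decide +kernel

/-- Orthogonality to three independent planes through `0` already forces a 4-set to be a plane. -/
theorem plane_of_even : ∀ p q r s : Fin 8, ({p, q, r, s} : Finset (Fin 8)).card = 4 →
    (({0, 1, 2, 3} : Finset (Fin 8)) ∩ {p, q, r, s}).card % 2 = 0 →
    (({0, 1, 4, 5} : Finset (Fin 8)) ∩ {p, q, r, s}).card % 2 = 0 →
    (({0, 2, 4, 6} : Finset (Fin 8)) ∩ {p, q, r, s}).card % 2 = 0 → p ^^^ q ^^^ r ^^^ s = 0 := by
  decide +kernel

theorem plane_seven : ∀ T ∈ (Finset.univ : Finset (Fin 8)).powersetCard 4, 7 ∈ T →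
    (({0, 1, 2, 3} : Finset (Fin 8)) ∩ T).card % 2 = 0 →
    (({0, 1, 4, 5} : Finset (Fin 8)) ∩ T).card % 2 = 0 →
    (({0, 2, 4, 6} : Finset (Fin 8)) ∩ T).card % 2 = 0 →
    T = {0, 1, 6, 7} ∨ T = {0, 2, 5, 7} ∨ T = {0, 3, 4, 7} ∨ T = {1, 2, 4, 7} ∨ T = {1, 3, 5, 7} ∨
      T = {2, 3, 6, 7} ∨ T = {4, 5, 6, 7} := by
  decide +kernel

theorem xor_ids : ∀ a b c d : Fin 8, a ^^^ b ^^^ (a ^^^ c ^^^ d) = b ^^^ c ^^^ d ∧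
    a ^^^ c ^^^ (a ^^^ b ^^^ d) = b ^^^ c ^^^ d ∧ a ^^^ (a ^^^ b ^^^ c) ^^^ d = b ^^^ c ^^^ d ∧
    b ^^^ (a ^^^ b ^^^ c) ^^^ (a ^^^ b ^^^ d) = b ^^^ c ^^^ d ∧
    c ^^^ (a ^^^ b ^^^ c) ^^^ (a ^^^ c ^^^ d) = b ^^^ c ^^^ d ∧
    d ^^^ (a ^^^ b ^^^ d) ^^^ (a ^^^ c ^^^ d) = b ^^^ c ^^^ d := by
  decide +kernel

/-- On eight points, a primitive group without 3- and 5-cycles that contains a double transposition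
consists of affine maps of `𝔽₂³`, for a suitable labelling of the points: the supports of its double
transpositions are the affine planes. -/
theorem exists_affine {H : Subgroup (Perm α)} (hn : Fintype.card α = 8)
    (hH : MulAction.IsPreprimitive H α) (h3 : NoThree H) (h5 : NoFive H) {S₀ : Finset α}
    (h₀ : IsQuad H S₀) : ∃ ε : α ≃ Fin 8, ∀ x ∈ H, Aff fun i => ε (x (ε.symm i)) := by
  obtain ⟨a, b, c, d, e, f, g, hcard, q1, q2, q3⟩ := exists_three_quads hH h3 h5 (by omega) h₀
  obtain ⟨h, hh⟩ : ∃ h, h ∉ ({a, b, c, d, e, f, g} : Finset α) := by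
    by_contra hc
    push Not at hc
    rw [Finset.eq_univ_of_forall hc, Finset.card_univ] at hcard
    omega
  have huniv : insert h ({a, b, c, d, e, f, g} : Finset α) = Finset.univ :=
    Finset.eq_univ_of_card _ (by rw [Finset.card_insert_of_notMem hh]; omega)
  obtain ⟨ε, hε⟩ : ∃ ε : Fin 8 ≃ α, ⇑ε = ![a, b, c, d, e, f, g, h] := by
    have hs : Function.Surjective ![a, b, c, d, e, f, g, h] := by
      intro z
      have := Finset.mem_univ z
      rw [← huniv] at this
      simp only [Finset.mem_insert, Finset.mem_singleton] at this
      rcases this with rfl | rfl | rfl | rfl | rfl | rfl | rfl | rfl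
      exacts [⟨7, rfl⟩, ⟨0, rfl⟩, ⟨1, rfl⟩, ⟨2, rfl⟩, ⟨3, rfl⟩, ⟨4, rfl⟩, ⟨5, rfl⟩, ⟨6, rfl⟩]
    exact ⟨Equiv.ofBijective _ ((Fintype.bijective_iff_surjective_and_card _).2
      ⟨hs, by simp [hn]⟩), rfl⟩
  let Q : Finset (Fin 8) → Prop := fun T => IsQuad H (T.image ε)
  have k1 : Q {0, 1, 2, 3} := by
    change IsQuad H _; convert q1; simp [hε]
  have k2 : Q {0, 1, 4, 5} := by
    change IsQuad H _; convert q2; simp [hε]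
  have k3 : Q {0, 2, 4, 6} := by
    change IsQuad H _; convert q3; simp [hε]
  have hQ4 : ∀ T, Q T → T.card = 4 := fun T hT => by
    rw [← IsQuad.card hT, Finset.card_image_of_injective _ ε.injective]
  have hQ2 : ∀ T T', Q T → Q T' → (T ∩ T').card % 2 = 0 := fun T T' hT hT' => by
    have := IsQuad.card_inter h3 h5 hT hT'
    rw [← Finset.image_inter _ _ ε.injective, Finset.card_image_of_injective _ ε.injective] at this
    omega
  have hplane : ∀ p q r s, Q {p, q, r, s} → p ^^^ q ^^^ r ^^^ s = 0 := fun p q r s hT =>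
    plane_of_even p q r s (hQ4 _ hT) (hQ2 _ _ k1 hT) (hQ2 _ _ k2 hT) (hQ2 _ _ k3 hT)
  refine ⟨ε.symm, fun x hx => ?_⟩
  let y : Fin 8 → Fin 8 := fun i => ε.symm (x (ε i))
  have hQy : ∀ T, Q T → Q (T.image y) := fun T hT => by
    have := IsQuad.image hT hx
    rw [Finset.image_image] at this
    change IsQuad H ((T.image y).image ε)
    rw [Finset.image_image, show ⇑ε ∘ y = ⇑x ∘ ⇑ε by funext i; simp [y]]
    exact this
  have hy : ∀ p q r s, Q {p, q, r, s} → y s = y p ^^^ y q ^^^ y r := fun p q r s hT => by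
    refine xor_solve _ _ _ _ (hplane _ _ _ _ ?_)
    have := hQy _ hT
    simpa only [Finset.image_insert, Finset.image_singleton] using this
  have e3 := hy _ _ _ _ k1
  have e5 := hy _ _ _ _ k2
  have e6 := hy _ _ _ _ k3
  refine ⟨e3, e5, e6, ?_⟩
  change y 7 = y 1 ^^^ y 2 ^^^ y 4
  obtain ⟨S, hS, ⟨t, ht, ht7⟩, -⟩ := exists_crossing hH h₀ (W := {h}) (by simp) (by simp [hn])
  rw [Finset.mem_singleton] at ht7
  subst ht7
  have hST : (S.image ε.symm).image ε = S := by
    rw [Finset.image_image]; simp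
  have hSQ : Q (S.image ε.symm) := by
    change IsQuad H _
    rw [hST]; exact hS
  have h7 : (7 : Fin 8) ∈ S.image ε.symm :=
    Finset.mem_image.2 ⟨t, ht, by rw [Equiv.symm_apply_eq, hε]; rfl⟩
  obtain ⟨i1, i2, i3, i4, i5, i6⟩ := xor_ids (y 0) (y 1) (y 2) (y 4)
  rcases plane_seven _ (Finset.mem_powersetCard.2 ⟨Finset.subset_univ _, hQ4 _ hSQ⟩) h7
    (hQ2 _ _ k1 hSQ) (hQ2 _ _ k2 hSQ) (hQ2 _ _ k3 hSQ) with hT | hT | hT | hT | hT | hT | hT <;>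
  · rw [hT] at hSQ
    have := hy _ _ _ _ hSQ
    refine this.trans ?_
    simp only [e3, e5, e6, i1, i2, i3, i4, i5, i6]

/-- Some even conjugate of `H` consists of permutations which, read on the labels `0, …, 7` through
`ε`, have the property `P`. -/
def Good (ε : α ≃ Fin 8) (H : Subgroup (Perm α)) (P : (Fin 8 → Fin 8) → Prop) : Prop :=
  ∃ g ∈ alternatingGroup α, ∀ x ∈ conjSub g H, P fun i => ε (x (ε.symm i))

/-- Three groups whose conjugates, suitably placed, meet in a semiregular group: the intersection
has order at most 8, and three further groups reduce it to 1 by halving. -/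
theorem Good.three (hn : Fintype.card α = 8) {ε : α ≃ Fin 8} {H₁ H₂ H₃ : Subgroup (Perm α)}
    {P₁ P₂ P₃ : (Fin 8 → Fin 8) → Prop} (h₁ : Good ε H₁ P₁) (h₂ : Good ε H₂ P₂) (h₃ : Good ε H₃ P₃)
    (hP : ∀ y : Fin 8 → Fin 8, Function.Injective y → P₁ y → P₂ y → P₃ y → y 0 = 0 → ∀ i, y i = i)
    {l : List (Subgroup (Perm α))} (hl : ∀ H ∈ l, Prp H) (hlen : 3 ≤ l.length) :
    Reg (alternatingGroup α) (H₁ :: H₂ :: H₃ :: l) := by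
  obtain ⟨g₁, hg₁, hx₁⟩ := h₁
  obtain ⟨g₂, hg₂, hx₂⟩ := h₂
  obtain ⟨g₃, hg₃, hx₃⟩ := h₃
  refine ⟨g₁, hg₁, g₂, hg₂, g₃, hg₃, ?_⟩
  refine Reg.of_card (by omega) l hl (inf_le_left.trans (inf_le_left.trans inf_le_left)) ?_
  have := card_le_cls (c := fun _ : α => 0) (ω := ε.symm 0)
    (L := ((alternatingGroup α ⊓ conjSub g₁ H₁) ⊓ conjSub g₂ H₂) ⊓ conjSub g₃ H₃)
    (fun x _ a => rfl) (by
      rintro x ⟨⟨⟨-, hx1⟩, hx2⟩, hx3⟩ hx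
      have := hP _ (fun i j hij => by simpa using hij) (hx₁ x hx1) (hx₂ x hx2) (hx₃ x hx3)
        (by simp [hx])
      ext a
      have := this (ε a)
      simpa using this)
  have h1 : (cls (fun _ : α => 0) (ε.symm 0)).card ≤ 8 :=
    (Finset.card_le_univ _).trans_eq hn
  have : 2 ^ 4 ≤ 2 ^ (l.length + 1) := Nat.pow_le_pow_right (by norm_num) (by omega)
  omega

/-! ### Imprimitive groups on eight points -/

theorem Unif.exists_match {e τ : α → ℕ} {b : ℕ} (he : Unif e b) (ht : Unif τ b) (hb : 0 < b) :
    ∃ σ : Perm α, ∀ a a', e (σ a) = e (σ a') ↔ τ a = τ a' := by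
  have hc : ∀ f : α → ℕ, Unif f b → Fintype.card α = (Finset.univ.image f).card * b := by
    intro f hf
    rw [← Finset.card_univ, Finset.card_eq_sum_card_image f, Finset.sum_const_nat]
    intro k hk
    obtain ⟨a, -, rfl⟩ := Finset.mem_image.1 hk
    exact hf a
  let I : (α → ℕ) → Type := fun f => {v // v ∈ Finset.univ.image f}
  let F : ∀ f : α → ℕ, α → I f := fun f a => ⟨f a, Finset.mem_image_of_mem f (Finset.mem_univ a)⟩
  have hF : ∀ f a a', F f a = F f a' ↔ f a = f a' := fun f a a' => Subtype.ext_iff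
  have hfib : ∀ f, Unif f b → ∀ v : I f, Nat.card {a // F f a = v} = b := by
    rintro f hf ⟨v, hv⟩
    obtain ⟨a, -, rfl⟩ := Finset.mem_image.1 hv
    rw [← hf a, cls, Nat.subtype_card]
    intro z
    simpa using (hF f z a).symm
  have hI : Nat.card (I τ) = Nat.card (I e) := by
    simp only [I, Nat.card_eq_fintype_card, Fintype.card_coe]
    exact Nat.eq_of_mul_eq_mul_right hb ((hc τ ht).symm.trans (hc e he))
  have hfin : ∀ f, Finite (I f) := fun f => by simp only [I]; infer_instance
  have := hfin τ
  have := hfin e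
  obtain ⟨E⟩ := Finite.card_eq.1 hI
  have hE : ∀ v : I τ, Nonempty ({a // F τ a = v} ≃ {a // F e a = E v}) := fun v =>
    Finite.card_eq.1 ((hfib τ ht v).trans (hfib e he (E v)).symm)
  let G := fun v => (hE v).some
  let σ : α ≃ α := (Equiv.sigmaFiberEquiv (F τ)).symm.trans
    ((Equiv.sigmaCongr E G).trans (Equiv.sigmaFiberEquiv (F e)))
  have hσ : ∀ a, F e (σ a) = E (F τ a) := fun a => (G (F τ a) ⟨a, rfl⟩).2
  exact ⟨σ, fun a a' => by rw [← hF e, ← hF τ, hσ, hσ, E.injective.eq_iff]⟩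

/-- An imprimitive group of degree 8 preserves any prescribed partition into pairs, up to even
conjugation, or any prescribed partition into two halves. -/
theorem Impr.good {H : Subgroup (Perm α)} (h : Impr H) (hn : Fintype.card α = 8) (ε : α ≃ Fin 8) :
    ∃ b, (b = 2 ∨ b = 4) ∧ ∀ t : Fin 8 → ℕ,
      (∀ i, (Finset.univ.filter fun j => t j = t i).card = b) →
      Good ε H fun y => ∀ i j, t (y i) = t (y j) ↔ t i = t j := by
  obtain ⟨e, b, hb, hbn, hu, hp⟩ := h.exists_conj
  refine ⟨b, ?_, fun t ht => ?_⟩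
  · have := hu.dvd
    rw [hn] at this hbn
    interval_cases b <;> omega
  · have hut : Unif (t ∘ ε) b := by
      intro a
      rw [← ht (ε a)]
      refine Finset.card_bij (fun z _ => ε z) ?_ (fun _ _ _ _ h => ε.injective h) ?_
      · intro z hz
        rw [mem_cls] at hz
        exact Finset.mem_filter.2 ⟨Finset.mem_univ _, hz⟩
      · intro j hj
        refine ⟨ε.symm j, ?_, by simp⟩
        rw [mem_cls]
        simpa using hj
    obtain ⟨σ, hσ⟩ := hu.exists_match hut (by omega)
    obtain ⟨g, hg, hx⟩ := hp σ
    refine ⟨g, hg, fun x hxg i j => ?_⟩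
    have := hx x hxg (ε.symm i) (ε.symm j)
    simp only [Function.comp] at this
    rw [hσ, hσ] at this
    simpa using this

/-- A matching of the eight labels; together with `mB` it forms an 8-cycle. -/
def mA : Fin 8 → ℕ := ![0, 0, 1, 1, 2, 2, 3, 3]
/-- The matching complementary to `mA` in an 8-cycle. -/
def mB : Fin 8 → ℕ := ![3, 0, 0, 1, 1, 2, 2, 3]
/-- The halves given by the lowest binary digit. -/
def hA : Fin 8 → ℕ := ![0, 1, 0, 1, 0, 1, 0, 1]
/-- The halves given by the middle binary digit. -/
def hB : Fin 8 → ℕ := ![0, 0, 1, 1, 0, 0, 1, 1]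
/-- The halves given by the highest binary digit. -/
def hC : Fin 8 → ℕ := ![0, 0, 0, 0, 1, 1, 1, 1]
/-- A matching which, with `hA` and `hB`, is preserved by no nontrivial map fixing `0`. -/
def mC : Fin 8 → ℕ := ![0, 0, 1, 2, 1, 2, 3, 3]

/-- The condition that `y` permutes the classes of `t`. -/
abbrev PresF (t : Fin 8 → ℕ) (y : Fin 8 → Fin 8) : Prop := ∀ i j, t (y i) = t (y j) ↔ t i = t j

theorem mate {t : Fin 8 → ℕ} {y : Fin 8 → Fin 8} (hy : Function.Injective y) (ht : PresF t y)
    (i j : Fin 8) (hi : y i = i) (hij : i ≠ j) (h : t i = t j)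
    (hu : ∀ v, t i = t v → i ≠ v → v = j) : y j = j := by
  refine hu _ ?_ fun h' => hij (hy (hi.trans h'))
  have := (ht i j).2 h
  rwa [hi] at this

theorem two_matchings (y : Fin 8 → Fin 8) (hy : Function.Injective y) (h1 : PresF mA y)
    (h2 : PresF mB y) (h0 : y 0 = 0) : ∀ i, y i = i := by
  have e1 := mate hy h1 0 1 h0 (by decide) (by decide) (by decide)
  have e2 := mate hy h2 1 2 e1 (by decide) (by decide) (by decide)
  have e3 := mate hy h1 2 3 e2 (by decide) (by decide) (by decide)
  have e4 := mate hy h2 3 4 e3 (by decide) (by decide) (by decide)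
  have e5 := mate hy h1 4 5 e4 (by decide) (by decide) (by decide)
  have e6 := mate hy h2 5 6 e5 (by decide) (by decide) (by decide)
  have e7 := mate hy h1 6 7 e6 (by decide) (by decide) (by decide)
  intro i
  fin_cases i <;> assumption

theorem three_halves (y : Fin 8 → Fin 8) (h1 : PresF hA y)
    (h2 : PresF hB y) (h3 : PresF hC y) (h0 : y 0 = 0) : ∀ i, y i = i := by
  intro i
  have k1 := h1 i 0
  have k2 := h2 i 0
  have k3 := h3 i 0
  rw [h0] at k1 k2 k3
  generalize y i = v at k1 k2 k3
  revert i v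
  decide +kernel

theorem two_halves_matching (y : Fin 8 → Fin 8) (hy : Function.Injective y) (h1 : PresF hA y)
    (h2 : PresF hB y) (h3 : PresF mC y) (h0 : y 0 = 0) : ∀ i, y i = i := by
  have key : ∀ i j, y i = i → i ≠ j → (∀ v, (hA v = hA 0 ↔ hA j = hA 0) →
      (hB v = hB 0 ↔ hB j = hB 0) → i ≠ v → v = j) → y j = j := by
    intro i j hi hij hv
    refine hv _ ?_ ?_ fun h' => hij (hy (hi.trans h'))
    · have := h1 j 0; rwa [h0] at this
    · have := h2 j 0; rwa [h0] at this
  have e4 := key 0 4 h0 (by decide) (by decide)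
  have e1 := mate hy h3 0 1 h0 (by decide) (by decide) (by decide)
  have e5 := key 1 5 e1 (by decide) (by decide)
  have e2 := mate hy h3 4 2 e4 (by decide) (by decide) (by decide)
  have e6 := key 2 6 e2 (by decide) (by decide)
  have e3 := mate hy h3 5 3 e5 (by decide) (by decide) (by decide)
  have e7 := key 3 7 e3 (by decide) (by decide)
  intro i
  fin_cases i <;> assumption

theorem Good.true (ε : α ≃ Fin 8) (H : Subgroup (Perm α)) : Good ε H fun _ => True :=
  ⟨1, one_mem _, fun _ _ => trivial⟩

/-- Three imprimitive groups of degree eight: two matchings forming an 8-cycle, three independent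
partitions into halves, or two such partitions and a suitable matching leave a semiregular group. -/
theorem eight_impr (hn : Fintype.card α = 8) {H₁ H₂ H₃ : Subgroup (Perm α)} (h₁ : Impr H₁)
    (h₂ : Impr H₂) (h₃ : Impr H₃) {l : List (Subgroup (Perm α))} (hl : ∀ H ∈ l, Prp H)
    (hlen : 3 ≤ l.length) : Reg (alternatingGroup α) (H₁ :: H₂ :: H₃ :: l) := by
  let ε : α ≃ Fin 8 := Fintype.equivFinOfCardEq hn
  obtain ⟨b₁, hb₁, k₁⟩ := h₁.good hn ε
  obtain ⟨b₂, hb₂, k₂⟩ := h₂.good hn ε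
  obtain ⟨b₃, hb₃, k₃⟩ := h₃.good hn ε
  have u1 := Good.true ε H₁
  have u2 := Good.true ε H₂
  have u3 := Good.true ε H₃
  rcases hb₁ with rfl | rfl <;> rcases hb₂ with rfl | rfl <;> rcases hb₃ with rfl | rfl
  · exact Good.three hn (k₁ mA (by decide)) (k₂ mB (by decide)) u3
      (fun y hy h1 h2 _ h0 => two_matchings y hy h1 h2 h0) hl hlen
  · exact Good.three hn (k₁ mA (by decide)) (k₂ mB (by decide)) u3
      (fun y hy h1 h2 _ h0 => two_matchings y hy h1 h2 h0) hl hlen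
  · exact Good.three hn (k₁ mA (by decide)) u2 (k₃ mB (by decide))
      (fun y hy h1 _ h2 h0 => two_matchings y hy h1 h2 h0) hl hlen
  · exact Good.three hn (k₁ mC (by decide)) (k₂ hA (by decide)) (k₃ hB (by decide))
      (fun y hy h1 h2 h3 h0 => two_halves_matching y hy h2 h3 h1 h0) hl hlen
  · exact Good.three hn u1 (k₂ mA (by decide)) (k₃ mB (by decide))
      (fun y hy _ h1 h2 h0 => two_matchings y hy h1 h2 h0) hl hlen
  · exact Good.three hn (k₁ hA (by decide)) (k₂ mC (by decide)) (k₃ hB (by decide))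
      (fun y hy h1 h2 h3 h0 => two_halves_matching y hy h1 h3 h2 h0) hl hlen
  · exact Good.three hn (k₁ hA (by decide)) (k₂ hB (by decide)) (k₃ mC (by decide))
      (fun y hy h1 h2 h3 h0 => two_halves_matching y hy h1 h2 h3 h0) hl hlen
  · exact Good.three hn (k₁ hA (by decide)) (k₂ hB (by decide)) (k₃ hC (by decide))
      (fun y hy h1 h2 h3 h0 => three_halves y h1 h2 h3 h0) hl hlen

/-! ### Affine groups on eight points -/

/-- Even conjugates of `H` act by affine maps with respect to every modification of `ε`
by an even permutation of the labels. -/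
def Cod (ε : α ≃ Fin 8) (H : Subgroup (Perm α)) : Prop :=
  ∀ π : Perm (Fin 8), sign π = 1 → Good ε H fun y => Aff fun i => π (y (π.symm i))

theorem cod_of_sign {ε ε' : α ≃ Fin 8} {H : Subgroup (Perm α)}
    (h : ∀ x ∈ H, Aff fun i => ε (x (ε.symm i))) (hs : sign (ε'.symm.trans ε) = 1) : Cod ε' H := by
  intro π hπ
  let g : Perm α := ε.trans (π.symm.trans ε'.symm)
  have hg : ε'.permCongr g = π⁻¹ * (ε'.symm.trans ε) := by
    ext i
    simp [g, Perm.mul_apply]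
  refine ⟨g, ?_, fun x hx => ?_⟩
  · rw [mem_alternatingGroup, ← sign_permCongr ε', hg, Perm.sign_mul, hs, sign_inv, hπ, one_mul]
  · have := h _ (mem_conjSub.1 hx)
    convert this using 2 with i
    rw [Perm.mul_apply, Perm.mul_apply]
    have h1 : ∀ z, ε (g⁻¹ z) = π (ε' z) := by
      intro z
      obtain ⟨w, rfl⟩ := g.surjective z
      rw [inv_ap]
      simp [g]
    rw [h1]
    simp [g]

/-- The two labellings `ε` and `ε` followed by a transposition represent both classes of affine
structures under even permutations. -/
theorem exists_cod {H : Subgroup (Perm α)} {η : α ≃ Fin 8}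
    (h : ∀ x ∈ H, Aff fun i => η (x (η.symm i))) (ε : α ≃ Fin 8) :
    Cod ε H ∨ Cod (ε.trans (swap 0 1)) H := by
  rcases Int.units_eq_one_or (sign (ε.symm.trans η)) with hs | hs
  · exact Or.inl (cod_of_sign h hs)
  · refine Or.inr (cod_of_sign h ?_)
    have : (ε.trans (swap 0 1)).symm.trans η = (ε.symm.trans η) * swap 0 1 := by
      ext i
      simp [Perm.mul_apply]
    rw [this, Perm.sign_mul, hs, sign_swap (by decide)]
    decide

instance (y : Fin 8 → Fin 8) : Decidable (Aff y) := by unfold Aff; infer_instance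

/-- An even permutation of the labels, giving a second affine structure. -/
def affP : Perm (Fin 8) := swap 5 6 * swap 6 7
/-- An even permutation of the labels, giving a third affine structure. -/
def affQ : Perm (Fin 8) := swap 3 4 * swap 4 5

/-- The linear map of `𝔽₂³` with values `u`, `v`, `w` on the standard basis. -/
def linMap (u v w : Fin 8) : Fin 8 → Fin 8 :=
  ![0, u, v, u ^^^ v, w, u ^^^ w, v ^^^ w, u ^^^ v ^^^ w]

theorem three_affine_aux : ∀ u v w : Fin 8,
    (u ≠ 0 ∧ v ≠ 0 ∧ w ≠ 0 ∧ u ≠ v ∧ u ≠ w ∧ v ≠ w ∧ u ^^^ v ^^^ w ≠ 0) →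
    (Aff fun i => affP (linMap u v w (affP.symm i))) →
    (Aff fun i => affQ (linMap u v w (affQ.symm i))) → u = 1 ∧ v = 2 ∧ w = 4 := by
  decide +kernel

/-- Only the identity is linear and remains affine after conjugation by `affP` and by `affQ`. -/
theorem three_affine (y : Fin 8 → Fin 8) (hy : Function.Injective y) (h1 : Aff y)
    (h2 : Aff fun i => affP (y (affP.symm i))) (h3 : Aff fun i => affQ (y (affQ.symm i)))
    (h0 : y 0 = 0) : ∀ i, y i = i := by
  obtain ⟨e3, e5, e6, e7⟩ := h1
  have h : ∀ a : Fin 8, 0 ^^^ a = a := by decide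
  simp only [h0, h] at e3 e5 e6
  have hyy : y = linMap (y 1) (y 2) (y 4) := by
    funext i
    fin_cases i <;> simp [linMap, h0, e3, e5, e6, e7]
  have hne : ∀ i j, i ≠ j → y i ≠ y j := fun i j hij h => hij (hy h)
  have hne0 : ∀ i, i ≠ 0 → y i ≠ 0 := fun i hi h => hi (hy (h.trans h0.symm))
  rw [hyy] at h2 h3
  obtain ⟨k1, k2, k4⟩ := three_affine_aux (y 1) (y 2) (y 4) ⟨hne0 _ (by decide),
    hne0 _ (by decide), hne0 _ (by decide), hne _ _ (by decide), hne _ _ (by decide),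
    hne _ _ (by decide), e7 ▸ hne0 7 (by decide)⟩ h2 h3
  rw [k1, k2, k4] at hyy
  rw [hyy]
  decide

theorem eight_affine (hn : Fintype.card α = 8) {ε : α ≃ Fin 8} {H₁ H₂ H₃ : Subgroup (Perm α)}
    (h₁ : Cod ε H₁) (h₂ : Cod ε H₂) (h₃ : Cod ε H₃) {l : List (Subgroup (Perm α))}
    (hl : ∀ H ∈ l, Prp H) (hlen : 3 ≤ l.length) :
    Reg (alternatingGroup α) (H₁ :: H₂ :: H₃ :: l) := by
  have k2 : sign affP = 1 := by
    rw [affP, Perm.sign_mul, sign_swap (by decide), sign_swap (by decide)]; decide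
  have k3 : sign affQ = 1 := by
    rw [affQ, Perm.sign_mul, sign_swap (by decide), sign_swap (by decide)]; decide
  exact Good.three hn (h₁ 1 sign_one) (h₂ affP k2) (h₃ affQ k3)
    (fun y hy h1 h2 h3 h0 => three_affine y hy h1 h2 h3 h0) hl hlen

/-- Six primitive groups of degree 8 all containing double transpositions. -/
theorem eight_all_quad (hn : Fintype.card α = 8) {l : List (Subgroup (Perm α))} (hlen : 6 ≤ l.length)
    (hl : ∀ H ∈ l, Prp H) (hp : ∀ H ∈ l, MulAction.IsPreprimitive H α)
    (hq : ∀ H ∈ l, ∃ S, IsQuad H S) : Reg (alternatingGroup α) l := by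
  let ε : α ≃ Fin 8 := Fintype.equivFinOfCardEq hn
  have hcod : ∀ H ∈ l, Cod ε H ∨ Cod (ε.trans (swap 0 1)) H := fun H hH => by
    obtain ⟨S, hS⟩ := hq H hH
    obtain ⟨η, hη⟩ := exists_affine hn (hp H hH) (noThree_of_prim (hl H hH) (hp H hH))
      (noFive_of_prim (by omega) (hl H hH) (hp H hH)) hS
    exact exists_cod hη ε
  have key : ∀ (η : α ≃ Fin 8) (l₁ l₂ : List (Subgroup (Perm α))), l.Perm (l₁ ++ l₂) →
      (∀ H ∈ l₁, Cod η H) → 3 ≤ l₁.length → Reg (alternatingGroup α) l := by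
    intro η l₁ l₂ hperm hc h3
    match l₁, h3 with
    | H₁ :: H₂ :: H₃ :: l₁, _ =>
      refine Reg.perm hperm.symm ?_
      have hlen' := hperm.length_eq
      simp only [List.length_append, List.length_cons, List.cons_append] at hlen' ⊢
      exact eight_affine hn (hc H₁ (by simp)) (hc H₂ (by simp)) (hc H₃ (by simp))
        (fun H hH => hl H (hperm.mem_iff.2 (by simp at hH ⊢; tauto)))
        (by simp only [List.length_append]; omega)
  obtain ⟨l₁, l₂, hperm, h1, h2⟩ := exists_list_split (Cod ε) l
  have hlen' := hperm.length_eq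
  rw [List.length_append] at hlen'
  rcases Nat.lt_or_ge l₁.length 3 with h | h
  · refine key (ε.trans (swap 0 1)) l₂ l₁ (hperm.trans List.perm_append_comm) (fun H hH => ?_) (by omega)
    exact (hcod H (hperm.mem_iff.2 (by simp [hH]))).resolve_left (h2 H hH)
  · exact key ε l₁ l₂ hperm h1 h

/-- A partition into halves that no fixed-point-free involution `σ` of `Fin 4`, acting on
the first coordinate of `Fin 4 × Fin 2`, preserves. The pair `(i, j)` has the label `j + 2 * i`. -/
def vF : Fin 8 → ℕ := ![0, 1, 1, 0, 1, 0, 1, 0]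
/-- A partition into pairs with the same property as `vF`. -/
def vM : Fin 8 → ℕ := ![0, 0, 1, 3, 2, 1, 3, 2]

theorem not_presF_of_free : ∀ σ : Fin 4 → Fin 4, (∀ i, σ (σ i) = i) → (∀ i, σ i ≠ i) →
    (¬ ∀ p q : Fin 4 × Fin 2, vF (finProdFinEquiv (σ p.1, p.2)) = vF (finProdFinEquiv (σ q.1, q.2)) ↔
      vF (finProdFinEquiv p) = vF (finProdFinEquiv q)) ∧
    ¬ ∀ p q : Fin 4 × Fin 2, vM (finProdFinEquiv (σ p.1, p.2)) = vM (finProdFinEquiv (σ q.1, q.2)) ↔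
      vM (finProdFinEquiv p) = vM (finProdFinEquiv q) := by
  decide +kernel

/-- A semiregular Klein four-group of degree 8 is killed by an imprimitive group. -/
theorem kill_free_four (hn : Fintype.card α = 8) {H L : Subgroup (Perm α)} (hH : Impr H)
    (h4 : Nat.card L = 4) (h2 : ∀ x ∈ L, x ^ 2 = 1) (hfree : ∀ x ∈ L, x ≠ 1 → ∀ a, x a ≠ a) :
    ∃ g ∈ alternatingGroup α, L ⊓ conjSub g H = ⊥ := by
  let θ : Fin 4 ≃ L := (Finite.equivFinOfCardEq h4).symm
  obtain ⟨a⟩ : Nonempty α := Fintype.card_pos_iff.1 (by omega)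
  obtain ⟨e, he⟩ : ∃ e, ∀ u ∈ L, u a ≠ e := by
    by_contra hc
    push Not at hc
    have hs : Function.Surjective fun i : Fin 4 => (θ i : Perm α) a := by
      intro e
      obtain ⟨u, hu, rfl⟩ := hc e
      exact ⟨θ.symm ⟨u, hu⟩, by simp⟩
    have := Fintype.card_le_of_surjective _ hs
    rw [hn, Fintype.card_fin] at this
    omega
  let v : Fin 4 × Fin 2 → α := fun p => (θ p.1 : Perm α) (![a, e] p.2)
  have hfix : ∀ x ∈ L, ∀ b, x b = b → x = 1 := fun x hx b hb => by
    by_contra h1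
    exact hfree x hx h1 b hb
  have hsame : ∀ i i' b, (θ i : Perm α) b = (θ i' : Perm α) b → i = i' := by
    intro i i' b h
    have h1 := hfix _ (L.mul_mem (L.inv_mem (θ i').2) (θ i).2) b (by
      rw [Perm.mul_apply, h, inv_ap])
    exact θ.injective (Subtype.ext (inv_mul_eq_one.1 h1).symm)
  have hdiff : ∀ i i', (θ i : Perm α) a ≠ (θ i' : Perm α) e := by
    intro i i' h
    refine he _ (L.mul_mem (L.inv_mem (θ i').2) (θ i).2) ?_
    rw [Perm.mul_apply, h, inv_ap]
  have hv : Function.Injective v := by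
    rintro ⟨i, j⟩ ⟨i', j'⟩ h
    fin_cases j <;> fin_cases j'
    · rw [hsame i i' a h]
    · exact absurd h (hdiff i i')
    · exact absurd h.symm (hdiff i' i)
    · rw [hsame i i' e h]
  let η : Fin 4 × Fin 2 ≃ α := Equiv.ofBijective v
    ((Fintype.bijective_iff_injective_and_card v).2 ⟨hv, by simp [hn]⟩)
  let ε : α ≃ Fin 8 := η.symm.trans finProdFinEquiv
  have main : ∀ x ∈ L, x ≠ 1 → ∃ σ : Fin 4 → Fin 4, (∀ i, σ (σ i) = i) ∧ (∀ i, σ i ≠ i) ∧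
      ∀ p : Fin 4 × Fin 2, ε (x (ε.symm (finProdFinEquiv p))) = finProdFinEquiv (σ p.1, p.2) := by
    intro x hx hx1
    refine ⟨fun i => θ.symm (⟨x, hx⟩ * θ i), fun i => ?_, fun i h => ?_, fun p => ?_⟩
    · have : (⟨x, hx⟩ : L) * ⟨x, hx⟩ = 1 := by
        rw [← pow_two]; exact Subtype.ext (h2 x hx)
      simp [← mul_assoc, this]
    · rw [Equiv.symm_apply_eq] at h
      exact hx1 (congrArg Subtype.val (mul_eq_right.1 h))
    · change finProdFinEquiv (η.symm (x (η (finProdFinEquiv.symm (finProdFinEquiv p))))) = _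
      rw [Equiv.symm_apply_apply, Equiv.apply_eq_iff_eq, Equiv.symm_apply_eq]
      change x (v p) = v _
      simp [v]
  obtain ⟨b, hb, hgood⟩ := hH.good hn ε
  have key : ∀ t : Fin 8 → ℕ, (∀ i, (Finset.univ.filter fun j => t j = t i).card = b) →
      (∀ σ : Fin 4 → Fin 4, (∀ i, σ (σ i) = i) → (∀ i, σ i ≠ i) →
        ¬ ∀ p q : Fin 4 × Fin 2,
          t (finProdFinEquiv (σ p.1, p.2)) = t (finProdFinEquiv (σ q.1, q.2)) ↔
          t (finProdFinEquiv p) = t (finProdFinEquiv q)) →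
      ∃ g ∈ alternatingGroup α, L ⊓ conjSub g H = ⊥ := by
    intro t ht hσ
    obtain ⟨g, hg, hx⟩ := hgood t ht
    refine ⟨g, hg, ?_⟩
    rw [Subgroup.eq_bot_iff_forall]
    rintro x ⟨hxL, hxg⟩
    by_contra hx1
    obtain ⟨σ, k1, k2, k3⟩ := main x hxL hx1
    refine hσ σ k1 k2 fun p q => ?_
    have := hx x hxg (finProdFinEquiv p) (finProdFinEquiv q)
    simp only [k3] at this
    exact this
  rcases hb with rfl | rfl
  · exact key vM (by decide) fun σ h1 h2 => (not_presF_of_free σ h1 h2).2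
  · exact key vF (by decide) fun σ h1 h2 => (not_presF_of_free σ h1 h2).1

/-- Two involutions that induce different double transpositions on `{a, b, c, d}` and agree
elsewhere differ by a double transposition. -/
theorem quad_mul {H : Subgroup (Perm α)} {f f' : Perm α} (hf : f ∈ H) (hf' : f' ∈ H) {a b c d : α}
    (hnd : [a, b, c, d].Nodup) (fa : f a = b) (fb : f b = a) (fc : f c = d) (fd : f d = c)
    (ga : f' a = c) (gc : f' c = a) (gb : f' b = d) (gd : f' d = b) (hff : ∀ p, f (f p) = p)
    (h : ∀ p, p ≠ a → p ≠ b → p ≠ c → p ≠ d → f' p = f p) : IsQuad H {a, b, c, d} := by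
  simp only [List.nodup_cons, List.mem_cons, not_or, List.not_mem_nil, not_false_eq_true,
    List.nodup_nil, and_true] at hnd
  obtain ⟨⟨hab, hac, had⟩, ⟨hbc, hbd⟩, hcd⟩ := hnd
  have wa : (f * f') a = d := by rw [Perm.mul_apply, ga, fc]
  have wb : (f * f') b = c := by rw [Perm.mul_apply, gb, fd]
  have wc : (f * f') c = b := by rw [Perm.mul_apply, gc, fa]
  have wd : (f * f') d = a := by rw [Perm.mul_apply, gd, fb]
  have wp : ∀ p, p ≠ a → p ≠ b → p ≠ c → p ≠ d → (f * f') p = p := fun p h1 h2 h3 h4 => by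
    rw [Perm.mul_apply, h p h1 h2 h3 h4, hff]
  refine ⟨f * f', H.mul_mem hf hf', fun p => ?_, ?_, ?_⟩
  · by_cases h1 : p = a
    · rw [h1, wa, wd]
    by_cases h2 : p = b
    · rw [h2, wb, wc]
    by_cases h3 : p = c
    · rw [h3, wc, wb]
    by_cases h4 : p = d
    · rw [h4, wd, wa]
    rw [wp p h1 h2 h3 h4, wp p h1 h2 h3 h4]
  · ext p
    rw [mem_support]
    simp only [Finset.mem_insert, Finset.mem_singleton]
    constructor
    · intro hp
      by_contra hc
      push Not at hc
      exact hp (wp p hc.1 hc.2.1 hc.2.2.1 hc.2.2.2)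
    · rintro (rfl | rfl | rfl | rfl)
      · rw [wa]; exact Ne.symm had
      · rw [wb]; exact Ne.symm hbc
      · rw [wc]; exact hbc
      · rw [wd]; exact had
  · rw [Finset.card_insert_of_notMem (by simp [hab, hac, had]),
      Finset.card_insert_of_notMem (by simp [hbc, hbd]), Finset.card_pair hcd]

theorem IsQuad.of_conj {H : Subgroup (Perm α)} {g : Perm α} {S : Finset α}
    (h : IsQuad (conjSub g H) S) : ∃ S', IsQuad H S' := by
  obtain ⟨x, hx, hxx, hs, h4⟩ := h
  refine ⟨_, g⁻¹ * x * g, mem_conjSub.1 hx, fun a => ?_, rfl, ?_⟩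
  · simp only [Perm.mul_apply, ap_inv, hxx, inv_ap]
  · have := card_support_conj (σ := g⁻¹) (τ := x)
    rw [inv_inv] at this
    rw [this, hs, h4]

/-- A fixed-point-free involution lies in at most a third of the conjugates of a group without
double transpositions: it can be re-paired on four points in three ways, any two of which differ by
a double transposition. -/
theorem phi_free_le {D : Subgroup (Perm α)} (hD : ∀ S, ¬ IsQuad D S) {z : Perm α}
    (hz : ∀ a, z (z a) = a) (hzf : ∀ a, z a ≠ a) (hn : 3 ≤ Fintype.card α) : phi D z ≤ 1 / 3 := by
  obtain ⟨a⟩ : Nonempty α := Fintype.card_pos_iff.1 (by omega)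
  obtain ⟨c, hc⟩ : ∃ c, c ∉ ({a, z a} : Finset α) := by
    by_contra hc
    push Not at hc
    have h1 := Finset.card_univ (α := α)
    rw [← Finset.eq_univ_of_forall hc] at h1
    have := Finset.card_le_two (a := a) (b := z a)
    omega
  simp only [Finset.mem_insert, Finset.mem_singleton, not_or] at hc
  obtain ⟨hca, hcb⟩ := hc
  obtain ⟨b, hb⟩ : ∃ b, z a = b := ⟨_, rfl⟩
  obtain ⟨d, hd⟩ : ∃ d, z c = d := ⟨_, rfl⟩
  have hb' : z b = a := by rw [← hb, hz]
  have hd' : z d = c := by rw [← hd, hz]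
  rw [hb] at hcb
  have hab : a ≠ b := fun h => hzf a (hb.trans h.symm)
  have hcd : c ≠ d := fun h => hzf c (hd.trans h.symm)
  have hda : d ≠ a := fun h => hcb (by rw [← hd', h, hb])
  have hdb : d ≠ b := fun h => hca (by rw [← hd', h, hb'])
  have hs : swap a b ∉ alternatingGroup α := by
    rw [mem_alternatingGroup, sign_swap hab]; decide
  have hsz : swap a b * z = z * swap a b := by
    rw [mul_swap_eq_swap_mul, hb, hb', swap_comm]
  let y₁ := swap b c * z * (swap b c)⁻¹
  let y₂ := swap b d * z * (swap b d)⁻¹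
  have hy₁ : ∀ p, y₁ p = swap b c (z (swap b c p)) := fun p => by
    simp only [y₁, swap_inv, Perm.mul_apply]
  have hy₂ : ∀ p, y₂ p = swap b d (z (swap b d p)) := fun p => by
    simp only [y₂, swap_inv, Perm.mul_apply]
  have a1 : y₁ a = c := by
    rw [hy₁, swap_apply_of_ne_of_ne hab (Ne.symm hca), hb, swap_apply_left]
  have c1 : y₁ c = a := by
    rw [hy₁, swap_apply_right, hb', swap_apply_of_ne_of_ne hab (Ne.symm hca)]
  have b1 : y₁ b = d := by
    rw [hy₁, swap_apply_left, hd, swap_apply_of_ne_of_ne hdb (Ne.symm hcd)]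
  have d1 : y₁ d = b := by
    rw [hy₁, swap_apply_of_ne_of_ne hdb (Ne.symm hcd), hd', swap_apply_right]
  have a2 : y₂ a = d := by
    rw [hy₂, swap_apply_of_ne_of_ne hab (Ne.symm hda), hb, swap_apply_left]
  have d2 : y₂ d = a := by
    rw [hy₂, swap_apply_right, hb', swap_apply_of_ne_of_ne hab (Ne.symm hda)]
  have b2 : y₂ b = c := by
    rw [hy₂, swap_apply_left, hd', swap_apply_of_ne_of_ne hcb hcd]
  have c2 : y₂ c = b := by
    rw [hy₂, swap_apply_of_ne_of_ne hcb hcd, hd, swap_apply_right]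
  have hout : ∀ p, p ≠ a → p ≠ b → p ≠ c → p ≠ d → z p ≠ b ∧ z p ≠ c ∧ z p ≠ d := by
    intro p h1 h2 h3 h4
    refine ⟨fun h => h1 ?_, fun h => h4 ?_, fun h => h3 ?_⟩
    · rw [← hz p, h, hb']
    · rw [← hz p, h, hd]
    · rw [← hz p, h, hd']
  have p1 : ∀ p, p ≠ a → p ≠ b → p ≠ c → p ≠ d → y₁ p = z p := fun p h1 h2 h3 h4 => by
    obtain ⟨k1, k2, k3⟩ := hout p h1 h2 h3 h4
    rw [hy₁, swap_apply_of_ne_of_ne h2 h3, swap_apply_of_ne_of_ne k1 k2]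
  have p2 : ∀ p, p ≠ a → p ≠ b → p ≠ c → p ≠ d → y₂ p = z p := fun p h1 h2 h3 h4 => by
    obtain ⟨k1, k2, k3⟩ := hout p h1 h2 h3 h4
    rw [hy₂, swap_apply_of_ne_of_ne h2 h4, swap_apply_of_ne_of_ne k1 k3]
  have hy11 : ∀ p, y₁ (y₁ p) = p := fun p => by rw [hy₁, hy₁, swap_apply_self, hz, swap_apply_self]
  have hnd : [a, b, c, d].Nodup := by
    simp [hab, Ne.symm hca, Ne.symm hda, Ne.symm hcb, Ne.symm hdb, hcd]
  have hnd2 : [a, b, d, c].Nodup := by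
    simp [hab, Ne.symm hca, Ne.symm hda, Ne.symm hcb, Ne.symm hdb, Ne.symm hcd]
  have hnd3 : [a, c, d, b].Nodup := by
    simp [hab, Ne.symm hca, Ne.symm hda, hcb, hdb, hcd]
  classical
  have hcf := phi_le_of_family_const D z ![z, y₁, y₂] (by
      intro i
      fin_cases i
      · rfl
      · exact phi_conj_of_odd D hs hsz _
      · exact phi_conj_of_odd D hs hsz _) 1 (by
    intro g hg
    have hDg : ∀ S, ¬ IsQuad (conjSub g D) S := fun S h => by
      obtain ⟨S', h'⟩ := h.of_conj
      exact hD S' h'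
    have n1 : z ∈ conjSub g D → y₁ ∈ conjSub g D → False := fun h1 h2 =>
      hDg _ (quad_mul h1 h2 hnd hb hb' hd hd' a1 c1 b1 d1 hz p1)
    have n2 : z ∈ conjSub g D → y₂ ∈ conjSub g D → False := fun h1 h2 =>
      hDg _ (quad_mul h1 h2 hnd2 hb hb' hd' hd a2 d2 b2 c2 hz
        fun p k1 k2 k3 k4 => p2 p k1 k2 k4 k3)
    have n3 : y₁ ∈ conjSub g D → y₂ ∈ conjSub g D → False := fun h1 h2 =>
      hDg _ (quad_mul h1 h2 hnd3 a1 c1 d1 b1 a2 d2 c2 b2 hy11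
        fun p k1 k2 k3 k4 => (p2 p k1 k4 k2 k3).trans (p1 p k1 k4 k2 k3).symm)
    refine Finset.card_le_one.2 fun i hi j hj => ?_
    replace hi := (Finset.mem_filter.1 hi).2
    replace hj := (Finset.mem_filter.1 hj).2
    fin_cases i <;> fin_cases j
    · rfl
    · exact (n1 hi hj).elim
    · exact (n2 hi hj).elim
    · exact (n1 hj hi).elim
    · rfl
    · exact (n3 hi hj).elim
    · exact (n2 hj hi).elim
    · exact (n3 hj hi).elim
    · rfl)
  simpa using hcf

/-! ### Degree eight: assembling the cases -/

/-- Four primitive groups of degree eight can be conjugated so that their intersection acts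
semiregularly on the orbit of some point. -/
theorem eight_chain (hn : Fintype.card α = 8) {H₁ H₂ H₃ H₄ : Subgroup (Perm α)}
    (p₁ : NoThree H₁) (q₂ : Prp H₂) (p₂ : NoThree H₂) (q₃ : Prp H₃) (p₃ : NoThree H₃)
    (q₄ : Prp H₄) (p₄ : NoThree H₄) :
    ∃ ω : α, Reg (alternatingGroup α ⊓ fixOff {ω}ᶜ) [H₁, H₂, H₃, H₄] := by
  obtain ⟨G, -, hG, h1⟩ := exists_base p₁ Finset.univ
  rw [Finset.card_univ, hn] at hG
  obtain ⟨p, G', hp, rfl, hG'⟩ := Finset.card_eq_succ.1 hG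
  obtain ⟨q, r, s, hqr, hqs, hrs, rfl⟩ := Finset.card_eq_three.1 hG'
  simp only [Finset.mem_insert, Finset.mem_singleton, not_or] at hp
  obtain ⟨hpq, hpr, hps⟩ := hp
  have r1 : Reg (alternatingGroup α ⊓ fixOff (insert p (insert q {r, s}))ᶜ) [H₁] := by
    refine Reg.single.2 ⟨1, one_mem _, (Subgroup.eq_bot_iff_forall _).2 fun x hx => ?_⟩
    obtain ⟨⟨-, hx1⟩, hx2⟩ := hx
    rw [conjSub_one] at hx2
    refine h1 x hx2 ?_
    rwa [← Finset.compl_eq_univ_sdiff]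
  have r2 := prim_chain hn le_rfl (T := insert q {r, s}) (Finset.insert_nonempty _ _)
    (ω := p) (by simp [hpq, hpr, hps]) r1 q₂ p₂
  have r3 := prim_chain hn le_rfl (T := {r, s}) (Finset.insert_nonempty _ _)
    (ω := q) (by simp [hqr, hqs]) r2 q₃ p₃
  have r4 := prim_chain hn le_rfl (T := {s}) (Finset.singleton_nonempty _)
    (ω := r) (by simp [hrs]) r3 q₄ p₄
  exact ⟨s, r4⟩

/-- After four primitive groups, what is left is either small or regular on the eight points. -/
theorem eight_core (hn : Fintype.card α = 8) {H₁ H₂ H₃ H₄ : Subgroup (Perm α)}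
    (p₁ : NoThree H₁) (q₂ : Prp H₂) (p₂ : NoThree H₂) (q₃ : Prp H₃) (p₃ : NoThree H₃)
    (q₄ : Prp H₄) (p₄ : NoThree H₄) {H₅ H₆ : Subgroup (Perm α)} (q₅ : Prp H₅) (q₆ : Prp H₆)
    (hreg : ∀ L ≤ alternatingGroup α, Nat.card L = 8 → (∀ x ∈ L, x ≠ 1 → ∀ a, x a ≠ a) →
      Reg L [H₅, H₆]) :
    Reg (alternatingGroup α) ([H₁, H₂, H₃, H₄] ++ [H₅, H₆]) := by
  obtain ⟨ω, hω⟩ := eight_chain hn p₁ q₂ p₂ q₃ p₃ q₄ p₄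
  obtain ⟨L, hLA, hLM, hL, -⟩ := Reg.exists_core _ hω
  refine hL _ ?_
  have hst : ∀ x ∈ L, x ω = ω → x = 1 := fun x hx h => by
    have : x ∈ L ⊓ fixOff {ω}ᶜ := Subgroup.mem_inf.2 ⟨hx, fun a ha => by
      have : a = ω := by simpa using ha
      rw [this, h]⟩
    rwa [hLM, Subgroup.mem_bot] at this
  obtain ⟨O, hO, hO2⟩ := exists_regular_orbit hst
  have hle : Nat.card L ≤ 8 := by
    rw [← hO, ← hn]; exact Finset.card_le_univ O
  rcases hle.lt_or_eq with h | h
  · refine Reg.of_card (by omega) _ ?_ hLA (by simpa using h)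
    simp [q₅, q₆]
  · refine hreg L hLA h fun x hx hx1 a => ?_
    have hu : O = Finset.univ := Finset.eq_univ_of_card O (by rw [hO, h, hn])
    exact (hO2 x (mem_nt.2 ⟨hx, hx1⟩) a (by simp [hu])).2

/-- A group acting regularly on eight points is cut down to order four by any group, and then killed
by an imprimitive one. -/
theorem eight_regular_impr (hn : Fintype.card α = 8) {H₅ H₆ : Subgroup (Perm α)} (q₅ : Prp H₅)
    (q₆ : Prp H₆) (i₆ : Impr H₆) {L : Subgroup (Perm α)} (hL : L ≤ alternatingGroup α)
    (h8 : Nat.card L = 8) (hfree : ∀ x ∈ L, x ≠ 1 → ∀ a, x a ≠ a) : Reg L [H₅, H₆] := by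
  obtain ⟨g, hg, h⟩ := card_inf_half (by omega) q₅ hL (by
    rintro rfl
    simp at h8)
  refine ⟨g, hg, Reg.single.2 ?_⟩
  have hL' : L ⊓ conjSub g H₅ ≤ alternatingGroup α := inf_le_left.trans hL
  rcases (show Nat.card (L ⊓ conjSub g H₅ : Subgroup _) ≤ 4 by omega).lt_or_eq with h3 | h4
  · exact exists_inf_eq_bot_of_card_le_three (by omega) q₆ hL' (by omega)
  · rcases card_four (by omega) q₆ hL' h4 with h | h
    · exact h
    · exact kill_free_four hn i₆ h4 h fun x hx => hfree x hx.1

/-- A group acting regularly on eight points: each nontrivial element has a fixed-point-free involution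
among its powers, so on average at most `7 / 3` of them lie in a conjugate of `D`. -/
theorem eight_regular_no_quad (hn : Fintype.card α = 8) {D H₆ : Subgroup (Perm α)}
    (hD : ∀ S, ¬ IsQuad D S) (q₆ : Prp H₆) {L : Subgroup (Perm α)} (hL : L ≤ alternatingGroup α)
    (h8 : Nat.card L = 8) (hfree : ∀ x ∈ L, x ≠ 1 → ∀ a, x a ≠ a) : Reg L [D, H₆] := by
  have hphi : ∀ x ∈ nt L, phi D x ≤ 1 / 3 := by
    intro x hx
    obtain ⟨hxL, hx1⟩ := mem_nt.1 hx
    have hx8 : x ^ 8 = 1 := by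
      have := pow_card_eq_one' (x := (⟨x, hxL⟩ : L))
      rw [h8] at this
      exact congrArg Subtype.val this
    have inv : ∀ m, x ^ m ≠ 1 → (x ^ m) ^ 2 = 1 → phi D x ≤ 1 / 3 := fun m h1 h2 =>
      (phi_pow D x m).trans (phi_free_le hD (sq_eq h2)
        (hfree _ (L.pow_mem hxL m) h1) (by omega))
    by_cases h4 : x ^ 4 = 1
    · by_cases h2 : x ^ 2 = 1
      · exact inv 1 (by simpa using hx1) (by simpa using h2)
      · exact inv 2 h2 (by rw [← pow_mul]; exact h4)
    · exact inv 4 h4 (by rw [← pow_mul]; exact hx8)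
  obtain ⟨g, hg, h⟩ := exists_card_inf_le L D
  refine ⟨g, hg, Reg.single.2 ?_⟩
  have hsum := Finset.sum_le_card_nsmul (nt L) (phi D) (1 / 3) hphi
  have hc := card_nt L
  rw [h8] at hc
  have hc7 : (nt L).card = 7 := by omega
  rw [hc7] at hsum
  have hlt : ((nt (L ⊓ conjSub g D)).card : ℚ) < 3 := by
    refine (h.trans hsum).trans_lt ?_
    norm_num
  have hlt' : (nt (L ⊓ conjSub g D)).card < 3 := by exact_mod_cast hlt
  have hc' := card_nt (L ⊓ conjSub g D)
  exact exists_inf_eq_bot_of_card_le_three (by omega) q₆ (inf_le_left.trans hL) (by omega)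

theorem step_eight (hn : Fintype.card α = 8) : Step α := by
  intro c l ih hl hc hr
  by_cases hr2 : 2 ≤ rk c
  · exact step_eight_rk hn ih hl hc hr hr2
  by_cases hi : ∃ H ∈ l, Intr H
  · obtain ⟨H, hH, hi⟩ := hi
    exact step_intr ih hl hc hr (by omega) hH hi
  push Not at hi
  refine Reg.mono inf_le_right ?_
  have hlen : 6 ≤ l.length := by omega
  obtain ⟨l₁, l₂, hp, h₁, h₂⟩ := exists_list_split Impr l
  have hlen' : l₁.length + l₂.length = l.length := by rw [hp.length_eq, List.length_append]
  have hl₁ : ∀ H ∈ l₁, Prp H := fun H h => hl H (hp.mem_iff.2 (List.mem_append_left _ h))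
  have hl₂ : ∀ H ∈ l₂, Prp H := fun H h => hl H (hp.mem_iff.2 (List.mem_append_right _ h))
  have prim : ∀ H ∈ l₂, MulAction.IsPreprimitive H α := fun H h => by
    rcases trichotomy H (by omega) with k | k | k
    · exact (hi H (hp.mem_iff.2 (List.mem_append_right _ h)) k).elim
    · exact (h₂ H h k.2).elim
    · exact k.2
  have hn3 : ∀ H ∈ l₂, NoThree H := fun H h => noThree_of_prim (hl₂ H h) (prim H h)
  refine Reg.perm hp.symm ?_
  match l₁, hl₁, h₁, hp, hlen' with
  | J₁ :: J₂ :: J₃ :: m, hl₁, h₁, hp, hlen' =>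
    simp only [List.length_cons] at hlen'
    refine eight_impr hn (h₁ _ (by simp)) (h₁ _ (by simp)) (h₁ _ (by simp)) (l := m ++ l₂) ?_ ?_
    · intro H h
      rcases List.mem_append.1 h with h | h
      · exact hl₁ H (by simp [h])
      · exact hl₂ H h
    · rw [List.length_append]; omega
  | [J₁, J₂], hl₁, h₁, hp, hlen' =>
    match l₂, hl₂, hn3, hlen' with
    | H₁ :: H₂ :: H₃ :: H₄ :: m, hl₂, hn3, hlen' =>
      have := eight_core hn (hn3 H₁ (by simp)) (hl₂ H₂ (by simp)) (hn3 H₂ (by simp))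
        (hl₂ H₃ (by simp)) (hn3 H₃ (by simp)) (hl₂ H₄ (by simp)) (hn3 H₄ (by simp))
        (hl₁ J₁ (by simp)) (hl₁ J₂ (by simp)) fun L hL h8 hf =>
          eight_regular_impr hn (hl₁ J₁ (by simp)) (hl₁ J₂ (by simp)) (h₁ J₂ (by simp)) hL h8 hf
      refine Reg.perm ?_ (this.append (m := m))
      rw [List.append_assoc]
      exact (List.perm_append_comm_assoc [H₁, H₂, H₃, H₄] [J₁, J₂] m)
    | [], _, _, h => simp at h; omega
    | [_], _, _, h => simp at h; omega
    | [_, _], _, _, h => simp at h; omega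
    | [_, _, _], _, _, h => simp at h; omega
  | [J], hl₁, h₁, hp, hlen' =>
    match l₂, hl₂, hn3, hlen' with
    | H₁ :: H₂ :: H₃ :: H₄ :: H₅ :: m, hl₂, hn3, hlen' =>
      have := eight_core hn (hn3 H₁ (by simp)) (hl₂ H₂ (by simp)) (hn3 H₂ (by simp))
        (hl₂ H₃ (by simp)) (hn3 H₃ (by simp)) (hl₂ H₄ (by simp)) (hn3 H₄ (by simp))
        (hl₂ H₅ (by simp)) (hl₁ J (by simp)) fun L hL h8 hf =>
          eight_regular_impr hn (hl₂ H₅ (by simp)) (hl₁ J (by simp)) (h₁ J (by simp)) hL h8 hf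
      refine Reg.perm ?_ (this.append (m := m))
      exact (List.perm_middle (a := J) (l₁ := [H₁, H₂, H₃, H₄, H₅]) (l₂ := m))
    | [], _, _, h => simp at h; omega
    | [_], _, _, h => simp at h; omega
    | [_, _], _, _, h => simp at h; omega
    | [_, _, _], _, _, h => simp at h; omega
    | [_, _, _, _], _, _, h => simp at h; omega
  | [], hl₁, h₁, hp, hlen' =>
    rw [List.nil_append]
    simp only [List.length_nil, zero_add] at hlen'
    by_cases hq : ∀ H ∈ l₂, ∃ S, IsQuad H S
    · exact eight_all_quad hn (by omega) hl₂ prim hq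
    push Not at hq
    obtain ⟨D, hD, hDq⟩ := hq
    obtain ⟨m, hm⟩ := exists_perm_cons hD
    have hml : m.length + 1 = l₂.length := by rw [hm.length_eq, List.length_cons]
    have hm₂ : ∀ H ∈ m, Prp H := fun H h => hl₂ H (hm.mem_iff.2 (List.mem_cons_of_mem _ h))
    have hm3 : ∀ H ∈ m, NoThree H := fun H h => hn3 H (hm.mem_iff.2 (List.mem_cons_of_mem _ h))
    refine Reg.perm hm.symm ?_
    match m, hm₂, hm3, hml with
    | H₁ :: H₂ :: H₃ :: H₄ :: H₆ :: m, hm₂, hm3, hml =>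
      have := eight_core hn (hm3 H₁ (by simp)) (hm₂ H₂ (by simp)) (hm3 H₂ (by simp))
        (hm₂ H₃ (by simp)) (hm3 H₃ (by simp)) (hm₂ H₄ (by simp)) (hm3 H₄ (by simp))
        (hl₂ D hD) (hm₂ H₆ (by simp)) fun L hL h8 hf =>
          eight_regular_no_quad hn hDq (hm₂ H₆ (by simp)) hL h8 hf
      refine Reg.perm ?_ (this.append (m := m))
      exact (List.perm_middle (a := D) (l₁ := [H₁, H₂, H₃, H₄]) (l₂ := H₆ :: m))
    | [], _, _, h => simp at h; omega
    | [_], _, _, h => simp at h; omega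
    | [_, _], _, _, h => simp at h; omega
    | [_, _, _], _, _, h => simp at h; omega
    | [_, _, _, _], _, _, h => simp at h; omega

theorem step_all (n : ℕ) (hn : 5 ≤ n) : Step (Fin n) := by
  have hc : Fintype.card (Fin n) = n := Fintype.card_fin n
  rcases le_or_gt n 7 with h | h
  · exact step_seven_le (by omega) (by omega)
  rcases (show n = 8 ∨ 9 ≤ n by omega) with h8 | h9
  · exact step_eight (by omega)
  · exact step_nine (by omega)

/-! ### From lists to tuples, and the lower bound -/

theorem Reg.exists_tuple : ∀ {k : ℕ} (F : Fin k → Subgroup (Perm α)) {K : Subgroup (Perm α)},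
    Reg K (List.ofFn F) → ∃ g : Fin k → Perm α, (∀ i, g i ∈ alternatingGroup α) ∧
      ∀ x ∈ K, (∀ i, x ∈ conjSub (g i) (F i)) → x = 1 := by
  intro k
  induction k with
  | zero =>
    intro F K h
    rw [List.ofFn_zero] at h
    refine ⟨fun i => i.elim0, fun i => i.elim0, fun x hx _ => ?_⟩
    have h' : K = ⊥ := h
    rwa [h', Subgroup.mem_bot] at hx
  | succ k ih =>
    intro F K h
    rw [List.ofFn_succ] at h
    obtain ⟨g, hg, hr⟩ := h
    obtain ⟨g', hg', h'⟩ := ih _ hr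
    refine ⟨Fin.cons g g', ?_, ?_⟩
    · intro i
      refine Fin.cases ?_ (fun j => ?_) i
      · simpa using hg
      · simpa using hg' j
    · intro x hx hi
      refine h' x ⟨hx, by simpa using hi 0⟩ (fun i => by simpa using hi i.succ)

theorem prp_of_normalCore (hn : 5 ≤ Fintype.card α) {H : Subgroup (alternatingGroup α)}
    (h : H.normalCore = ⊥) : Prp (H.map (alternatingGroup α).subtype) := by
  refine ⟨?_, ?_⟩
  · rintro _ ⟨y, -, rfl⟩; exact y.2
  · intro he
    have hs : IsSimpleGroup (alternatingGroup α) :=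
      alternatingGroup.isSimpleGroup (by rwa [Nat.card_eq_fintype_card])
    have htop : H = ⊤ := by
      rw [eq_top_iff]
      intro x _
      have : (x : Perm α) ∈ H.map (alternatingGroup α).subtype := by rw [he]; exact x.2
      obtain ⟨y, hy, hyx⟩ := this
      rwa [← Subtype.ext hyx]
    subst htop
    rw [Subgroup.normalCore_eq_self] at h
    exact top_ne_bot h

theorem rk_const [Nonempty α] : rk (fun _ : α => 0) = 1 := by
  rw [rk, Finset.image_const Finset.univ_nonempty, Finset.card_singleton]

theorem regular_tuple (hn : 5 ≤ Fintype.card α) (hs : Step α) {k : ℕ}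
    (hk : Fintype.card α - 2 ≤ k) (H : Fin k → Subgroup (alternatingGroup α))
    (hH : ∀ i, (H i).normalCore = ⊥) : IsRegularTuple H := by
  have : Nonempty α := Fintype.card_pos_iff.1 (by omega)
  have hR := claim hs (fun _ => 0) (List.ofFn fun i => (H i).map (alternatingGroup α).subtype)
    (by
      intro K hK
      rw [List.mem_ofFn] at hK
      obtain ⟨i, rfl⟩ := hK
      exact prp_of_normalCore hn (hH i))
    (by rw [rk_const, List.length_ofFn]; omega)
  obtain ⟨g, hg, h⟩ := Reg.exists_tuple _ hR
  refine ⟨fun i => ⟨g i, hg i⟩, ?_⟩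
  rw [eq_bot_iff]
  intro x hx
  rw [Subgroup.mem_iInf] at hx
  rw [Subgroup.mem_bot]
  refine Subtype.ext (h x ⟨fun _ => rfl, x.2⟩ fun i => ?_)
  have hxi := hx i
  rw [mem_conjSub] at hxi ⊢
  exact ⟨_, hxi, rfl⟩

/-- Fewer than `n - 2` points always leave a nontrivial even permutation fixing all of them. -/
theorem exists_fixing {k : ℕ} (hk : k + 3 ≤ Fintype.card α) (a : Fin k → α) :
    ∃ x ∈ alternatingGroup α, x ≠ 1 ∧ ∀ i, x (a i) = a i := by
  have hc : (Finset.univ.image a).card ≤ k := by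
    simpa using (Finset.card_image_le (s := Finset.univ) (f := a))
  have h2 : 2 < (Finset.univ.image a)ᶜ.card := by
    rw [Finset.card_compl]; omega
  obtain ⟨p, q, r, hp, hq, hr, hpq, hpr, hqr⟩ := Finset.two_lt_card_iff.1 h2
  simp only [Finset.mem_compl, Finset.mem_image, Finset.mem_univ, true_and, not_exists] at hp hq hr
  refine ⟨swap p q * swap p r, ?_, ?_, ?_⟩
  · rw [mem_alternatingGroup, Perm.sign_mul, sign_swap hpq, sign_swap hpr]; rfl
  · intro h
    have := DFunLike.congr_fun h r
    rw [mul_apply, swap_apply_right, swap_apply_left] at this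
    exact hqr this
  · intro i
    rw [mul_apply, swap_apply_of_ne_of_ne (hp i) (hr i), swap_apply_of_ne_of_ne (hp i) (hq i)]

theorem stabilizer_normalCore (hn : 4 ≤ Fintype.card α) (ω : α) :
    (MulAction.stabilizer (alternatingGroup α) ω).normalCore = ⊥ := by
  rw [eq_bot_iff]
  intro x hx
  rw [Subgroup.mem_bot]
  refine Subtype.ext (Perm.ext fun a => ?_)
  obtain ⟨σ, hσ, h⟩ := exists_even_perm_map (k := 1) (by omega) (f := ![ω]) (g := ![a])
    (Function.injective_of_subsingleton _) (Function.injective_of_subsingleton _)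
  have h0 : σ ω = a := h 0
  have h1 : ((⟨σ, hσ⟩ : alternatingGroup α)⁻¹ * x * (⟨σ, hσ⟩ : alternatingGroup α)⁻¹⁻¹) • ω = ω :=
    hx (⟨σ, hσ⟩ : alternatingGroup α)⁻¹
  have h2 : σ⁻¹ (x.1 (σ ω)) = ω := by simpa [Subgroup.smul_def] using h1
  rw [h0] at h2
  have h3 := congrArg σ h2
  rw [ap_inv, h0] at h3
  exact h3

theorem iInf_stabilizer_ne_bot {k : ℕ} (hk : k + 3 ≤ Fintype.card α) (ω : α)
    (g : Fin k → alternatingGroup α) :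
    (⨅ i, conjSub (g i) (MulAction.stabilizer (alternatingGroup α) ω)) ≠ ⊥ := by
  obtain ⟨x, hx, hx1, hfix⟩ := exists_fixing hk (fun i => (g i : Perm α) ω)
  intro h
  have hm : (⟨x, hx⟩ : alternatingGroup α) ∈
      ⨅ i, conjSub (g i) (MulAction.stabilizer (alternatingGroup α) ω) := by
    rw [Subgroup.mem_iInf]
    intro i
    rw [mem_conjSub, MulAction.mem_stabilizer_iff]
    change ((g i : Perm α)⁻¹ * x * (g i : Perm α)) ω = ω
    rw [mul_apply, mul_apply, hfix i, inv_ap]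
  rw [h, Subgroup.mem_bot] at hm
  exact hx1 (congrArg Subtype.val hm)

end AltReg

open AltReg in
theorem regularity_number_of_alternating_group (n : ℕ) (hn : 5 ≤ n) :
    (∀ H : Fin (n - 2) → Subgroup ↥(alternatingGroup (Fin n)),
        (∀ i, (H i).normalCore = ⊥) → IsRegularTuple H) ∧
    ((MulAction.stabilizer ↥(alternatingGroup (Fin n))
        (⟨n - 1, by omega⟩ : Fin n)).normalCore = ⊥ ∧
      ∀ g : Fin (n - 3) → ↥(alternatingGroup (Fin n)),
        (⨅ i, conjSub (g i)
          (MulAction.stabilizer ↥(alternatingGroup (Fin n))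
            (⟨n - 1, by omega⟩ : Fin n))) ≠ ⊥) ∧
    IsLeast {k : ℕ | 0 < k ∧ ∀ H : Fin k → Subgroup ↥(alternatingGroup (Fin n)),
        (∀ i, (H i).normalCore = ⊥) → IsRegularTuple H} (n - 2) := by
  have hc : Fintype.card (Fin n) = n := Fintype.card_fin n
  have h1 : ∀ H : Fin (n - 2) → Subgroup ↥(alternatingGroup (Fin n)),
      (∀ i, (H i).normalCore = ⊥) → IsRegularTuple H := fun H hH =>
    AltReg.regular_tuple (by omega) (AltReg.step_all n hn) (by omega) H hH
  refine ⟨h1, ⟨AltReg.stabilizer_normalCore (by omega) _, fun g =>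
    AltReg.iInf_stabilizer_ne_bot (by omega) _ g⟩, ⟨by omega, h1⟩, ?_⟩
  rintro k ⟨-, hk⟩
  by_contra hlt
  obtain ⟨g, hg⟩ := hk (fun _ => MulAction.stabilizer ↥(alternatingGroup (Fin n))
    (⟨n - 1, by omega⟩ : Fin n)) (fun _ => AltReg.stabilizer_normalCore (by omega) _)
  exact AltReg.iInf_stabilizer_ne_bot (by omega) _ g hg
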